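/- Let γ = 7/5. There exists N ∈ ℕ such that for every odd integer n ≥ N there exist r with 1 < r < r*(7/5) and n < k(r) < n+1, and a smooth function 𝒲 : ℝ → ℝ satisfying the self-similar profile equation at every ζ ≠ 0, such that 𝒲(1) = W₀, 𝒲(−1) = −Z₀, and 𝒲(ζ)/ζ → 0 and 𝒲(−ζ)/ζ → 0 as ζ → +∞. Consequently W(ξ) = e^{−ξ}·𝒲(e^{ξ}), Z(ξ) = −e^{−ξ}·𝒲(−e^{ξ}) is a smooth solution of the autonomous ODE system on all of ℝ which passes through the sonic point P_s at ξ = 0 and converges to P_∞ = (0,0) as ξ → +∞. -/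

import Mathlib

noncomputable section

open Real Filter Set Topology

namespace SelfSimilarImplosion

/-- `α = (γ−1)/2`. -/
def alphaF (γ : ℝ) : ℝ := (γ - 1) / 2

/-- `D_W(W,Z) = 1 + (1/2)(W + Z + α(W − Z))`. -/
def DW (γ W Z : ℝ) : ℝ := 1 + (1 / 2) * (W + Z + alphaF γ * (W - Z))

/-- `D_Z(W,Z) = 1 + (1/2)(W + Z − α(W − Z))`. -/
def DZ (γ W Z : ℝ) : ℝ := 1 + (1 / 2) * (W + Z - alphaF γ * (W - Z))

/-- `N_W(W,Z) = −(r + (1/2)((1+2α)W + (1−α)Z))·W + (α/2)Z²`. -/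
def NW (γ r W Z : ℝ) : ℝ :=
  -(r + (1 / 2) * ((1 + 2 * alphaF γ) * W + (1 - alphaF γ) * Z)) * W + (alphaF γ / 2) * Z ^ 2

/-- `N_Z(W,Z) = −(r + (1/2)((1−α)W + (1+2α)Z))·Z + (α/2)W²`. -/
def NZ (γ r W Z : ℝ) : ℝ :=
  -(r + (1 / 2) * ((1 - alphaF γ) * W + (1 + 2 * alphaF γ) * Z)) * Z + (alphaF γ / 2) * W ^ 2

/-- The critical self-similar exponent `r*(γ)`. -/
def rStar (γ : ℝ) : ℝ :=
  if γ < 5 / 3 then 1 + 2 / (Real.sqrt (2 / (γ - 1)) + 1) ^ 2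
  else (3 * γ - 1) / (2 + Real.sqrt 3 * (γ - 1))

/-- `ℛ₁`. -/
def R1 (γ r : ℝ) : ℝ :=
  Real.sqrt (γ ^ 2 * (r - 3) ^ 2 - 2 * γ * (3 * r ^ 2 - 6 * r + 7) + 9 * r ^ 2 - 14 * r + 9)

/-- First coordinate `W₀` of the sonic point `P_s`. -/
def W₀ (γ r : ℝ) : ℝ :=
  (γ ^ 2 * r + (γ + 1) * R1 γ r - 3 * γ ^ 2 - 2 * γ * r + 10 * γ - 3 * r - 3) / (4 * (γ - 1) ^ 2)

/-- Second coordinate `Z₀` of the sonic point `P_s`. -/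
def Z₀ (γ r : ℝ) : ℝ :=
  (γ ^ 2 * r + (γ - 3) * R1 γ r - 3 * γ ^ 2 - 6 * γ * r + 6 * γ + 9 * r - 7) / (4 * (γ - 1) ^ 2)

/-- `ℛ₂`. -/
def R2 (γ r : ℝ) : ℝ :=
  (1 / (γ - 1)) *
    Real.sqrt (γ * ((76 - 27 * γ) * γ - 71) - (3 * γ - 5) * ((γ - 5) * γ + 2) * r ^ 2
      + (γ * (γ * (18 * γ - 52) + 50) - 8) * r
      + R1 γ r * (9 * (γ - 2) * γ + ((2 - 3 * γ) * γ + 5) * r + 5) + 18)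

/-- The first Taylor coefficient `W₁`. -/
def W₁ (γ r : ℝ) : ℝ :=
  (γ * (-3 * (R1 γ r + 6) - 3 * γ * (r - 3) + 2 * r) + R1 γ r + 5 * r + 5) / (4 * (γ - 1) ^ 2)

/-- The first Taylor coefficient `Z₁`. -/
def Z₁ (γ r : ℝ) : ℝ :=
  (-(3 * γ ^ 3 - 7 * γ ^ 2 + γ + 11) * r
      + γ * (γ * (9 * γ - 3 * R1 γ r - 25) + 10 * R1 γ r - 4 * (γ - 1) * R2 γ r + 27)
      - 3 * R1 γ r + 4 * (γ - 1) * R2 γ r - 3)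
    / (4 * (γ - 1) ^ 2 * (γ + 1))

/-- The eigenvalue-ratio function `k(r)`. -/
def kFun (γ r : ℝ) : ℝ :=
  (-4 + (1 + γ) * (r - 1) / (γ - 1) - R2 γ r) / (-4 + (1 + γ) * (r - 1) / (γ - 1) + R2 γ r)


/-- The self-similar profile equation for a function `𝒲` of `ζ`. -/
def ProfileEqn (γ r : ℝ) (Wc : ℝ → ℝ) (ζ : ℝ) : Prop :=
  (r - 1) * Wc ζ
      + (ζ + (1 / 2) * (Wc ζ - Wc (-ζ) + alphaF γ * (Wc ζ + Wc (-ζ)))) * deriv Wc ζ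
      + (alphaF γ / (2 * ζ)) * ((Wc ζ) ^ 2 - (Wc (-ζ)) ^ 2) = 0

/-- `(W, Z)` solves the autonomous ODE system on the set `s`. -/
def IsOdeSolutionOn (γ r : ℝ) (W Z : ℝ → ℝ) (s : Set ℝ) : Prop :=
  ∀ ξ ∈ s,
    DW γ (W ξ) (Z ξ) * deriv W ξ = NW γ r (W ξ) (Z ξ) ∧
    DZ γ (W ξ) (Z ξ) * deriv Z ξ = NZ γ r (W ξ) (Z ξ)

open PowerSeries

/-! ### Convergent power series -/

/-- The power series `f` converges absolutely on the open interval `|x| < R`. -/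
def Cv (R : ℝ) (f : PowerSeries ℝ) : Prop :=
  ∀ x : ℝ, |x| < R → Summable fun n => ‖coeff n f * x ^ n‖

/-- The sum of the power series `f` at `x`. -/
def ev (f : PowerSeries ℝ) (x : ℝ) : ℝ := ∑' n, coeff n f * x ^ n

lemma Cv.mono {R R' : ℝ} {f : PowerSeries ℝ} (h : Cv R f) (hR : R' ≤ R) : Cv R' f :=
  fun x hx => h x (hx.trans_le hR)

lemma Cv.add {R : ℝ} {f g : PowerSeries ℝ} (hf : Cv R f) (hg : Cv R g) : Cv R (f + g) := by
  intro x hx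
  refine Summable.of_nonneg_of_le (fun _ => norm_nonneg _) (fun n => ?_) ((hf x hx).add (hg x hx))
  simp only [map_add, add_mul]
  exact norm_add_le _ _

lemma ev_add {R : ℝ} {f g : PowerSeries ℝ} (hf : Cv R f) (hg : Cv R g) {x : ℝ} (hx : |x| < R) :
    ev (f + g) x = ev f x + ev g x := by
  unfold ev
  rw [← (hf x hx).of_norm.tsum_add (hg x hx).of_norm]
  simp [add_mul]

lemma Cv.neg {R : ℝ} {f : PowerSeries ℝ} (hf : Cv R f) : Cv R (-f) := by
  intro x hx
  simpa using hf x hx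

lemma ev_neg (f : PowerSeries ℝ) (x : ℝ) : ev (-f) x = -ev f x := by
  unfold ev
  rw [← tsum_neg]; simp

lemma Cv.sub {R : ℝ} {f g : PowerSeries ℝ} (hf : Cv R f) (hg : Cv R g) : Cv R (f - g) := by
  rw [sub_eq_add_neg]; exact hf.add hg.neg

lemma ev_sub {R : ℝ} {f g : PowerSeries ℝ} (hf : Cv R f) (hg : Cv R g) {x : ℝ} (hx : |x| < R) :
    ev (f - g) x = ev f x - ev g x := by
  rw [sub_eq_add_neg, ev_add hf hg.neg hx, ev_neg, sub_eq_add_neg]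

lemma coeff_mul_pow (f g : PowerSeries ℝ) (x : ℝ) (n : ℕ) :
    coeff n (f * g) * x ^ n = ∑ kl ∈ Finset.HasAntidiagonal.antidiagonal n,
      (coeff kl.1 f * x ^ kl.1) * (coeff kl.2 g * x ^ kl.2) := by
  rw [coeff_mul, Finset.sum_mul]
  refine Finset.sum_congr rfl fun kl hkl => ?_
  rw [← Finset.HasAntidiagonal.mem_antidiagonal.1 hkl, pow_add]; ring

lemma Cv.mul {R : ℝ} {f g : PowerSeries ℝ} (hf : Cv R f) (hg : Cv R g) : Cv R (f * g) := by
  intro x hx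
  have := summable_norm_sum_mul_antidiagonal_of_summable_norm (hf x hx) (hg x hx)
  exact this.congr fun n => by rw [coeff_mul_pow]

lemma ev_mul {R : ℝ} {f g : PowerSeries ℝ} (hf : Cv R f) (hg : Cv R g) {x : ℝ} (hx : |x| < R) :
    ev (f * g) x = ev f x * ev g x := by
  unfold ev
  rw [tsum_mul_tsum_eq_tsum_sum_antidiagonal_of_summable_norm (hf x hx) (hg x hx)]
  exact tsum_congr fun n => coeff_mul_pow f g x n

lemma cv_of_finite {f : PowerSeries ℝ} (N : ℕ) (h : ∀ n, N < n → coeff n f = 0)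
    (R : ℝ) : Cv R f := by
  intro x _
  refine summable_of_ne_finset_zero (s := Finset.range (N + 1)) fun n hn => ?_
  rw [h n (by simpa using hn)]; simp

lemma ev_of_finite {f : PowerSeries ℝ} (N : ℕ) (h : ∀ n, N < n → coeff n f = 0)
    (x : ℝ) : ev f x = ∑ n ∈ Finset.range (N + 1), coeff n f * x ^ n := by
  refine tsum_eq_sum fun n hn => ?_
  rw [h n (by simpa using hn)]; simp

lemma cv_C (R c : ℝ) : Cv R (C c) :=
  cv_of_finite 0 (fun n hn => by rw [coeff_C, if_neg (by omega)]) R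

lemma ev_C (c x : ℝ) : ev (C c) x = c := by
  rw [ev_of_finite 0 (fun n hn => by rw [coeff_C, if_neg (by omega)])]; simp

lemma cv_X (R : ℝ) : Cv R X :=
  cv_of_finite 1 (fun n hn => by rw [coeff_X, if_neg (by omega)]) R

lemma ev_X (x : ℝ) : ev X x = x := by
  rw [ev_of_finite 1 (fun n hn => by rw [coeff_X, if_neg (by omega)])]
  simp [coeff_X]

lemma cv_one (R : ℝ) : Cv R 1 := by simpa using cv_C R 1

lemma ev_one (x : ℝ) : ev 1 x = 1 := by simpa using ev_C 1 x

lemma ev_zero_right (f : PowerSeries ℝ) : ev f 0 = coeff 0 f := by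
  unfold ev
  rw [tsum_eq_single 0 (fun n hn => by simp [hn])]; simp

lemma Cv.deriv {R : ℝ} {f : PowerSeries ℝ} (hf : Cv R f) :
    Cv R (derivative ℝ f) := by
  intro x hx
  obtain ⟨y, hy1, hy2⟩ := exists_between hx
  have hy0 : 0 < y := (abs_nonneg x).trans_lt hy1
  have hs := hf y (by rwa [abs_of_pos hy0])
  obtain ⟨C, hC⟩ := hs.tendsto_atTop_zero.bddAbove_range
  have hC' : ∀ n, |coeff n f| * y ^ n ≤ C := fun n => by
    have := hC (Set.mem_range_self n)
    simpa [abs_mul, abs_of_pos hy0] using this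
  have hr : ‖|x| / y‖ < 1 := by
    rw [Real.norm_eq_abs, abs_div, abs_abs, abs_of_pos hy0]; exact (div_lt_one hy0).2 hy1
  have hsum := (summable_pow_mul_geometric_of_norm_lt_one 1 hr).mul_left (C / y)
  have hsum0 := (summable_geometric_of_norm_lt_one hr).mul_left (C / y)
  refine Summable.of_nonneg_of_le (fun _ => norm_nonneg _) (fun n => ?_) (hsum.add hsum0)
  rw [coeff_derivative]
  have h1 := hC' (n + 1)
  rw [norm_mul, norm_mul, norm_pow, Real.norm_eq_abs, Real.norm_eq_abs, Real.norm_eq_abs]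
  have h2 : |(n : ℝ) + 1| = n + 1 := abs_of_nonneg (by positivity)
  rw [h2]
  have h3 : |coeff (n + 1) f| ≤ C / y ^ (n + 1) := by
    rw [le_div_iff₀ (by positivity)]; exact h1
  calc |coeff (n + 1) f| * (n + 1) * |x| ^ n
      ≤ C / y ^ (n + 1) * (n + 1) * |x| ^ n := by gcongr
    _ = C / y * ((n : ℝ) ^ 1 * (|x| / y) ^ n) + C / y * (|x| / y) ^ n := by
        rw [div_pow, pow_succ]; field_simp

lemma ev_hasDerivAt {R : ℝ} {f : PowerSeries ℝ} (hf : Cv R f) {x : ℝ} (hx : |x| < R) :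
    HasDerivAt (ev f) (ev (derivative ℝ f) x) x := by
  obtain ⟨y, hy1, hy2⟩ := exists_between hx
  have hy0 : 0 < y := (abs_nonneg x).trans_lt hy1
  have hd := hf.deriv y (by rwa [abs_of_pos hy0])
  have hsum : Summable fun n : ℕ => ‖coeff n f * (n * y ^ (n - 1))‖ := by
    rw [← summable_nat_add_iff 1]
    refine hd.congr fun n => ?_
    rw [coeff_derivative]; push_cast; simp [mul_assoc]
  have key := hasDerivAt_tsum_of_isPreconnected (u := fun n : ℕ =>
    ‖coeff n f * (n * y ^ (n - 1))‖) (t := Metric.ball (0 : ℝ) y)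
    (g := fun n z => coeff n f * z ^ n)
    (g' := fun n z => coeff n f * (n * z ^ (n - 1))) (y₀ := 0) (y := x)
    hsum Metric.isOpen_ball (convex_ball 0 y).isPreconnected
    (fun n z _ => (hasDerivAt_pow n z).const_mul _)
    (fun n z hz => by
      have hz' : |z| ≤ y := by simpa using (mem_ball_zero_iff.1 hz).le
      simp only [norm_mul, norm_pow, Real.norm_eq_abs, abs_of_pos hy0]
      gcongr)
    (by simpa using hy0)
    ((hf 0 (by simpa using hy0.trans hy2)).of_norm)
    (by simpa using hy1)
  have hsx : Summable fun n : ℕ => coeff n f * (n * x ^ (n - 1)) := by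
    refine Summable.of_norm_bounded hsum fun n => ?_
    simp only [norm_mul, norm_pow, Real.norm_eq_abs, abs_of_pos hy0]
    gcongr
  have hval : ev (derivative ℝ f) x
      = ∑' n : ℕ, coeff n f * (n * x ^ (n - 1)) := by
    rw [hsx.tsum_eq_zero_add]
    simp only [Nat.cast_zero, zero_mul, mul_zero, zero_add]
    refine tsum_congr fun n => ?_
    rw [coeff_derivative]; push_cast; simp [mul_assoc]
  rw [hval]
  exact key

lemma ev_contDiffOn {R : ℝ} {f : PowerSeries ℝ} (hf : Cv R f) :
    ContDiffOn ℝ (⊤ : ℕ∞) (ev f) (Ioo (-R) R) := by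
  rw [contDiffOn_infty]
  intro n
  induction n generalizing f with
  | zero =>
    rw [Nat.cast_zero, contDiffOn_zero]
    exact fun x hx => (ev_hasDerivAt hf (abs_lt.2 hx)).continuousAt.continuousWithinAt
  | succ n ih =>
    rw [Nat.cast_add, Nat.cast_one, contDiffOn_succ_iff_deriv_of_isOpen isOpen_Ioo]
    refine ⟨fun x hx => (ev_hasDerivAt hf (abs_lt.2 hx)).differentiableAt.differentiableWithinAt,
      by simp, (ih hf.deriv).congr fun x hx => (ev_hasDerivAt hf (abs_lt.2 hx)).deriv⟩

/-- A geometric bound on the coefficients gives a positive radius of convergence. -/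
lemma cv_of_geom {f : PowerSeries ℝ} {C R : ℝ} (hR : 0 < R)
    (h : ∀ n, |coeff n f| ≤ C * R ^ n) : Cv (1 / R) f := by
  intro x hx
  have hr : ‖R * |x|‖ < 1 := by
    rw [Real.norm_eq_abs, abs_mul, abs_abs, abs_of_pos hR]
    rw [lt_div_iff₀ hR] at hx; linarith
  refine Summable.of_nonneg_of_le (fun _ => norm_nonneg _) (fun n => ?_)
    ((summable_geometric_of_norm_lt_one hr).mul_left C)
  rw [norm_mul, norm_pow, Real.norm_eq_abs, Real.norm_eq_abs, mul_pow, ← mul_assoc]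
  exact mul_le_mul_of_nonneg_right (h n) (by positivity)

/-- Joint dependence on a parameter: coefficients that are continuous and uniformly geometrically
bounded give a sum continuous in the parameter. -/
lemma ev_continuousOn_param {S : Set ℝ} {f : ℝ → PowerSeries ℝ} {C R x : ℝ} (hR : 0 < R)
    (hc : ∀ n, ContinuousOn (fun s => coeff n (f s)) S)
    (h : ∀ s ∈ S, ∀ n, |coeff n (f s)| ≤ C * R ^ n) (hx : |x| < 1 / R) :
    ContinuousOn (fun s => ev (f s) x) S := by
  have hr : ‖R * |x|‖ < 1 := by
    rw [Real.norm_eq_abs, abs_mul, abs_abs, abs_of_pos hR]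
    rw [lt_div_iff₀ hR] at hx; linarith
  refine continuousOn_tsum (u := fun n => C * (R * |x|) ^ n) (fun n => (hc n).mul continuousOn_const)
    ((summable_geometric_of_norm_lt_one hr).mul_left C) fun n s hs => ?_
  rw [norm_mul, norm_pow, Real.norm_eq_abs, Real.norm_eq_abs, mul_pow, ← mul_assoc]
  exact mul_le_mul_of_nonneg_right (h s hs n) (by positivity)

/-! ### The parameter `s` and the linearisation at the sonic point -/

/-- The critical value `1 + √5` of the parameter `s`; it corresponds to `r = r*(7/5)`. -/
def sS : ℝ := 1 + √5

/-- `ρ = r - 1` as a function of `s`, the value of `1 / (1 + (W + Z) / 2)` at the sonic point. -/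
def rho (s : ℝ) : ℝ := (2 * s - 2) / (s ^ 2 + 4 * s)

/-- The distance between the two zeros of `P` in the variable `v`. -/
def eps (s : ℝ) : ℝ := (4 + 2 * s - s ^ 2) / (s - 1)

/-- The coefficients of `a₀` in powers of `x = s - v`. -/
def al0 (s : ℝ) : ℝ := 2 / 5 + (3 / 5 - rho s / 5) * s + 6 / 5 * rho s * s ^ 2
def al1 (s : ℝ) : ℝ := -(3 / 5 - rho s / 5 + 12 / 5 * rho s * s)
def al2 (s : ℝ) : ℝ := 6 / 5 * rho s

/-- The coefficients of `v b₀` in powers of `x = s - v`. -/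
def ka0 (s : ℝ) : ℝ := s * ((s - 1) * (1 + rho s * s))
def ka1 (s : ℝ) : ℝ := -((s - 1) * (1 + rho s * s)) - s * (1 + rho s * s + rho s * (s - 1))
def ka2 (s : ℝ) : ℝ := (1 + rho s * s + rho s * (s - 1)) + s * rho s
def ka3 (s : ℝ) : ℝ := -rho s

/-- `s ρ ε`, the linear coefficient of `v P`. -/
def pp1 (s : ℝ) : ℝ := s * (rho s * eps s)
def pp2 (s : ℝ) : ℝ := s * rho s - rho s * eps s
def pp3 (s : ℝ) : ℝ := -rho s

/-- The discriminant of the linearisation. -/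
def disc (s : ℝ) : ℝ := (2 * al0 s - pp1 s) ^ 2 + 48 / 5 * ka0 s * (rho s * eps s)

/-- Slope at the sonic point of the smooth solution, in the variables `(x, y)`. -/
def a1 (s : ℝ) : ℝ := (-(2 * al0 s - pp1 s) + √(disc s)) / (2 * ka0 s)

/-- The large eigenvalue (up to sign). -/
def lam (s : ℝ) : ℝ := 2 * al0 s + ka0 s * a1 s

/-- The small eigenvalue (up to sign). -/
def mu (s : ℝ) : ℝ := pp1 s - ka0 s * a1 s

/-- The parameter interval, closed at the critical end. -/
def Dm : Set ℝ := Ioc (16 / 5) sS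

lemma sS_sq : sS ^ 2 = 2 * sS + 4 := by
  unfold sS; have := Real.sq_sqrt (show (0:ℝ) ≤ 5 by norm_num); nlinarith

lemma sqrt5_bounds : 2.236067 < √5 ∧ √5 < 2.236068 := by
  constructor
  · rw [Real.lt_sqrt (by norm_num)]; norm_num
  · rw [Real.sqrt_lt' (by norm_num)]; norm_num

lemma sS_bounds : 3.236067 < sS ∧ sS < 3.236068 := by
  have := sqrt5_bounds; unfold sS; constructor <;> linarith [this.1, this.2]

lemma sS_mem : sS ∈ Dm := ⟨by linarith [sS_bounds.1], le_rfl⟩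

lemma Dm_bounds {s : ℝ} (h : s ∈ Dm) : 3.2 < s ∧ s < 3.236068 :=
  ⟨by have := h.1; linarith, h.2.trans_lt sS_bounds.2⟩

lemma rho_bounds {s : ℝ} (h : s ∈ Dm) : 0.19 < rho s ∧ rho s < 0.192 := by
  obtain ⟨h1, h2⟩ := Dm_bounds h
  unfold rho
  rw [lt_div_iff₀ (by positivity), div_lt_iff₀ (by positivity)]
  constructor <;> nlinarith

lemma eps_nonneg {s : ℝ} (h : s ∈ Dm) : 0 ≤ eps s := by
  obtain ⟨h1, h2⟩ := Dm_bounds h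
  have h3 := h.2
  have := sS_sq
  refine div_nonneg ?_ (by linarith)
  nlinarith

lemma eps_pos {s : ℝ} (h : s ∈ Dm) (hs : s < sS) : 0 < eps s := by
  obtain ⟨h1, h2⟩ := Dm_bounds h
  have := sS_sq
  refine div_pos ?_ (by linarith)
  nlinarith

lemma eps_sS : eps sS = 0 := by
  unfold eps; rw [sS_sq]; simp; left; ring

lemma eps_lt {s : ℝ} (h : s ∈ Dm) : eps s < 0.08 := by
  obtain ⟨h1, h2⟩ := Dm_bounds h
  unfold eps
  rw [div_lt_iff₀ (by linarith)]; nlinarith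

lemma al0_pos {s : ℝ} (h : s ∈ Dm) : 4 < al0 s := by
  obtain ⟨h1, h2⟩ := Dm_bounds h
  obtain ⟨h3, h4⟩ := rho_bounds h
  unfold al0
  nlinarith [mul_pos (sub_pos.2 h3) (sub_pos.2 h1), mul_pos (sub_pos.2 h1) (sub_pos.2 h1)]

lemma ka0_pos {s : ℝ} (h : s ∈ Dm) : 11 < ka0 s := by
  obtain ⟨h1, h2⟩ := Dm_bounds h
  obtain ⟨h3, h4⟩ := rho_bounds h
  unfold ka0
  have e1 : 1.608 < 1 + rho s * s := by nlinarith [mul_pos (sub_pos.2 h3) (sub_pos.2 h1)]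
  have e2 : 2.2 * 1.608 < (s - 1) * (1 + rho s * s) := by
    nlinarith [mul_pos (sub_pos.2 e1) (sub_pos.2 h1)]
  nlinarith [mul_pos (sub_pos.2 e2) (sub_pos.2 h1)]

lemma pp1_nonneg {s : ℝ} (h : s ∈ Dm) : 0 ≤ pp1 s := by
  have := Dm_bounds h; have h2 := rho_bounds h; have h3 := eps_nonneg h
  exact mul_nonneg (by linarith [this.1]) (mul_nonneg (by linarith [h2.1]) h3)

lemma pp1_lt {s : ℝ} (h : s ∈ Dm) : pp1 s < 0.1 := by
  have h1 := Dm_bounds h; have h2 := rho_bounds h; have h3 := eps_nonneg h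
  have h4 := eps_lt h
  unfold pp1
  have : rho s * eps s < 0.192 * 0.08 := by nlinarith [h2.1]
  have h0 : 0 ≤ rho s * eps s := mul_nonneg (by linarith [h2.1]) h3
  nlinarith [h1.1, h1.2]

lemma disc_pos {s : ℝ} (h : s ∈ Dm) : 0 < disc s := by
  have h1 := al0_pos h; have h2 := pp1_lt h; have h3 := ka0_pos h
  have h4 := rho_bounds h; have h5 := eps_nonneg h
  unfold disc
  have : 0 ≤ ka0 s * (rho s * eps s) :=
    mul_nonneg (by linarith) (mul_nonneg (by linarith [h4.1]) h5)
  nlinarith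

lemma a1_root {s : ℝ} (h : s ∈ Dm) :
    ka0 s * a1 s ^ 2 + (2 * al0 s - pp1 s) * a1 s - 12 / 5 * (rho s * eps s) = 0 := by
  have h3 := ka0_pos h
  have h4 := Real.sq_sqrt (disc_pos h).le
  have hk : ka0 s ≠ 0 := by linarith
  unfold a1
  field_simp
  have h5 : disc s = (2 * al0 s - pp1 s) ^ 2 + 48 / 5 * ka0 s * (rho s * eps s) := rfl
  linear_combination 5 * h4 + 5 * h5

lemma sqrt_disc_eq {s : ℝ} (h : s ∈ Dm) : √(disc s) = 2 * al0 s - pp1 s + 2 * (ka0 s * a1 s) := by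
  have h3 := ka0_pos h
  have hk : ka0 s ≠ 0 := by linarith
  unfold a1; field_simp; ring

lemma a1_nonneg {s : ℝ} (h : s ∈ Dm) : 0 ≤ a1 s := by
  have h3 := ka0_pos h
  have h4 := rho_bounds h; have h5 := eps_nonneg h
  refine div_nonneg ?_ (by linarith)
  have : 2 * al0 s - pp1 s ≤ √(disc s) := by
    refine Real.le_sqrt_of_sq_le ?_
    unfold disc
    have : 0 ≤ ka0 s * (rho s * eps s) :=
      mul_nonneg (by linarith) (mul_nonneg (by linarith [h4.1]) h5)
    linarith
  linarith

lemma a1_pos {s : ℝ} (h : s ∈ Dm) (hs : s < sS) : 0 < a1 s := by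
  have h1 := a1_root h
  have h4 := rho_bounds h; have h5 := eps_pos h hs
  rcases (a1_nonneg h).lt_or_eq with h6 | h6
  · exact h6
  · rw [← h6] at h1
    have : 0 < rho s * eps s := mul_pos (by linarith [h4.1]) h5
    exfalso; linarith

lemma a1_lt {s : ℝ} (h : s ∈ Dm) : a1 s < 0.01 := by
  have h1 := a1_root h
  have h4 := rho_bounds h; have h5 := eps_nonneg h; have h6 := eps_lt h
  have h7 := al0_pos h; have h8 := pp1_lt h; have h9 := ka0_pos h; have h10 := a1_nonneg h
  by_contra! hc
  have e1 : rho s * eps s < 0.192 * 0.08 := by nlinarith [h4.1]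
  have e2 : 7.9 * a1 s ≤ (2 * al0 s - pp1 s) * a1 s := by nlinarith
  have e3 : 0 ≤ ka0 s * a1 s ^ 2 := by positivity
  nlinarith

lemma lam_add_mu (s : ℝ) : lam s + mu s = 2 * al0 s + pp1 s := by unfold lam mu; ring

lemma lam_sub_mu {s : ℝ} (h : s ∈ Dm) : lam s - mu s = √(disc s) := by
  rw [sqrt_disc_eq h]; unfold lam mu; ring

lemma lam_pos {s : ℝ} (h : s ∈ Dm) : 8 < lam s := by
  have h7 := al0_pos h; have h9 := ka0_pos h; have h10 := a1_nonneg h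
  unfold lam
  nlinarith [mul_nonneg (by linarith : (0:ℝ) ≤ ka0 s) h10]

lemma rho_s {s : ℝ} (h : s ∈ Dm) : rho s * (s ^ 2 + 4 * s) = 2 * s - 2 := by
  obtain ⟨h1, h2⟩ := Dm_bounds h
  unfold rho; field_simp

lemma eps_s {s : ℝ} (h : s ∈ Dm) : eps s * (s - 1) = 4 + 2 * s - s ^ 2 := by
  obtain ⟨h1, h2⟩ := Dm_bounds h
  have : s - 1 ≠ 0 := by linarith
  unfold eps; field_simp

/-- `λμ = 2 s ρ ε (a₀ - (6/5) b₀)(s)`. -/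
lemma lam_mul_mu {s : ℝ} (h : s ∈ Dm) :
    lam s * mu s = rho s * eps s * (2 * al0 s * s - 12 / 5 * ka0 s) := by
  have h1 := a1_root h
  have h2 : pp1 s = s * (rho s * eps s) := rfl
  unfold lam mu
  rw [h2] at h1 ⊢
  linear_combination (-ka0 s) * h1

lemma al0_ka0 {s : ℝ} (h : s ∈ Dm) :
    0.9 < 2 * al0 s * s - 12 / 5 * ka0 s ∧ 2 * al0 s * s - 12 / 5 * ka0 s < 30 := by
  have h1 := Dm_bounds h
  have h2 := rho_bounds h
  have h3 := rho_s h
  have : 2 * al0 s * s - 12 / 5 * ka0 s = s * (16 / 5 - 2 / 5 * (3 - 5 * rho s) * s) := by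
    unfold al0 ka0
    ring
  rw [this]
  constructor <;> nlinarith [h1.1, h1.2, h2.1, h2.2]

lemma mu_pos {s : ℝ} (h : s ∈ Dm) (hs : s < sS) : 0 < mu s := by
  have h1 := lam_mul_mu h
  have h2 := al0_ka0 h
  have h4 := rho_bounds h; have h5 := eps_pos h hs
  have h6 := lam_pos h
  have : 0 < lam s * mu s := by
    rw [h1]; exact mul_pos (mul_pos (by linarith [h4.1]) h5) (by linarith [h2.1])
  exact (mul_pos_iff_of_pos_left (by linarith)).1 this

lemma mu_nonneg {s : ℝ} (h : s ∈ Dm) : 0 ≤ mu s := by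
  have h1 := lam_mul_mu h
  have h2 := al0_ka0 h
  have h4 := rho_bounds h; have h5 := eps_nonneg h
  have h6 := lam_pos h
  have : 0 ≤ lam s * mu s := by
    rw [h1]; exact mul_nonneg (mul_nonneg (by linarith [h4.1]) h5) (by linarith [h2.1])
  exact (mul_nonneg_iff_of_pos_left (by linarith)).1 this

/-! Continuity in the parameter. -/

lemma rho_cont : ContinuousOn rho Dm := by
  unfold rho
  refine ContinuousOn.div (by fun_prop) (by fun_prop) fun s h => ?_
  have := (Dm_bounds h).1; positivity

lemma eps_cont : ContinuousOn eps Dm := by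
  unfold eps
  refine ContinuousOn.div (by fun_prop) (by fun_prop) fun s h => ?_
  have := (Dm_bounds h).1; linarith

lemma al0_cont : ContinuousOn al0 Dm := by have := rho_cont; unfold al0; fun_prop
lemma al1_cont : ContinuousOn al1 Dm := by have := rho_cont; unfold al1; fun_prop
lemma al2_cont : ContinuousOn al2 Dm := by have := rho_cont; unfold al2; fun_prop
lemma ka0_cont : ContinuousOn ka0 Dm := by have := rho_cont; unfold ka0; fun_prop
lemma ka1_cont : ContinuousOn ka1 Dm := by have := rho_cont; unfold ka1; fun_prop
lemma ka2_cont : ContinuousOn ka2 Dm := by have := rho_cont; unfold ka2; fun_prop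
lemma ka3_cont : ContinuousOn ka3 Dm := by have := rho_cont; unfold ka3; fun_prop
lemma pp1_cont : ContinuousOn pp1 Dm := by
  have := rho_cont; have := eps_cont; unfold pp1; fun_prop
lemma pp2_cont : ContinuousOn pp2 Dm := by
  have := rho_cont; have := eps_cont; unfold pp2; fun_prop
lemma pp3_cont : ContinuousOn pp3 Dm := by have := rho_cont; unfold pp3; fun_prop

lemma disc_cont : ContinuousOn disc Dm := by
  have := rho_cont; have := eps_cont; have := al0_cont; have := pp1_cont; have := ka0_cont
  unfold disc; fun_prop

lemma a1_cont : ContinuousOn a1 Dm := by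
  have := al0_cont; have := pp1_cont; have h0 := ka0_cont; have := disc_cont.sqrt
  unfold a1
  refine ContinuousOn.div (by fun_prop) (by fun_prop) fun s h => ?_
  have := ka0_pos h; linarith

lemma lam_cont : ContinuousOn lam Dm := by
  have := al0_cont; have := ka0_cont; have := a1_cont; unfold lam; fun_prop
lemma mu_cont : ContinuousOn mu Dm := by
  have := pp1_cont; have := ka0_cont; have := a1_cont; unfold mu; fun_prop

lemma a1_sS : a1 sS = 0 := by
  have h := a1_root sS_mem
  rw [show pp1 sS = 0 by simp [pp1, eps_sS], eps_sS] at h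
  have h7 := al0_pos sS_mem; have h9 := ka0_pos sS_mem; have h10 := a1_nonneg sS_mem
  by_contra hne
  have : 0 < a1 sS := lt_of_le_of_ne h10 (Ne.symm hne)
  have e1 : 0 < ka0 sS * a1 sS ^ 2 := by positivity
  nlinarith

lemma mu_sS : mu sS = 0 := by simp [mu, pp1, eps_sS, a1_sS]

/-! Identification with the quantities of the statement. -/

lemma R1_eq {s : ℝ} (h : s ∈ Dm) :
    R1 (7 / 5) (1 + rho s) = (6 / s + 6 * rho s - 3) * (4 / 15) := by
  obtain ⟨h1, h2⟩ := Dm_bounds h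
  obtain ⟨h3, h4⟩ := rho_bounds h
  have hs : (0:ℝ) < s := by linarith
  have e6 : 6 / s + 6 * rho s - 3 = 3 * (4 + 2 * s - s ^ 2) / (s ^ 2 + 4 * s) := by
    unfold rho; field_simp; ring
  have e7 : 0 ≤ 3 * (4 + 2 * s - s ^ 2) / (s ^ 2 + 4 * s) := by
    refine div_nonneg ?_ (by positivity)
    have := sS_sq; have := h.2; nlinarith
  unfold R1
  rw [show (7 / 5) ^ 2 * (1 + rho s - 3) ^ 2 - 2 * (7 / 5) * (3 * (1 + rho s) ^ 2
      - 6 * (1 + rho s) + 7) + 9 * (1 + rho s) ^ 2 - 14 * (1 + rho s) + 9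
      = ((6 / s + 6 * rho s - 3) * (4 / 15)) ^ 2 by unfold rho; field_simp; ring]
  exact Real.sqrt_sq (mul_nonneg (e6 ▸ e7) (by norm_num))

lemma W0_eq {s : ℝ} (h : s ∈ Dm) : W₀ (7 / 5) (1 + rho s) = 6 / s - 1 := by
  unfold W₀; rw [R1_eq h]; ring

lemma Z0_eq {s : ℝ} (h : s ∈ Dm) : Z₀ (7 / 5) (1 + rho s) = -4 / s - 1 := by
  unfold Z₀; rw [R1_eq h]; ring

lemma R2_eq {s : ℝ} (h : s ∈ Dm) : R2 (7 / 5) (1 + rho s) = (lam s - mu s) / s := by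
  obtain ⟨h1, h2⟩ := Dm_bounds h
  obtain ⟨h3, h4⟩ := rho_bounds h
  have hs : (0:ℝ) < s := by linarith
  have e := rho_s h
  have e2 := eps_s h
  rw [lam_sub_mu h]
  unfold R2
  rw [R1_eq h, eq_div_iff hs.ne', mul_assoc, mul_comm _ s, ← mul_assoc]
  have key : disc s = (1 / (7 / 5 - 1) * s) ^ 2 * ((7 / 5) * ((76 - 27 * (7 / 5)) * (7 / 5) - 71)
      - (3 * (7 / 5) - 5) * ((7 / 5 - 5) * (7 / 5) + 2) * (1 + rho s) ^ 2
      + (7 / 5 * (7 / 5 * (18 * (7 / 5) - 52) + 50) - 8) * (1 + rho s)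
      + (6 / s + 6 * rho s - 3) * (4 / 15) * (9 * (7 / 5 - 2) * (7 / 5)
        + ((2 - 3 * (7 / 5)) * (7 / 5) + 5) * (1 + rho s) + 5) + 18) := by
    have hs1 : s - 1 ≠ 0 := by linarith
    unfold disc al0 ka0 pp1 eps rho
    field_simp
    ring
  rw [key, Real.sqrt_mul (sq_nonneg _), Real.sqrt_sq (by positivity)]

lemma kFun_eq {s : ℝ} (h : s ∈ Dm) : kFun (7 / 5) (1 + rho s) = lam s / mu s := by
  obtain ⟨h1, h2⟩ := Dm_bounds h
  have hs : (0:ℝ) < s := by linarith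
  have hT : lam s + mu s = s * (4 - 6 * rho s) := by
    have hs1 : s - 1 ≠ 0 := by linarith
    rw [lam_add_mu]; unfold al0 pp1 eps rho; field_simp; ring
  unfold kFun
  rw [R2_eq h]
  have e1 : (-4 + (1 + 7 / 5) * (1 + rho s - 1) / (7 / 5 - 1) : ℝ) = -(lam s + mu s) / s := by
    rw [hT]; field_simp; ring
  rw [e1]
  have e2 : -(lam s + mu s) / s - (lam s - mu s) / s = -(2 / s) * lam s := by ring
  have e3 : -(lam s + mu s) / s + (lam s - mu s) / s = -(2 / s) * mu s := by ring
  rw [e2, e3, mul_div_mul_left]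
  have : 0 < 2 / s := by positivity
  linarith

lemma rho_lt_rStar {s : ℝ} (h : s ∈ Dm) (hs : s < sS) : 1 + rho s < rStar (7 / 5) := by
  obtain ⟨h1, h2⟩ := Dm_bounds h
  unfold rStar
  rw [if_pos (by norm_num)]
  have e5 : (2 / (7 / 5 - 1) : ℝ) = 5 := by norm_num
  rw [e5]
  have h5 := Real.sq_sqrt (show (0:ℝ) ≤ 5 by norm_num)
  have hb := sS_bounds
  have hss : √5 = sS - 1 := by unfold sS; ring
  rw [hss] at h5 ⊢
  have : (sS - 1 + 1) ^ 2 = 2 * sS + 4 := by have := sS_sq; ring_nf; linarith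
  rw [this]
  have hq := sS_sq
  unfold rho
  gcongr 1 + ?_
  rw [div_lt_div_iff₀ (by positivity) (by linarith)]
  nlinarith [mul_pos (sub_pos.2 hs) (sub_pos.2 hs)]

/-! ### The formal expansion at the sonic point -/


/-- The formal derivative. -/
def dd (f : PowerSeries ℝ) : PowerSeries ℝ := derivative ℝ f

lemma dd_add (f g : PowerSeries ℝ) : dd (f + g) = dd f + dd g := map_add _ f g
lemma dd_mul (f g : PowerSeries ℝ) : dd (f * g) = f * dd g + dd f * g := by
  simp [dd, smul_eq_mul, mul_comm]
lemma coeff_dd (f : PowerSeries ℝ) (n : ℕ) :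
    coeff n (dd f) = coeff (n + 1) f * (n + 1) := by
  simp [dd, coeff_derivative]

def VPs (s : ℝ) : PowerSeries ℝ :=
  C (pp1 s) * X + C (pp2 s) * X ^ 2
    + C (pp3 s) * X ^ 3
def VBs (s : ℝ) : PowerSeries ℝ :=
  C (ka0 s) + C (ka1 s) * X
    + C (ka2 s) * X ^ 2 + C (ka3 s) * X ^ 3
def A0s (s : ℝ) : PowerSeries ℝ :=
  C (al0 s) + C (al1 s) * X
    + C (al2 s) * X ^ 2
def PPs (s : ℝ) : PowerSeries ℝ :=
  C (rho s * eps s) * X + C (rho s) * X ^ 2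

/-- The residual `v(P - b₀Y)Y' - 2(1-Y)(a₀Y - (6/5)P)` of the orbit equation. -/
def Res (s : ℝ) (Y : PowerSeries ℝ) : PowerSeries ℝ :=
  VPs s * dd Y - VBs s * Y * dd Y
    - C 2 * (1 - Y) * (A0s s * Y - C (6 / 5) * PPs s)

/-- First-order coefficient of the linearised residual at `T`. -/
def Aop (s : ℝ) (T : PowerSeries ℝ) : PowerSeries ℝ := VPs s - VBs s * T
/-- Zeroth-order coefficient of the linearised residual at `T`. -/
def Bop (s : ℝ) (T : PowerSeries ℝ) : PowerSeries ℝ :=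
  -(VBs s * dd T) - C 2 * A0s s - C (12 / 5) * PPs s
    + C 4 * A0s s * T

lemma res_add (s : ℝ) (T Z : PowerSeries ℝ) :
    Res s (T + Z) = Res s T + Aop s T * dd Z + Bop s T * Z - VBs s * Z * dd Z
      + C 2 * A0s s * Z ^ 2 := by
  have e1 : (C (12 / 5) : PowerSeries ℝ)
    = C 2 * C (6 / 5) := by rw [← map_mul]; norm_num
  have e2 : (C 4 : PowerSeries ℝ)
    = C 2 + C 2 := by rw [← map_add]; norm_num
  unfold Res Aop Bop
  rw [dd_add, e1, e2]; ring

lemma coeff_VPs (s : ℝ) (n : ℕ) : coeff n (VPs s)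
    = if n = 1 then pp1 s else if n = 2 then pp2 s else if n = 3 then pp3 s else 0 := by
  simp only [VPs, map_add, coeff_C_mul, coeff_X, coeff_X_pow]
  split_ifs <;> first | omega | simp
lemma coeff_VBs (s : ℝ) (n : ℕ) : coeff n (VBs s)
    = if n = 0 then ka0 s else if n = 1 then ka1 s else if n = 2 then ka2 s else
      if n = 3 then ka3 s else 0 := by
  simp only [VBs, map_add, coeff_C_mul, coeff_X, coeff_X_pow,
    coeff_C]
  split_ifs <;> first | omega | simp
lemma coeff_A0s (s : ℝ) (n : ℕ) : coeff n (A0s s)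
    = if n = 0 then al0 s else if n = 1 then al1 s else if n = 2 then al2 s else 0 := by
  simp only [A0s, map_add, coeff_C_mul, coeff_X, coeff_X_pow,
    coeff_C]
  split_ifs <;> first | omega | simp
lemma coeff_PPs (s : ℝ) (n : ℕ) : coeff n (PPs s)
    = if n = 1 then rho s * eps s else if n = 2 then rho s else 0 := by
  simp only [PPs, map_add, coeff_C_mul, coeff_X, coeff_X_pow]
  split_ifs <;> first | omega | simp

lemma coeff_zero_Aop {s : ℝ} {T : PowerSeries ℝ} (h0 : coeff 0 T = 0) :
    coeff 0 (Aop s T) = 0 := by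
  simp only [Aop, map_sub, coeff_mul, coeff_VPs, coeff_VBs]
  simp [h0] at *

lemma coeff_one_mul (f g : PowerSeries ℝ) : coeff 1 (f * g)
    = coeff 0 f * coeff 1 g
      + coeff 1 f * coeff 0 g := by
  rw [coeff_mul, Finset.Nat.sum_antidiagonal_eq_sum_range_succ_mk]
  simp [Finset.sum_range_succ]

lemma coeff_zero_mul' (f g : PowerSeries ℝ) : coeff 0 (f * g)
    = coeff 0 f * coeff 0 g := by
  rw [coeff_mul, Finset.Nat.sum_antidiagonal_eq_sum_range_succ_mk]
  simp

lemma coeff_one_Aop {s : ℝ} {T : PowerSeries ℝ} (h0 : coeff 0 T = 0)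
    (h1 : coeff 1 T = a1 s) : coeff 1 (Aop s T) = mu s := by
  rw [Aop, map_sub, coeff_one_mul, coeff_VPs, coeff_VBs, h0, h1]
  simp [mu]

lemma coeff_zero_Bop {s : ℝ} {T : PowerSeries ℝ} (h0 : coeff 0 T = 0)
    (h1 : coeff 1 T = a1 s) : coeff 0 (Bop s T) = -lam s := by
  rw [Bop, map_add, map_sub, map_sub, map_neg, coeff_zero_mul', coeff_zero_mul' _ T,
    coeff_C_mul, coeff_C_mul, coeff_VBs, coeff_A0s, coeff_PPs, h0,
    coeff_dd, zero_add, h1]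
  simp [lam]; ring

/-- Changing coefficients from order `n + 1` on changes the residual in a triangular way. -/
lemma res_perturb {s : ℝ} {T Z : PowerSeries ℝ} (h0 : coeff 0 T = 0)
    (h1 : coeff 1 T = a1 s) {n : ℕ} (hn : 1 ≤ n) (hZ : X ^ (n + 1) ∣ Z) :
    (∀ j ≤ n, coeff j (Res s (T + Z)) = coeff j (Res s T)) ∧
    coeff (n + 1) (Res s (T + Z)) = coeff (n + 1) (Res s T)
      + coeff (n + 1) Z * (mu s * (n + 1) - lam s) := by
  obtain ⟨W, rfl⟩ := hZ
  obtain ⟨A', hA'⟩ := X_dvd_iff.2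
    (by simpa using coeff_zero_Aop (s := s) h0 : constantCoeff (Aop s T) = 0)
  have hA1 : coeff 0 A' = mu s := by
    have := coeff_one_Aop h0 h1
    rw [hA', show (1 : ℕ) = 0 + 1 from rfl, coeff_succ_X_mul] at this; exact this
  have hdX : dd (X ^ (n + 1) : PowerSeries ℝ)
      = C ((n : ℝ) + 1) * X ^ n := by
    ext j
    rw [coeff_dd, coeff_C_mul, coeff_X_pow, coeff_X_pow]
    by_cases hj : j = n
    · simp [hj]
    · simp [hj]
  obtain ⟨p, rfl⟩ : ∃ p, n = p + 1 := ⟨n - 1, by omega⟩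
  have key : Res s (T + X ^ (p + 1 + 1) * W) = Res s T + X ^ (p + 1 + 1) *
      (A' * (C (((p + 1 : ℕ) : ℝ) + 1) * W + X * dd W) + Bop s T * W
        + X * (C 2 * A0s s * X ^ (p + 1) * W ^ 2
          - VBs s * X ^ p * W * (C (((p + 1 : ℕ) : ℝ) + 1) * W
            + X * dd W))) := by
    rw [res_add, dd_mul, hdX, hA']; ring
  rw [key]
  constructor
  · intro j hj
    rw [map_add, coeff_X_pow_mul', if_neg (by omega), add_zero]
  · rw [map_add, coeff_X_pow_mul', if_pos le_rfl, coeff_X_pow_mul',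
      if_pos le_rfl, Nat.sub_self]
    simp only [map_add, coeff_zero_mul', coeff_zero_X, hA1,
      coeff_C, coeff_zero_Bop h0 h1, zero_mul, add_zero, if_true]
    push_cast; ring

/-- The Taylor polynomial of degree `m` of the smooth solution at the sonic point. -/
def Tr (s : ℝ) : ℕ → PowerSeries ℝ
  | 0 => 0
  | 1 => C (a1 s) * X
  | (m + 2) => Tr s (m + 1) + C (coeff (m + 2) (Res s (Tr s (m + 1)))
      / (lam s - mu s * (m + 2))) * X ^ (m + 2)

/-- The Taylor coefficients of the smooth solution at the sonic point. -/
def aS (s : ℝ) (m : ℕ) : ℝ := coeff m (Tr s m)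

/-- The numerator in the recursion for `aS`. -/
def num (s : ℝ) (m : ℕ) : ℝ := coeff m (Res s (Tr s (m - 1)))

lemma coeff_Tr_gt (s : ℝ) : ∀ m j, m < j → coeff j (Tr s m) = 0
  | 0, j, _ => by simp [Tr]
  | 1, j, h => by
      rw [Tr, coeff_C_mul, coeff_X, if_neg (by omega), mul_zero]
  | m + 2, j, h => by
      rw [Tr, map_add, coeff_Tr_gt s (m + 1) j (by omega), coeff_C_mul,
        coeff_X_pow, if_neg (by omega), mul_zero, add_zero]

lemma coeff_Tr_succ (s : ℝ) (m j : ℕ) (h : j ≤ m) :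
    coeff j (Tr s (m + 1)) = coeff j (Tr s m) := by
  match m, h with
  | 0, h => obtain rfl : j = 0 := by omega
            simp [Tr]
  | m + 1, h =>
      rw [Tr, map_add, coeff_C_mul,
        coeff_X_pow, if_neg (by omega), mul_zero, add_zero]

lemma coeff_Tr_le (s : ℝ) (m j : ℕ) (h : j ≤ m) :
    coeff j (Tr s m) = aS s j := by
  induction m, h using Nat.le_induction with
  | base => rfl
  | succ m h ih => rw [coeff_Tr_succ s m j h, ih]

lemma coeff_Tr (s : ℝ) (m j : ℕ) :
    coeff j (Tr s m) = if j ≤ m then aS s j else 0 := by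
  split_ifs with h
  · exact coeff_Tr_le s m j h
  · exact coeff_Tr_gt s m j (by omega)

lemma aS_zero (s : ℝ) : aS s 0 = 0 := by simp [aS, Tr]
lemma aS_one (s : ℝ) : aS s 1 = a1 s := by simp [aS, Tr]

lemma Tr_succ (s : ℝ) (m : ℕ) :
    Tr s (m + 1) = Tr s m + C (aS s (m + 1)) * X ^ (m + 1) := by
  ext j
  rw [map_add, coeff_C_mul, coeff_X_pow, coeff_Tr, coeff_Tr]
  by_cases h : j ≤ m
  · rw [if_pos (by omega), if_pos h, if_neg (by omega)]; ring
  · by_cases h' : j = m + 1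
    · simp [h']
    · rw [if_neg (by omega), if_neg h, if_neg h']; ring

lemma aS_eq (s : ℝ) {m : ℕ} (hm : 2 ≤ m) : aS s m = num s m / (lam s - mu s * m) := by
  obtain ⟨p, rfl⟩ : ∃ p, m = p + 2 := ⟨m - 2, by omega⟩
  rw [aS, num, Tr, map_add, coeff_Tr_gt s (p + 1) (p + 2) (by omega), coeff_C_mul,
    coeff_X_pow, if_pos rfl]
  simp

lemma coeff_res_Tr {s : ℝ} (h : s ∈ Dm) (m : ℕ) (hm : 1 ≤ m)
    (hk : ∀ j : ℕ, 2 ≤ j → j ≤ m → lam s - mu s * j ≠ 0) :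
    ∀ j ≤ m, coeff j (Res s (Tr s m)) = 0 := by
  induction m, hm using Nat.le_induction with
  | base =>
    intro j hj
    have e : dd (Tr s 1) = C (a1 s) := by
      ext j; rw [coeff_dd, Tr, coeff_C_mul, coeff_X, coeff_C]
      by_cases hj : j = 0 <;> simp [hj]
    have hr := a1_root h
    have hv : ∀ j ≤ 1, coeff j (Tr s 1) = if j = 1 then a1 s else 0 := by
      intro j _; rw [Tr, coeff_C_mul, coeff_X]; split_ifs <;> simp
    interval_cases j
    · rw [Res, e]
      simp only [map_sub, coeff_zero_mul', coeff_VPs, coeff_VBs, coeff_A0s, coeff_PPs,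
        hv 0 (by omega), coeff_C]
      simp
    · rw [Res, e]
      simp only [map_sub, coeff_zero_mul', coeff_one_mul, coeff_VPs, coeff_VBs, coeff_A0s,
        coeff_PPs, hv 0 (by omega), hv 1 (by omega), coeff_C, coeff_one]
      simp
      linear_combination -hr
  | succ m hm ih =>
    intro j hj
    have ih' := ih (fun j h1 h2 => hk j h1 (by omega))
    have hp := res_perturb (s := s) (T := Tr s m)
      (Z := C (aS s (m + 1)) * X ^ (m + 1))
      (by rw [coeff_Tr, if_pos (by omega), aS_zero]) (by rw [coeff_Tr, if_pos hm, aS_one]) hm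
      (Dvd.intro_left _ rfl)
    rw [← Tr_succ] at hp
    rcases Nat.lt_or_ge j (m + 1) with hlt | hge
    · rw [hp.1 j (by omega)]; exact ih' j (by omega)
    · obtain rfl : j = m + 1 := by omega
      rw [hp.2, coeff_C_mul, coeff_X_pow, if_pos rfl, mul_one,
        aS_eq s (by omega)]
      have hne := hk (m + 1) (by omega) le_rfl
      have : num s (m + 1) = coeff (m + 1) (Res s (Tr s m)) := rfl
      rw [← this]
      push_cast at hne ⊢
      field_simp
      ring

/-- The formal power series solution. -/
def Yf (s : ℝ) : PowerSeries ℝ := mk (aS s)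

lemma Yf_split (s : ℝ) (m : ℕ) : ∃ Z, X ^ (m + 1) ∣ Z ∧ Yf s = Tr s m + Z := by
  refine ⟨Yf s - Tr s m, ?_, by ring⟩
  rw [X_pow_dvd_iff]
  intro j hj
  rw [map_sub, Yf, coeff_mk, coeff_Tr, if_pos (by omega), sub_self]

lemma res_Yf {s : ℝ} (h : s ∈ Dm) (hk : ∀ j : ℕ, 2 ≤ j → lam s - mu s * j ≠ 0) :
    Res s (Yf s) = 0 := by
  ext j
  obtain ⟨Z, hZ, e⟩ := Yf_split s (j + 1)
  rw [e, (res_perturb (by rw [coeff_Tr, if_pos (by omega), aS_zero])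
    (by rw [coeff_Tr, if_pos (by omega), aS_one]) (by omega) hZ).1 j (by omega),
    coeff_res_Tr h (j + 1) (by omega) (fun j h1 _ => hk j h1) j (by omega)]
  simp

/-! Continuity of the coefficients in the parameter. -/

/-- All coefficients depend continuously on the parameter on `S`. -/
def CC (S : Set ℝ) (f : ℝ → PowerSeries ℝ) : Prop :=
  ∀ n, ContinuousOn (fun s => coeff n (f s)) S

lemma CC.add {S : Set ℝ} {f g : ℝ → PowerSeries ℝ} (hf : CC S f) (hg : CC S g) :
    CC S (fun s => f s + g s) := fun n => by simp only [map_add]; exact (hf n).add (hg n)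
lemma CC.sub {S : Set ℝ} {f g : ℝ → PowerSeries ℝ} (hf : CC S f) (hg : CC S g) :
    CC S (fun s => f s - g s) := fun n => by simp only [map_sub]; exact (hf n).sub (hg n)
lemma CC.neg {S : Set ℝ} {f : ℝ → PowerSeries ℝ} (hf : CC S f) :
    CC S (fun s => - f s) := fun n => by simp only [map_neg]; exact (hf n).neg
lemma CC.mul {S : Set ℝ} {f g : ℝ → PowerSeries ℝ} (hf : CC S f) (hg : CC S g) :
    CC S (fun s => f s * g s) := fun n => by
  simp only [coeff_mul]
  exact continuousOn_finsetSum _ fun p _ => (hf p.1).mul (hg p.2)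
lemma CC.dd {S : Set ℝ} {f : ℝ → PowerSeries ℝ} (hf : CC S f) : CC S (fun s => dd (f s)) :=
  fun n => by simp only [coeff_dd]; exact (hf (n + 1)).mul continuousOn_const
lemma CC.const {S : Set ℝ} (f : PowerSeries ℝ) : CC S (fun _ => f) := fun _ => continuousOn_const
lemma CC.C {S : Set ℝ} {c : ℝ → ℝ} (hc : ContinuousOn c S) :
    CC S (fun s => C (c s)) := fun n => by
  simp only [coeff_C]
  split_ifs
  · exact hc
  · exact continuousOn_const
lemma CC.mono {S S' : Set ℝ} {f : ℝ → PowerSeries ℝ} (hf : CC S f) (h : S' ⊆ S) : CC S' f :=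
  fun n => (hf n).mono h

lemma cc_VPs : CC Dm VPs := ((CC.C pp1_cont).mul (CC.const _)).add
  ((CC.C pp2_cont).mul (CC.const _)) |>.add ((CC.C pp3_cont).mul (CC.const _))
lemma cc_VBs : CC Dm VBs := ((CC.C ka0_cont).add ((CC.C ka1_cont).mul (CC.const _))).add
  ((CC.C ka2_cont).mul (CC.const _)) |>.add ((CC.C ka3_cont).mul (CC.const _))
lemma cc_A0s : CC Dm A0s := ((CC.C al0_cont).add ((CC.C al1_cont).mul (CC.const _))).add
  ((CC.C al2_cont).mul (CC.const _))
lemma cc_PPs : CC Dm PPs := ((CC.C (rho_cont.mul eps_cont)).mul (CC.const _)).add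
  ((CC.C rho_cont).mul (CC.const _))

lemma CC.res {S : Set ℝ} {f : ℝ → PowerSeries ℝ} (hf : CC S f) (hS : S ⊆ Dm) :
    CC S (fun s => Res s (f s)) :=
  (((cc_VPs.mono hS).mul hf.dd).sub (((cc_VBs.mono hS).mul hf).mul hf.dd)).sub
    (((CC.const _).mul ((CC.const 1).sub hf)).mul (((cc_A0s.mono hS).mul hf).sub
      ((CC.const _).mul (cc_PPs.mono hS))))

lemma CC.aop {S : Set ℝ} {f : ℝ → PowerSeries ℝ} (hf : CC S f) (hS : S ⊆ Dm) :
    CC S (fun s => Aop s (f s)) := (cc_VPs.mono hS).sub ((cc_VBs.mono hS).mul hf)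

lemma CC.bop {S : Set ℝ} {f : ℝ → PowerSeries ℝ} (hf : CC S f) (hS : S ⊆ Dm) :
    CC S (fun s => Bop s (f s)) :=
  ((((cc_VBs.mono hS).mul hf.dd).neg.sub ((CC.const _).mul (cc_A0s.mono hS))).sub
    ((CC.const _).mul (cc_PPs.mono hS))).add (((CC.const _).mul (cc_A0s.mono hS)).mul hf)

lemma cc_Tr {S : Set ℝ} (hS : S ⊆ Dm) (m : ℕ)
    (hk : ∀ j : ℕ, 2 ≤ j → j ≤ m → ∀ s ∈ S, lam s - mu s * j ≠ 0) :
    CC S (fun s => Tr s m) := by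
  induction m using Nat.strong_induction_on with
  | _ m ih =>
    match m, ih, hk with
    | 0, _, _ => simp only [Tr]; exact CC.const 0
    | 1, _, _ => simp only [Tr]; exact (CC.C (a1_cont.mono hS)).mul (CC.const _)
    | m + 2, ih, hk =>
      simp only [Tr]
      have ih1 := ih (m + 1) (by omega) (fun j h1 h2 => hk j h1 (by omega))
      refine ih1.add ((CC.C ?_).mul (CC.const _))
      refine (ih1.res hS (m + 2)).div ?_ fun s hs => ?_
      · have := lam_cont.mono hS; have := mu_cont.mono hS; fun_prop
      · have := hk (m + 2) (by omega) le_rfl s hs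
        push_cast at this; exact this

lemma aS_cont {S : Set ℝ} (hS : S ⊆ Dm) (m : ℕ)
    (hk : ∀ j : ℕ, 2 ≤ j → j ≤ m → ∀ s ∈ S, lam s - mu s * j ≠ 0) :
    ContinuousOn (fun s => aS s m) S := cc_Tr hS m hk m

lemma num_cont {S : Set ℝ} (hS : S ⊆ Dm) (m : ℕ)
    (hk : ∀ j : ℕ, 2 ≤ j → j ≤ m - 1 → ∀ s ∈ S, lam s - mu s * j ≠ 0) :
    ContinuousOn (fun s => num s m) S := (cc_Tr hS (m - 1) hk).res hS m

/-! ### Exact Taylor coefficients at the degenerate parameter -/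

def zadd (a b : ℤ × ℤ) : ℤ × ℤ := (a.1 + b.1, a.2 + b.2)
def zmul (a b : ℤ × ℤ) : ℤ × ℤ := (a.1 * b.1 + 5 * (a.2 * b.2), a.1 * b.2 + a.2 * b.1)
def zsm (k : ℤ) (a : ℤ × ℤ) : ℤ × ℤ := (k * a.1, k * a.2)
def zsum : List (ℤ × ℤ) → ℤ × ℤ
  | [] => (0, 0)
  | x :: l => zadd x (zsum l)

/-- Continuation-passing evaluation: forces the kernel to reduce `n` to a literal before `k n`
is unfolded. -/
def fN {α : Type} (n : ℕ) (k : ℕ → α) : α := Nat.rec (k 0) (fun n _ => k (Nat.succ n)) n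
def fZ {α : Type} (z : ℤ) (k : ℤ → α) : α :=
  match z with
  | .ofNat n => fN n fun n => k (Int.ofNat n)
  | .negSucc n => fN n fun n => k (Int.negSucc n)
def fP {α : Type} (z : ℤ × ℤ) (k : ℤ × ℤ → α) : α := fZ z.1 fun a => fZ z.2 fun b => k (a, b)

/-- Convolution `∑ xᵢ yᵢ` in `ℤ[√5]`, added to the accumulator `(a, b)`. -/
def conv {α : Type} : List (ℤ × ℤ) → List (ℤ × ℤ) → ℤ → ℤ → (ℤ → ℤ → α) → α
  | (x, x') :: l, (y, y') :: r, a, b, k =>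
    fZ (Int.add a (Int.add (Int.mul x y) (Int.mul 5 (Int.mul x' y')))) fun a =>
      fZ (Int.add b (Int.add (Int.mul x y') (Int.mul x' y))) fun b => conv l r a b k
  | _, _, a, b, k => k a b

/-- Positivity of `a + b√5`, decided in integers. -/
def pos5 (a : ℤ × ℤ) : Bool :=
  (0 ≤ a.1 && 0 < a.2) || (0 < a.1 && a.2 ≤ 0 && 5 * (a.2 * a.2) < a.1 * a.1)
    || (a.1 ≤ 0 && 0 < a.2 && a.1 * a.1 < 5 * (a.2 * a.2))

/-- `P i cᵢ cᵢ₋₁` for all consecutive entries of a list that is stored in reverse order. -/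
def chk (P : ℕ → ℤ × ℤ → ℤ × ℤ → Bool) : List (ℤ × ℤ) → Bool
  | x :: y :: l => P (l.length + 1) x y && chk P (y :: l)
  | _ => true

/-- Sixteen times the next scaled coefficient. -/
def lin (m : ℤ) (x y q0 q1 q2 q3 : ℤ × ℤ) : ℤ × ℤ :=
  zsum [zmul (-120 * (m - 1) - 460, 80 * (m - 1) + 380) (zsm (2 * 55) x),
    zmul (-130 * (m - 2) - 624, 50 * (m - 2) + 240) (zsm (4 * 55 ^ 3) y),
    zmul (-200 * (m + 1), -160 * (m + 1)) q0,
    zmul (510 * m + 880, -10 * m) (zsm (2 * 55 ^ 2) q1),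
    zmul (175 * (m - 1) + 460, -135 * (m - 1) - 380) (zsm (4 * 55 ^ 4) q2),
    zmul (65 * (m - 2) + 312, -25 * (m - 2) - 120) (zsm (8 * 55 ^ 6) q3)]

/-- Runs the recursion `n` times from the list of the scaled coefficients `aᵢ₊₂, …, a₂`. -/
def st : ℕ → ℕ → List (ℤ × ℤ) → ℤ × ℤ → ℤ × ℤ → ℤ × ℤ → (List (ℤ × ℤ) → Bool) → Bool
  | 0, _, l, _, _, _, k => k l
  | n + 1, i, l, q1, q2, q3, k =>
    conv l l.reverse 0 0 fun a b =>
      fP (lin (i + 3) (l.headD (0, 0)) (l.tail.headD (0, 0)) (a, b) q1 q2 q3) fun t =>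
        fP (t.1 / 16, t.2 / 16) fun c => fN (i + 1) fun i =>
          zsm 16 c == t && st n i (c :: l) (a, b) q1 q2 k

/-- The embedding `ℤ[√5] → ℝ`. -/
def ph (a : ℤ × ℤ) : ℝ := a.1 + a.2 * √5

lemma s5 : √5 * √5 = 5 := Real.mul_self_sqrt (by norm_num)
lemma ph_zadd (a b : ℤ × ℤ) : ph (zadd a b) = ph a + ph b := by
  simp only [ph, zadd]; push_cast; ring
lemma ph_zmul (a b : ℤ × ℤ) : ph (zmul a b) = ph a * ph b := by
  simp only [ph, zmul]; push_cast; linear_combination (-(a.2 : ℝ) * b.2) * s5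
lemma ph_zsm (k : ℤ) (b : ℤ × ℤ) : ph (zsm k b) = k * ph b := by
  simp only [ph, zsm]; push_cast; ring
lemma ph_zero : ph (0, 0) = 0 := by simp [ph]
lemma ph_zsum (l : List (ℤ × ℤ)) : ph (zsum l) = (l.map ph).sum := by
  induction l with
  | nil => simp [zsum, ph]
  | cons x l ih => simp [zsum, ph_zadd, ih]

lemma fN_eq {α : Type} (n : ℕ) (k : ℕ → α) : fN n k = k n := by cases n <;> rfl
lemma fZ_eq {α : Type} (n : ℤ) (k : ℤ → α) : fZ n k = k n := by
  cases n <;> simp only [fZ, fN_eq]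
lemma fP_eq {α : Type} (n : ℤ × ℤ) (k : ℤ × ℤ → α) : fP n k = k n := by
  simp only [fP, fZ_eq]

lemma conv_eq {α : Type} (l r : List (ℤ × ℤ)) (a b : ℤ) (k : ℤ → ℤ → α) :
    ∃ a' b', conv l r a b k = k a' b' ∧
      ph (a', b') = ph (a, b) + (List.zipWith (fun x y => ph x * ph y) l r).sum := by
  induction l generalizing r a b with
  | nil => exact ⟨a, b, by simp [conv], by simp⟩
  | cons x l ih =>
    cases r with
    | nil => exact ⟨a, b, by simp [conv], by simp⟩
    | cons y r =>
      obtain ⟨x, x'⟩ := x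
      obtain ⟨y, y'⟩ := y
      simp only [conv, fZ_eq]
      obtain ⟨a', b', h, h'⟩ := ih r (Int.add a (Int.add (Int.mul x y) (Int.mul 5 (Int.mul x' y'))))
        (Int.add b (Int.add (Int.mul x y') (Int.mul x' y)))
      refine ⟨a', b', h, ?_⟩
      rw [h', List.zipWith_cons_cons, List.sum_cons]
      simp only [Int.add_def, Int.mul_def, ph]
      push_cast
      linear_combination (-(x' : ℝ) * y') * s5

lemma pos5_pos {a : ℤ × ℤ} (h : pos5 a = true) : 0 < ph a := by
  obtain ⟨x, y⟩ := a
  have h5 : 0 < √5 := by positivity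
  simp only [pos5, Bool.or_eq_true, Bool.and_eq_true, decide_eq_true_eq] at h
  simp only [ph]
  rcases h with (⟨h1, h2⟩ | ⟨⟨h1, h2⟩, h3⟩) | ⟨⟨h1, h2⟩, h3⟩
  · have h1 : (0 : ℝ) ≤ x := by exact_mod_cast h1
    have h2 : (0 : ℝ) < y := by exact_mod_cast h2
    positivity
  · have h1 : (0 : ℝ) < x := by exact_mod_cast h1
    have h2 : (y : ℝ) ≤ 0 := by exact_mod_cast h2
    have h3 : (5 : ℝ) * (y * y) < x * x := by exact_mod_cast h3
    have : (-y * √5) < x := by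
      refine lt_of_pow_lt_pow_left₀ 2 h1.le ?_
      nlinarith [s5]
    linarith
  · have h1 : (x : ℝ) ≤ 0 := by exact_mod_cast h1
    have h2 : (0 : ℝ) < y := by exact_mod_cast h2
    have h3 : (x : ℝ) * x < 5 * (y * y) := by exact_mod_cast h3
    have : (-x : ℝ) < y * √5 := by
      refine lt_of_pow_lt_pow_left₀ 2 (by positivity) ?_
      nlinarith [s5]
    linarith

/-- Abstract correctness of the recursion. -/
lemma st_spec (g H : ℕ → ℝ) (hH : ∀ n, H (n + 4) = ∑ i ∈ Finset.range (n + 1), g i * g (n - i))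
    (hrec : ∀ n : ℕ, ∀ x y q0 q1 q2 q3 : ℤ × ℤ, ph x = g n → ph y = (if n = 0 then 0 else g (n - 1)) →
      ph q0 = H (n + 4) → ph q1 = H (n + 3) → ph q2 = H (n + 2) → ph q3 = H (n + 1) →
      ph (lin (n + 3) x y q0 q1 q2 q3) = 16 * g (n + 1))
    (n : ℕ) : ∀ (i : ℕ) (l : List (ℤ × ℤ)) (q1 q2 q3 : ℤ × ℤ) (k : List (ℤ × ℤ) → Bool),
      l.map ph = ((List.range (i + 1)).map g).reverse → ph q1 = H (i + 3) → ph q2 = H (i + 2) →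
      ph q3 = H (i + 1) → st n i l q1 q2 q3 k = true →
      ∃ l' : List (ℤ × ℤ), k l' = true ∧ l'.map ph = ((List.range (i + n + 1)).map g).reverse := by
  induction n with
  | zero => intro i l q1 q2 q3 k h1 _ _ _ hk; exact ⟨l, by simpa [st] using hk, h1⟩
  | succ n ih =>
    intro i l q1 q2 q3 k h1 h2 h3 h4 hk
    simp only [st] at hk
    obtain ⟨a, b, e, e'⟩ := conv_eq l l.reverse 0 0 fun a b =>
      fP (lin (i + 3) (l.headD (0, 0)) (l.tail.headD (0, 0)) (a, b) q1 q2 q3) fun t =>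
        fP (t.1 / 16, t.2 / 16) fun c => fN (i + 1) fun i =>
          zsm 16 c == t && st n i (c :: l) (a, b) q1 q2 k
    rw [e, fP_eq, fP_eq, fN_eq, Bool.and_eq_true, beq_iff_eq] at hk
    set t := lin (i + 3) (l.headD (0, 0)) (l.tail.headD (0, 0)) (a, b) q1 q2 q3 with ht
    set c : ℤ × ℤ := (t.1 / 16, t.2 / 16)
    have hq0 : ph (a, b) = H (i + 4) := by
      rw [e', ph_zero, zero_add, hH]
      have : List.zipWith (fun x y => ph x * ph y) l l.reverse
          = List.zipWith (fun x y => x * y) (l.map ph) (l.map ph).reverse := by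
        rw [← List.map_reverse, List.zipWith_map]
      rw [this, h1, List.reverse_reverse]
      have : List.zipWith (fun x y => x * y) ((List.range (i + 1)).map g).reverse
          ((List.range (i + 1)).map g) = (List.range (i + 1)).map (fun j => g j * g (i - j)) := by
        apply List.ext_getElem
        · simp
        · intro j hj1 hj2
          simp at hj1 hj2
          simp [mul_comm]
      rw [this]; rfl
    have hx : ph (l.headD (0, 0)) = g i := by
      cases l with
      | nil => simp [List.range_succ] at h1
      | cons x l => simp [List.range_succ] at h1; simpa using h1.1
    have hy : ph (l.tail.headD (0, 0)) = if i = 0 then 0 else g (i - 1) := by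
      cases l with
      | nil => simp [List.range_succ] at h1
      | cons x l =>
        simp [List.range_succ] at h1
        rcases i with _ | i
        · simp at h1; simp [h1.2, ph_zero]
        · cases l with
          | nil => simp [List.range_succ] at h1
          | cons y l => simp [List.range_succ] at h1; simpa using h1.2.1
    have hc : ph c = g (i + 1) := by
      have := hrec i _ _ _ _ _ _ hx hy hq0 h2 h3 h4
      rw [← ht, ← hk.1, ph_zsm] at this
      push_cast at this; linarith
    obtain ⟨l', hl, hl'⟩ := ih (i + 1) (c :: l) (a, b) q1 q2 k
      (by rw [List.range_succ, List.map_append, List.reverse_append]; simp [hc, h1])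
      hq0 h2 h3 hk.2
    exact ⟨l', hl, by rw [hl']; congr 3; omega⟩

lemma chk_spec (g : ℕ → ℝ) (P : ℕ → ℤ × ℤ → ℤ × ℤ → Bool) (n : ℕ) :
    ∀ l : List (ℤ × ℤ), l.map ph = ((List.range (n + 1)).map g).reverse → chk P l = true →
      ∀ i < n, ∃ x y, ph x = g (i + 1) ∧ ph y = g i ∧ P (i + 1) x y = true := by
  induction n with
  | zero => intro l _ _ i hi; omega
  | succ n ih =>
    intro l h hl i hi
    rw [List.range_succ, List.map_append, List.reverse_append] at h
    rcases l with _ | ⟨x, _ | ⟨y, l⟩⟩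
    · simp at h
    · simp [List.range_succ] at h
    · simp only [chk, Bool.and_eq_true] at hl
      simp only [List.map_cons, List.map_nil, List.reverse_cons, List.reverse_nil,
        List.nil_append, List.cons_append, List.cons.injEq] at h
      rcases Nat.lt_or_ge i n with hi' | hi'
      · exact ih (y :: l) (by simpa using h.2) hl.2 i hi'
      · obtain rfl : i = n := by omega
        have hlen : l.length = i := by
          have := congrArg List.length h.2
          simpa using this
        have h2 := h.2
        rw [List.range_succ, List.map_append, List.reverse_append] at h2
        simp at h2
        exact ⟨x, y, h.1, h2.1, by rw [← hlen]; exact hl.1⟩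

lemma coeff_VPs_mul (s : ℝ) (f : PowerSeries ℝ) (n : ℕ) :
    coeff (n + 3) (VPs s * f) = pp1 s * coeff (n + 2) f
      + pp2 s * coeff (n + 1) f + pp3 s * coeff n f := by
  have : VPs s * f = C (pp1 s) * (X ^ 1 * f)
    + C (pp2 s) * (X ^ 2 * f)
    + C (pp3 s) * (X ^ 3 * f) := by unfold VPs; ring
  rw [this]
  simp only [map_add, coeff_C_mul, coeff_X_pow_mul']
  simp
lemma coeff_VBs_mul (s : ℝ) (f : PowerSeries ℝ) (n : ℕ) :
    coeff (n + 3) (VBs s * f) = ka0 s * coeff (n + 3) f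
      + ka1 s * coeff (n + 2) f
      + ka2 s * coeff (n + 1) f + ka3 s * coeff n f := by
  have : VBs s * f = C (ka0 s) * f + C (ka1 s) * (X ^ 1 * f)
    + C (ka2 s) * (X ^ 2 * f)
    + C (ka3 s) * (X ^ 3 * f) := by unfold VBs; ring
  rw [this]
  simp only [map_add, coeff_C_mul, coeff_X_pow_mul']
  simp
lemma coeff_A0s_mul (s : ℝ) (f : PowerSeries ℝ) (n : ℕ) :
    coeff (n + 2) (A0s s * f) = al0 s * coeff (n + 2) f
      + al1 s * coeff (n + 1) f + al2 s * coeff n f := by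
  have : A0s s * f = C (al0 s) * f + C (al1 s) * (X ^ 1 * f)
    + C (al2 s) * (X ^ 2 * f) := by unfold A0s; ring
  rw [this]
  simp only [map_add, coeff_C_mul, coeff_X_pow_mul']
  simp
lemma coeff_PPs_mul (s : ℝ) (f : PowerSeries ℝ) (n : ℕ) :
    coeff (n + 2) (PPs s * f) = rho s * eps s * coeff (n + 1) f
      + rho s * coeff n f := by
  have : PPs s * f = C (rho s * eps s) * (X ^ 1 * f)
    + C (rho s) * (X ^ 2 * f) := by unfold PPs; ring
  rw [this]
  simp only [map_add, coeff_C_mul, coeff_X_pow_mul']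
  simp

lemma res_sq (s : ℝ) (Y : PowerSeries ℝ) : Res s Y = VPs s * dd Y
    - C (1 / 2) * (VBs s * dd (Y ^ 2)) - C 2 * (A0s s * Y)
    + C (12 / 5) * PPs s + C 2 * (A0s s * Y ^ 2)
    - C (12 / 5) * (PPs s * Y) := by
  have e1 : (C (12 / 5) : PowerSeries ℝ)
    = C 2 * C (6 / 5) := by rw [← map_mul]; norm_num
  have e2 : (C (1 / 2) : PowerSeries ℝ) * 2 = 1 := by
    rw [show (2 : PowerSeries ℝ) = C 2 from (map_ofNat _ 2).symm, ← map_mul]; norm_num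
  have e3 : dd (Y ^ 2) = 2 * (Y * dd Y) := by rw [sq, dd_mul]; ring
  rw [e3, e1, Res]
  linear_combination (VBs s * Y * dd Y) * e2

lemma coeff_res (s : ℝ) (Y : PowerSeries ℝ) (n : ℕ) :
    coeff (n + 3) (Res s Y) =
      pp1 s * (coeff (n + 3) Y * (n + 3)) + pp2 s * (coeff (n + 2) Y * (n + 2))
      + pp3 s * (coeff (n + 1) Y * (n + 1))
      - 1 / 2 * (ka0 s * (coeff (n + 4) (Y ^ 2) * (n + 4))
        + ka1 s * (coeff (n + 3) (Y ^ 2) * (n + 3))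
        + ka2 s * (coeff (n + 2) (Y ^ 2) * (n + 2))
        + ka3 s * (coeff (n + 1) (Y ^ 2) * (n + 1)))
      - 2 * (al0 s * coeff (n + 3) Y + al1 s * coeff (n + 2) Y
        + al2 s * coeff (n + 1) Y)
      + 2 * (al0 s * coeff (n + 3) (Y ^ 2) + al1 s * coeff (n + 2) (Y ^ 2)
        + al2 s * coeff (n + 1) (Y ^ 2))
      - 12 / 5 * (rho s * eps s * coeff (n + 2) Y
        + rho s * coeff (n + 1) Y) := by
  rw [res_sq]
  simp only [map_add, map_sub, coeff_C_mul, coeff_VPs_mul, coeff_VBs_mul, coeff_dd,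
    coeff_A0s_mul s _ (n + 1), coeff_PPs_mul s _ (n + 1), coeff_PPs]
  rw [if_neg (by omega), if_neg (by omega)]
  push_cast; ring

lemma sS_vals : rho sS = (3 - √5) / 4 ∧ pp1 sS = 0 ∧ pp2 sS = (√5 - 1) / 2 ∧
    pp3 sS = -(3 - √5) / 4 ∧ al0 sS = (7 + √5) / 2 ∧ al1 sS = (3 - 5 * √5) / 4 ∧
    al2 sS = 3 / 10 * (3 - √5) ∧ ka0 sS = 5 + 3 * √5 ∧ ka1 sS = -8 - √5 ∧
    ka2 sS = (7 * √5 - 5) / 4 ∧ ka3 sS = -(3 - √5) / 4 ∧ lam sS = 7 + √5 := by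
  have h5 : √5 ^ 2 = 5 := Real.sq_sqrt (by norm_num)
  have h53 : √5 ^ 3 = 5 * √5 := by rw [pow_succ, h5]
  have h54 : √5 ^ 4 = 25 := by rw [show √5 ^ 4 = (√5 ^ 2) ^ 2 by ring, h5]; norm_num
  have hr : rho sS = (3 - √5) / 4 := by
    have := rho_s sS_mem
    have h0 : sS ^ 2 + 4 * sS ≠ 0 := by nlinarith [sS_bounds.1]
    rw [rho, div_eq_iff h0]
    unfold sS; ring_nf; rw [h53, h5]; ring
  have h0 : al0 sS = (7 + √5) / 2 := by
    rw [al0, hr, sS_sq]; unfold sS; ring_nf; rw [h5]; ring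
  refine ⟨hr, by simp [pp1, eps_sS], ?_, ?_, h0, ?_, ?_, ?_, ?_, ?_, ?_, ?_⟩
  · rw [pp2, hr, eps_sS]; unfold sS; ring_nf; rw [h5]; ring
  · rw [pp3, hr]; ring
  · rw [al1, hr]; unfold sS; ring_nf; rw [h5]; ring
  · rw [al2, hr]; ring
  · rw [ka0, hr]; unfold sS; ring_nf; try rw [h54]
    try rw [h53]
    try rw [h5]
    ring
  · rw [ka1, hr]; unfold sS; ring_nf; try rw [h53]
    try rw [h5]
    ring
  · rw [ka2, hr]; unfold sS; ring_nf; rw [h5]; ring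
  · rw [ka3, hr]; ring
  · rw [lam, a1_sS, h0]; ring

/-- Coefficients of the square of the Taylor series. -/
def qS (s : ℝ) (j : ℕ) : ℝ := coeff j (Yf s ^ 2)

lemma qS_sum (s : ℝ) (j : ℕ) : qS s j = ∑ i ∈ Finset.range (j + 1), aS s i * aS s (j - i) := by
  rw [qS, sq, coeff_mul, Finset.Nat.sum_antidiagonal_eq_sum_range_succ_mk]
  simp [Yf]

lemma aS_one_sS : aS sS 1 = 0 := by rw [aS_one, a1_sS]

lemma num_sS (n : ℕ) : num sS (n + 3) =
      pp2 sS * (aS sS (n + 2) * (n + 2)) + pp3 sS * (aS sS (n + 1) * (n + 1))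
      - 1 / 2 * (ka0 sS * (qS sS (n + 4) * (n + 4)) + ka1 sS * (qS sS (n + 3) * (n + 3))
        + ka2 sS * (qS sS (n + 2) * (n + 2)) + ka3 sS * (qS sS (n + 1) * (n + 1)))
      - 2 * (al1 sS * aS sS (n + 2) + al2 sS * aS sS (n + 1))
      + 2 * (al0 sS * qS sS (n + 3) + al1 sS * qS sS (n + 2) + al2 sS * qS sS (n + 1))
      - 12 / 5 * (rho sS * aS sS (n + 1)) := by
  have hq : ∀ j ≤ n + 4, coeff j (Tr sS (n + 2) ^ 2) = qS sS j := by
    intro j hj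
    rw [qS, sq, sq, coeff_mul, coeff_mul]
    refine Finset.sum_congr rfl fun p hp => ?_
    rw [Finset.HasAntidiagonal.mem_antidiagonal] at hp
    have e : ∀ i, coeff i (Yf sS) = aS sS i := fun i => by simp [Yf]
    have z : ∀ i ≤ 1, aS sS i = 0 := by
      intro i hi; interval_cases i
      · exact aS_zero _
      · exact aS_one_sS
    rw [e, e, coeff_Tr, coeff_Tr]
    by_cases h1 : p.1 ≤ n + 2
    · by_cases h2 : p.2 ≤ n + 2
      · rw [if_pos h1, if_pos h2]
      · rw [z p.1 (by omega)]; simp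
    · rw [z p.2 (by omega)]; simp
  rw [num, show n + 3 - 1 = n + 2 from rfl, coeff_res, hq _ (by omega), hq _ (by omega),
    hq _ (by omega), hq _ (by omega), coeff_Tr, if_neg (by omega), coeff_Tr, if_pos (by omega),
    coeff_Tr, if_pos (by omega), eps_sS]
  ring

lemma rec_sS (n : ℕ) : aS sS (n + 3) = 1 / 880 * (
    ((-120 * (n + 2) - 460) + (80 * (n + 2) + 380) * √5) * aS sS (n + 2)
    + ((-130 * (n + 1) - 624) + (50 * (n + 1) + 240) * √5) * aS sS (n + 1)
    + ((-200 * (n + 4)) + (-160 * (n + 4)) * √5) * qS sS (n + 4)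
    + ((510 * (n + 3) + 880) + (-10 * (n + 3)) * √5) * qS sS (n + 3)
    + ((175 * (n + 2) + 460) + (-135 * (n + 2) - 380) * √5) * qS sS (n + 2)
    + ((65 * (n + 1) + 312) + (-25 * (n + 1) - 120) * √5) * qS sS (n + 1)) := by
  have h5 : √5 ^ 2 = 5 := Real.sq_sqrt (by norm_num)
  have h : aS sS (n + 3) = (7 - √5) / 44 * num sS (n + 3) := by
    rw [aS_eq _ (by omega), mu_sS, sS_vals.2.2.2.2.2.2.2.2.2.2.2]
    have : 7 + √5 ≠ 0 := by positivity
    rw [zero_mul, sub_zero, div_eq_iff this]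
    linear_combination ((num sS (n + 3)) / 44) * h5
  obtain ⟨h1, h2, h3, h4, h5', h6, h7, h8, h9, h10, h11, h12⟩ := sS_vals
  rw [h, num_sS, h1, h3, h4, h5', h6, h7, h8, h9, h10, h11]
  ring_nf
  simp only [h5]
  ring

lemma aS_two_sS : aS sS 2 = (39 - 15 * √5) / 110 := by
  have h5 : √5 ^ 2 = 5 := Real.sq_sqrt (by norm_num)
  obtain ⟨h1, h2, h3, h4, h5', h6, h7, h8, h9, h10, h11, h12⟩ := sS_vals
  have hT : Tr sS 1 = 0 := by simp [Tr, a1_sS]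
  rw [aS_eq _ le_rfl, num, hT, mu_sS, h12, res_sq]
  have : dd (0 : PowerSeries ℝ) = 0 := by simp [dd]
  simp only [ne_eq, OfNat.ofNat_ne_zero, not_false_eq_true, zero_pow, this, mul_zero, sub_zero,
    zero_add, add_zero, coeff_C_mul, coeff_PPs, h1, zero_mul]
  rw [div_eq_iff (by positivity)]
  norm_num
  linear_combination (15 / 110) * h5

/-- The scaled coefficients, elements of `ℤ[√5]`. -/
def gS (n : ℕ) : ℝ := aS sS (n + 2) * (110 * 6050 ^ n)
def HS (m : ℕ) : ℝ := qS sS m * 6050 ^ m / (4 * 55 ^ 6)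

lemma HS_four (n : ℕ) : HS (n + 4) = ∑ i ∈ Finset.range (n + 1), gS i * gS (n - i) := by
  rw [HS, qS_sum, Finset.sum_range_succ, Finset.sum_range_succ, Finset.sum_range_succ',
    Finset.sum_range_succ', show n + 4 - (n + 4) = 0 by omega, show n + 4 - (n + 3) = 1 by omega,
    aS_zero, zero_add, aS_one_sS]
  simp only [mul_zero, zero_mul, add_zero]
  rw [Finset.sum_mul, Finset.sum_div]
  refine Finset.sum_congr rfl fun i hi => ?_
  obtain ⟨j, rfl⟩ : ∃ j, n = i + j := ⟨n - i, by simp at hi; omega⟩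
  rw [show i + j + 4 - (i + 1 + 1) = j + 2 by omega, show i + j - i = j by omega, gS, gS]
  rw [show (6050 : ℝ) ^ (i + j + 4) = 6050 ^ i * 6050 ^ j * 6050 ^ 4 by rw [← pow_add, ← pow_add]]
  norm_num
  ring

lemma gS_rec (n : ℕ) (x y q0 q1 q2 q3 : ℤ × ℤ) (hx : ph x = gS n)
    (hy : ph y = (if n = 0 then 0 else gS (n - 1))) (h0 : ph q0 = HS (n + 4))
    (h1 : ph q1 = HS (n + 3)) (h2 : ph q2 = HS (n + 2)) (h3 : ph q3 = HS (n + 1)) :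
    ph (lin (n + 3) x y q0 q1 q2 q3) = 16 * gS (n + 1) := by
  have hy' : ph y * 6050 = aS sS (n + 1) * (110 * 6050 ^ n) := by
    rw [hy]
    rcases n with _ | n
    · rw [aS_one_sS]; simp
    · simp only [Nat.add_eq_zero_iff, one_ne_zero, and_false, if_false, gS, Nat.add_sub_cancel]
      rw [pow_succ]; ring
  have hy'' : ph y = aS sS (n + 1) * (110 * 6050 ^ n) / 6050 := by linarith
  have hl : ph (lin (n + 3) x y q0 q1 q2 q3) =
      ((-120 * (n + 2) - 460) + (80 * (n + 2) + 380) * √5) * (2 * 55 * ph x)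
      + ((-130 * (n + 1) - 624) + (50 * (n + 1) + 240) * √5) * (4 * 55 ^ 3 * ph y)
      + ((-200 * (n + 4)) + (-160 * (n + 4)) * √5) * ph q0
      + ((510 * (n + 3) + 880) + (-10 * (n + 3)) * √5) * (2 * 55 ^ 2 * ph q1)
      + ((175 * (n + 2) + 460) + (-135 * (n + 2) - 380) * √5) * (4 * 55 ^ 4 * ph q2)
      + ((65 * (n + 1) + 312) + (-25 * (n + 1) - 120) * √5) * (8 * 55 ^ 6 * ph q3) := by
    simp only [lin, ph_zsum, List.map_cons, List.map_nil, List.sum_cons, List.sum_nil, ph_zmul,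
      ph_zsm]
    simp only [ph]
    push_cast; ring
  rw [hl, hx, hy'', h0, h1, h2, h3, HS, HS, HS, HS, gS, gS, show n + 1 + 2 = n + 3 from rfl,
    rec_sS, pow_succ, pow_add _ n 4, pow_add _ n 3, pow_add _ n 2]
  ring

/-- The finite list of checks on the exact coefficients. -/
def PS (i : ℕ) (x y : ℤ × ℤ) : Bool :=
  pos5 x && (i < 13 || pos5 (zadd (zsm (4114 * (i + 2) + 435600) y) (zsm (-100) x))) &&
    (i < 74 || pos5 (zadd (zsm 1000 x) (zsm (-(23595 * (i + 2) + 4235000)) y)))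

set_option maxRecDepth 100000 in
lemma st_true : st 148 0 [(39, -15)] (0, 0) (0, 0) (0, 0) (chk PS) = true := by decide +kernel

lemma qS_small (j : ℕ) (hj : j < 4) : qS sS j = 0 := by
  rw [qS_sum]
  refine Finset.sum_eq_zero fun i hi => ?_
  simp at hi
  have z : ∀ i ≤ 1, aS sS i = 0 := by
    intro i hi; interval_cases i
    · exact aS_zero _
    · exact aS_one_sS
  rcases Nat.lt_or_ge i 2 with h | h
  · rw [z i (by omega)]; simp
  · rw [z (j - i) (by omega)]; simp

lemma run_spec (N : ℕ) (P : ℕ → ℤ × ℤ → ℤ × ℤ → Bool)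
    (h : st N 0 [(39, -15)] (0, 0) (0, 0) (0, 0) (chk P) = true) :
    ∀ i < N, ∃ x y, ph x = gS (i + 1) ∧ ph y = gS i ∧ P (i + 1) x y = true := by
  obtain ⟨l, h1, h2⟩ := st_spec gS HS HS_four
    (fun n x y q0 q1 q2 q3 hx hy a b c d => gS_rec n x y q0 q1 q2 q3 hx hy a b c d) N 0
    [(39, -15)] (0, 0) (0, 0) (0, 0) (chk P)
    (by
      simp only [zero_add, List.range_one, List.map_cons, List.map_nil, List.reverse_cons,
        List.reverse_nil, List.nil_append, List.cons.injEq, and_true, gS, aS_two_sS, ph]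
      push_cast; ring)
    (by rw [HS, qS_small _ (by omega), ph_zero]; simp)
    (by rw [HS, qS_small _ (by omega), ph_zero]; simp)
    (by rw [HS, qS_small _ (by omega), ph_zero]; simp) h
  rw [zero_add] at h2
  exact chk_spec gS P N l h2 h1

lemma aS_pos_sS (m : ℕ) (h2 : 2 ≤ m) (h : m ≤ 150) : 0 < aS sS m := by
  rcases Nat.lt_or_ge m 3 with h3 | h3
  · obtain rfl : m = 2 := by omega
    rw [aS_two_sS]; linarith [sqrt5_bounds.2]
  obtain ⟨i, rfl⟩ : ∃ i, m = i + 3 := ⟨m - 3, by omega⟩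
  obtain ⟨x, y, hx, hy, hP⟩ := run_spec 148 PS st_true i (by omega)
  simp only [PS, Bool.and_eq_true] at hP
  have := pos5_pos hP.1.1
  rw [hx, gS] at this
  exact pos_of_mul_pos_left this (by positivity)

/-- Upper bounds for the ratios of consecutive coefficients. -/
def Ub (m : ℕ) : ℝ := 0.0068 * m + 0.72
/-- Lower bounds for the ratios of consecutive coefficients. -/
def Lb (m : ℕ) : ℝ := 0.0039 * m + 0.7

lemma aS_upper_sS (m : ℕ) (h2 : 15 ≤ m) (h : m ≤ 150) : aS sS m < Ub m * aS sS (m - 1) := by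
  obtain ⟨i, rfl⟩ : ∃ i, m = i + 3 := ⟨m - 3, by omega⟩
  obtain ⟨x, y, hx, hy, hP⟩ := run_spec 148 PS st_true i (by omega)
  simp only [PS, Bool.and_eq_true, Bool.or_eq_true, decide_eq_true_eq] at hP
  have := pos5_pos (hP.1.2.resolve_left (by omega))
  rw [ph_zadd, ph_zsm, ph_zsm, hx, hy, gS, gS, show i + 1 + 2 = i + 3 from rfl, pow_succ] at this
  rw [show i + 3 - 1 = i + 2 from rfl, Ub]
  have hp : (0 : ℝ) < 100 * 110 * 6050 ^ i * 6050 := by positivity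
  refine lt_of_sub_pos (pos_of_mul_pos_right (a := (100 * 110 * 6050 ^ i * 6050 : ℝ)) ?_ hp.le)
  push_cast at this ⊢
  linear_combination this

lemma aS_lower_sS (m : ℕ) (h2 : 76 ≤ m) (h : m ≤ 150) : Lb m * aS sS (m - 1) < aS sS m := by
  obtain ⟨i, rfl⟩ : ∃ i, m = i + 3 := ⟨m - 3, by omega⟩
  obtain ⟨x, y, hx, hy, hP⟩ := run_spec 148 PS st_true i (by omega)
  simp only [PS, Bool.and_eq_true, Bool.or_eq_true, decide_eq_true_eq] at hP
  have := pos5_pos (hP.2.resolve_left (by omega))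
  rw [ph_zadd, ph_zsm, ph_zsm, hx, hy, gS, gS, show i + 1 + 2 = i + 3 from rfl, pow_succ] at this
  rw [show i + 3 - 1 = i + 2 from rfl, Lb]
  have hp : (0 : ℝ) < 1000 * 110 * 6050 ^ i * 6050 := by positivity
  refine lt_of_sub_pos (pos_of_mul_pos_right (a := (1000 * 110 * 6050 ^ i * 6050 : ℝ)) ?_ hp.le)
  push_cast at this ⊢
  linear_combination this

/-- Integer parts of `10¹² aᵢ₊₂`. -/
def loS : List ℤ := [49627093977, 22374742844, 8306008508, 3116560264, 1260201414, 555966273, 264593121, 133454236, 70237340, 38145500, 21220321, 12034264, 6935728]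

def PI (i : ℕ) (x _ : ℤ × ℤ) : Bool :=
  pos5 (zadd (zsm (10 ^ 12) x) (-(loS.getD i 0 * (110 * 6050 ^ i)), 0)) &&
    pos5 (zadd (zsm (-10 ^ 12) x) ((loS.getD i 0 + 1) * (110 * 6050 ^ i), 0))

set_option maxRecDepth 100000 in
lemma st_true' : st 12 0 [(39, -15)] (0, 0) (0, 0) (0, 0) (chk PI) = true := by decide +kernel

lemma aS_int (i : ℕ) (hi : i < 12) : (loS.getD (i + 1) 0 : ℝ) < 10 ^ 12 * aS sS (i + 3) ∧
    10 ^ 12 * aS sS (i + 3) < (loS.getD (i + 1) 0 : ℝ) + 1 := by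
  obtain ⟨x, y, hx, hy, hP⟩ := run_spec 12 PI st_true' i hi
  simp only [PI, Bool.and_eq_true] at hP
  have h1 := pos5_pos hP.1
  have h2 := pos5_pos hP.2
  rw [ph_zadd, ph_zsm, hx, gS] at h1 h2
  simp only [ph] at h1 h2
  have hp : (0 : ℝ) < 110 * 6050 ^ (i + 1) := by positivity
  push_cast at h1 h2
  constructor
  · refine lt_of_sub_pos (pos_of_mul_pos_right (a := (110 * 6050 ^ (i + 1) : ℝ)) ?_ hp.le)
    linear_combination h1
  · refine lt_of_sub_pos (pos_of_mul_pos_right (a := (110 * 6050 ^ (i + 1) : ℝ)) ?_ hp.le)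
    linear_combination h2

lemma aS_vals : (49627093977 / 10 ^ 12 < aS sS 2 ∧ aS sS 2 < 49627093978 / 10 ^ 12) ∧
    (22374742844 / 10 ^ 12 < aS sS 3 ∧ aS sS 3 < 22374742845 / 10 ^ 12) ∧
    (8306008508 / 10 ^ 12 < aS sS 4 ∧ aS sS 4 < 8306008509 / 10 ^ 12) ∧
    (3116560264 / 10 ^ 12 < aS sS 5 ∧ aS sS 5 < 3116560265 / 10 ^ 12) ∧
    (1260201414 / 10 ^ 12 < aS sS 6 ∧ aS sS 6 < 1260201415 / 10 ^ 12) ∧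
    (555966273 / 10 ^ 12 < aS sS 7 ∧ aS sS 7 < 555966274 / 10 ^ 12) ∧
    (264593121 / 10 ^ 12 < aS sS 8 ∧ aS sS 8 < 264593122 / 10 ^ 12) ∧
    (133454236 / 10 ^ 12 < aS sS 9 ∧ aS sS 9 < 133454237 / 10 ^ 12) ∧
    (70237340 / 10 ^ 12 < aS sS 10 ∧ aS sS 10 < 70237341 / 10 ^ 12) ∧
    (38145500 / 10 ^ 12 < aS sS 11 ∧ aS sS 11 < 38145501 / 10 ^ 12) ∧
    (21220321 / 10 ^ 12 < aS sS 12 ∧ aS sS 12 < 21220322 / 10 ^ 12) ∧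
    (12034264 / 10 ^ 12 < aS sS 13 ∧ aS sS 13 < 12034265 / 10 ^ 12) ∧
    (6935728 / 10 ^ 12 < aS sS 14 ∧ aS sS 14 < 6935729 / 10 ^ 12) := by
  refine ⟨⟨?_, ?_⟩, ?_, ?_, ?_, ?_, ?_, ?_, ?_, ?_, ?_, ?_, ?_, ?_⟩
  · rw [aS_two_sS, ← sub_pos]
    have : √5 < 2.236067977499789697 := by rw [Real.sqrt_lt' (by norm_num)]; norm_num
    norm_num at this ⊢; linarith
  · rw [aS_two_sS, ← sub_pos]
    have : 2.236067977499789696 < √5 := by rw [Real.lt_sqrt (by norm_num)]; norm_num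
    norm_num at this ⊢; linarith
  · have := aS_int 0 (by omega)
    simp only [loS, List.getD_cons_succ, List.getD_cons_zero] at this
    push_cast at this
    constructor <;> linarith [this.1, this.2]
  · have := aS_int 1 (by omega)
    simp only [loS, List.getD_cons_succ, List.getD_cons_zero] at this
    push_cast at this
    constructor <;> linarith [this.1, this.2]
  · have := aS_int 2 (by omega)
    simp only [loS, List.getD_cons_succ, List.getD_cons_zero] at this
    push_cast at this
    constructor <;> linarith [this.1, this.2]
  · have := aS_int 3 (by omega)
    simp only [loS, List.getD_cons_succ, List.getD_cons_zero] at this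
    push_cast at this
    constructor <;> linarith [this.1, this.2]
  · have := aS_int 4 (by omega)
    simp only [loS, List.getD_cons_succ, List.getD_cons_zero] at this
    push_cast at this
    constructor <;> linarith [this.1, this.2]
  · have := aS_int 5 (by omega)
    simp only [loS, List.getD_cons_succ, List.getD_cons_zero] at this
    push_cast at this
    constructor <;> linarith [this.1, this.2]
  · have := aS_int 6 (by omega)
    simp only [loS, List.getD_cons_succ, List.getD_cons_zero] at this
    push_cast at this
    constructor <;> linarith [this.1, this.2]
  · have := aS_int 7 (by omega)
    simp only [loS, List.getD_cons_succ, List.getD_cons_zero] at this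
    push_cast at this
    constructor <;> linarith [this.1, this.2]
  · have := aS_int 8 (by omega)
    simp only [loS, List.getD_cons_succ, List.getD_cons_zero] at this
    push_cast at this
    constructor <;> linarith [this.1, this.2]
  · have := aS_int 9 (by omega)
    simp only [loS, List.getD_cons_succ, List.getD_cons_zero] at this
    push_cast at this
    constructor <;> linarith [this.1, this.2]
  · have := aS_int 10 (by omega)
    simp only [loS, List.getD_cons_succ, List.getD_cons_zero] at this
    push_cast at this
    constructor <;> linarith [this.1, this.2]
  · have := aS_int 11 (by omega)
    simp only [loS, List.getD_cons_succ, List.getD_cons_zero] at this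
    push_cast at this
    constructor <;> linarith [this.1, this.2]

lemma coeff_VBs_mul_two (s : ℝ) (f : PowerSeries ℝ) :
    coeff 2 (VBs s * f) = ka0 s * coeff 2 f
      + ka1 s * coeff 1 f + ka2 s * coeff 0 f := by
  have : VBs s * f = C (ka0 s) * f + C (ka1 s) * (X ^ 1 * f)
    + C (ka2 s) * (X ^ 2 * f)
    + C (ka3 s) * (X ^ 3 * f) := by unfold VBs; ring
  rw [this]
  simp only [map_add, coeff_C_mul, coeff_X_pow_mul']
  simp

lemma coeff_Aop (s : ℝ) (n : ℕ) (T : PowerSeries ℝ) : coeff (n + 3) (Aop s T) =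
    coeff (n + 3) (VPs s) - (ka0 s * coeff (n + 3) T
      + ka1 s * coeff (n + 2) T
      + ka2 s * coeff (n + 1) T + ka3 s * coeff n T) := by
  rw [Aop, map_sub, coeff_VBs_mul]

lemma coeff_Bop (s : ℝ) (n : ℕ) (T : PowerSeries ℝ) : coeff (n + 3) (Bop s T) =
    -(ka0 s * (coeff (n + 4) T * (n + 4))
      + ka1 s * (coeff (n + 3) T * (n + 3))
      + ka2 s * (coeff (n + 2) T * (n + 2))
      + ka3 s * (coeff (n + 1) T * (n + 1)))
      + 4 * (al0 s * coeff (n + 3) T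
      + al1 s * coeff (n + 2) T + al2 s * coeff (n + 1) T) := by
  rw [Bop, mul_assoc (C 4), map_add, map_sub, map_sub, map_neg, coeff_VBs_mul,
    coeff_C_mul, coeff_C_mul, coeff_C_mul, coeff_A0s, coeff_PPs,
    coeff_A0s_mul s T (n + 1), coeff_dd, coeff_dd, coeff_dd, coeff_dd, if_neg (by omega),
    if_neg (by omega), if_neg (by omega), if_neg (by omega), if_neg (by omega)]
  push_cast; ring

lemma coeff_one_Bop (s : ℝ) (T : PowerSeries ℝ) : coeff 1 (Bop s T) =
    -(ka0 s * (coeff 2 T * 2) + ka1 s * coeff 1 T) - 2 * al1 s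
      - 12 / 5 * (rho s * eps s)
      + 4 * (al0 s * coeff 1 T + al1 s * coeff 0 T) := by
  rw [Bop, mul_assoc (C 4), map_add, map_sub, map_sub, map_neg, coeff_one_mul,
    coeff_C_mul, coeff_C_mul, coeff_C_mul, coeff_A0s, coeff_PPs,
    coeff_one_mul, coeff_dd, coeff_dd, coeff_VBs, coeff_VBs, coeff_A0s]
  simp [coeff_A0s]; norm_num

lemma coeff_two_Bop (s : ℝ) (T : PowerSeries ℝ) : coeff 2 (Bop s T) =
    -(ka0 s * (coeff 3 T * 3) + ka1 s * (coeff 2 T * 2)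
      + ka2 s * coeff 1 T) - 2 * al2 s - 12 / 5 * rho s
      + 4 * (al0 s * coeff 2 T + al1 s * coeff 1 T
        + al2 s * coeff 0 T) := by
  rw [Bop, mul_assoc (C 4), map_add, map_sub, map_sub, map_neg, coeff_VBs_mul_two,
    coeff_C_mul, coeff_C_mul, coeff_C_mul, coeff_A0s, coeff_PPs,
    coeff_A0s_mul s T 0, coeff_dd, coeff_dd, coeff_dd]
  simp; norm_num

lemma T13_vals {j : ℕ} : coeff j (Tr sS 13) = if j ≤ 13 then aS sS j else 0 := coeff_Tr _ _ _

lemma s5_mul {a lo hi : ℝ} (h : lo / 10 ^ 12 < a ∧ a < hi / 10 ^ 12) (h0 : 0 < lo) :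
    2.236067 * lo / 10 ^ 12 < √5 * a ∧ √5 * a < 2.236068 * hi / 10 ^ 12 := by
  have := sqrt5_bounds
  have h1 : 0 < lo / 10 ^ 12 := by positivity
  constructor
  · rw [mul_div_assoc]; exact mul_lt_mul'' this.1 h.1 (by norm_num) h1.le
  · rw [mul_div_assoc]; exact mul_lt_mul'' this.2 h.2 (by positivity) (h1.trans h.1).le

/-- The first coefficients of the operator linearised at the Taylor polynomial of degree 13. -/
lemma low_sS :
    (0.004 * lam sS < coeff 2 (Aop sS (Tr sS 13)) ∧ coeff 2 (Aop sS (Tr sS 13)) < 0.00402 * lam sS) ∧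
    (0.00595 * lam sS < coeff 3 (Aop sS (Tr sS 13)) ∧ coeff 3 (Aop sS (Tr sS 13)) < 0.00597 * lam sS) ∧
    (0.3169 * lam sS < coeff 1 (Bop sS (Tr sS 13)) ∧ coeff 1 (Bop sS (Tr sS 13)) < 0.3172 * lam sS) ∧
    (0.0248 * lam sS < coeff 2 (Bop sS (Tr sS 13)) ∧ coeff 2 (Bop sS (Tr sS 13)) < 0.025 * lam sS) := by
  obtain ⟨h1, h2, h3, h4, h5', h6, h7, h8, h9, h10, h11, h12⟩ := sS_vals
  obtain ⟨b2, b3, b4, b5, b6, b7, b8, b9, b10, b11, b12, b13, b14⟩ := aS_vals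
  have c2 := s5_mul b2 (by norm_num)
  have c3 := s5_mul b3 (by norm_num)
  have c4 := s5_mul b4 (by norm_num)
  have c5 := s5_mul b5 (by norm_num)
  have c6 := s5_mul b6 (by norm_num)
  have c7 := s5_mul b7 (by norm_num)
  have c8 := s5_mul b8 (by norm_num)
  have c9 := s5_mul b9 (by norm_num)
  have c10 := s5_mul b10 (by norm_num)
  have c11 := s5_mul b11 (by norm_num)
  have c12 := s5_mul b12 (by norm_num)
  have c13 := s5_mul b13 (by norm_num)
  have c14 := s5_mul b14 (by norm_num)
  have hs := sqrt5_bounds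
  rw [Aop, map_sub, coeff_VBs_mul_two, ← Aop, coeff_Aop sS 0, coeff_one_Bop, coeff_two_Bop]
  simp only [T13_vals, coeff_VPs]
  norm_num [h1, h3, h4, h5', h6, h7, h8, h9, h10, h11, h12, aS_zero, aS_one_sS, eps_sS]
  refine ⟨⟨?_, ?_⟩, ⟨?_, ?_⟩, ⟨?_, ?_⟩, ?_, ?_⟩ <;>
    linarith only [b2.1, b2.2, c2.1, c2.2, b3.1, b3.2, c3.1, c3.2, hs.1, hs.2]

set_option maxHeartbeats 2000000 in
lemma sumA_sS :
    ∑ l ∈ Finset.range 13, |coeff (l + 4) (Aop sS (Tr sS 13))| < 0.0004 * lam sS := by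
  obtain ⟨h1, h2, h3, h4, h5', h6, h7, h8, h9, h10, h11, h12⟩ := sS_vals
  obtain ⟨b2, b3, b4, b5, b6, b7, b8, b9, b10, b11, b12, b13, b14⟩ := aS_vals
  have c2 := s5_mul b2 (by norm_num)
  have c3 := s5_mul b3 (by norm_num)
  have c4 := s5_mul b4 (by norm_num)
  have c5 := s5_mul b5 (by norm_num)
  have c6 := s5_mul b6 (by norm_num)
  have c7 := s5_mul b7 (by norm_num)
  have c8 := s5_mul b8 (by norm_num)
  have c9 := s5_mul b9 (by norm_num)
  have c10 := s5_mul b10 (by norm_num)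
  have c11 := s5_mul b11 (by norm_num)
  have c12 := s5_mul b12 (by norm_num)
  have c13 := s5_mul b13 (by norm_num)
  have c14 := s5_mul b14 (by norm_num)
  have hs := sqrt5_bounds
  have hlam := lam_pos sS_mem
  have k4 : |coeff 4 (Aop sS (Tr sS 13))| < 420 / 10 ^ 7 * lam sS := by
    rw [coeff_Aop sS 1, abs_lt]
    simp only [T13_vals, coeff_VPs]
    norm_num [h1, h3, h4, h5', h6, h7, h8, h9, h10, h11, h12, aS_zero, aS_one_sS]
    constructor <;> linarith only [b2.1, b2.2, c2.1, c2.2, b3.1, b3.2, c3.1, c3.2, b4.1, b4.2, c4.1, c4.2, hs.1, hs.2]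
  have k5 : |coeff 5 (Aop sS (Tr sS 13))| < 1720 / 10 ^ 7 * lam sS := by
    rw [coeff_Aop sS 2, abs_lt]
    simp only [T13_vals, coeff_VPs]
    norm_num [h1, h3, h4, h5', h6, h7, h8, h9, h10, h11, h12, aS_zero, aS_one_sS]
    constructor <;> linarith only [b2.1, b2.2, c2.1, c2.2, b3.1, b3.2, c3.1, c3.2, b4.1, b4.2, c4.1, c4.2, b5.1, b5.2, c5.1, c5.2, hs.1, hs.2]
  have k6 : |coeff 6 (Aop sS (Tr sS 13))| < 770 / 10 ^ 7 * lam sS := by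
    rw [coeff_Aop sS 3, abs_lt]
    simp only [T13_vals, coeff_VPs]
    norm_num [h1, h3, h4, h5', h6, h7, h8, h9, h10, h11, h12, aS_zero, aS_one_sS]
    constructor <;> linarith only [b3.1, b3.2, c3.1, c3.2, b4.1, b4.2, c4.1, c4.2, b5.1, b5.2, c5.1, c5.2, b6.1, b6.2, c6.1, c6.2, hs.1, hs.2]
  have k7 : |coeff 7 (Aop sS (Tr sS 13))| < 360 / 10 ^ 7 * lam sS := by
    rw [coeff_Aop sS 4, abs_lt]
    simp only [T13_vals, coeff_VPs]
    norm_num [h1, h3, h4, h5', h6, h7, h8, h9, h10, h11, h12, aS_zero, aS_one_sS]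
    constructor <;> linarith only [b4.1, b4.2, c4.1, c4.2, b5.1, b5.2, c5.1, c5.2, b6.1, b6.2, c6.1, c6.2, b7.1, b7.2, c7.1, c7.2, hs.1, hs.2]
  have k8 : |coeff 8 (Aop sS (Tr sS 13))| < 190 / 10 ^ 7 * lam sS := by
    rw [coeff_Aop sS 5, abs_lt]
    simp only [T13_vals, coeff_VPs]
    norm_num [h1, h3, h4, h5', h6, h7, h8, h9, h10, h11, h12, aS_zero, aS_one_sS]
    constructor <;> linarith only [b5.1, b5.2, c5.1, c5.2, b6.1, b6.2, c6.1, c6.2, b7.1, b7.2, c7.1, c7.2, b8.1, b8.2, c8.1, c8.2, hs.1, hs.2]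
  have k9 : |coeff 9 (Aop sS (Tr sS 13))| < 110 / 10 ^ 7 * lam sS := by
    rw [coeff_Aop sS 6, abs_lt]
    simp only [T13_vals, coeff_VPs]
    norm_num [h1, h3, h4, h5', h6, h7, h8, h9, h10, h11, h12, aS_zero, aS_one_sS]
    constructor <;> linarith only [b6.1, b6.2, c6.1, c6.2, b7.1, b7.2, c7.1, c7.2, b8.1, b8.2, c8.1, c8.2, b9.1, b9.2, c9.1, c9.2, hs.1, hs.2]
  have k10 : |coeff 10 (Aop sS (Tr sS 13))| < 65 / 10 ^ 7 * lam sS := by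
    rw [coeff_Aop sS 7, abs_lt]
    simp only [T13_vals, coeff_VPs]
    norm_num [h1, h3, h4, h5', h6, h7, h8, h9, h10, h11, h12, aS_zero, aS_one_sS]
    constructor <;> linarith only [b7.1, b7.2, c7.1, c7.2, b8.1, b8.2, c8.1, c8.2, b9.1, b9.2, c9.1, c9.2, b10.1, b10.2, c10.1, c10.2, hs.1, hs.2]
  have k11 : |coeff 11 (Aop sS (Tr sS 13))| < 40 / 10 ^ 7 * lam sS := by
    rw [coeff_Aop sS 8, abs_lt]
    simp only [T13_vals, coeff_VPs]
    norm_num [h1, h3, h4, h5', h6, h7, h8, h9, h10, h11, h12, aS_zero, aS_one_sS]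
    constructor <;> linarith only [b8.1, b8.2, c8.1, c8.2, b9.1, b9.2, c9.1, c9.2, b10.1, b10.2, c10.1, c10.2, b11.1, b11.2, c11.1, c11.2, hs.1, hs.2]
  have k12 : |coeff 12 (Aop sS (Tr sS 13))| < 25 / 10 ^ 7 * lam sS := by
    rw [coeff_Aop sS 9, abs_lt]
    simp only [T13_vals, coeff_VPs]
    norm_num [h1, h3, h4, h5', h6, h7, h8, h9, h10, h11, h12, aS_zero, aS_one_sS]
    constructor <;> linarith only [b9.1, b9.2, c9.1, c9.2, b10.1, b10.2, c10.1, c10.2, b11.1, b11.2, c11.1, c11.2, b12.1, b12.2, c12.1, c12.2, hs.1, hs.2]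
  have k13 : |coeff 13 (Aop sS (Tr sS 13))| < 20 / 10 ^ 7 * lam sS := by
    rw [coeff_Aop sS 10, abs_lt]
    simp only [T13_vals, coeff_VPs]
    norm_num [h1, h3, h4, h5', h6, h7, h8, h9, h10, h11, h12, aS_zero, aS_one_sS]
    constructor <;> linarith only [b10.1, b10.2, c10.1, c10.2, b11.1, b11.2, c11.1, c11.2, b12.1, b12.2, c12.1, c12.2, b13.1, b13.2, c13.1, c13.2, hs.1, hs.2]
  have k14 : |coeff 14 (Aop sS (Tr sS 13))| < 90 / 10 ^ 7 * lam sS := by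
    rw [coeff_Aop sS 11, abs_lt]
    simp only [T13_vals, coeff_VPs]
    norm_num [h1, h3, h4, h5', h6, h7, h8, h9, h10, h11, h12, aS_zero, aS_one_sS]
    constructor <;> linarith only [b11.1, b11.2, c11.1, c11.2, b12.1, b12.2, c12.1, c12.2, b13.1, b13.2, c13.1, c13.2, hs.1, hs.2]
  have k15 : |coeff 15 (Aop sS (Tr sS 13))| < 40 / 10 ^ 7 * lam sS := by
    rw [coeff_Aop sS 12, abs_lt]
    simp only [T13_vals, coeff_VPs]
    norm_num [h1, h3, h4, h5', h6, h7, h8, h9, h10, h11, h12, aS_zero, aS_one_sS]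
    constructor <;> linarith only [b12.1, b12.2, c12.1, c12.2, b13.1, b13.2, c13.1, c13.2, hs.1, hs.2]
  have k16 : |coeff 16 (Aop sS (Tr sS 13))| < 10 / 10 ^ 7 * lam sS := by
    rw [coeff_Aop sS 13, abs_lt]
    simp only [T13_vals, coeff_VPs]
    norm_num [h1, h3, h4, h5', h6, h7, h8, h9, h10, h11, h12, aS_zero, aS_one_sS]
    constructor <;> linarith only [b13.1, b13.2, c13.1, c13.2, hs.1, hs.2]
  simp only [Finset.sum_range_succ, Finset.sum_range_zero]
  norm_num
  linarith only [hlam, k4, k5, k6, k7, k8, k9, k10, k11, k12, k13, k14, k15, k16]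

set_option maxHeartbeats 2000000 in
lemma sumB_sS :
    ∑ l ∈ Finset.range 13, |coeff (l + 3) (Bop sS (Tr sS 13))| < 0.008 * lam sS := by
  obtain ⟨h1, h2, h3, h4, h5', h6, h7, h8, h9, h10, h11, h12⟩ := sS_vals
  obtain ⟨b2, b3, b4, b5, b6, b7, b8, b9, b10, b11, b12, b13, b14⟩ := aS_vals
  have c2 := s5_mul b2 (by norm_num)
  have c3 := s5_mul b3 (by norm_num)
  have c4 := s5_mul b4 (by norm_num)
  have c5 := s5_mul b5 (by norm_num)
  have c6 := s5_mul b6 (by norm_num)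
  have c7 := s5_mul b7 (by norm_num)
  have c8 := s5_mul b8 (by norm_num)
  have c9 := s5_mul b9 (by norm_num)
  have c10 := s5_mul b10 (by norm_num)
  have c11 := s5_mul b11 (by norm_num)
  have c12 := s5_mul b12 (by norm_num)
  have c13 := s5_mul b13 (by norm_num)
  have c14 := s5_mul b14 (by norm_num)
  have hs := sqrt5_bounds
  have hlam := lam_pos sS_mem
  have k3 : |coeff 3 (Bop sS (Tr sS 13))| < 45000 / 10 ^ 7 * lam sS := by
    rw [coeff_Bop sS 0, abs_lt]
    simp only [T13_vals]
    norm_num [h1, h3, h4, h5', h6, h7, h8, h9, h10, h11, h12, aS_zero, aS_one_sS]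
    constructor <;> linarith only [b2.1, b2.2, c2.1, c2.2, b3.1, b3.2, c3.1, c3.2, b4.1, b4.2, c4.1, c4.2, hs.1, hs.2]
  have k4 : |coeff 4 (Bop sS (Tr sS 13))| < 15000 / 10 ^ 7 * lam sS := by
    rw [coeff_Bop sS 1, abs_lt]
    simp only [T13_vals]
    norm_num [h1, h3, h4, h5', h6, h7, h8, h9, h10, h11, h12, aS_zero, aS_one_sS]
    constructor <;> linarith only [b2.1, b2.2, c2.1, c2.2, b3.1, b3.2, c3.1, c3.2, b4.1, b4.2, c4.1, c4.2, b5.1, b5.2, c5.1, c5.2, hs.1, hs.2]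
  have k5 : |coeff 5 (Bop sS (Tr sS 13))| < 6000 / 10 ^ 7 * lam sS := by
    rw [coeff_Bop sS 2, abs_lt]
    simp only [T13_vals]
    norm_num [h1, h3, h4, h5', h6, h7, h8, h9, h10, h11, h12, aS_zero, aS_one_sS]
    constructor <;> linarith only [b3.1, b3.2, c3.1, c3.2, b4.1, b4.2, c4.1, c4.2, b5.1, b5.2, c5.1, c5.2, b6.1, b6.2, c6.1, c6.2, hs.1, hs.2]
  have k6 : |coeff 6 (Bop sS (Tr sS 13))| < 2300 / 10 ^ 7 * lam sS := by
    rw [coeff_Bop sS 3, abs_lt]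
    simp only [T13_vals]
    norm_num [h1, h3, h4, h5', h6, h7, h8, h9, h10, h11, h12, aS_zero, aS_one_sS]
    constructor <;> linarith only [b4.1, b4.2, c4.1, c4.2, b5.1, b5.2, c5.1, c5.2, b6.1, b6.2, c6.1, c6.2, b7.1, b7.2, c7.1, c7.2, hs.1, hs.2]
  have k7 : |coeff 7 (Bop sS (Tr sS 13))| < 800 / 10 ^ 7 * lam sS := by
    rw [coeff_Bop sS 4, abs_lt]
    simp only [T13_vals]
    norm_num [h1, h3, h4, h5', h6, h7, h8, h9, h10, h11, h12, aS_zero, aS_one_sS]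
    constructor <;> linarith only [b5.1, b5.2, c5.1, c5.2, b6.1, b6.2, c6.1, c6.2, b7.1, b7.2, c7.1, c7.2, b8.1, b8.2, c8.1, c8.2, hs.1, hs.2]
  have k8 : |coeff 8 (Bop sS (Tr sS 13))| < 200 / 10 ^ 7 * lam sS := by
    rw [coeff_Bop sS 5, abs_lt]
    simp only [T13_vals]
    norm_num [h1, h3, h4, h5', h6, h7, h8, h9, h10, h11, h12, aS_zero, aS_one_sS]
    constructor <;> linarith only [b6.1, b6.2, c6.1, c6.2, b7.1, b7.2, c7.1, c7.2, b8.1, b8.2, c8.1, c8.2, b9.1, b9.2, c9.1, c9.2, hs.1, hs.2]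
  have k9 : |coeff 9 (Bop sS (Tr sS 13))| < 150 / 10 ^ 7 * lam sS := by
    rw [coeff_Bop sS 6, abs_lt]
    simp only [T13_vals]
    norm_num [h1, h3, h4, h5', h6, h7, h8, h9, h10, h11, h12, aS_zero, aS_one_sS]
    constructor <;> linarith only [b7.1, b7.2, c7.1, c7.2, b8.1, b8.2, c8.1, c8.2, b9.1, b9.2, c9.1, c9.2, b10.1, b10.2, c10.1, c10.2, hs.1, hs.2]
  have k10 : |coeff 10 (Bop sS (Tr sS 13))| < 80 / 10 ^ 7 * lam sS := by
    rw [coeff_Bop sS 7, abs_lt]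
    simp only [T13_vals]
    norm_num [h1, h3, h4, h5', h6, h7, h8, h9, h10, h11, h12, aS_zero, aS_one_sS]
    constructor <;> linarith only [b8.1, b8.2, c8.1, c8.2, b9.1, b9.2, c9.1, c9.2, b10.1, b10.2, c10.1, c10.2, b11.1, b11.2, c11.1, c11.2, hs.1, hs.2]
  have k11 : |coeff 11 (Bop sS (Tr sS 13))| < 90 / 10 ^ 7 * lam sS := by
    rw [coeff_Bop sS 8, abs_lt]
    simp only [T13_vals]
    norm_num [h1, h3, h4, h5', h6, h7, h8, h9, h10, h11, h12, aS_zero, aS_one_sS]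
    constructor <;> linarith only [b9.1, b9.2, c9.1, c9.2, b10.1, b10.2, c10.1, c10.2, b11.1, b11.2, c11.1, c11.2, b12.1, b12.2, c12.1, c12.2, hs.1, hs.2]
  have k12 : |coeff 12 (Bop sS (Tr sS 13))| < 80 / 10 ^ 7 * lam sS := by
    rw [coeff_Bop sS 9, abs_lt]
    simp only [T13_vals]
    norm_num [h1, h3, h4, h5', h6, h7, h8, h9, h10, h11, h12, aS_zero, aS_one_sS]
    constructor <;> linarith only [b10.1, b10.2, c10.1, c10.2, b11.1, b11.2, c11.1, c11.2, b12.1, b12.2, c12.1, c12.2, b13.1, b13.2, c13.1, c13.2, hs.1, hs.2]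
  have k13 : |coeff 13 (Bop sS (Tr sS 13))| < 1200 / 10 ^ 7 * lam sS := by
    rw [coeff_Bop sS 10, abs_lt]
    simp only [T13_vals]
    norm_num [h1, h3, h4, h5', h6, h7, h8, h9, h10, h11, h12, aS_zero, aS_one_sS]
    constructor <;> linarith only [b11.1, b11.2, c11.1, c11.2, b12.1, b12.2, c12.1, c12.2, b13.1, b13.2, c13.1, c13.2, hs.1, hs.2]
  have k14 : |coeff 14 (Bop sS (Tr sS 13))| < 500 / 10 ^ 7 * lam sS := by
    rw [coeff_Bop sS 11, abs_lt]
    simp only [T13_vals]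
    norm_num [h1, h3, h4, h5', h6, h7, h8, h9, h10, h11, h12, aS_zero, aS_one_sS]
    constructor <;> linarith only [b12.1, b12.2, c12.1, c12.2, b13.1, b13.2, c13.1, c13.2, hs.1, hs.2]
  have k15 : |coeff 15 (Bop sS (Tr sS 13))| < 50 / 10 ^ 7 * lam sS := by
    rw [coeff_Bop sS 12, abs_lt]
    simp only [T13_vals]
    norm_num [h1, h3, h4, h5', h6, h7, h8, h9, h10, h11, h12, aS_zero, aS_one_sS]
    constructor <;> linarith only [b13.1, b13.2, c13.1, c13.2, hs.1, hs.2]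
  simp only [Finset.sum_range_succ, Finset.sum_range_zero]
  norm_num
  linarith only [hlam, k3, k4, k5, k6, k7, k8, k9, k10, k11, k12, k13, k14, k15]

/-- Quantitative closeness of `s` to the critical value: finitely many strict inequalities that hold
at the critical value and hence nearby. -/
structure Good (s : ℝ) : Prop where
  mem : s ∈ Dm
  mu0 : 0 < mu s
  k_big : 2 * 10 ^ 7 * mu s < lam s
  pos : ∀ m : ℕ, 2 ≤ m → m ≤ 150 → 0 < aS s m
  up : ∀ m : ℕ, 15 ≤ m → m ≤ 150 → (lam s - mu s * m) * aS s m < lam s * Ub m * aS s (m - 1)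
  low : ∀ m : ℕ, 76 ≤ m → m ≤ 150 → lam s * Lb m * aS s (m - 1) < (lam s - mu s * m) * aS s m
  A2 : 0.004 * lam s < coeff 2 (Aop s (Tr s 13)) ∧
    coeff 2 (Aop s (Tr s 13)) < 0.00402 * lam s
  A3 : 0.00595 * lam s < coeff 3 (Aop s (Tr s 13)) ∧
    coeff 3 (Aop s (Tr s 13)) < 0.00597 * lam s
  B1 : 0.3169 * lam s < coeff 1 (Bop s (Tr s 13)) ∧
    coeff 1 (Bop s (Tr s 13)) < 0.3172 * lam s
  B2 : 0.0248 * lam s < coeff 2 (Bop s (Tr s 13)) ∧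
    coeff 2 (Bop s (Tr s 13)) < 0.025 * lam s
  sumA : ∑ l ∈ Finset.range 13, |coeff (l + 4) (Aop s (Tr s 13))| < 0.0004 * lam s
  sumB : ∑ l ∈ Finset.range 13, |coeff (l + 3) (Bop s (Tr s 13))| < 0.008 * lam s
  a14 : aS s 14 < 7 / 10 ^ 6
  kap : |ka0 s| + |ka1 s| + |ka2 s| + |ka3 s| < 25
  alp : |al0 s| + |al1 s| + |al2 s| < 7
  lam9 : 9.2 < lam s
  small : ∀ m : ℕ, 2 ≤ m → m ≤ 13 → aS s m < 1 / 20

lemma good_eventually : ∀ᶠ s in 𝓝[<] sS, Good s := by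
  have hsub : 𝓝[<] sS ≤ 𝓝[Dm] sS := by
    rw [← nhdsWithin_Ioo_eq_nhdsLT (show (16 / 5 : ℝ) < sS by linarith [sS_bounds.1])]
    exact nhdsWithin_mono _ fun x hx => ⟨hx.1, hx.2.le⟩
  have hmem : ∀ᶠ s in 𝓝[Dm] sS, s ∈ Dm := eventually_mem_nhdsWithin
  have hlam := lam_cont sS sS_mem
  have hmu := mu_cont sS sS_mem
  have hl9 : 9.2 < lam sS := by
    rw [sS_vals.2.2.2.2.2.2.2.2.2.2.2]; linarith [sqrt5_bounds.1]
  have hk0 : 2 * 10 ^ 7 * mu sS < lam sS := by rw [mu_sS]; linarith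
  have hk : ∀ᶠ s in 𝓝[Dm] sS, 2 * 10 ^ 7 * mu s < lam s :=
    (hmu.const_mul (2 * 10 ^ 7)).eventually_lt hlam hk0
  -- a relative neighbourhood on which the first recursions are non-degenerate
  set S : Set ℝ := {s | s ∈ Dm ∧ 2 * 10 ^ 7 * mu s < lam s} with hS
  have hSn : S ∈ 𝓝[Dm] sS := hmem.and hk
  have hSD : S ⊆ Dm := fun s hs => hs.1
  have hSS : sS ∈ S := ⟨sS_mem, hk0⟩
  have hnS : 𝓝[S] sS = 𝓝[Dm] sS :=
    le_antisymm (nhdsWithin_mono _ hSD) (nhdsWithin_le_iff.2 hSn)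
  have hne : ∀ s ∈ S, ∀ j : ℕ, j ≤ 150 → lam s - mu s * j ≠ 0 := by
    intro s hs j hj
    have h1 : (j : ℝ) ≤ 150 := by exact_mod_cast hj
    have h2 := mu_nonneg hs.1
    have h3 := hs.2
    have h4 := lam_pos hs.1
    have : mu s * j ≤ mu s * 150 := by gcongr
    intro h0
    nlinarith
  have hac : ∀ m ≤ 150, ContinuousWithinAt (fun s => aS s m) Dm sS := by
    intro m hm
    have := aS_cont hSD m (fun j _ h2 s hs => hne s hs j (by omega)) sS hSS
    rwa [ContinuousWithinAt, hnS] at this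
  have hTc : ∀ n, ContinuousWithinAt (fun s => coeff n (Aop s (Tr s 13))) Dm sS := by
    intro n
    have := ((cc_Tr hSD 13 (fun j _ h2 s hs => hne s hs j (by omega))).aop hSD) n sS hSS
    rwa [ContinuousWithinAt, hnS] at this
  have hTb : ∀ n, ContinuousWithinAt (fun s => coeff n (Bop s (Tr s 13))) Dm sS := by
    intro n
    have := ((cc_Tr hSD 13 (fun j _ h2 s hs => hne s hs j (by omega))).bop hSD) n sS hSS
    rwa [ContinuousWithinAt, hnS] at this
  have hall : ∀ (p : ℕ → ℝ → Prop) (a b : ℕ), (∀ m, a ≤ m → m ≤ b → ∀ᶠ s in 𝓝[Dm] sS, p m s) →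
      ∀ᶠ s in 𝓝[Dm] sS, ∀ m, a ≤ m → m ≤ b → p m s := by
    intro p a b h
    have : ∀ᶠ s in 𝓝[Dm] sS, ∀ m ∈ Finset.Icc a b, p m s :=
      (Finset.eventually_all _).2 fun m hm => h m (Finset.mem_Icc.1 hm).1 (Finset.mem_Icc.1 hm).2
    filter_upwards [this] with s hs m h1 h2
    exact hs m (Finset.mem_Icc.2 ⟨h1, h2⟩)
  have e1 := hall (fun m s => 0 < aS s m) 2 150
    fun m h1 h2 => continuousWithinAt_const.eventually_lt (hac m h2) (aS_pos_sS m h1 h2)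
  have e2 := hall (fun m s => (lam s - mu s * m) * aS s m < lam s * Ub m * aS s (m - 1)) 15 150
    fun m h1 h2 => Filter.Tendsto.eventually_lt
      ((hlam.sub (hmu.mul_const (m : ℝ))).mul (hac m h2))
      ((hlam.mul_const (Ub m)).mul (hac (m - 1) (by omega))) (by
        show (lam sS - mu sS * m) * aS sS m < lam sS * Ub m * aS sS (m - 1)
        rw [mu_sS]
        have := mul_lt_mul_of_pos_left (aS_upper_sS m h1 h2) (lam_pos sS_mem |>.trans' (by norm_num))
        linarith)
  have e3 := hall (fun m s => lam s * Lb m * aS s (m - 1) < (lam s - mu s * m) * aS s m) 76 150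
    fun m h1 h2 => Filter.Tendsto.eventually_lt
      ((hlam.mul_const (Lb m)).mul (hac (m - 1) (by omega)))
      ((hlam.sub (hmu.mul_const (m : ℝ))).mul (hac m h2)) (by
        show lam sS * Lb m * aS sS (m - 1) < (lam sS - mu sS * m) * aS sS m
        rw [mu_sS]
        have := mul_lt_mul_of_pos_left (aS_lower_sS m h1 h2) (lam_pos sS_mem |>.trans' (by norm_num))
        linarith)
  obtain ⟨⟨l1, l2⟩, ⟨l3, l4⟩, ⟨l5, l6⟩, l7, l8⟩ := low_sS
  have lc : ∀ c : ℝ, ContinuousWithinAt (fun s => c * lam s) Dm sS := fun c => hlam.const_mul c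
  have e4 := (lc _).eventually_lt (hTc 2) l1
  have e5 := (hTc 2).eventually_lt (lc _) l2
  have e6 := (lc _).eventually_lt (hTc 3) l3
  have e7 := (hTc 3).eventually_lt (lc _) l4
  have e8 := (lc _).eventually_lt (hTb 1) l5
  have e9 := (hTb 1).eventually_lt (lc _) l6
  have e10 := (lc _).eventually_lt (hTb 2) l7
  have e11 := (hTb 2).eventually_lt (lc _) l8
  have e12 := (tendsto_finsetSum (Finset.range 13) fun l _ => (hTc (l + 4)).abs).eventually_lt
    (lc 0.0004) sumA_sS
  have e13 := (tendsto_finsetSum (Finset.range 13) fun l _ => (hTb (l + 3)).abs).eventually_lt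
    (lc 0.008) sumB_sS
  have e14 := (hac 14 (by omega)).eventually_lt
    (continuousWithinAt_const (b := (7 / 10 ^ 6 : ℝ)))
    (by have := aS_vals.2.2.2.2.2.2.2.2.2.2.2.2.2; norm_num at this ⊢; linarith)
  have hs := sqrt5_bounds
  obtain ⟨h1, h2, h3, h4, h5', h6, h7, h8, h9, h10, h11, h12⟩ := sS_vals
  have e15 := ((((ka0_cont sS sS_mem).abs.add (ka1_cont sS sS_mem).abs).add
    (ka2_cont sS sS_mem).abs).add (ka3_cont sS sS_mem).abs).eventually_lt
    (continuousWithinAt_const (b := (25 : ℝ))) (by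
      show |ka0 sS| + |ka1 sS| + |ka2 sS| + |ka3 sS| < 25
      rw [h8, h9, h10, h11, abs_of_pos (by linarith), abs_of_neg (by linarith),
        abs_of_pos (by linarith), abs_of_neg (by linarith)]; linarith)
  have e16 := (((al0_cont sS sS_mem).abs.add (al1_cont sS sS_mem).abs).add
    (al2_cont sS sS_mem).abs).eventually_lt
    (continuousWithinAt_const (b := (7 : ℝ))) (by
      show |al0 sS| + |al1 sS| + |al2 sS| < 7
      rw [h5', h6, h7, abs_of_pos (by linarith), abs_of_neg (by linarith),
        abs_of_pos (by linarith)]; linarith)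
  have e17 := (continuousWithinAt_const (b := (9.2 : ℝ))).eventually_lt hlam hl9
  have e18 := hall (fun m s => aS s m < 1 / 20) 2 13 fun m h1 h2 =>
    (hac m (by omega)).eventually_lt continuousWithinAt_const (by
      obtain ⟨v2, v3, v4, v5, v6, v7, v8, v9, v10, v11, v12, v13, -⟩ := aS_vals
      interval_cases m <;> linarith)
  have e := (hmem.and (hk.and (e1.and (e2.and (e3.and (e4.and (e5.and (e6.and (e7.and (e8.and
    (e9.and (e10.and (e11.and (e12.and (e13.and (e14.and (e15.and (e16.and (e17.and e18)))))))))))))))))))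
  filter_upwards [hsub e, self_mem_nhdsWithin] with s hs hlt
  obtain ⟨hm, hk, e1, e2, e3, e4, e5, e6, e7, e8, e9, e10, e11, e12, e13, e14, e15, e16, e17, e18⟩ := hs
  exact ⟨hm, mu_pos hm hlt, hk, e1, e2, e3, ⟨e4, e5⟩, ⟨e6, e7⟩, ⟨e8, e9⟩, ⟨e10, e11⟩, e12, e13,
    e14, e15, e16, e17, e18⟩

/-! ### Positivity and growth of the Taylor coefficients below the resonance -/

/-- Positivity and two-sided ratio bounds for the coefficients up to order `M`. -/
structure Hyp (s : ℝ) (M : ℕ) : Prop where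
  pos : ∀ j : ℕ, 2 ≤ j → j ≤ M → 0 < aS s j
  up : ∀ j : ℕ, 15 ≤ j → j ≤ M → (lam s - mu s * j) * aS s j ≤ lam s * Ub j * aS s (j - 1)
  low : ∀ j : ℕ, 76 ≤ j → j ≤ M → lam s * Lb j * aS s (j - 1) ≤ (lam s - mu s * j) * aS s j

lemma Good.lam_pos {s : ℝ} (h : Good s) : 0 < lam s := by linarith [h.lam9]

lemma gap_pos {s : ℝ} (h : Good s) {M j : ℕ} (hM : mu s * M < lam s) (hj : j ≤ M) :
    0 < lam s - mu s * j := by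
  have : mu s * j ≤ mu s * M := by
    have := h.mu0
    gcongr
  linarith

lemma dom_step {E1 E2 l U L x x' y y' a b : ℝ} (e1 : 0 < E1) (he : E2 ≤ E1) (hl : 0 < l)
    (hU : 0 < U) (hUL : U ≤ L) (ha : 0 < a) (hb : 0 < b) (hy : 0 < y) (hy' : 0 < y')
    (hu : E1 * x' ≤ l * U * x) (hlo : l * L * y ≤ E2 * y') (ih : x * b ≤ a * y) :
    x' * b ≤ a * y' := by
  have k1 : E1 * (x' * b) ≤ l * U * (a * y) :=
    calc E1 * (x' * b) = (E1 * x') * b := by ring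
      _ ≤ (l * U * x) * b := by gcongr
      _ = l * U * (x * b) := by ring
      _ ≤ _ := by gcongr
  have k2 : l * U * (a * y) ≤ E1 * (a * y') :=
    calc l * U * (a * y) ≤ l * L * (a * y) := by gcongr
      _ = a * (l * L * y) := by ring
      _ ≤ a * (E2 * y') := by gcongr
      _ ≤ a * (E1 * y') := by gcongr
      _ = _ := by ring
  exact le_of_mul_le_mul_left (k1.trans k2) e1

/-- Products of two coefficients are dominated by pushing one index down to `14`: the upper ratio
bound at the small index is below the lower ratio bound at the large one. -/
lemma dom {s : ℝ} (h : Good s) {M : ℕ} (hM : mu s * M < lam s) (H : Hyp s M) (d : ℕ) (hd : 61 ≤ d)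
    (i : ℕ) (hi : 14 ≤ i) : i ≤ d + 14 → d + i ≤ M →
    aS s i * aS s (d + 14) ≤ aS s 14 * aS s (d + i) := by
  induction i, hi using Nat.le_induction with
  | base => intro _ _; exact le_rfl
  | succ i hi ih =>
    intro h1 h2
    have IH := ih (by omega) (by omega)
    have hu := H.up (i + 1) (by omega) (by omega)
    have hl := H.low (d + (i + 1)) (by omega) h2
    rw [show i + 1 - 1 = i from rfl] at hu
    rw [show d + (i + 1) - 1 = d + i from rfl] at hl
    have e1 := gap_pos h hM (show i + 1 ≤ M by omega)
    have e2 := gap_pos h hM h2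
    have p1 := H.pos (i + 1) (by omega) (by omega)
    have p2 := H.pos (d + (i + 1)) (by omega) h2
    have p3 := H.pos 14 (by omega) (by omega)
    have p4 := H.pos (d + 14) (by omega) (by omega)
    have p5 := H.pos (d + i) (by omega) (by omega)
    have hlam := h.lam_pos
    have hUL : Ub (i + 1) ≤ Lb (d + (i + 1)) := by
      have h61 : (61 : ℝ) ≤ d := by exact_mod_cast hd
      have hid : ((i + 1 : ℕ) : ℝ) ≤ d + 14 := by exact_mod_cast h1
      unfold Ub Lb; push_cast at *; linarith
    have hU : 0 < Ub (i + 1) := by unfold Ub; positivity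
    have he : lam s - mu s * ((d + (i + 1) : ℕ) : ℝ) ≤ lam s - mu s * ((i + 1 : ℕ) : ℝ) := by
      have := mul_le_mul_of_nonneg_left
        (Nat.cast_le (α := ℝ) |>.2 (show i + 1 ≤ d + (i + 1) by omega)) h.mu0.le
      linarith
    exact dom_step e1 he hlam hU hUL p3 p4 p5 p2 hu hl IH

lemma dom' {s : ℝ} (h : Good s) {M : ℕ} (hM : mu s * M < lam s) (H : Hyp s M) {p q : ℕ}
    (hp : 14 ≤ p) (hq : 14 ≤ q) (h1 : 149 ≤ p + q) (h2 : p + q - 14 ≤ M) :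
    aS s p * aS s q ≤ aS s 14 * aS s (p + q - 14) := by
  rcases le_total p q with hpq | hpq
  · have := dom h hM H (q - 14) (by omega) p hp (by omega) (by omega)
    rwa [show q - 14 + 14 = q by omega, show q - 14 + p = p + q - 14 by omega] at this
  · have := dom h hM H (p - 14) (by omega) q hq (by omega) (by omega)
    rwa [show p - 14 + 14 = p by omega, show p - 14 + q = p + q - 14 by omega, mul_comm] at this

lemma grow {s : ℝ} (h : Good s) {M : ℕ} (H : Hyp s M) {j : ℕ} (h76 : 76 ≤ j)
    (hj : j ≤ M) : Lb j * aS s (j - 1) ≤ aS s j := by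
  have := H.low j h76 hj
  have p := H.pos j (by omega) hj
  have hm : 0 ≤ mu s * j := mul_nonneg h.mu0.le (Nat.cast_nonneg _)
  have hl := h.lam_pos
  have : lam s * (Lb j * aS s (j - 1)) ≤ lam s * aS s j := by nlinarith
  exact le_of_mul_le_mul_left this hl

lemma grow_mono {s : ℝ} (h : Good s) {M : ℕ} (H : Hyp s M) {i j : ℕ} (hi : 76 ≤ i) (hij : i ≤ j)
    (hj : j ≤ M) : aS s i ≤ aS s j := by
  induction j, hij using Nat.le_induction with
  | base => rfl
  | succ j hij ih =>
    refine (ih (by omega)).trans ?_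
    have h1 := grow h H (show 76 ≤ j + 1 by omega) hj
    have hL : 1 ≤ Lb (j + 1) := by
      have : (77 : ℝ) ≤ ((j + 1 : ℕ) : ℝ) := by exact_mod_cast (by omega : 77 ≤ j + 1)
      unfold Lb; linarith
    have p := H.pos j (by omega) (by omega)
    rw [show j + 1 - 1 = j from rfl] at h1
    nlinarith

lemma grow_ten {s : ℝ} (h : Good s) {M : ℕ} (H : Hyp s M) (i : ℕ) (hi : 138 ≤ i) (k : ℕ) :
    i + k ≤ M → 1.24 ^ k * aS s i ≤ aS s (i + k) := by
  induction k with
  | zero => intro _; simp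
  | succ k ih =>
    intro hk
    have IH := ih (by omega)
    have h1 := grow h H (show 76 ≤ i + (k + 1) by omega) hk
    rw [show i + (k + 1) - 1 = i + k from rfl] at h1
    have hL : 1.24 ≤ Lb (i + (k + 1)) := by
      have : (139 : ℝ) ≤ ((i + (k + 1) : ℕ) : ℝ) := by exact_mod_cast (by omega)
      unfold Lb; linarith
    have p := H.pos (i + k) (by omega) (by omega)
    rw [pow_succ]
    nlinarith

/-- A partial sum of degree `≤ N` makes the residual a polynomial of degree `≤ 2N + 2`. -/
lemma coeff_res_high (s : ℝ) (N n : ℕ) (h : 2 * N < n + 1) :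
    coeff (n + 3) (Res s (Tr s N)) = 0 := by
  have hq : ∀ j, 2 * N < j → coeff j (Tr s N ^ 2) = 0 := by
    intro j hj
    rw [sq, coeff_mul]
    refine Finset.sum_eq_zero fun p hp => ?_
    have := Finset.HasAntidiagonal.mem_antidiagonal.1 hp
    rcases Nat.lt_or_ge N p.1 with h1 | h1
    · rw [coeff_Tr_gt s N p.1 h1, zero_mul]
    · rw [coeff_Tr_gt s N p.2 (by omega), mul_zero]
  rw [coeff_res, hq _ (by omega), hq _ (by omega), hq _ (by omega), hq _ (by omega),
    coeff_Tr_gt s N _ (by omega), coeff_Tr_gt s N _ (by omega), coeff_Tr_gt s N _ (by omega)]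
  ring

lemma coeff_mul_low (f g : PowerSeries ℝ) {N m : ℕ} (hf : ∀ k, N < k → coeff k f = 0)
    (hm : N ≤ m) : coeff m (f * g)
      = ∑ k ∈ Finset.range (N + 1), coeff k f * coeff (m - k) g := by
  rw [coeff_mul, Finset.Nat.sum_antidiagonal_eq_sum_range_succ_mk]
  symm
  refine Finset.sum_subset (by intro x; simp; omega) fun k _ hk => ?_
  simp only [Finset.mem_range, not_lt] at hk
  rw [hf k (by omega), zero_mul]

lemma aop13_high (s : ℝ) (k : ℕ) (hk : 16 < k) : coeff k (Aop s (Tr s 13)) = 0 := by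
  obtain ⟨n, rfl⟩ : ∃ n, k = n + 3 := ⟨k - 3, by omega⟩
  rw [coeff_Aop, coeff_VPs, coeff_Tr_gt _ _ _ (by omega), coeff_Tr_gt _ _ _ (by omega),
    coeff_Tr_gt _ _ _ (by omega), coeff_Tr_gt _ _ _ (by omega), if_neg (by omega),
    if_neg (by omega), if_neg (by omega)]
  ring

lemma bop13_high (s : ℝ) (k : ℕ) (hk : 15 < k) : coeff k (Bop s (Tr s 13)) = 0 := by
  obtain ⟨n, rfl⟩ : ∃ n, k = n + 3 := ⟨k - 3, by omega⟩
  rw [coeff_Bop, coeff_Tr_gt _ _ _ (by omega), coeff_Tr_gt _ _ _ (by omega),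
    coeff_Tr_gt _ _ _ (by omega), coeff_Tr_gt _ _ _ (by omega)]
  ring

/-- The tail of the expansion after order `13`. -/
def Zt (s : ℝ) (m : ℕ) : PowerSeries ℝ := Tr s (m - 1) - Tr s 13

lemma coeff_Zt (s : ℝ) (m j : ℕ) (hm : 15 ≤ m) : coeff j (Zt s m)
    = if 14 ≤ j ∧ j ≤ m - 1 then aS s j else 0 := by
  rw [Zt, map_sub, coeff_Tr, coeff_Tr]
  split_ifs <;> first | omega | simp

/-- The quadratic contribution of the tail to the recursion. -/
def qtail (s : ℝ) (m : ℕ) : ℝ :=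
  coeff m (C 2 * A0s s * Zt s m ^ 2 - VBs s * Zt s m * dd (Zt s m))

lemma num_split {s : ℝ} {m : ℕ} (hm : 151 ≤ m) : num s m =
    coeff 2 (Aop s (Tr s 13)) * ((m - 1) * aS s (m - 1))
    + coeff 3 (Aop s (Tr s 13)) * ((m - 2) * aS s (m - 2))
    + ∑ l ∈ Finset.range 13, coeff (l + 4) (Aop s (Tr s 13)) *
        ((m - 3 - l) * aS s (m - 3 - l))
    + coeff 1 (Bop s (Tr s 13)) * aS s (m - 1)
    + coeff 2 (Bop s (Tr s 13)) * aS s (m - 2)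
    + ∑ l ∈ Finset.range 13, coeff (l + 3) (Bop s (Tr s 13)) * aS s (m - 3 - l)
    + qtail s m := by
  have e : Res s (Tr s (m - 1)) = Res s (Tr s 13) + Aop s (Tr s 13) * dd (Zt s m)
      + Bop s (Tr s 13) * Zt s m + (C 2 * A0s s * Zt s m ^ 2
        - VBs s * Zt s m * dd (Zt s m)) := by
    have := res_add s (Tr s 13) (Zt s m)
    rw [show Tr s 13 + Zt s m = Tr s (m - 1) by rw [Zt]; ring] at this
    rw [this]; ring
  have hz : ∀ j, 14 ≤ j → j ≤ m - 1 → coeff j (Zt s m) = aS s j := by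
    intro j h1 h2
    rw [coeff_Zt _ _ _ (by omega), if_pos ⟨h1, h2⟩]
  have hz0 : coeff m (Zt s m) = 0 := by
    rw [coeff_Zt _ _ _ (by omega), if_neg (by omega)]
  have hz1 : coeff (m + 1) (Zt s m) = 0 := by
    rw [coeff_Zt _ _ _ (by omega), if_neg (by omega)]
  have hd : ∀ j, 13 ≤ j → j + 2 ≤ m → coeff j (dd (Zt s m)) = (j + 1) * aS s (j + 1) := by
    intro j h1 h2
    rw [coeff_dd, hz (j + 1) (by omega) (by omega)]; ring
  have hd0 : coeff m (dd (Zt s m)) = 0 := by rw [coeff_dd, hz1, zero_mul]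
  have hd1 : coeff (m - 1) (dd (Zt s m)) = 0 := by
    rw [coeff_dd, show m - 1 + 1 = m by omega, hz0, zero_mul]
  have h0 : coeff m (Res s (Tr s 13)) = 0 := by
    obtain ⟨n, rfl⟩ : ∃ n, m = n + 3 := ⟨m - 3, by omega⟩
    exact coeff_res_high s 13 n (by omega)
  have hA : coeff m (Aop s (Tr s 13) * dd (Zt s m)) =
      coeff 2 (Aop s (Tr s 13)) * ((m - 1) * aS s (m - 1))
      + coeff 3 (Aop s (Tr s 13)) * ((m - 2) * aS s (m - 2))
      + ∑ l ∈ Finset.range 13, coeff (l + 4) (Aop s (Tr s 13)) *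
        ((m - 3 - l) * aS s (m - 3 - l)) := by
    rw [coeff_mul_low _ _ (aop13_high s) (by omega), Finset.sum_range_succ', Finset.sum_range_succ',
      Finset.sum_range_succ', Finset.sum_range_succ']
    simp only [zero_add, Nat.sub_zero]
    rw [hd0, hd1, hd (m - (1 + 1)) (by omega) (by omega), hd (m - (1 + 1 + 1)) (by omega) (by omega),
      show m - (1 + 1) + 1 = m - 1 by omega, show m - (1 + 1 + 1) + 1 = m - 2 by omega,
      Nat.cast_sub (by omega), Nat.cast_sub (by omega)]
    have : ∑ l ∈ Finset.range 13, coeff (l + 1 + 1 + 1 + 1) (Aop s (Tr s 13)) *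
        coeff (m - (l + 1 + 1 + 1 + 1)) (dd (Zt s m))
        = ∑ l ∈ Finset.range 13, coeff (l + 4) (Aop s (Tr s 13)) *
        ((m - 3 - l) * aS s (m - 3 - l)) := by
      refine Finset.sum_congr rfl fun l hl => ?_
      rw [Finset.mem_range] at hl
      rw [hd _ (by omega) (by omega), show m - (l + 1 + 1 + 1 + 1) + 1 = m - 3 - l by omega,
        Nat.cast_sub (by omega)]
      push_cast; ring
    rw [this]; push_cast; ring
  have hB : coeff m (Bop s (Tr s 13) * Zt s m) =
      coeff 1 (Bop s (Tr s 13)) * aS s (m - 1)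
      + coeff 2 (Bop s (Tr s 13)) * aS s (m - 2)
      + ∑ l ∈ Finset.range 13, coeff (l + 3) (Bop s (Tr s 13)) * aS s (m - 3 - l) := by
    rw [coeff_mul_low _ _ (bop13_high s) (by omega), Finset.sum_range_succ', Finset.sum_range_succ',
      Finset.sum_range_succ']
    simp only [zero_add, Nat.sub_zero]
    rw [hz0, hz (m - 1) (by omega) (by omega), hz (m - (1 + 1)) (by omega) (by omega)]
    have : ∑ l ∈ Finset.range 13, coeff (l + 1 + 1 + 1) (Bop s (Tr s 13)) *
        coeff (m - (l + 1 + 1 + 1)) (Zt s m)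
        = ∑ l ∈ Finset.range 13, coeff (l + 3) (Bop s (Tr s 13)) * aS s (m - 3 - l) := by
      refine Finset.sum_congr rfl fun l hl => ?_
      rw [Finset.mem_range] at hl
      rw [hz _ (by omega) (by omega), show m - (l + 1 + 1 + 1) = m - 3 - l by omega]
    rw [this]; ring
  rw [num, e, map_add, map_add, map_add, h0, hA, hB, qtail]
  ring

/-- Size of the quadratic part of the residual, from a bound on the coefficients of `Z²`
(`VB·Z·Z' = ½·VB·(Z²)'`). -/
lemma quad_coeff {s : ℝ} (h : Good s) (Z : PowerSeries ℝ) {m : ℕ} (hm : 3 ≤ m) {Q : ℝ}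
    (hq : ∀ j, m - 2 ≤ j → j ≤ m + 1 → 0 ≤ coeff j (Z ^ 2) ∧
      coeff j (Z ^ 2) ≤ Q) :
    |coeff m (C 2 * A0s s * Z ^ 2 - VBs s * Z * dd Z)|
      ≤ (12.5 * (m + 1) + 14) * Q := by
  obtain ⟨n, rfl⟩ : ∃ n, m = n + 3 := ⟨m - 3, by omega⟩
  have e : coeff (n + 3) (C 2 * A0s s * Z ^ 2 - VBs s * Z * dd Z) = 2 * (al0 s * coeff (n + 3) (Z ^ 2)
      + al1 s * coeff (n + 2) (Z ^ 2)
      + al2 s * coeff (n + 1) (Z ^ 2))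
      - 1 / 2 * (ka0 s * (coeff (n + 4) (Z ^ 2) * (n + 4))
        + ka1 s * (coeff (n + 3) (Z ^ 2) * (n + 3))
        + ka2 s * (coeff (n + 2) (Z ^ 2) * (n + 2))
        + ka3 s * (coeff (n + 1) (Z ^ 2) * (n + 1))) := by
    have e2 : VBs s * Z * dd Z
        = C (1 / 2) * (VBs s * dd (Z ^ 2)) := by
      have : (C (1 / 2) : PowerSeries ℝ) * 2 = 1 := by
        rw [show (2 : PowerSeries ℝ) = C 2 from (map_ofNat _ 2).symm, ← map_mul]
        norm_num
      rw [sq, dd_mul]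
      linear_combination (-(VBs s * Z * dd Z)) * this
    rw [e2, mul_assoc (C 2)]
    simp only [map_sub, coeff_C_mul, coeff_VBs_mul, coeff_dd,
      coeff_A0s_mul s _ (n + 1)]
    push_cast; ring
  obtain ⟨b1, b1'⟩ := hq (n + 1) (by omega) (by omega)
  obtain ⟨b2, b2'⟩ := hq (n + 2) (by omega) (by omega)
  obtain ⟨b3, b3'⟩ := hq (n + 3) (by omega) (by omega)
  obtain ⟨b4, b4'⟩ := hq (n + 4) (by omega) (by omega)
  have hQ0 : 0 ≤ Q := b1.trans b1'
  rw [e]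
  generalize coeff (n + 1) (Z ^ 2) = q1 at *
  generalize coeff (n + 2) (Z ^ 2) = q2 at *
  generalize coeff (n + 3) (Z ^ 2) = q3 at *
  generalize coeff (n + 4) (Z ^ 2) = q4 at *
  have key : ∀ c q : ℝ, 0 ≤ q → q ≤ Q → |c * q| ≤ |c| * Q := fun c q h0 h1 => by
    rw [abs_mul, abs_of_nonneg h0]; gcongr
  have key2 : ∀ c q t : ℝ, 0 ≤ q → q ≤ Q → 0 ≤ t → t ≤ n + 4 → |c * (q * t)| ≤ |c| * (Q * (n + 4)) :=
    fun c q t h0 h1 h2 h3 => by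
      rw [abs_mul, abs_of_nonneg (mul_nonneg h0 h2)]; gcongr
  have c1 := abs_le.1 (key (al0 s) q3 b3 b3')
  have c2 := abs_le.1 (key (al1 s) q2 b2 b2')
  have c3 := abs_le.1 (key (al2 s) q1 b1 b1')
  have hn : (0 : ℝ) ≤ n := Nat.cast_nonneg n
  have c4 := abs_le.1 (key2 (ka0 s) q4 (n + 4) b4 b4' (by linarith) (by linarith))
  have c5 := abs_le.1 (key2 (ka1 s) q3 (n + 3) b3 b3' (by linarith) (by linarith))
  have c6 := abs_le.1 (key2 (ka2 s) q2 (n + 2) b2 b2' (by linarith) (by linarith))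
  have c7 := abs_le.1 (key2 (ka3 s) q1 (n + 1) b1 b1' (by linarith) (by linarith))
  have d1 : (|al0 s| + |al1 s| + |al2 s|) * Q ≤ 7 * Q := by have := h.alp; gcongr
  have d2 : (|ka0 s| + |ka1 s| + |ka2 s| + |ka3 s|) * (Q * (n + 4)) ≤ 25 * (Q * (n + 4)) := by
    have := h.kap; gcongr
  push_cast
  rw [abs_le]
  clear hq e key key2
  constructor <;> linarith

lemma qtail_bound {s : ℝ} (h : Good s) {m : ℕ} (hm : 151 ≤ m) (hk : mu s * (m - 1 : ℕ) < lam s)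
    (H : Hyp s (m - 1)) :
    |qtail s m| ≤ (12.5 * (m + 1) + 14) * ((m + 2) * (7 / 10 ^ 6 * aS s (m - 13))) := by
  obtain ⟨Q, hQ⟩ : ∃ Q : ℝ, Q = (m + 2) * (7 / 10 ^ 6 * aS s (m - 13)) := ⟨_, rfl⟩
  rw [← hQ]
  have pm : 0 < aS s (m - 13) := H.pos _ (by omega) (by omega)
  have hz0 : ∀ j, 0 ≤ coeff j (Zt s m) := by
    intro j
    rw [coeff_Zt _ _ _ (by omega)]
    split_ifs with hj
    · exact (H.pos j (by omega) hj.2).le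
    · exact le_rfl
  have hq : ∀ j, m - 2 ≤ j → j ≤ m + 1 → 0 ≤ coeff j (Zt s m ^ 2) ∧
      coeff j (Zt s m ^ 2) ≤ Q := by
    intro j h1 h2
    rw [sq, coeff_mul, Finset.Nat.sum_antidiagonal_eq_sum_range_succ_mk]
    refine ⟨Finset.sum_nonneg fun i _ => mul_nonneg (hz0 _) (hz0 _), ?_⟩
    have : ∀ i ∈ Finset.range j.succ, coeff i (Zt s m) * coeff (j - i) (Zt s m)
        ≤ 7 / 10 ^ 6 * aS s (m - 13) := by
      intro i hi
      have hi' := Finset.mem_range.1 hi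
      rw [coeff_Zt _ _ _ (by omega), coeff_Zt _ _ _ (by omega)]
      split_ifs with c1 c2
      · have := dom' h hk H c1.1 c2.1 (by omega) (by omega)
        refine this.trans ?_
        have g := grow_mono h H (i := i + (j - i) - 14) (j := m - 13) (by omega) (by omega) (by omega)
        have := h.a14
        have p14 := H.pos 14 (by omega) (by omega)
        exact mul_le_mul this.le g (H.pos _ (by omega) (by omega)).le (by norm_num)
      all_goals simp; positivity
    refine (Finset.sum_le_sum this).trans ?_
    rw [Finset.sum_const, Finset.card_range, nsmul_eq_mul, hQ]
    have : ((j.succ : ℕ) : ℝ) ≤ m + 2 := by exact_mod_cast (by omega : j.succ ≤ m + 2)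
    gcongr
  exact quad_coeff h (Zt s m) (by omega) hq

/-- The real-variable core of `num_bounds`: `x, y, w` are three consecutive coefficients, `R` collects
all remaining contributions. -/
lemma num_core {t ℓ M x y w R A2 A3 B1 B2 : ℝ} (hM : 151 ≤ t) (hl : 0 < ℓ) (hmu : 0 < M)
    (px : 0 < x) (py : 0 < y) (pw : 0 < w) (hkb : 2 * 10 ^ 7 * M < ℓ)
    (A2l : 0.004 * ℓ < A2) (A2u : A2 < 0.00402 * ℓ) (A3l : 0.00595 * ℓ < A3)
    (A3u : A3 < 0.00597 * ℓ) (B1l : 0.3169 * ℓ < B1) (B1u : B1 < 0.3172 * ℓ)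
    (B2l : 0.0248 * ℓ < B2) (B2u : B2 < 0.025 * ℓ)
    (hx1 : (0.0039 * t + 0.6961) * y ≤ x) (hy1 : (0.0039 * t + 0.6922) * w ≤ y)
    (hup : (ℓ - M * (t - 1)) * x ≤ ℓ * (0.0068 * t + 0.7132) * y)
    (hR : |R| ≤ ℓ * ((0.0004 * t + 0.008 + 9 / 10 ^ 8 * (t + 2) * (12.5 * t + 26.5)) * w)) :
    ℓ * (0.0039 * t + 0.7) * x ≤
      A2 * ((t - 1) * x) + A3 * ((t - 2) * y) + B1 * x + B2 * y + R ∧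
    A2 * ((t - 1) * x) + A3 * ((t - 2) * y) + B1 * x + B2 * y + R ≤ ℓ * (0.0068 * t + 0.72) * x := by
  obtain ⟨r1, r2⟩ := abs_le.1 hR
  have hxn : 0 < (t - 1) * x := mul_pos (by linarith) px
  have hyn : 0 < (t - 2) * y := mul_pos (by linarith) py
  obtain ⟨z, hz⟩ : ∃ z, t = 151 + z := ⟨t - 151, by ring⟩
  have hz0 : 0 ≤ z := by linarith
  obtain ⟨c3, hc3⟩ : ∃ c3, c3 = 0.0004 * t + 0.008 + 9 / 10 ^ 8 * (t + 2) * (12.5 * t + 26.5) :=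
    ⟨_, rfl⟩
  rw [← hc3] at r1 r2
  -- the `w`-terms are absorbed by the `y`-terms
  have hyw : c3 * w ≤ (0.0005 * t + 0.07) * y := by
    have : c3 ≤ (0.0005 * t + 0.07) * (0.0039 * t + 0.6922) := by
      rw [hc3, hz]; ring_nf; nlinarith [sq_nonneg z]
    calc c3 * w ≤ (0.0005 * t + 0.07) * (0.0039 * t + 0.6922) * w := by gcongr
      _ = (0.0005 * t + 0.07) * ((0.0039 * t + 0.6922) * w) := by ring
      _ ≤ _ := by gcongr
  constructor
  · have i1 : 0.004 * ℓ * ((t - 1) * x) ≤ A2 * ((t - 1) * x) := by gcongr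
    have i2 : 0.00595 * ℓ * ((t - 2) * y) ≤ A3 * ((t - 2) * y) := by gcongr
    have i3 : 0.3169 * ℓ * x ≤ B1 * x := by gcongr
    have i4 : 0.0248 * ℓ * y ≤ B2 * y := by gcongr
    have goal : 0 ≤ (0.0001 * t - 0.3871) * x + (0.00595 * t + 0.0129) * y - c3 * w := by
      rcases le_total 3871 t with ht3 | ht3
      · have h1 : 0 ≤ (0.0001 * t - 0.3871) * x := mul_nonneg (by linarith) px.le
        have h2 : 0 ≤ (0.00545 * t - 0.0571) * y := mul_nonneg (by linarith) py.le
        linarith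
      · have hmk : M * (t - 1) ≤ 0.001 * ℓ := by
          have : M * (t - 1) ≤ M * 20000 := mul_le_mul_of_nonneg_left (by linarith) hmu.le
          linarith
        have hx2 : 0.999 * x ≤ (0.0068 * t + 0.7132) * y := by
          have h1 := mul_le_mul_of_nonneg_right hmk px.le
          have : ℓ * (0.999 * x) ≤ ℓ * ((0.0068 * t + 0.7132) * y) := by linarith
          exact le_of_mul_le_mul_left this hl
        have h3 : (0.3871 - 0.0001 * t) * (0.999 * x)
            ≤ (0.3871 - 0.0001 * t) * ((0.0068 * t + 0.7132) * y) :=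
          mul_le_mul_of_nonneg_left hx2 (by linarith)
        have p2 : (0.3871 - 0.0001 * t) * (0.0068 * t + 0.7132)
            ≤ 0.999 * (0.00545 * t - 0.0571) := by nlinarith [sq_nonneg t]
        have p3 := mul_le_mul_of_nonneg_right p2 py.le
        linarith
    have := mul_nonneg hl.le goal
    linarith
  · have i1 : A2 * ((t - 1) * x) ≤ 0.00402 * ℓ * ((t - 1) * x) := by gcongr
    have i2 : A3 * ((t - 2) * y) ≤ 0.00597 * ℓ * ((t - 2) * y) := by gcongr
    have i3 : B1 * x ≤ 0.3172 * ℓ * x := by gcongr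
    have i4 : B2 * y ≤ 0.025 * ℓ * y := by gcongr
    have goal : (0.00597 * t + 0.01306) * y + c3 * w ≤ (0.00278 * t + 0.40682) * x := by
      have p1 : 0.00647 * t + 0.08306 ≤ (0.00278 * t + 0.40682) * (0.0039 * t + 0.6961) := by
        nlinarith [sq_nonneg t]
      calc (0.00597 * t + 0.01306) * y + c3 * w ≤ (0.00647 * t + 0.08306) * y := by linarith
        _ ≤ (0.00278 * t + 0.40682) * (0.0039 * t + 0.6961) * y := by gcongr
        _ = (0.00278 * t + 0.40682) * ((0.0039 * t + 0.6961) * y) := by ring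
        _ ≤ _ := by gcongr
    have := mul_le_mul_of_nonneg_left goal hl.le
    linarith

lemma rem_core {t ℓ w w' SA SB QT : ℝ} (hM : 151 ≤ t) (hl : 9.2 < ℓ) (hw8 : 8.5 * w' ≤ w)
    (pw : 0 < w) (ha : |SA| ≤ 0.0004 * ℓ * (t * w)) (hb : |SB| ≤ 0.008 * ℓ * w)
    (hq : |QT| ≤ (12.5 * (t + 1) + 14) * ((t + 2) * (7 / 10 ^ 6 * w'))) :
    |SA + SB + QT| ≤
      ℓ * ((0.0004 * t + 0.008 + 9 / 10 ^ 8 * (t + 2) * (12.5 * t + 26.5)) * w) := by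
  have hqw : (12.5 * (t + 1) + 14) * ((t + 2) * (7 / 10 ^ 6 * w'))
      ≤ ((t + 2) * (12.5 * t + 26.5)) * (9 / 10 ^ 8 * ℓ * w) := by
    have e : (12.5 * (t + 1) + 14) * ((t + 2) * (7 / 10 ^ 6 * w'))
      = ((t + 2) * (12.5 * t + 26.5)) * (7 / 10 ^ 6 * w') := by ring
    rw [e]
    refine mul_le_mul_of_nonneg_left ?_ (by positivity)
    nlinarith
  have h1 := abs_add_le (SA + SB) QT
  have h2 := abs_add_le SA SB
  linarith

/-- Two-sided bounds for the right-hand side of the recursion, up to and including the first index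
past the resonance. -/
lemma num_bounds {s : ℝ} (h : Good s) {m : ℕ} (hm : 151 ≤ m) (hk : mu s * (m - 1 : ℕ) < lam s)
    (H : Hyp s (m - 1)) :
    lam s * Lb m * aS s (m - 1) ≤ num s m ∧ num s m ≤ lam s * Ub m * aS s (m - 1) := by
  have hx1 := grow h H (j := m - 1) (by omega) le_rfl
  have hy1 := grow h H (j := m - 2) (by omega) (by omega)
  rw [show m - 1 - 1 = m - 2 by omega] at hx1
  rw [show m - 2 - 1 = m - 3 by omega] at hy1
  have hup := H.up (m - 1) (by omega) le_rfl
  rw [show m - 1 - 1 = m - 2 by omega] at hup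
  have hw1 := grow_ten h H (m - 13) (by omega) 10 (by omega)
  rw [show m - 13 + 10 = m - 3 by omega] at hw1
  have px := H.pos (m - 1) (by omega) le_rfl
  have py := H.pos (m - 2) (by omega) (by omega)
  have pw := H.pos (m - 3) (by omega) (by omega)
  have pw' := H.pos (m - 13) (by omega) (by omega)
  have hq := qtail_bound h hm hk H
  have hM : (151 : ℝ) ≤ m := by exact_mod_cast hm
  have hlam := h.lam9
  have hmu := h.mu0
  -- the remainders of the two linear sums
  have hsa : |∑ l ∈ Finset.range 13, coeff (l + 4) (Aop s (Tr s 13)) *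
        (((m : ℝ) - 3 - l) * aS s (m - 3 - l))| ≤ 0.0004 * lam s * (m * aS s (m - 3)) := by
    refine (Finset.abs_sum_le_sum_abs _ _).trans ?_
    have : ∀ l ∈ Finset.range 13, |coeff (l + 4) (Aop s (Tr s 13)) *
        (((m : ℝ) - 3 - l) * aS s (m - 3 - l))|
        ≤ |coeff (l + 4) (Aop s (Tr s 13))| * (m * aS s (m - 3)) := by
      intro l hl
      have hl' := Finset.mem_range.1 hl
      have hl2 : (l : ℝ) ≤ 13 := by exact_mod_cast hl'.le
      have g := grow_mono h H (i := m - 3 - l) (j := m - 3) (by omega) (by omega) (by omega)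
      have p := H.pos (m - 3 - l) (by omega) (by omega)
      have hl3 : (0 : ℝ) ≤ l := Nat.cast_nonneg l
      rw [abs_mul, abs_of_nonneg (mul_nonneg (by linarith : (0 : ℝ) ≤ (m : ℝ) - 3 - l) p.le)]
      gcongr
      linarith
    refine (Finset.sum_le_sum this).trans ?_
    rw [← Finset.sum_mul]
    have := h.sumA.le
    gcongr
  have hsb : |∑ l ∈ Finset.range 13, coeff (l + 3) (Bop s (Tr s 13)) *
        aS s (m - 3 - l)| ≤ 0.008 * lam s * aS s (m - 3) := by
    refine (Finset.abs_sum_le_sum_abs _ _).trans ?_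
    have : ∀ l ∈ Finset.range 13, |coeff (l + 3) (Bop s (Tr s 13)) *
        aS s (m - 3 - l)| ≤ |coeff (l + 3) (Bop s (Tr s 13))| * aS s (m - 3) := by
      intro l hl
      have hl' := Finset.mem_range.1 hl
      have g := grow_mono h H (i := m - 3 - l) (j := m - 3) (by omega) (by omega) (by omega)
      have p := H.pos (m - 3 - l) (by omega) (by omega)
      rw [abs_mul, abs_of_pos p]
      gcongr
    refine (Finset.sum_le_sum this).trans ?_
    rw [← Finset.sum_mul]
    have := h.sumB.le
    gcongr
  have hns := num_split (s := s) hm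
  have hcast1 : ((m - 1 : ℕ) : ℝ) = m - 1 := by rw [Nat.cast_sub (by omega)]; simp
  have hcast2 : ((m - 2 : ℕ) : ℝ) = m - 2 := by rw [Nat.cast_sub (by omega)]; simp
  have hw8 : 8.5 * aS s (m - 13) ≤ aS s (m - 3) := by
    refine le_trans ?_ hw1
    gcongr
    norm_num
  have hrem := rem_core hM hlam hw8 pw hsa hsb hq
  rw [hcast1] at hup
  have hL1 : Lb (m - 1) = 0.0039 * m + 0.6961 := by rw [Lb, hcast1]; ring
  have hL2 : Lb (m - 2) = 0.0039 * m + 0.6922 := by rw [Lb, hcast2]; ring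
  have hU1 : Ub (m - 1) = 0.0068 * m + 0.7132 := by rw [Ub, hcast1]; ring
  rw [hL1] at hx1
  rw [hL2] at hy1
  rw [hU1] at hup
  have := num_core hM h.lam_pos h.mu0 px py pw h.k_big h.A2.1 h.A2.2 h.A3.1 h.A3.2 h.B1.1 h.B1.2
    h.B2.1 h.B2.2 hx1 hy1 hup hrem
  rw [hns, show Lb m = 0.0039 * m + 0.7 from rfl, show Ub m = 0.0068 * m + 0.72 from rfl]
  constructor <;> linarith [this.1, this.2]

lemma hyp_of_lt {s : ℝ} (h : Good s) (M : ℕ) (hM : mu s * M < lam s) : Hyp s M := by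
  rcases Nat.lt_or_ge M 150 with hlt | hge
  · exact ⟨fun j h1 h2 => h.pos j h1 (by omega), fun j h1 h2 => (h.up j h1 (by omega)).le,
      fun j h1 h2 => (h.low j h1 (by omega)).le⟩
  induction M, hge using Nat.le_induction with
  | base => exact ⟨h.pos, fun j h1 h2 => (h.up j h1 h2).le, fun j h1 h2 => (h.low j h1 h2).le⟩
  | succ M hM' ih =>
    have hk : mu s * M < lam s := by have := h.mu0; push_cast at hM; nlinarith
    have H := ih hk
    obtain ⟨b1, b2⟩ := num_bounds h (m := M + 1) (by omega) (by simpa using hk) (by simpa using H)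
    rw [show M + 1 - 1 = M from rfl] at b1 b2
    have he := gap_pos h hM le_rfl
    have ha : (lam s - mu s * ((M + 1 : ℕ) : ℝ)) * aS s (M + 1) = num s (M + 1) := by
      rw [aS_eq s (by omega)]; field_simp
    have hpos : 0 < aS s (M + 1) := by
      have h1 := H.pos M (by omega) le_rfl
      have h2 : 0 < lam s * Lb (M + 1) * aS s M := by
        have := h.lam_pos
        unfold Lb; positivity
      exact pos_of_mul_pos_right (by rw [ha]; linarith) he.le
    refine ⟨fun j h1 h2 => ?_, fun j h1 h2 => ?_, fun j h1 h2 => ?_⟩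
    all_goals rcases Nat.lt_or_ge j (M + 1) with hj | hj
    · exact H.pos j h1 (by omega)
    · obtain rfl : j = M + 1 := by omega
      exact hpos
    · exact H.up j h1 (by omega)
    · obtain rfl : j = M + 1 := by omega
      rw [ha]; exact b2
    · exact H.low j h1 (by omega)
    · obtain rfl : j = M + 1 := by omega
      rw [ha]; exact b1

/-! ### A majorant for quadratic recursions -/

/-- The comparison sequence `R ^ m / m ^ 2`. -/
def Fm (R : ℝ) (m : ℕ) : ℝ := R ^ m / (m : ℝ) ^ 2

lemma Fm_nonneg {R : ℝ} (hR : 0 ≤ R) (m : ℕ) : 0 ≤ Fm R m := by unfold Fm; positivity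

lemma Fm_sum {R : ℝ} (hR : 8 ≤ R) (m : ℕ) (hm : 1 ≤ m) :
    ∑ p ∈ Finset.range m, Fm R p ≤ 8 / R * Fm R m := by
  induction m, hm using Nat.le_induction with
  | base => simp [Fm]; positivity
  | succ m hm ih =>
    rw [Finset.sum_range_succ]
    have h1 : 8 / R ≤ 1 := by rw [div_le_one (by linarith)]; exact hR
    have h2 := Fm_nonneg (by linarith : 0 ≤ R) m
    have h3 : 2 * Fm R m ≤ 8 / R * Fm R (m + 1) := by
      have hm' : (1 : ℝ) ≤ m := by exact_mod_cast hm
      have e : 8 / R * Fm R (m + 1) = R ^ m * (8 / ((m : ℝ) + 1) ^ 2) := by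
        unfold Fm; push_cast; field_simp; ring
      rw [e, Fm, ← mul_div_assoc, mul_comm 2, mul_div_assoc]
      refine mul_le_mul_of_nonneg_left ?_ (by positivity)
      rw [div_le_div_iff₀ (by positivity) (by positivity)]
      nlinarith
    nlinarith

lemma Fm_ge {R : ℝ} (hR : 8 ≤ R) (m : ℕ) (hm : 1 ≤ m) : R ≤ Fm R m := by
  induction m, hm using Nat.le_induction with
  | base => simp [Fm]
  | succ m hm ih =>
    have h := Fm_sum hR (m + 1) (by omega)
    have h0 : Fm R m ≤ ∑ p ∈ Finset.range (m + 1), Fm R p :=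
      Finset.single_le_sum (fun i _ => Fm_nonneg (by linarith) i) (by simp)
    have h1 : 8 / R ≤ 1 := by rw [div_le_one (by linarith)]; exact hR
    have := Fm_nonneg (by linarith : 0 ≤ R) (m + 1)
    nlinarith

lemma inv_sq_sum (m : ℕ) : ∑ i ∈ Finset.range m, (1 : ℝ) / (i : ℝ) ^ 2 ≤ 2 := by
  have key : ∀ m : ℕ, ∑ i ∈ Finset.range (m + 2), (1 : ℝ) / (i : ℝ) ^ 2 ≤ 2 - 1 / (m + 1) := by
    intro m
    induction m with
    | zero => norm_num [Finset.sum_range_succ]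
    | succ m ih =>
      rw [show m + 1 + 2 = (m + 2) + 1 from rfl, Finset.sum_range_succ]
      have e : (1 : ℝ) / ((m + 2 : ℕ) : ℝ) ^ 2 ≤ 1 / (m + 1 : ℝ) - 1 / ((m + 1 : ℕ) + 1 : ℝ) := by
        push_cast
        rw [div_sub_div _ _ (by positivity) (by positivity),
          div_le_div_iff₀ (by positivity) (by positivity)]
        nlinarith [(Nat.cast_nonneg m : (0 : ℝ) ≤ m)]
      linarith
  have h1 : ∑ i ∈ Finset.range m, (1 : ℝ) / (i : ℝ) ^ 2
      ≤ ∑ i ∈ Finset.range (m + 2), (1 : ℝ) / (i : ℝ) ^ 2 :=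
    Finset.sum_le_sum_of_subset_of_nonneg (by simp) (fun i _ _ => by positivity)
  have h2 := key m
  have h3 : (0 : ℝ) ≤ 1 / (m + 1) := by positivity
  linarith

/-- Truncated double sum of a sequence. -/
def dsum (b : ℕ → ℝ) (m : ℕ) : ℝ :=
  ∑ i ∈ Finset.range m, ∑ j ∈ Finset.range m, if i + j ≤ m then b i * b j else 0

lemma Fm_mul {R : ℝ} (hR : 0 ≤ R) (i j : ℕ) : Fm R i * Fm R j
    ≤ 2 * (1 / (i : ℝ) ^ 2) * Fm R (i + j) + 2 * (1 / (j : ℝ) ^ 2) * Fm R (i + j) := by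
  have hF := Fm_nonneg hR (i + j)
  rcases Nat.eq_zero_or_pos i with rfl | hi
  · have : Fm R 0 = 0 := by simp [Fm]
    rw [this, zero_mul]; positivity
  rcases Nat.eq_zero_or_pos j with rfl | hj
  · have : Fm R 0 = 0 := by simp [Fm]
    rw [this, mul_zero]; positivity
  have hi' : (0 : ℝ) < i := by exact_mod_cast hi
  have hj' : (0 : ℝ) < j := by exact_mod_cast hj
  unfold Fm
  have e1 : R ^ i / (i : ℝ) ^ 2 * (R ^ j / (j : ℝ) ^ 2)
      = R ^ (i + j) * (1 / ((i : ℝ) ^ 2 * (j : ℝ) ^ 2)) := by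
    rw [pow_add]; field_simp
  have e2 : 2 * (1 / (i : ℝ) ^ 2) * (R ^ (i + j) / ((i + j : ℕ) : ℝ) ^ 2)
      + 2 * (1 / (j : ℝ) ^ 2) * (R ^ (i + j) / ((i + j : ℕ) : ℝ) ^ 2)
      = R ^ (i + j) * ((2 * ((i : ℝ) ^ 2 + (j : ℝ) ^ 2) / ((i : ℝ) + j) ^ 2)
        * (1 / ((i : ℝ) ^ 2 * (j : ℝ) ^ 2))) := by
    push_cast; field_simp; ring
  rw [e1, e2]
  gcongr
  refine le_mul_of_one_le_left (by positivity) ?_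
  rw [le_div_iff₀ (by positivity)]
  nlinarith [sq_nonneg ((i : ℝ) - j)]

lemma dsum_Fm {R : ℝ} (hR : 8 ≤ R) (m : ℕ) (hm : 1 ≤ m) : dsum (Fm R) m ≤ 16 * Fm R m := by
  have hR0 : 0 ≤ R := by linarith
  have hF := Fm_nonneg hR0 m
  have hS : ∀ i : ℕ, ∑ j ∈ Finset.range m, (if i + j ≤ m then Fm R (i + j) else 0)
      ≤ 2 * Fm R m := by
    intro i
    have h1 : ∑ j ∈ Finset.range m, (if i + j ≤ m then Fm R (i + j) else 0)
        ≤ ∑ p ∈ Finset.range (m + 1), Fm R p := by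
      rw [← Finset.sum_filter, ← Finset.sum_image (f := fun p => Fm R p) (g := fun j => i + j)
        (fun a _ b _ h => by simpa using h)]
      refine Finset.sum_le_sum_of_subset_of_nonneg ?_ (fun p _ _ => Fm_nonneg hR0 p)
      intro p hp
      simp only [Finset.mem_image, Finset.mem_filter, Finset.mem_range] at hp ⊢
      obtain ⟨j, hj, rfl⟩ := hp
      omega
    rw [Finset.sum_range_succ] at h1
    have h2 := Fm_sum hR m hm
    have h3 : 8 / R ≤ 1 := by rw [div_le_one (by linarith)]; exact hR
    nlinarith
  have hT : ∑ i ∈ Finset.range m, ∑ j ∈ Finset.range m,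
      (if i + j ≤ m then 2 * (1 / (i : ℝ) ^ 2) * Fm R (i + j) else 0) ≤ 8 * Fm R m := by
    have : ∀ i ∈ Finset.range m, ∑ j ∈ Finset.range m,
        (if i + j ≤ m then 2 * (1 / (i : ℝ) ^ 2) * Fm R (i + j) else 0)
        ≤ (1 / (i : ℝ) ^ 2) * (4 * Fm R m) := by
      intro i _
      have e : ∑ j ∈ Finset.range m, (if i + j ≤ m then 2 * (1 / (i : ℝ) ^ 2) * Fm R (i + j) else 0)
          = 2 * (1 / (i : ℝ) ^ 2) * ∑ j ∈ Finset.range m, (if i + j ≤ m then Fm R (i + j) else 0) := by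
        rw [Finset.mul_sum]; exact Finset.sum_congr rfl fun j _ => by split_ifs <;> simp
      rw [e]
      have := mul_le_mul_of_nonneg_left (hS i) (by positivity : 0 ≤ 2 * (1 / (i : ℝ) ^ 2))
      linarith
    refine (Finset.sum_le_sum this).trans ?_
    rw [← Finset.sum_mul]
    have := inv_sq_sum m
    nlinarith
  have hT' : ∑ i ∈ Finset.range m, ∑ j ∈ Finset.range m,
      (if i + j ≤ m then 2 * (1 / (j : ℝ) ^ 2) * Fm R (i + j) else 0) ≤ 8 * Fm R m := by
    rw [Finset.sum_comm]
    refine le_trans (le_of_eq ?_) hT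
    refine Finset.sum_congr rfl fun i _ => Finset.sum_congr rfl fun j _ => ?_
    rw [add_comm j i]
  have : dsum (Fm R) m ≤ (∑ i ∈ Finset.range m, ∑ j ∈ Finset.range m,
      (if i + j ≤ m then 2 * (1 / (i : ℝ) ^ 2) * Fm R (i + j) else 0))
      + ∑ i ∈ Finset.range m, ∑ j ∈ Finset.range m,
      (if i + j ≤ m then 2 * (1 / (j : ℝ) ^ 2) * Fm R (i + j) else 0) := by
    unfold dsum
    rw [← Finset.sum_add_distrib]
    refine Finset.sum_le_sum fun i _ => ?_
    rw [← Finset.sum_add_distrib]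
    refine Finset.sum_le_sum fun j _ => ?_
    split_ifs
    · exact Fm_mul hR0 i j
    · simp
  linarith

lemma dsum_mono {b c : ℕ → ℝ} {m : ℕ} (hb : ∀ i, 0 ≤ b i) (h : ∀ i < m, b i ≤ c i) :
    dsum b m ≤ dsum c m := by
  unfold dsum
  refine Finset.sum_le_sum fun i hi => Finset.sum_le_sum fun j hj => ?_
  rw [Finset.mem_range] at hi hj
  split_ifs
  · exact mul_le_mul (h i hi) (h j hj) (hb j) ((hb i).trans (h i hi))
  · exact le_rfl

/-- A quadratic recursive inequality forces at most geometric growth. -/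
lemma majorant0 {C : ℝ} (hC : 1 ≤ C) {b : ℕ → ℝ} (hb : ∀ i, 0 ≤ b i) (h0 : b 0 = 0)
    (h : ∀ m, 1 ≤ m → b m ≤ C * (1 + ∑ i ∈ Finset.range m, b i + dsum b m)) (m : ℕ) :
    b m ≤ (144 * C ^ 2) ^ m := by
  have hR : 8 ≤ 144 * C ^ 2 := by nlinarith
  have hR0 : 0 ≤ 144 * C ^ 2 := by linarith
  have key : ∀ m, b m ≤ 1 / (48 * C) * Fm (144 * C ^ 2) m := by
    intro m
    induction m using Nat.strong_induction_on with
    | _ m ih =>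
      rcases Nat.eq_zero_or_pos m with rfl | hm
      · simp [h0, Fm]
      have hF := Fm_ge hR m hm
      have hs := Fm_sum hR m hm
      have h1 : ∑ i ∈ Finset.range m, b i ≤ 1 / (48 * C) * (8 / (144 * C ^ 2) * Fm (144 * C ^ 2) m) := by
        refine (Finset.sum_le_sum fun i hi => ih i (Finset.mem_range.1 hi)).trans ?_
        rw [← Finset.mul_sum]
        exact mul_le_mul_of_nonneg_left hs (by positivity)
      have h2 : dsum b m ≤ (1 / (48 * C)) ^ 2 * (16 * Fm (144 * C ^ 2) m) := by
        refine (dsum_mono hb (fun i hi => ih i hi)).trans ?_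
        have e : dsum (fun i => 1 / (48 * C) * Fm (144 * C ^ 2) i) m
            = (1 / (48 * C)) ^ 2 * dsum (Fm (144 * C ^ 2)) m := by
          unfold dsum
          rw [Finset.mul_sum]
          refine Finset.sum_congr rfl fun i _ => ?_
          rw [Finset.mul_sum]
          refine Finset.sum_congr rfl fun j _ => ?_
          split_ifs
          · ring
          · simp
        rw [e]
        exact mul_le_mul_of_nonneg_left (dsum_Fm hR m hm) (by positivity)
      refine (h m hm).trans ?_
      generalize Fm (144 * C ^ 2) m = F at *
      have hC0 : 0 < C := by linarith
      have hF0 : 0 ≤ F := by linarith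
      have g1 : C ≤ 1 / 3 * (1 / (48 * C) * F) := by
        have : C = 1 / 3 * (1 / (48 * C) * (144 * C ^ 2)) := by field_simp; norm_num
        refine this.le.trans ?_
        gcongr
      have g2 : C * (1 / (48 * C) * (8 / (144 * C ^ 2) * F)) ≤ 1 / 3 * (1 / (48 * C) * F) := by
        have : C * (1 / (48 * C) * (8 / (144 * C ^ 2) * F))
          = (1 / (18 * C)) * (1 / (48 * C) * F) := by field_simp; ring
        rw [this]
        have : 1 / (18 * C) ≤ 1 / 3 := by
          apply one_div_le_one_div_of_le <;> linarith
        gcongr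
      have g3 : C * ((1 / (48 * C)) ^ 2 * (16 * F)) = 1 / 3 * (1 / (48 * C) * F) := by
        field_simp; ring
      have k1 := mul_le_mul_of_nonneg_left h1 hC0.le
      have k2 := mul_le_mul_of_nonneg_left h2 hC0.le
      linarith
  have h1 := key m
  have h2 : Fm (144 * C ^ 2) m ≤ (144 * C ^ 2) ^ m := by
    unfold Fm
    rcases Nat.eq_zero_or_pos m with rfl | hm
    · simp
    · refine div_le_self (by positivity) ?_
      have : (1 : ℝ) ≤ m := by exact_mod_cast hm
      nlinarith
  have h3 : 1 / (48 * C) ≤ 1 := by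
    rw [div_le_one (by linarith)]; linarith
  have h4 := Fm_nonneg hR0 m
  nlinarith

/-- Version of `majorant0` in which the zeroth entry is merely bounded. -/
lemma majorant {C : ℝ} (hC : 1 ≤ C) {b : ℕ → ℝ} (hb : ∀ i, 0 ≤ b i) (h0 : b 0 ≤ C)
    (h : ∀ m, 1 ≤ m → b m ≤ C * (1 + ∑ i ∈ Finset.range m, b i + dsum b m)) :
    ∀ m, b m ≤ (144 * (8 * C ^ 3) ^ 2) ^ (m + 1) := by
  -- the shifted sequence with a vanishing zeroth entry
  have hC3 : 1 ≤ 8 * C ^ 3 := by nlinarith [one_le_pow₀ (n := 3) hC]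
  have hz : ∀ m, (if m = 0 then 0 else b m) ≤ (144 * (8 * C ^ 3) ^ 2) ^ m := by
    refine majorant0 hC3 (b := fun m => if m = 0 then 0 else b m)
      (fun i => by split_ifs; exacts [le_rfl, hb i]) (by simp) ?_
    intro m hm
    rw [if_neg (by omega)]
    have e1 : ∑ i ∈ Finset.range m, b i
        = b 0 + ∑ i ∈ Finset.range m, (if i = 0 then 0 else b i) := by
      obtain ⟨p, rfl⟩ : ∃ p, m = p + 1 := ⟨m - 1, by omega⟩
      rw [Finset.sum_range_succ', Finset.sum_range_succ' (fun i => if i = 0 then 0 else b i)]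
      simp [add_comm]
    have e2 : dsum b m ≤ dsum (fun m => if m = 0 then 0 else b m) m
        + 2 * (b 0 * ∑ i ∈ Finset.range m, b i) := by
      have : dsum b m ≤ ∑ i ∈ Finset.range m, ∑ j ∈ Finset.range m,
          ((if i + j ≤ m then (if i = 0 then 0 else b i) * (if j = 0 then 0 else b j) else 0)
          + (if i = 0 then b 0 * b j else 0) + (if j = 0 then b i * b 0 else 0)) := by
        unfold dsum
        refine Finset.sum_le_sum fun i _ => Finset.sum_le_sum fun j _ => ?_
        have hi := hb i
        have hj := hb j
        have h00 := hb 0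
        by_cases hi0 : i = 0
        · subst hi0
          have p1 := mul_nonneg h00 hj
          have p2 : (0 : ℝ) ≤ if j = 0 then b 0 * b 0 else 0 := by
            split_ifs
            · exact mul_nonneg h00 h00
            · exact le_rfl
          by_cases hc : 0 + j ≤ m
          · simp only [if_pos hc, if_true, zero_mul]; linarith
          · simp only [if_neg hc, if_true]; linarith
        · by_cases hj0 : j = 0
          · subst hj0
            have p1 := mul_nonneg hi h00
            by_cases hc : i + 0 ≤ m
            · simp only [if_pos hc, if_true, if_neg hi0, mul_zero]; linarith
            · simp only [if_neg hc, if_true, if_neg hi0]; linarith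
          · simp only [if_neg hi0, if_neg hj0]; linarith
      refine this.trans (le_of_eq ?_)
      simp only [Finset.sum_add_distrib]
      unfold dsum
      have hm0 : 0 ∈ Finset.range m := Finset.mem_range.2 hm
      have a1 : ∑ i ∈ Finset.range m, ∑ j ∈ Finset.range m, (if i = 0 then b 0 * b j else 0)
          = b 0 * ∑ i ∈ Finset.range m, b i := by
        rw [Finset.sum_eq_single_of_mem 0 hm0]
        · simp [Finset.mul_sum]
        · intro i _ hi; simp [hi]
      have a2 : ∑ i ∈ Finset.range m, ∑ j ∈ Finset.range m, (if j = 0 then b i * b 0 else 0)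
          = b 0 * ∑ i ∈ Finset.range m, b i := by
        rw [Finset.mul_sum]
        refine Finset.sum_congr rfl fun i _ => ?_
        rw [Finset.sum_eq_single_of_mem 0 hm0]
        · simp [mul_comm]
        · intro j _ hj; simp [hj]
      rw [a1, a2]; ring
    have hS : 0 ≤ ∑ i ∈ Finset.range m, (if i = 0 then 0 else b i) :=
      Finset.sum_nonneg fun i _ => by split_ifs; exacts [le_rfl, hb i]
    have hD : 0 ≤ dsum (fun m => if m = 0 then 0 else b m) m := by
      unfold dsum
      refine Finset.sum_nonneg fun i _ => Finset.sum_nonneg fun j _ => ?_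
      have hz : ∀ i, (0 : ℝ) ≤ if i = 0 then 0 else b i := fun i => by
        split_ifs; exacts [le_rfl, hb i]
      by_cases hc : i + j ≤ m
      · rw [if_pos hc]; exact mul_nonneg (hz i) (hz j)
      · rw [if_neg hc]
    have hm' := h m hm
    have h00 := hb 0
    rw [e1] at hm' e2
    generalize ∑ i ∈ Finset.range m, (if i = 0 then 0 else b i) = S at *
    generalize dsum (fun m => if m = 0 then 0 else b m) m = D at *
    refine hm'.trans ?_
    have q : 1 + (b 0 + S) + dsum b m ≤ 8 * C ^ 2 * (1 + S + D) := by
      have p1 : b 0 * S ≤ C * S := mul_le_mul_of_nonneg_right h0 hS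
      have p2 : b 0 * b 0 ≤ C ^ 2 := by nlinarith
      have p3 : C ≤ C ^ 2 := by nlinarith
      have p4 : C * S ≤ C ^ 2 * S := mul_le_mul_of_nonneg_right p3 hS
      have p5 : 1 * D ≤ C ^ 2 * D := mul_le_mul_of_nonneg_right (by nlinarith) hD
      have p6 : 1 * S ≤ C ^ 2 * S := mul_le_mul_of_nonneg_right (by nlinarith) hS
      nlinarith
    calc C * (1 + (b 0 + S) + dsum b m) ≤ C * (8 * C ^ 2 * (1 + S + D)) :=
          mul_le_mul_of_nonneg_left q (by linarith)
      _ = 8 * C ^ 3 * (1 + S + D) := by ring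
  have hR1 : 1 ≤ 144 * (8 * C ^ 3) ^ 2 := by nlinarith
  intro m
  rcases Nat.eq_zero_or_pos m with rfl | hm
  · refine h0.trans ?_
    have : C ≤ 8 * C ^ 3 := by nlinarith [sq_nonneg (C - 1), mul_self_nonneg C]
    rw [zero_add, pow_one]; nlinarith
  · have := hz m
    rw [if_neg (by omega)] at this
    exact this.trans (pow_le_pow_right₀ hR1 (by omega))

/-! ### Convergence of the formal solution at the sonic point -/

lemma gap_unif {K : Set ℝ} (hK : IsCompact K) (hKD : K ⊆ Dm) (n : ℕ)
    (hg : ∀ s ∈ K, mu s * n < lam s ∧ lam s < mu s * (n + 1)) :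
    ∃ c > 0, ∀ s ∈ K, ∀ m : ℕ, 1 ≤ m → c * m ≤ |lam s - mu s * m| := by
  rcases K.eq_empty_or_nonempty with rfl | hne
  · exact ⟨1, one_pos, by simp⟩
  have hlam := lam_cont.mono hKD
  have hmu := mu_cont.mono hKD
  obtain ⟨s0, hs0, hmin⟩ := hK.exists_isMinOn hne
    (f := fun s => min (lam s - mu s * n) (mu s * (n + 1) - lam s)) (by fun_prop)
  set δ := min (lam s0 - mu s0 * n) (mu s0 * (n + 1) - lam s0) with hδ
  have hδ0 : 0 < δ := lt_min (by linarith [(hg s0 hs0).1]) (by linarith [(hg s0 hs0).2])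
  refine ⟨δ / (n + 1), by positivity, fun s hs m hm => ?_⟩
  have h1 : δ ≤ min (lam s - mu s * n) (mu s * (n + 1) - lam s) := hmin hs
  have h2 := h1.trans (min_le_left _ _)
  have h3 := h1.trans (min_le_right _ _)
  have hl := lam_pos (hKD hs)
  have hmu0 := mu_nonneg (hKD hs)
  have hn1 : (0 : ℝ) < n + 1 := by positivity
  rw [div_mul_eq_mul_div, div_le_iff₀ hn1]
  rcases Nat.lt_or_ge n m with hlt | hge
  · have hm' : ((n : ℝ) + 1) ≤ m := by exact_mod_cast hlt
    have h4 : (mu s * m - lam s) ≤ |lam s - mu s * m| := by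
      rw [abs_sub_comm]; exact le_abs_self _
    have h5 : δ * m ≤ (mu s * (n + 1) - lam s) * m :=
      mul_le_mul_of_nonneg_right h3 (by positivity)
    have h6 := mul_le_mul_of_nonneg_right h4 hn1.le
    have h7 : lam s * ((n : ℝ) + 1) ≤ lam s * m :=
      mul_le_mul_of_nonneg_left hm' (by linarith)
    nlinarith
  · have hm' : (m : ℝ) ≤ n := by exact_mod_cast hge
    have h4 : lam s - mu s * m ≤ |lam s - mu s * m| := le_abs_self _
    have h5 : mu s * m ≤ mu s * n := mul_le_mul_of_nonneg_left hm' hmu0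
    have h6 : δ ≤ |lam s - mu s * m| := by linarith
    calc δ * m ≤ δ * (n + 1) := mul_le_mul_of_nonneg_left (by linarith) hδ0.le
      _ ≤ _ := mul_le_mul_of_nonneg_right h6 hn1.le

lemma sq_coeff_le {Y : PowerSeries ℝ} {b : ℕ → ℝ} {M : ℕ} (h0 : coeff 0 Y = 0)
    (hb : ∀ i, 0 ≤ b i)
    (h1 : ∀ i, i < M → |coeff (i + 1) Y| ≤ b i)
    (h2 : ∀ i, M ≤ i → coeff (i + 1) Y = 0) {p : ℕ} (hp : p ≤ M + 2) :
    |coeff p (Y ^ 2)| ≤ dsum b M := by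
  rw [sq, coeff_mul]
  refine (Finset.abs_sum_le_sum_abs _ _).trans ?_
  have hd : dsum b M = ∑ q ∈ Finset.range M ×ˢ Finset.range M,
      if q.1 + q.2 ≤ M then b q.1 * b q.2 else 0 := by
    rw [dsum, Finset.sum_product]
  rw [hd]
  -- only the pairs with both indices between `1` and `M` contribute
  have hsub : ∑ x ∈ Finset.HasAntidiagonal.antidiagonal p,
      |coeff x.1 Y * coeff x.2 Y|
      = ∑ x ∈ (Finset.HasAntidiagonal.antidiagonal p).filter
        (fun x => 1 ≤ x.1 ∧ 1 ≤ x.2 ∧ x.1 ≤ M ∧ x.2 ≤ M),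
      |coeff x.1 Y * coeff x.2 Y| := by
    symm
    refine Finset.sum_filter_of_ne fun x _ hx => ?_
    by_contra hcon
    apply hx
    rw [abs_eq_zero, mul_eq_zero]
    by_cases c1 : x.1 = 0
    · left; rw [c1, h0]
    by_cases c2 : x.2 = 0
    · right; rw [c2, h0]
    by_cases c3 : M < x.1
    · left; obtain ⟨i, hi⟩ : ∃ i, x.1 = i + 1 := ⟨x.1 - 1, by omega⟩
      rw [hi]; exact h2 i (by omega)
    by_cases c4 : M < x.2
    · right; obtain ⟨i, hi⟩ : ∃ i, x.2 = i + 1 := ⟨x.2 - 1, by omega⟩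
      rw [hi]; exact h2 i (by omega)
    exact absurd ⟨by omega, by omega, by omega, by omega⟩ hcon
  rw [hsub]
  refine le_trans ?_ (Finset.sum_le_sum_of_subset_of_nonneg
    (s := ((Finset.HasAntidiagonal.antidiagonal p).filter
        (fun x => 1 ≤ x.1 ∧ 1 ≤ x.2 ∧ x.1 ≤ M ∧ x.2 ≤ M)).image (fun x => (x.1 - 1, x.2 - 1)))
    ?_ ?_)
  · rw [Finset.sum_image]
    · refine Finset.sum_le_sum fun x hx => ?_
      simp only [Finset.mem_filter, Finset.HasAntidiagonal.mem_antidiagonal] at hx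
      obtain ⟨hx0, hx1, hx2, hx3, hx4⟩ := hx
      rw [if_pos (by omega), abs_mul]
      have e1 := h1 (x.1 - 1) (by omega)
      have e2 := h1 (x.2 - 1) (by omega)
      rw [Nat.sub_add_cancel hx1] at e1
      rw [Nat.sub_add_cancel hx2] at e2
      exact mul_le_mul e1 e2 (abs_nonneg _) (hb _)
    · intro x hx y hy hxy
      simp only [Finset.coe_filter, Finset.HasAntidiagonal.mem_antidiagonal, Set.mem_ofPred_eq] at hx hy
      simp only [Prod.mk.injEq] at hxy
      ext <;> omega
  · intro q hq
    simp only [Finset.mem_image, Finset.mem_filter, Finset.HasAntidiagonal.mem_antidiagonal] at hq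
    obtain ⟨x, hx, rfl⟩ := hq
    simp only [Finset.mem_product, Finset.mem_range]
    omega
  · intro q _ _
    split_ifs
    · exact mul_nonneg (hb _) (hb _)
    · exact le_rfl

lemma num_le {K0 S1 S2 x : ℝ} (hx : 0 ≤ x) {p1 p2 p3 k0 k1 k2 k3 l0 l1 l2 e r : ℝ}
    (hK : |p1| + |p2| + |p3| + |k0| + |k1| + |k2| + |k3| + |l0| + |l1| + |l2| + |e| + |r| ≤ K0)
    {y1 y2 z1 z2 z3 z4 : ℝ} (hy1 : |y1| ≤ S1) (hy2 : |y2| ≤ S1)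
    (hz1 : |z1| ≤ S2) (hz2 : |z2| ≤ S2) (hz3 : |z3| ≤ S2) (hz4 : |z4| ≤ S2) :
    |p1 * (0 * (x + 3)) + p2 * (y2 * (x + 2)) + p3 * (y1 * (x + 1))
      - 1 / 2 * (k0 * (z4 * (x + 4)) + k1 * (z3 * (x + 3)) + k2 * (z2 * (x + 2))
        + k3 * (z1 * (x + 1)))
      - 2 * (l0 * 0 + l1 * y2 + l2 * y1) + 2 * (l0 * z3 + l1 * z2 + l2 * z1)
      - 12 / 5 * (e * y2 + r * y1)| ≤ 20 * K0 * ((x + 3) * (S1 + S2)) := by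
  have hS1 : 0 ≤ S1 := (abs_nonneg _).trans hy1
  have hS2 : 0 ≤ S2 := (abs_nonneg _).trans hz1
  obtain ⟨Q, hQ⟩ : ∃ Q, Q = (x + 3) * (S1 + S2) := ⟨_, rfl⟩
  have hQ1 : S1 + S2 ≤ Q := by rw [hQ]; nlinarith
  have key : ∀ k y : ℝ, |y| ≤ S1 + S2 → |k * y| ≤ |k| * Q := fun k y h => by
    rw [abs_mul]; exact mul_le_mul_of_nonneg_left (h.trans hQ1) (abs_nonneg _)
  have key2 : ∀ k y t : ℝ, |y| ≤ S1 + S2 → 0 ≤ t → t ≤ 2 * (x + 3) →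
      |k * (y * t)| ≤ 2 * (|k| * Q) := fun k y t h h0 ht => by
    rw [abs_mul, abs_mul, abs_of_nonneg h0]
    calc |k| * (|y| * t) ≤ |k| * ((S1 + S2) * (2 * (x + 3))) := by gcongr
      _ = _ := by rw [hQ]; ring
  have t1 := abs_le.1 (key2 p2 y2 (x + 2) (by linarith) (by linarith) (by linarith))
  have t2 := abs_le.1 (key2 p3 y1 (x + 1) (by linarith) (by linarith) (by linarith))
  have t3 := abs_le.1 (key2 k0 z4 (x + 4) (by linarith) (by linarith) (by linarith))
  have t4 := abs_le.1 (key2 k1 z3 (x + 3) (by linarith) (by linarith) (by linarith))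
  have t5 := abs_le.1 (key2 k2 z2 (x + 2) (by linarith) (by linarith) (by linarith))
  have t6 := abs_le.1 (key2 k3 z1 (x + 1) (by linarith) (by linarith) (by linarith))
  have u1 := abs_le.1 (key l1 y2 (by linarith))
  have u2 := abs_le.1 (key l2 y1 (by linarith))
  have u3 := abs_le.1 (key l0 z3 (by linarith))
  have u4 := abs_le.1 (key l1 z2 (by linarith))
  have u5 := abs_le.1 (key l2 z1 (by linarith))
  have u6 := abs_le.1 (key e y2 (by linarith))
  have u7 := abs_le.1 (key r y1 (by linarith))
  have hQ0 : 0 ≤ Q := by linarith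
  have hKQ := mul_le_mul_of_nonneg_right hK hQ0
  simp only [add_mul] at hKQ
  rw [← hQ]
  have n1 := mul_nonneg (abs_nonneg p1) hQ0
  have n2 := mul_nonneg (abs_nonneg p2) hQ0
  have n3 := mul_nonneg (abs_nonneg p3) hQ0
  have n4 := mul_nonneg (abs_nonneg k0) hQ0
  have n5 := mul_nonneg (abs_nonneg k1) hQ0
  have n6 := mul_nonneg (abs_nonneg k2) hQ0
  have n7 := mul_nonneg (abs_nonneg k3) hQ0
  have n8 := mul_nonneg (abs_nonneg l0) hQ0
  have n9 := mul_nonneg (abs_nonneg l1) hQ0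
  have n10 := mul_nonneg (abs_nonneg l2) hQ0
  have n11 := mul_nonneg (abs_nonneg e) hQ0
  have n12 := mul_nonneg (abs_nonneg r) hQ0
  clear hK hy1 hy2 hz1 hz2 hz3 hz4 key key2 hQ hQ1 hS1 hS2
  generalize p2 * (y2 * (x + 2)) = T1 at *
  generalize p3 * (y1 * (x + 1)) = T2 at *
  generalize k0 * (z4 * (x + 4)) = T3 at *
  generalize k1 * (z3 * (x + 3)) = T4 at *
  generalize k2 * (z2 * (x + 2)) = T5 at *
  generalize k3 * (z1 * (x + 1)) = T6 at *
  generalize l1 * y2 = U1 at *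
  generalize l2 * y1 = U2 at *
  generalize l0 * z3 = U3 at *
  generalize l1 * z2 = U4 at *
  generalize l2 * z1 = U5 at *
  generalize e * y2 = U6 at *
  generalize r * y1 = U7 at *
  simp only [zero_mul, mul_zero, zero_add, mul_assoc] at *
  generalize |p1| * Q = q1 at *
  generalize |p2| * Q = q2 at *
  generalize |p3| * Q = q3 at *
  generalize |k0| * Q = q4 at *
  generalize |k1| * Q = q5 at *
  generalize |k2| * Q = q6 at *
  generalize |k3| * Q = q7 at *
  generalize |l0| * Q = q8 at *
  generalize |l1| * Q = q9 at *
  generalize |l2| * Q = q10 at *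
  generalize |e| * Q = q11 at *
  generalize |r| * Q = q12 at *
  generalize K0 * Q = q13 at *
  rw [abs_le]
  constructor <;> linarith

/-- Uniform geometric growth of the coefficients while the eigenvalue ratio stays strictly between
two consecutive integers. -/
lemma aS_geom {K : Set ℝ} (hK : IsCompact K) (hKD : K ⊆ Dm) (n : ℕ)
    (hg : ∀ s ∈ K, mu s * n < lam s ∧ lam s < mu s * (n + 1)) :
    ∃ R : ℝ, 1 ≤ R ∧ ∀ s ∈ K, ∀ m, |aS s m| ≤ R ^ m := by
  obtain ⟨c, hc, hgap⟩ := gap_unif hK hKD n hg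
  have hne : ∀ s ∈ K, ∀ m : ℕ, 1 ≤ m → lam s - mu s * m ≠ 0 := fun s hs m hm h0 => by
    have := hgap s hs m hm
    rw [h0, abs_zero] at this
    have hm' : (1 : ℝ) ≤ m := by exact_mod_cast hm
    nlinarith
  obtain ⟨K0, hK0⟩ : ∃ K0, ∀ s ∈ K, ‖|pp1 s| + |pp2 s| + |pp3 s| + |ka0 s| + |ka1 s| + |ka2 s|
      + |ka3 s| + |al0 s| + |al1 s| + |al2 s| + |rho s * eps s| + |rho s|‖ ≤ K0 := by
    refine hK.exists_bound_of_continuousOn ?_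
    have e1 := pp1_cont.mono hKD
    have e2 := pp2_cont.mono hKD
    have e3 := pp3_cont.mono hKD
    have e4 := ka0_cont.mono hKD
    have e5 := ka1_cont.mono hKD
    have e6 := ka2_cont.mono hKD
    have e7 := ka3_cont.mono hKD
    have e8 := al0_cont.mono hKD
    have e9 := al1_cont.mono hKD
    have e10 := al2_cont.mono hKD
    have e11 := rho_cont.mono hKD
    have e12 := eps_cont.mono hKD
    fun_prop
  obtain ⟨K2, hK2⟩ : ∃ K2, ∀ s ∈ K, ‖aS s 2‖ ≤ K2 :=
    hK.exists_bound_of_continuousOn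
      (aS_cont hKD 2 (fun j h1 _ s hs => hne s hs j (by omega)))
  rcases K.eq_empty_or_nonempty with rfl | hKne
  · exact ⟨1, le_rfl, by simp⟩
  obtain ⟨s0, hs0⟩ := hKne
  have hK00 : 0 ≤ K0 := (norm_nonneg _).trans (hK0 s0 hs0)
  have hK20 : 0 ≤ K2 := (norm_nonneg _).trans (hK2 s0 hs0)
  obtain ⟨C, hC⟩ : ∃ C, C = 1 + K2 + 20 * K0 / c := ⟨_, rfl⟩
  have hq : 0 ≤ 20 * K0 / c := by positivity
  have hC1 : 1 ≤ C := by linarith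
  refine ⟨144 * (8 * C ^ 3) ^ 2, ?_, fun s hs => ?_⟩
  · nlinarith [one_le_pow₀ (n := 3) hC1]
  have hb : ∀ i, 0 ≤ |aS s (i + 1)| := fun i => abs_nonneg _
  have key := majorant hC1 (b := fun i => |aS s (i + 1)|) hb
    (by rw [zero_add, aS_one, abs_of_nonneg (a1_nonneg (hKD hs))]
        linarith [a1_lt (hKD hs)]) ?_
  · intro m
    rcases Nat.eq_zero_or_pos m with rfl | hm
    · simp [aS_zero]
    · obtain ⟨p, rfl⟩ : ∃ p, m = p + 1 := ⟨m - 1, by omega⟩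
      exact key p
  intro M hM
  have hS0 : 0 ≤ ∑ i ∈ Finset.range M, |aS s (i + 1)| := Finset.sum_nonneg fun i _ => hb i
  have hD0 : 0 ≤ dsum (fun i => |aS s (i + 1)|) M := by
    unfold dsum
    refine Finset.sum_nonneg fun i _ => Finset.sum_nonneg fun j _ => ?_
    split_ifs
    · exact mul_nonneg (hb i) (hb j)
    · exact le_rfl
  rcases Nat.eq_or_lt_of_le hM with rfl | hM2
  · have := hK2 s hs
    rw [Real.norm_eq_abs] at this
    have : C * 1 ≤ C * (1 + ∑ i ∈ Finset.range 1, |aS s (i + 1)| + dsum (fun i => |aS s (i + 1)|) 1) :=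
      mul_le_mul_of_nonneg_left (by linarith) (by linarith)
    show |aS s 2| ≤ _
    linarith
  obtain ⟨p, rfl⟩ : ∃ p, M = p + 2 := ⟨M - 2, by omega⟩
  show |aS s (p + 3)| ≤ _
  have hden : c * ((p : ℝ) + 3) ≤ |lam s - mu s * (p + 3 : ℕ)| := by
    have := hgap s hs (p + 3) (by omega); push_cast at this ⊢; exact this
  have hsingle : ∀ i < p + 2, |aS s (i + 1)| ≤ ∑ i ∈ Finset.range (p + 2), |aS s (i + 1)| :=
    fun i hi => Finset.single_le_sum (f := fun i => |aS s (i + 1)|) (fun i _ => hb i)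
      (Finset.mem_range.2 hi)
  have hz : ∀ q ≤ p + 2 + 2, |coeff q (Tr s (p + 2) ^ 2)|
      ≤ dsum (fun i => |aS s (i + 1)|) (p + 2) := fun q hq =>
    sq_coeff_le (by rw [coeff_Tr, if_pos (by omega), aS_zero]) hb
      (fun i hi => by rw [coeff_Tr, if_pos (by omega)])
      (fun i hi => by rw [coeff_Tr, if_neg (by omega)]) hq
  have hnum : |num s (p + 3)| ≤ 20 * K0 * (((p : ℝ) + 3) *
      (∑ i ∈ Finset.range (p + 2), |aS s (i + 1)| + dsum (fun i => |aS s (i + 1)|) (p + 2))) := by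
    have hk := hK0 s hs
    rw [Real.norm_eq_abs] at hk
    have hnl := num_le (Nat.cast_nonneg p) ((le_abs_self _).trans hk) (hsingle p (by omega))
      (hsingle (p + 1) (by omega)) (hz (p + 1) (by omega)) (hz (p + 2) (by omega))
      (hz (p + 3) (by omega)) (hz (p + 4) (by omega))
    have hform : num s (p + 3) = coeff (p + 3) (Res s (Tr s (p + 2))) := rfl
    rw [hform, coeff_res, coeff_Tr, coeff_Tr, coeff_Tr, if_neg (by omega), if_pos (by omega),
      if_pos (by omega)]
    exact hnl
  rw [aS_eq s (by omega), abs_div]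
  generalize ∑ i ∈ Finset.range (p + 2), |aS s (i + 1)| = S at *
  generalize dsum (fun i => |aS s (i + 1)|) (p + 2) = D at *
  have hp0 : (0 : ℝ) < (p : ℝ) + 3 := by positivity
  calc |num s (p + 3)| / |lam s - mu s * (p + 3 : ℕ)|
      ≤ (20 * K0 * (((p : ℝ) + 3) * (S + D))) / (c * ((p : ℝ) + 3)) := by
        gcongr
    _ = 20 * K0 / c * (S + D) := by field_simp
    _ ≤ C * (1 + S + D) := by
        have : 20 * K0 / c ≤ C := by linarith
        gcongr
        linarith

/-! ### The smooth profile at the centre of symmetry -/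

/-- Weight of the odd and even parts in the transport coefficient. -/
def kW (j : ℕ) : ℝ := if Even j then 1 / 5 else 1

/-- Part of the `m`-th coefficient of the profile equation not involving the `(m + 1)`-st
coefficient of the profile. -/
def restW (ρ : ℝ) (m : ℕ) (f : ℕ → ℝ) : ℝ :=
  (ρ + m) * f m + ∑ i ∈ Finset.range m, kW (i + 1) * f (i + 1) * (f (m - i) * (m - i : ℕ))
    + 2 / 5 * ∑ i ∈ Finset.range m,
      (if Even i then f (i + 1) else 0) * (if Even (m - i) then f (m - i) else 0)

/-- Indicial factor of the profile equation at the centre. -/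
def denW (m : ℕ) : ℝ := (m + 1 : ℝ) + if Even m then 2 else 0

lemma denW_ge (m : ℕ) : (m + 1 : ℝ) ≤ denW m := by
  unfold denW; split_ifs <;> linarith

/-- Truncated coefficient sequences of the profile. -/
def wT (ρ : ℝ) : ℕ → ℕ → ℝ
  | 0 => fun j => if j = 0 then 1 else 0
  | m + 1 => Function.update (wT ρ m) (m + 1) (-(5 * restW ρ m (wT ρ m) / denW m))

/-- Taylor coefficients at the centre of the profile normalised by `𝒲(0) = 1`. -/
def wS (ρ : ℝ) (m : ℕ) : ℝ := wT ρ m m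

lemma wT_le (ρ : ℝ) (m j : ℕ) (h : j ≤ m) : wT ρ m j = wS ρ j := by
  induction m, h using Nat.le_induction with
  | base => rfl
  | succ m h ih => rw [wT, Function.update_of_ne (by omega), ih]

lemma restW_congr {ρ : ℝ} {m : ℕ} {f g : ℕ → ℝ} (h : ∀ j ≤ m, f j = g j) :
    restW ρ m f = restW ρ m g := by
  have h1 : ∑ i ∈ Finset.range m, kW (i + 1) * f (i + 1) * (f (m - i) * ((m - i : ℕ) : ℝ))
      = ∑ i ∈ Finset.range m, kW (i + 1) * g (i + 1) * (g (m - i) * ((m - i : ℕ) : ℝ)) := by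
    refine Finset.sum_congr rfl fun i hi => ?_
    rw [Finset.mem_range] at hi
    rw [h (i + 1) (by omega), h (m - i) (by omega)]
  have h2 : ∑ i ∈ Finset.range m,
      (if Even i then f (i + 1) else 0) * (if Even (m - i) then f (m - i) else 0)
      = ∑ i ∈ Finset.range m,
        (if Even i then g (i + 1) else 0) * (if Even (m - i) then g (m - i) else 0) := by
    refine Finset.sum_congr rfl fun i hi => ?_
    rw [Finset.mem_range] at hi
    rw [h (i + 1) (by omega), h (m - i) (by omega)]
  unfold restW
  rw [h m le_rfl, h1, h2]

lemma wS_zero (ρ : ℝ) : wS ρ 0 = 1 := by simp [wS, wT]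

lemma wS_succ (ρ : ℝ) (m : ℕ) : wS ρ (m + 1) = -(5 * restW ρ m (wS ρ) / denW m) := by
  rw [wS, wT, Function.update_self, restW_congr (fun j hj => wT_le ρ m j hj)]

lemma wS_rec (ρ : ℝ) (m : ℕ) : restW ρ m (wS ρ) + 1 / 5 * denW m * wS ρ (m + 1) = 0 := by
  have : 0 < denW m := lt_of_lt_of_le (by positivity) (denW_ge m)
  rw [wS_succ]; field_simp; ring

lemma wS_cont (m : ℕ) : Continuous (fun ρ => wS ρ m) := by
  induction m using Nat.strong_induction_on with
  | _ m ih =>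
    match m, ih with
    | 0, _ => simp only [wS_zero]; exact continuous_const
    | m + 1, ih =>
      simp only [wS_succ]
      refine ((continuous_const.mul ?_).div_const _).neg
      unfold restW
      refine (((continuous_id.add continuous_const).mul (ih m (by omega))).add ?_).add
        (continuous_const.mul ?_)
      · refine continuous_finsetSum _ fun i hi => ?_
        rw [Finset.mem_range] at hi
        exact (continuous_const.mul (ih (i + 1) (by omega))).mul
          ((ih (m - i) (by omega)).mul continuous_const)
      · refine continuous_finsetSum _ fun i hi => ?_
        rw [Finset.mem_range] at hi
        refine Continuous.mul ?_ ?_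
        · split_ifs
          exacts [ih (i + 1) (by omega), continuous_const]
        · split_ifs
          exacts [ih (m - i) (by omega), continuous_const]

lemma wS_one (ρ : ℝ) : wS ρ 1 = -(5 * ρ / 3) := by
  rw [wS_succ]; simp [restW, denW, wS_zero]; ring

lemma wS_two (ρ : ℝ) : wS ρ 2 = 25 / 6 * ρ * (1 - 2 * ρ / 3) := by
  have h := wS_succ ρ 1
  rw [show 1 + 1 = 2 from rfl] at h
  rw [h]
  simp [restW, denW, wS_one, kW]; ring

lemma wS_three (ρ : ℝ) : wS ρ 3 = -(25 / 3 * ρ * (1 - 5 * ρ / 3) * (1 - 2 * ρ / 3)) := by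
  have h := wS_succ ρ 2
  rw [show 2 + 1 = 3 from rfl] at h
  rw [h]
  have e : ¬ Even (1 : ℕ) := by decide
  have e2 : Even (2 : ℕ) := by decide
  simp [restW, denW, wS_one, wS_two, kW, Finset.sum_range_succ, e, e2]; ring

/-- Uniform geometric growth of the coefficients. -/
lemma wS_geom : ∃ R : ℝ, 1 ≤ R ∧ ∀ ρ : ℝ, |ρ| ≤ 1 → ∀ m, |wS ρ m| ≤ R ^ (m + 1) := by
  refine ⟨144 * (8 * (10 : ℝ) ^ 3) ^ 2, by norm_num, fun ρ hρ => ?_⟩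
  have hb : ∀ i, 0 ≤ |wS ρ i| := fun i => abs_nonneg _
  refine majorant (C := 10) (by norm_num) (b := fun i => |wS ρ i|) hb
    (by rw [wS_zero]; norm_num) ?_
  intro M hM
  obtain ⟨m, rfl⟩ : ∃ m, M = m + 1 := ⟨M - 1, by omega⟩
  have hm0 : (0 : ℝ) ≤ m := Nat.cast_nonneg m
  have hd := denW_ge m
  have hd0 : 0 < denW m := by linarith
  obtain ⟨Q, hQ⟩ : ∃ Q, Q = ∑ i ∈ Finset.range m, |wS ρ (i + 1)| * |wS ρ (m - i)| := ⟨_, rfl⟩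
  have hQD : Q ≤ dsum (fun i => |wS ρ i|) (m + 1) := by
    rw [hQ, dsum, Finset.sum_range_succ' (fun i => ∑ j ∈ Finset.range (m + 1), _)]
    have h0 : 0 ≤ ∑ j ∈ Finset.range (m + 1),
        (if 0 + j ≤ m + 1 then |wS ρ 0| * |wS ρ j| else 0) :=
      Finset.sum_nonneg fun j _ => by
        split_ifs
        exacts [mul_nonneg (hb _) (hb _), le_rfl]
    refine le_trans (Finset.sum_le_sum fun i hi => ?_) (le_add_of_nonneg_right h0)
    rw [Finset.mem_range] at hi
    have := Finset.single_le_sum (s := Finset.range (m + 1))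
      (f := fun j => if (i + 1) + j ≤ m + 1 then |wS ρ (i + 1)| * |wS ρ j| else 0)
      (fun j _ => by
        split_ifs
        exacts [mul_nonneg (hb _) (hb _), le_rfl]) (Finset.mem_range.2 (by omega : m - i < m + 1))
    rwa [if_pos (by omega)] at this
  have hs : |wS ρ m| ≤ ∑ i ∈ Finset.range (m + 1), |wS ρ i| :=
    Finset.single_le_sum (f := fun i => |wS ρ i|) (fun i _ => hb i) (Finset.mem_range.2 (by omega))
  have hk : ∀ j, |kW j| ≤ 1 := fun j => by unfold kW; split_ifs <;> norm_num
  have r1 : |∑ i ∈ Finset.range m, kW (i + 1) * wS ρ (i + 1) * (wS ρ (m - i) * (m - i : ℕ))|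
      ≤ (m + 1) * Q := by
    refine (Finset.abs_sum_le_sum_abs _ _).trans ?_
    rw [hQ, Finset.mul_sum]
    refine Finset.sum_le_sum fun i _ => ?_
    rw [abs_mul, abs_mul, abs_mul, Nat.abs_cast]
    have h1 : ((m - i : ℕ) : ℝ) ≤ m + 1 := by
      have : ((m - i : ℕ) : ℝ) ≤ (m : ℝ) := Nat.cast_le.2 (Nat.sub_le m i)
      linarith
    calc |kW (i + 1)| * |wS ρ (i + 1)| * (|wS ρ (m - i)| * ((m - i : ℕ) : ℝ))
        ≤ 1 * |wS ρ (i + 1)| * (|wS ρ (m - i)| * (m + 1)) := by gcongr; exact hk _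
      _ = _ := by ring
  have r2 : |∑ i ∈ Finset.range m,
      (if Even i then wS ρ (i + 1) else 0) * (if Even (m - i) then wS ρ (m - i) else 0)| ≤ Q := by
    refine (Finset.abs_sum_le_sum_abs _ _).trans ?_
    rw [hQ]
    refine Finset.sum_le_sum fun i _ => ?_
    rw [abs_mul]
    refine mul_le_mul ?_ ?_ (abs_nonneg _) (abs_nonneg _)
    · split_ifs
      · exact le_rfl
      · simp
    · split_ifs
      · exact le_rfl
      · simp
  have hQ0 : 0 ≤ Q := by rw [hQ]; exact Finset.sum_nonneg fun i _ => mul_nonneg (hb _) (hb _)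
  have hrest : |restW ρ m (wS ρ)| ≤ (m + 1) * (|wS ρ m| + 2 * Q) := by
    unfold restW
    refine (abs_add_le _ _).trans ?_
    have a1 := abs_add_le ((ρ + m) * wS ρ m)
      (∑ i ∈ Finset.range m, kW (i + 1) * wS ρ (i + 1) * (wS ρ (m - i) * (m - i : ℕ)))
    have a2 : |(ρ + m) * wS ρ m| ≤ (m + 1) * |wS ρ m| := by
      rw [abs_mul]
      refine mul_le_mul_of_nonneg_right ?_ (abs_nonneg _)
      refine (abs_add_le _ _).trans ?_
      rw [Nat.abs_cast]; linarith
    rw [abs_mul (2 / 5 : ℝ), abs_of_pos (by norm_num : (0 : ℝ) < 2 / 5)]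
    nlinarith
  show |wS ρ (m + 1)| ≤ _
  rw [wS_succ, abs_neg, abs_div, abs_mul, abs_of_pos hd0, abs_of_pos (by norm_num : (0 : ℝ) < 5),
    div_le_iff₀ hd0]
  generalize ∑ i ∈ Finset.range (m + 1), |wS ρ i| = S at *
  generalize dsum (fun i => |wS ρ i|) (m + 1) = D at *
  have hw := hb m
  calc 5 * |restW ρ m (wS ρ)| ≤ 5 * ((m + 1) * (|wS ρ m| + 2 * Q)) := by linarith
    _ ≤ 5 * (denW m * (S + 2 * D)) := by gcongr
    _ ≤ 10 * (1 + S + D) * denW m := by nlinarith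

/-- The formal profile. -/
def wf (ρ : ℝ) : PowerSeries ℝ := mk (wS ρ)
/-- Its odd part divided by the variable. -/
def o1f (ρ : ℝ) : PowerSeries ℝ := mk fun j => if Even j then wS ρ (j + 1) else 0
/-- Its even part. -/
def evf (ρ : ℝ) : PowerSeries ℝ := mk fun j => if Even j then wS ρ j else 0

lemma profile_formal (ρ : ℝ) :
    C ρ * wf ρ + (X + X * o1f ρ + C (1 / 5) * evf ρ)
      * dd (wf ρ) + C (2 / 5) * (o1f ρ * evf ρ) = 0 := by
  have hx : X * o1f ρ + C (1 / 5) * evf ρ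
      = mk (fun j => kW j * wS ρ j) := by
    ext j
    rw [map_add, coeff_C_mul]
    rcases j with _ | j
    · simp [o1f, evf, kW]
    · rw [coeff_succ_X_mul]
      simp only [o1f, evf, coeff_mk, kW, Nat.even_add_one]
      split_ifs <;> simp
  have e : C ρ * wf ρ
      + (X + X * o1f ρ + C (1 / 5) * evf ρ) * dd (wf ρ)
      + C (2 / 5) * (o1f ρ * evf ρ)
      = C ρ * wf ρ + X * dd (wf ρ)
        + mk (fun j => kW j * wS ρ j) * dd (wf ρ)
        + C (2 / 5) * (o1f ρ * evf ρ) := by rw [← hx]; ring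
  rw [e]
  ext m
  have hX : coeff m (X * dd (wf ρ)) = m * wS ρ m := by
    rcases m with _ | m
    · simp
    · rw [coeff_succ_X_mul, coeff_dd, wf, coeff_mk]; push_cast; ring
  rw [map_add, map_add, map_add, coeff_C_mul, coeff_C_mul, hX,
    coeff_mul, coeff_mul,
    Finset.Nat.sum_antidiagonal_eq_sum_range_succ_mk,
    Finset.Nat.sum_antidiagonal_eq_sum_range_succ_mk,
    Finset.sum_range_succ' (fun i => coeff (i, m - i).1
      (mk fun j => kW j * wS ρ j) * _), Finset.sum_range_succ (fun i =>
        coeff (i, m - i).1 (o1f ρ) * _)]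
  have hr := wS_rec ρ m
  simp only [wf, o1f, evf, coeff_dd, coeff_mk, map_zero]
  have h1 : ∑ i ∈ Finset.range m,
      kW (i + 1) * wS ρ (i + 1) * (wS ρ (m - (i + 1) + 1) * (((m - (i + 1) : ℕ) : ℝ) + 1))
      = ∑ i ∈ Finset.range m, kW (i + 1) * wS ρ (i + 1) * (wS ρ (m - i) * (m - i : ℕ)) := by
    refine Finset.sum_congr rfl fun i hi => ?_
    rw [Finset.mem_range] at hi
    obtain ⟨q, hq⟩ : ∃ q, m - i = q + 1 := ⟨m - i - 1, by omega⟩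
    rw [show m - (i + 1) = q by omega, hq]; push_cast; ring
  rw [h1]
  have hk0 : kW 0 = 1 / 5 := by simp [kW]
  rw [hk0, wS_zero]
  simp only [Nat.sub_self, Nat.sub_zero, Even.zero, if_true, wS_zero]
  unfold restW denW at hr
  split_ifs at hr ⊢ <;> linear_combination hr

/-- The profile near the centre. -/
def wE (ρ ζ : ℝ) : ℝ := ev (wf ρ) ζ

/-- Uniform radius on which the central profile is smooth, solves the profile equation, and depends
continuously on the parameter; together with its second-order expansion. -/
lemma central_profile : ∃ R0 : ℝ, 0 < R0 ∧
    (∀ x, |x| < R0 → ContinuousOn (fun ρ => wE ρ x) (Icc (-1) 1)) ∧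
    ∀ ρ : ℝ, |ρ| ≤ 1 → ContDiffOn ℝ (⊤ : ℕ∞) (wE ρ) (Ioo (-R0) R0) ∧
      (∀ ζ, ζ ≠ 0 → |ζ| < R0 → ∃ d, HasDerivAt (wE ρ) d ζ ∧
        ρ * wE ρ ζ + (ζ + 1 / 2 * (wE ρ ζ - wE ρ (-ζ) + 1 / 5 * (wE ρ ζ + wE ρ (-ζ)))) * d
          + 1 / 10 / ζ * (wE ρ ζ ^ 2 - wE ρ (-ζ) ^ 2) = 0) ∧
      ∃ g h : ℝ → ℝ, ContinuousAt g 0 ∧ ContinuousAt h 0 ∧ g 0 = 1 ∧ h 0 = wS ρ 3 ∧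
        ∀ ζ, |ζ| < R0 → (wE ρ ζ + wE ρ (-ζ)) / 2 = g ζ ∧
          (wE ρ ζ - wE ρ (-ζ)) / 2 = ζ * (wS ρ 1 + ζ ^ 2 * h ζ) := by
  obtain ⟨R, hR1, hR⟩ := wS_geom
  have hR0 : 0 < R := by linarith
  have hgeo : ∀ ρ : ℝ, |ρ| ≤ 1 → ∀ n, |coeff n (wf ρ)| ≤ R * R ^ n := fun ρ hρ n => by
    rw [wf, coeff_mk, ← pow_succ']; exact hR ρ hρ n
  refine ⟨1 / R, by positivity, ?_, ?_⟩
  · intro x hx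
    refine ev_continuousOn_param (C := R) hR0 (fun n => ?_)
      (fun ρ hρ => hgeo ρ (abs_le.2 hρ)) hx
    simp only [wf, coeff_mk]
    exact (wS_cont n).continuousOn
  intro ρ hρ
  have hcv : Cv (1 / R) (wf ρ) := cv_of_geom hR0 (hgeo ρ hρ)
  have hcvo : Cv (1 / R) (o1f ρ) := cv_of_geom (C := R ^ 2) hR0 fun n => by
    rw [o1f, coeff_mk]
    split_ifs
    · refine (hR ρ hρ (n + 1)).trans (le_of_eq ?_); ring
    · rw [abs_zero]; positivity
  have hcve : Cv (1 / R) (evf ρ) := cv_of_geom (C := R) hR0 fun n => by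
    rw [evf, coeff_mk]
    split_ifs
    · refine (hR ρ hρ n).trans (le_of_eq ?_); ring
    · rw [abs_zero]; positivity
  -- even and odd parts
  have hsum : wf ρ = evf ρ + X * o1f ρ := by
    ext j
    rw [map_add]
    rcases j with _ | j
    · simp [wf, evf]
    · rw [coeff_succ_X_mul]
      simp only [wf, evf, o1f, coeff_mk, Nat.even_add_one]
      split_ifs <;> simp
  have heven : ∀ f : PowerSeries ℝ, (∀ j, ¬ Even j → coeff j f = 0) → ∀ x,
      ev f (-x) = ev f x := by
    intro f hf x
    unfold ev
    refine tsum_congr fun j => ?_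
    by_cases hj : Even j
    · rw [hj.neg_pow]
    · rw [hf j hj]; simp
  have he1 : ∀ x, ev (evf ρ) (-x) = ev (evf ρ) x := heven _ fun j hj => by simp [evf, hj]
  have ho1 : ∀ x, ev (o1f ρ) (-x) = ev (o1f ρ) x := heven _ fun j hj => by simp [o1f, hj]
  have hw : ∀ x, |x| < 1 / R → wE ρ x = ev (evf ρ) x + x * ev (o1f ρ) x := fun x hx => by
    rw [wE, hsum, ev_add hcve ((cv_X _).mul hcvo) hx, ev_mul (cv_X _) hcvo hx, ev_X]
  have hw' : ∀ x, |x| < 1 / R → wE ρ (-x) = ev (evf ρ) x - x * ev (o1f ρ) x := fun x hx => by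
    rw [hw (-x) (by rwa [abs_neg]), he1, ho1]; ring
  have hcva : Cv (1 / R) (X + X * o1f ρ + C (1 / 5) * evf ρ) :=
    ((cv_X _).add ((cv_X _).mul hcvo)).add ((cv_C _ _).mul hcve)
  refine ⟨ev_contDiffOn hcv, ?_, ?_⟩
  · intro ζ h0 hζ
    refine ⟨_, ev_hasDerivAt hcv hζ, ?_⟩
    have hp := congrArg (fun f => ev f ζ) (profile_formal ρ)
    have hdd : Cv (1 / R) (dd (wf ρ)) := hcv.deriv
    have h0' : ev (0 : PowerSeries ℝ) ζ = 0 := by simp [ev]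
    simp only [h0'] at hp
    rw [ev_add (((cv_C _ _).mul hcv).add (hcva.mul hdd)) ((cv_C _ _).mul (hcvo.mul hcve)) hζ,
      ev_add ((cv_C _ _).mul hcv) (hcva.mul hdd) hζ, ev_mul (cv_C _ _) hcv hζ, ev_mul hcva hdd hζ,
      ev_mul (cv_C _ _) (hcvo.mul hcve) hζ, ev_mul hcvo hcve hζ,
      ev_add ((cv_X _).add ((cv_X _).mul hcvo)) ((cv_C _ _).mul hcve) hζ,
      ev_add (cv_X _) ((cv_X _).mul hcvo) hζ, ev_mul (cv_X _) hcvo hζ,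
      ev_mul (cv_C _ _) hcve hζ, ev_X, ev_C, ev_C, ev_C] at hp
    have hwz : ev (wf ρ) ζ = wE ρ ζ := rfl
    rw [hwz] at hp
    rw [hw ζ hζ] at hp
    rw [hw' ζ hζ, hw ζ hζ]
    have e : 1 / 10 / ζ * ((ev (evf ρ) ζ + ζ * ev (o1f ρ) ζ) ^ 2
        - (ev (evf ρ) ζ - ζ * ev (o1f ρ) ζ) ^ 2) = 2 / 5 * (ev (o1f ρ) ζ * ev (evf ρ) ζ) := by
      field_simp; ring
    rw [e]
    change _ + _ * ev (dd (wf ρ)) ζ + _ = 0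
    linear_combination hp
  · -- split off the first coefficient of the odd part twice
    obtain ⟨h3, hh3⟩ : ∃ h3 : PowerSeries ℝ,
        h3 = mk fun j => if Even j then wS ρ (j + 3) else 0 := ⟨_, rfl⟩
    have hcv3 : Cv (1 / R) h3 := cv_of_geom (C := R ^ 4) hR0 fun n => by
      rw [hh3, coeff_mk]
      split_ifs
      · refine (hR ρ hρ (n + 3)).trans (le_of_eq ?_); ring
      · rw [abs_zero]; positivity
    have hsplit : o1f ρ = C (wS ρ 1) + X * (X * h3) := by
      ext j
      rw [map_add]
      rcases j with _ | _ | j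
      · simp [o1f]
      · rw [coeff_succ_X_mul]; simp [o1f]
      · rw [coeff_succ_X_mul, coeff_succ_X_mul]
        simp [o1f, hh3, Nat.even_add_one]
    refine ⟨ev (evf ρ), ev h3, (ev_hasDerivAt hcve (by simpa using hR0)).continuousAt,
      (ev_hasDerivAt hcv3 (by simpa using hR0)).continuousAt, ?_, ?_, fun ζ hζ => ?_⟩
    · rw [ev_zero_right]; simp [evf, wS_zero]
    · rw [ev_zero_right]; simp [hh3]
    · have ho : ev (o1f ρ) ζ = wS ρ 1 + ζ ^ 2 * ev h3 ζ := by
        rw [hsplit, ev_add (cv_C _ _) ((cv_X _).mul ((cv_X _).mul hcv3)) hζ,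
          ev_mul (cv_X _) ((cv_X _).mul hcv3) hζ, ev_mul (cv_X _) hcv3 hζ, ev_C, ev_X]
        ring
      rw [hw ζ hζ, hw' ζ hζ, ho]
      constructor <;> ring

/-! ### Tools for ordinary differential equations -/

/-- Global existence for a bounded, globally Lipschitz autonomous field. -/
lemma global_flow {E : Type*} [NormedAddCommGroup E] [NormedSpace ℝ E] [CompleteSpace E]
    {f : E → E} {K C : NNReal} (hL : LipschitzWith K f) (hC : ∀ x, ‖f x‖ ≤ C) (x0 : E) :
    ∃ c : ℝ → E, c 0 = x0 ∧ ∀ t, HasDerivAt c (f (c t)) t := by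
  have loc : ∀ n : ℕ, ∃ c : ℝ → E, c 0 = x0 ∧
      ∀ t ∈ Ioo (-(n + 1 : ℝ)) (n + 1), HasDerivAt c (f (c t)) t := by
    intro n
    have h0 : (0 : ℝ) ∈ Icc (-(n + 1 : ℝ)) (n + 1) := by
      have : (0 : ℝ) ≤ n := Nat.cast_nonneg n
      constructor <;> linarith
    have hP : IsPicardLindelof (fun _ : ℝ => f) (tmin := -(n + 1 : ℝ)) (tmax := n + 1)
        ⟨0, h0⟩ x0 (C * (n + 1)) 0 C K :=
      { lipschitzOnWith := fun t _ => hL.lipschitzOnWith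
        continuousOn := fun x _ => continuousOn_const
        norm_le := fun t _ x _ => hC x
        mul_max_le := by
          have : max ((n : ℝ) + 1 - 0) (0 - -((n : ℝ) + 1)) = n + 1 := by
            rw [sub_zero, zero_sub, neg_neg, max_self]
          rw [this]; push_cast; linarith }
    obtain ⟨c, hc0, hc⟩ := hP.exists_eq_forall_mem_Icc_hasDerivWithinAt₀
    exact ⟨c, hc0, fun t ht => (hc t (Ioo_subset_Icc_self ht)).hasDerivAt (Icc_mem_nhds ht.1 ht.2)⟩
  choose c hc0 hc using loc
  have hagree : ∀ m n : ℕ, m ≤ n → ∀ t ∈ Ioo (-(m + 1 : ℝ)) (m + 1), c m t = c n t := by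
    intro m n hmn
    have hmn' : (m : ℝ) ≤ n := Nat.cast_le.2 hmn
    have hm0 : (0 : ℝ) ≤ m := Nat.cast_nonneg m
    refine ODE_solution_unique_of_mem_Ioo (v := fun _ => f) (s := fun _ => univ) (K := K)
      (t₀ := 0) (fun t _ => hL.lipschitzOnWith) ⟨by linarith, by linarith⟩
      (fun t ht => ⟨hc m t ht, mem_univ _⟩)
      (fun t ht => ⟨hc n t ⟨by linarith [ht.1], by linarith [ht.2]⟩, mem_univ _⟩)
      (by rw [hc0, hc0])
  refine ⟨fun t => c ⌈|t|⌉₊ t, by simp [hc0], fun t => ?_⟩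
  have key : ∀ n : ℕ, |t| < n → (fun t => c ⌈|t|⌉₊ t) =ᶠ[𝓝 t] c n := by
    intro n hn
    have ho : ∀ᶠ y : ℝ in 𝓝 t, |y| < (n : ℝ) := continuous_abs.continuousAt.eventually (gt_mem_nhds hn)
    filter_upwards [ho] with y hy
    have h1 : |y| ≤ (⌈|y|⌉₊ : ℝ) := Nat.le_ceil _
    refine hagree _ _ (Nat.ceil_le.2 hy.le) y ?_
    have := abs_le.1 h1
    constructor <;> linarith [this.1, this.2]
  have hn : |t| < ((⌈|t|⌉₊ + 1 : ℕ) : ℝ) := by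
    push_cast; linarith [Nat.le_ceil (|t|)]
  have hd := hc (⌈|t|⌉₊ + 1) t (by
    have := abs_lt.1 hn
    constructor <;> linarith [this.1, this.2])
  have he := key _ hn
  have := hd.congr_of_eventuallyEq he
  rwa [← he.self_of_nhds] at this

/-- Truncation of a real number to `[-B, B]`. -/
def cl1 (B a : ℝ) : ℝ := max (-B) (min B a)

lemma cl1_of_abs {B a : ℝ} (h : |a| ≤ B) : cl1 B a = a := by
  have := abs_le.1 h
  rw [cl1, min_eq_right this.2, max_eq_right this.1]

lemma abs_cl1 {B : ℝ} (hB : 0 ≤ B) (a : ℝ) : |cl1 B a| ≤ B := by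
  rw [abs_le, cl1]
  exact ⟨le_max_left _ _, max_le (by linarith) (min_le_left _ _)⟩

lemma cl1_lip (B : ℝ) : LipschitzWith 1 (cl1 B) :=
  (LipschitzWith.id.const_min B).const_max (-B)

/-- Truncation of a point of `ℝ³` to a cube. -/
def cl3 (B : ℝ) (p : ℝ × ℝ × ℝ) : ℝ × ℝ × ℝ := (cl1 B p.1, cl1 B p.2.1, cl1 B p.2.2)

lemma cl3_lip (B : ℝ) : LipschitzWith 1 (cl3 B) := by
  have h1 : LipschitzWith 1 (fun p : ℝ × ℝ × ℝ => cl1 B p.1) := by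
    have h := (cl1_lip B).comp (LipschitzWith.prod_fst (α := ℝ) (β := ℝ × ℝ))
    rw [mul_one] at h; exact h
  have h2 : LipschitzWith 1 (fun p : ℝ × ℝ × ℝ => cl1 B p.2.1) := by
    have h := (cl1_lip B).comp ((LipschitzWith.prod_fst (α := ℝ) (β := ℝ)).comp
      (LipschitzWith.prod_snd (α := ℝ) (β := ℝ × ℝ)))
    rw [mul_one, mul_one] at h; exact h
  have h3 : LipschitzWith 1 (fun p : ℝ × ℝ × ℝ => cl1 B p.2.2) := by
    have h := (cl1_lip B).comp ((LipschitzWith.prod_snd (α := ℝ) (β := ℝ)).comp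
      (LipschitzWith.prod_snd (α := ℝ) (β := ℝ × ℝ)))
    rw [mul_one, mul_one] at h; exact h
  have h := h1.prodMk (h2.prodMk h3)
  rw [max_self, max_self] at h; exact h

lemma cl3_of_abs {B : ℝ} {p : ℝ × ℝ × ℝ} (h1 : |p.1| ≤ B) (h2 : |p.2.1| ≤ B)
    (h3 : |p.2.2| ≤ B) : cl3 B p = p := by
  rw [cl3, cl1_of_abs h1, cl1_of_abs h2, cl1_of_abs h3]

lemma cl3_mem {B : ℝ} (hB : 0 ≤ B) (p : ℝ × ℝ × ℝ) : cl3 B p ∈ Metric.closedBall 0 B := by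
  rw [mem_closedBall_zero_iff, cl3, Prod.norm_def, Prod.norm_def]
  exact max_le (abs_cl1 hB _) (max_le (abs_cl1 hB _) (abs_cl1 hB _))

/-- A `C¹` field on `ℝ³`, frozen outside a cube, generates a global flow that depends continuously
on the initial point. -/
lemma box_flow {f : ℝ × ℝ × ℝ → ℝ × ℝ × ℝ} (hf : ContDiff ℝ 1 f) {B : ℝ} (hB : 0 ≤ B) :
    ∃ Φ : ℝ × ℝ × ℝ → ℝ → ℝ × ℝ × ℝ, (∀ p, Φ p 0 = p) ∧
      (∀ p t, HasDerivAt (Φ p) (f (cl3 B (Φ p t))) t) ∧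
      ∀ t, 0 ≤ t → Continuous fun p => Φ p t := by
  have hcpt : IsCompact (Metric.closedBall (0 : ℝ × ℝ × ℝ) B) := isCompact_closedBall _ _
  obtain ⟨K0, hK0⟩ := hcpt.exists_bound_of_continuousOn
    (hf.continuous_fderiv one_ne_zero).continuousOn
  obtain ⟨C0, hC0⟩ := hcpt.exists_bound_of_continuousOn hf.continuous.continuousOn
  have hlip : LipschitzOnWith (Real.toNNReal K0) f (Metric.closedBall 0 B) := by
    refine (convex_closedBall _ _).lipschitzOnWith_of_nnnorm_fderiv_le (𝕜 := ℝ)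
      (fun x _ => hf.differentiable one_ne_zero x) fun x hx => ?_
    have := hK0 x hx
    rw [← NNReal.coe_le_coe, coe_nnnorm]
    exact this.trans (le_coe_toNNReal _)
  have hL : LipschitzWith (Real.toNNReal K0) (fun p => f (cl3 B p)) := by
    have := hlip.comp ((cl3_lip B).lipschitzOnWith (s := univ)) (fun p _ => cl3_mem hB p)
    rw [mul_one] at this
    exact lipschitzOnWith_univ.1 this
  have hC : ∀ p, ‖f (cl3 B p)‖ ≤ Real.toNNReal C0 := fun p =>
    (hC0 _ (cl3_mem hB p)).trans (le_coe_toNNReal _)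
  choose Φ hΦ0 hΦ using global_flow hL hC
  refine ⟨Φ, hΦ0, hΦ, fun t ht => ?_⟩
  have hd : ∀ p q, dist (Φ p t) (Φ q t) ≤ exp (Real.toNNReal K0 * t) * dist p q := by
    intro p q
    have := dist_le_of_trajectories_ODE (v := fun _ => fun p => f (cl3 B p)) (f := Φ p) (g := Φ q)
      (a := 0) (b := t) (δ := dist p q) (fun _ => hL)
      (fun τ _ => (hΦ p τ).continuousAt.continuousWithinAt)
      (fun τ _ => (hΦ p τ).hasDerivWithinAt)
      (fun τ _ => (hΦ q τ).continuousAt.continuousWithinAt)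
      (fun τ _ => (hΦ q τ).hasDerivWithinAt) (by rw [hΦ0, hΦ0]) t ⟨ht, le_rfl⟩
    rwa [sub_zero, mul_comm] at this
  have : LipschitzWith (Real.toNNReal (exp (Real.toNNReal K0 * t))) (fun p => Φ p t) :=
    LipschitzWith.of_dist_le_mul fun p q => by
      rw [Real.coe_toNNReal _ (exp_pos _).le]; exact hd p q
  exact this.continuous

/-- First time at which a continuous function fails to be positive. -/
lemma first_exit {φ : ℝ → ℝ} (hφ : Continuous φ) (h0 : 0 < φ 0) {t : ℝ} (ht : 0 ≤ t)
    (h : φ t ≤ 0) : ∃ c, 0 < c ∧ c ≤ t ∧ φ c = 0 ∧ ∀ τ, 0 ≤ τ → τ < c → 0 < φ τ := by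
  have hcl : IsClosed {τ | φ τ ≤ 0} := isClosed_le hφ continuous_const
  have hcp : IsCompact (Icc 0 t ∩ {τ | φ τ ≤ 0}) := isCompact_Icc.inter_right hcl
  obtain ⟨c, ⟨hc1, hc2⟩, hmin⟩ := hcp.exists_isLeast ⟨t, ⟨ht, le_rfl⟩, h⟩
  have hc2' : φ c ≤ 0 := hc2
  have hpos : ∀ τ, 0 ≤ τ → τ < c → 0 < φ τ := by
    intro τ h1 h2
    by_contra hn
    exact absurd (hmin ⟨⟨h1, h2.le.trans hc1.2⟩, not_lt.1 hn⟩) (not_le.2 h2)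
  have hc0 : 0 < c := by
    rcases hc1.1.lt_or_eq with h | h
    · exact h
    · rw [← h] at hc2'; exact absurd h0 (not_lt.2 hc2')
  refine ⟨c, hc0, hc1.2, le_antisymm hc2' ?_, hpos⟩
  have hcc : c ∈ closure (Ico 0 c) := by rw [closure_Ico hc0.ne]; exact ⟨hc0.le, le_rfl⟩
  have : Ico 0 c ⊆ {τ | 0 ≤ φ τ} := fun τ hτ => (hpos τ hτ.1 hτ.2).le
  exact closure_minimal this (isClosed_le continuous_const hφ) hcc

/-- A function that is positive before `c` and vanishes at `c` has non-positive derivative. -/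
lemma deriv_nonpos_of_exit {φ : ℝ → ℝ} {d a c : ℝ} (hd : HasDerivAt φ d c) (hac : a < c)
    (h : ∀ τ, a ≤ τ → τ < c → 0 ≤ φ τ) (hc : φ c = 0) : d ≤ 0 := by
  have ht := (hasDerivAt_iff_tendsto_slope.1 hd).mono_left
    (nhdsWithin_mono c (fun x hx => (ne_of_lt hx : x ≠ c)) : 𝓝[<] c ≤ 𝓝[≠] c)
  refine le_of_tendsto ht ?_
  filter_upwards [Ioo_mem_nhdsLT hac] with τ hτ
  rw [slope_def_field, hc, sub_zero]
  refine div_nonpos_of_nonneg_of_nonpos ?_ ?_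
  · exact h τ hτ.1.le hτ.2
  · linarith [hτ.2]

/-- Change of time: a positive continuous speed bounded away from zero. -/
lemma reparam {p : ℝ → ℝ} (hp : Continuous p) {c : ℝ} (hc : 0 < c) (hpc : ∀ x, c ≤ p x) :
    ∃ θ : ℝ → ℝ, θ 0 = 0 ∧ StrictMono θ ∧ Function.Surjective θ ∧
      ∀ ξ, HasDerivAt θ (1 / p (θ ξ)) ξ := by
  obtain ⟨F, hF⟩ : ∃ F : ℝ → ℝ, F = fun x => ∫ t in (0 : ℝ)..x, p t := ⟨_, rfl⟩
  have hFd : ∀ x, HasDerivAt F (p x) x := fun x => by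
    rw [hF]
    exact intervalIntegral.integral_hasDerivAt_right (hp.intervalIntegrable _ _)
      (hp.stronglyMeasurableAtFilter _ _) hp.continuousAt
  have hF0 : F 0 = 0 := by rw [hF]; simp
  have hFm : StrictMono F := strictMono_of_hasDerivAt_pos hFd fun x => hc.trans_le (hpc x)
  have hFc : Continuous F := continuous_iff_continuousAt.2 fun x => (hFd x).continuousAt
  have hG : Monotone fun x => F x - c * x := monotone_of_hasDerivAt_nonneg
    (fun x => (hFd x).sub ((hasDerivAt_id x).const_mul c)) fun x => by
      have := hpc x; simp only [Pi.zero_apply]; linarith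
  have htop : Tendsto F atTop atTop := by
    refine tendsto_atTop_mono' _ ?_ (tendsto_id.const_mul_atTop hc)
    filter_upwards [eventually_ge_atTop (0 : ℝ)] with x hx
    have := hG hx
    simp only [hF0, id] at *; linarith
  have hbot : Tendsto F atBot atBot := by
    refine tendsto_atBot_mono' _ ?_ (tendsto_id.const_mul_atBot hc)
    filter_upwards [eventually_le_atBot (0 : ℝ)] with x hx
    have := hG hx
    simp only [hF0, id] at *; linarith
  have hsurj : Function.Surjective F := hFc.surjective htop hbot
  obtain ⟨e, he⟩ : ∃ e : ℝ ≃o ℝ, ∀ x, e x = F x :=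
    ⟨StrictMono.orderIsoOfSurjective F hFm hsurj, fun x => rfl⟩
  refine ⟨e.symm, ?_, e.symm.strictMono, e.symm.surjective, fun ξ => ?_⟩
  · rw [OrderIso.symm_apply_eq, he, hF0]
  · rw [one_div]
    refine HasDerivAt.of_local_left_inverse e.symm.continuous.continuousAt (hFd _)
      (hc.trans_le (hpc _)).ne' (Eventually.of_forall fun y => ?_)
    rw [← he, OrderIso.apply_symm_apply]

/-- Gluing two differentiable functions at a point where values and derivatives agree. -/
lemma glue_at {f g : ℝ → ℝ} {b d : ℝ} (hf : HasDerivAt f d b) (hg : HasDerivAt g d b)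
    (he : f b = g b) : HasDerivAt (fun x => if x ≤ b then f x else g x) d b := by
  have h1 : HasDerivWithinAt (fun x => if x ≤ b then f x else g x) d (Iic b) b :=
    hf.hasDerivWithinAt.congr (fun x hx => if_pos hx) (if_pos le_rfl)
  have h2 : HasDerivWithinAt (fun x => if x ≤ b then f x else g x) d (Ici b) b := by
    refine hg.hasDerivWithinAt.congr (fun x hx => ?_) ?_
    · rcases (mem_Ici.1 hx).lt_or_eq with h | h
      · exact if_neg (not_le.2 h)
      · rw [← h, if_pos le_rfl, he]
    · rw [if_pos le_rfl, he]
  have := h1.union h2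
  rwa [Iic_union_Ici, hasDerivWithinAt_univ] at this

lemma glue_left {f g : ℝ → ℝ} {b x d : ℝ} (hx : x < b) (hf : HasDerivAt f d x) :
    HasDerivAt (fun x => if x ≤ b then f x else g x) d x :=
  hf.congr_of_eventuallyEq (by
    filter_upwards [Iio_mem_nhds hx] with y hy
    exact if_pos (le_of_lt hy))

lemma glue_right {f g : ℝ → ℝ} {b x d : ℝ} (hx : b < x) (hg : HasDerivAt g d x) :
    HasDerivAt (fun x => if x ≤ b then f x else g x) d x :=
  hg.congr_of_eventuallyEq (by
    filter_upwards [Ioi_mem_nhds hx] with y hy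
    exact if_neg (not_le.2 hy))

/-! ### The orbit leaving the centre of symmetry -/

/-- `P`, `b₀`, `a₀` as functions of `ρ` and `v = 1 / (1 + (W + Z) / 2)`. -/
def Pv (ρ v : ℝ) : ℝ := 2 + (4 * ρ - 2) * v + ρ * v ^ 2
def b0v (ρ v : ℝ) : ℝ := (v - 1) * (1 + ρ * v)
def a0v (ρ v : ℝ) : ℝ := 2 / 5 + (3 / 5 - ρ / 5) * v + 6 / 5 * ρ * v ^ 2

/-- The desingularised field in the variables `v` and `y = 1 - u² / σ²`; the first coordinate is the
frozen parameter `ρ`. -/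
def fR (p : ℝ × ℝ × ℝ) : ℝ × ℝ × ℝ :=
  (0, p.2.1 * (Pv p.1 p.2.1 - b0v p.1 p.2.1 * p.2.2),
    -2 * (1 - p.2.2) * (a0v p.1 p.2.1 * p.2.2 - 6 / 5 * Pv p.1 p.2.1))

lemma fR_contDiff : ContDiff ℝ 1 fR := by
  unfold fR Pv b0v a0v
  fun_prop

/-- Auxiliary upper barrier function: `P (1 - δ q) - b₀ y` with `q = (3 - 5ρ) v - 3`, `δ = 1/1000`. -/
def qB (ρ v y : ℝ) : ℝ := Pv ρ v * (1 - ((3 - 5 * ρ) * v - 3) / 1000) - b0v ρ v * y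

lemma Pv_factor {s : ℝ} (hs : s ∈ Dm) (v : ℝ) :
    Pv (rho s) v = rho s * (s - v) * (s - v + eps s) := by
  have hb := Dm_bounds hs
  have h1 : s - 1 ≠ 0 := by linarith [hb.1]
  have h2 : s ≠ 0 := by linarith [hb.1]
  have h3 : s + 4 ≠ 0 := by linarith [hb.1]
  have h4 : s ^ 2 + 4 * s ≠ 0 := by
    rw [show s ^ 2 + 4 * s = s * (s + 4) by ring]; exact mul_ne_zero h2 h3
  unfold Pv rho eps
  field_simp
  ring

lemma barrier_real {P b a q e d v β : ℝ} (hP : 0 ≤ P) (hPu : P ≤ 1) (hb0 : 0 ≤ b) (hbu : b ≤ 4)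
    (hau : a ≤ 6) (hab2 : 1 / 4 ≤ a - 6 / 5 * b) (hq : 0 ≤ q) (hqu : q ≤ 4)
    (hd : -(3 / 2) ≤ d) (he : e ≤ 3) (hv0 : 0 ≤ v) (hv : v ≤ 4)
    (hβ0 : 0 ≤ β) (hβ : β ≤ 3) :
    0 < v / 1000 * (b * (d * (1 - q / 1000) - P * β / 1000) - e * (P * (1 - q / 1000)))
      + 2 * (1 + P / 1000) * (a * (1 - q / 1000) - 6 / 5 * b) := by
  have t0 : 0 ≤ 1 - q / 1000 := by linarith
  have t1 : 1 - q / 1000 ≤ 1 := by linarith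
  obtain ⟨t, ht⟩ : ∃ t, t = 1 - q / 1000 := ⟨_, rfl⟩
  rw [← ht] at t0 t1 ⊢
  have m1 : -(3 / 2) ≤ d * t := by
    have h1 : -(3 / 2) * t ≤ d * t := mul_le_mul_of_nonneg_right hd t0
    linarith
  have m2 : P * β ≤ 1 * 3 := mul_le_mul hPu hβ hβ0 (by norm_num)
  have m3 : -(4 * 2) ≤ b * (d * t - P * β / 1000) := by
    have h1 : -2 ≤ d * t - P * β / 1000 := by linarith
    have h2 := mul_le_mul_of_nonneg_left h1 hb0
    linarith
  have m4 : P * t ≤ 1 * 1 := mul_le_mul hPu t1 t0 (by norm_num)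
  have m5 : e * (P * t) ≤ 3 * 1 := mul_le_mul he (by linarith) (mul_nonneg hP t0) (by norm_num)
  have m6 : -(4 / 1000 * 11) ≤ v / 1000 * (b * (d * t - P * β / 1000) - e * (P * t)) := by
    have h1 : -11 ≤ b * (d * t - P * β / 1000) - e * (P * t) := by linarith
    have h2 := mul_le_mul_of_nonneg_left h1 (show 0 ≤ v / 1000 by linarith)
    linarith
  have m7 : 1 / 5 ≤ a * t - 6 / 5 * b := by
    have h1 : a * q ≤ 6 * 4 := mul_le_mul hau hqu hq (by norm_num)
    have h2 : a * t = a - a * q / 1000 := by rw [ht]; ring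
    linarith
  have m8 : 1 * (1 / 5) ≤ (1 + P / 1000) * (a * t - 6 / 5 * b) :=
    mul_le_mul (by linarith) m7 (by norm_num) (by linarith)
  linarith

lemma barrier_ineq {ρ v : ℝ} (h1 : 19 / 100 < ρ) (h2 : ρ < 24 / 125) (h3 : 7 / 5 ≤ v)
    (h4 : v ≤ 3237 / 1000) (hq : 0 ≤ (3 - 5 * ρ) * v - 3) (hP : 0 ≤ Pv ρ v) :
    0 < v / 1000 * (b0v ρ v * ((4 * ρ - 2 + 2 * ρ * v) * (1 - ((3 - 5 * ρ) * v - 3) / 1000)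
        - Pv ρ v * (3 - 5 * ρ) / 1000)
        - (1 - ρ + 2 * ρ * v) * (Pv ρ v * (1 - ((3 - 5 * ρ) * v - 3) / 1000)))
      + 2 * (1 + Pv ρ v / 1000)
        * (a0v ρ v * (1 - ((3 - 5 * ρ) * v - 3) / 1000) - 6 / 5 * b0v ρ v) := by
  have hρv1 : 19 / 100 * v ≤ ρ * v := mul_le_mul_of_nonneg_right h1.le (by linarith)
  have hρv2 : ρ * v ≤ 24 / 125 * v := mul_le_mul_of_nonneg_right h2.le (by linarith)
  have hv2 : v ^ 2 ≤ 3237 / 1000 * v := by rw [sq]; exact mul_le_mul_of_nonneg_right h4 (by linarith)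
  have hv5 : 0 ≤ (v - 7 / 5) * (3237 / 1000 - v) := mul_nonneg (by linarith) (by linarith)
  have hρv3 : ρ * v ^ 2 ≤ 24 / 125 * v ^ 2 := mul_le_mul_of_nonneg_right h2.le (sq_nonneg v)
  have hρv4 : 0 ≤ ρ * v ^ 2 := mul_nonneg (by linarith) (sq_nonneg v)
  apply barrier_real hP
  · unfold Pv; linarith
  · unfold b0v; exact mul_nonneg (by linarith) (by linarith)
  · have : (v - 1) * (1 + ρ * v) ≤ (9 / 4) * (1 + 2 / 3) :=
      mul_le_mul (by linarith) (by linarith) (by linarith) (by norm_num)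
    unfold b0v; linarith
  · unfold a0v; linarith
  · have hab : a0v ρ v - 6 / 5 * b0v ρ v = 8 / 5 - 3 / 5 * v + ρ * v := by unfold a0v b0v; ring
    linarith
  · exact hq
  · linarith
  all_goals linarith

/-- Derivative of the upper barrier function along the flow, on its zero set. -/
lemma qB_deriv_id (ρ v y : ℝ) (h : qB ρ v y = 0) :
    b0v ρ v * (((4 * ρ - 2 + 2 * ρ * v) * (1 - ((3 - 5 * ρ) * v - 3) / 1000)
        - Pv ρ v * (3 - 5 * ρ) / 1000) * (v * (Pv ρ v - b0v ρ v * y))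
      - ((1 - ρ + 2 * ρ * v) * (v * (Pv ρ v - b0v ρ v * y)) * y
        + b0v ρ v * (-2 * (1 - y) * (a0v ρ v * y - 6 / 5 * Pv ρ v))))
    = ((3 - 5 * ρ) * v - 3) * Pv ρ v *
      (v / 1000 * (b0v ρ v * ((4 * ρ - 2 + 2 * ρ * v) * (1 - ((3 - 5 * ρ) * v - 3) / 1000)
        - Pv ρ v * (3 - 5 * ρ) / 1000)
        - (1 - ρ + 2 * ρ * v) * (Pv ρ v * (1 - ((3 - 5 * ρ) * v - 3) / 1000)))
      + 2 * (1 + Pv ρ v / 1000)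
        * (a0v ρ v * (1 - ((3 - 5 * ρ) * v - 3) / 1000) - 6 / 5 * b0v ρ v)) := by
  have hb1 : b0v ρ v - Pv ρ v = (3 - 5 * ρ) * v - 3 := by unfold b0v Pv; ring
  unfold qB at h
  have hy : b0v ρ v * y = Pv ρ v * (1 - ((3 - 5 * ρ) * v - 3) / 1000) := by linarith
  generalize Pv ρ v = P at *
  generalize a0v ρ v = a at *
  generalize b0v ρ v = b at *
  generalize (3 - 5 * ρ) * v - 3 = q at *
  have e1 : P - b * y = q * P / 1000 := by rw [hy]; ring
  have e2 : b * (1 - y) = q * (1 + P / 1000) := by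
    have : b * (1 - y) = b - b * y := by ring
    rw [this, hy]; linear_combination hb1
  have e3 : b * (a * y - 6 / 5 * P) = P * (a * (1 - q / 1000) - 6 / 5 * b) := by
    linear_combination a * hy
  rw [e1]
  linear_combination (-(1 - ρ + 2 * ρ * v) * v * (q * P / 1000)) * hy
    + 2 * (b * (a * y - 6 / 5 * P)) * e2 + 2 * (q * (1 + P / 1000)) * e3

set_option maxHeartbeats 2000000 in
/-- The region bounded by `y = 0`, the upper barrier and the sonic value of `v` is forward
invariant. -/
lemma right_confine {s κ : ℝ} (hs : s ∈ Dm) (hκ : 0 < κ) {v y : ℝ → ℝ}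
    (hv : Continuous v) (hy : Continuous y)
    (hd : ∀ τ, |v τ| ≤ 10 → |y τ| ≤ 10 →
      HasDerivAt v (v τ * (Pv (rho s) (v τ) - b0v (rho s) (v τ) * y τ)) τ ∧
      HasDerivAt y (-2 * (1 - y τ) * (a0v (rho s) (v τ) * y τ - 6 / 5 * Pv (rho s) (v τ))) τ)
    (hy0 : 0 < y 0) (hq0 : 0 < qB (rho s) (v 0) (y 0)) (hv0 : v 0 < s)
    (hk0 : κ < (3 - 5 * rho s) * v 0 - 3) :
    ∀ τ, 0 ≤ τ → 0 < y τ ∧ 0 < qB (rho s) (v τ) (y τ) ∧ v τ < s ∧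
      κ < (3 - 5 * rho s) * v τ - 3 := by
  have hb := Dm_bounds hs
  have hr := rho_bounds hs
  have hε := eps_nonneg hs
  have hfac := Pv_factor hs
  generalize rho s = ρ at *
  have hβ : 0 < 3 - 5 * ρ := by linarith [hr.2]
  have hqc : Continuous fun τ => qB ρ (v τ) (y τ) := by unfold qB Pv b0v; fun_prop
  have hkc : Continuous fun τ => (3 - 5 * ρ) * v τ - 3 - κ := by fun_prop
  obtain ⟨φ, hφ⟩ : ∃ φ : ℝ → ℝ, φ = fun τ => min (min (y τ) (qB ρ (v τ) (y τ)))
    (min (s - v τ) ((3 - 5 * ρ) * v τ - 3 - κ)) := ⟨_, rfl⟩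
  have hφc : Continuous φ := by
    rw [hφ]; exact (hy.min hqc).min ((continuous_const.sub hv).min hkc)
  -- facts valid on the closed region
  have region : ∀ τ, 0 ≤ φ τ → 0 ≤ y τ ∧ 0 ≤ qB ρ (v τ) (y τ) ∧ v τ ≤ s ∧
      κ ≤ (3 - 5 * ρ) * v τ - 3 ∧ 7 / 5 ≤ v τ ∧ v τ ≤ 3237 / 1000 ∧ 0 ≤ Pv ρ (v τ) ∧ y τ ≤ 1 ∧
      ((3 - 5 * ρ) * v τ - 3) * Pv ρ (v τ) / 1000 ≤ Pv ρ (v τ) - b0v ρ (v τ) * y τ := by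
    intro τ h
    rw [hφ] at h
    simp only [le_min_iff] at h
    obtain ⟨⟨h1, h2⟩, h3, h4⟩ := h
    have hv1 : 7 / 5 ≤ v τ := by nlinarith
    have hP : 0 ≤ Pv ρ (v τ) := by
      rw [hfac]
      exact mul_nonneg (mul_nonneg (by linarith) h3) (by linarith)
    have hb1 : b0v ρ (v τ) - Pv ρ (v τ) = (3 - 5 * ρ) * v τ - 3 := by unfold b0v Pv; ring
    have hbp : 0 < b0v ρ (v τ) := by linarith
    have hq1 : ((3 - 5 * ρ) * v τ - 3) * Pv ρ (v τ) / 1000 ≤ Pv ρ (v τ) - b0v ρ (v τ) * y τ := by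
      unfold qB at h2; linarith
    refine ⟨h1, h2, by linarith, by linarith, hv1, by linarith [hb.2], hP, ?_, hq1⟩
    have : 0 ≤ ((3 - 5 * ρ) * v τ - 3) * Pv ρ (v τ) := mul_nonneg (by linarith) hP
    by_contra hn
    nlinarith
  have hd' : ∀ τ, 0 ≤ φ τ → HasDerivAt v (v τ * (Pv ρ (v τ) - b0v ρ (v τ) * y τ)) τ ∧
      HasDerivAt y (-2 * (1 - y τ) * (a0v ρ (v τ) * y τ - 6 / 5 * Pv ρ (v τ))) τ := by
    intro τ h
    obtain ⟨h1, -, -, -, h5, h6, -, h8, -⟩ := region τ h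
    exact hd τ (abs_le.2 ⟨by linarith, by linarith⟩) (abs_le.2 ⟨by linarith, by linarith⟩)
  have hφ0 : 0 < φ 0 := by
    rw [hφ]; simp only [lt_min_iff]
    exact ⟨⟨hy0, hq0⟩, by linarith, by linarith⟩
  have hpos : ∀ τ, 0 ≤ τ → 0 < φ τ := by
    intro t ht
    by_contra hn
    obtain ⟨c, hc0, -, hc, hbefore⟩ := first_exit hφc hφ0 ht (not_lt.1 hn)
    have hall : ∀ τ, 0 ≤ τ → τ ≤ c → 0 ≤ φ τ := by
      intro τ h1 h2
      rcases h2.lt_or_eq with h | h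
      · exact (hbefore τ h1 h).le
      · rw [h, hc]
    obtain ⟨h1, h2, h3, h4, h5, h6, h7, h8, h9⟩ := region c hc.ge
    obtain ⟨dv, dy⟩ := hd' c hc.ge
    have hmono : MonotoneOn v (Icc 0 c) := by
      refine monotoneOn_of_deriv_nonneg (convex_Icc 0 c) hv.continuousOn ?_ ?_
      · intro τ hτ
        rw [interior_Icc] at hτ
        exact (hd' τ (hall τ hτ.1.le hτ.2.le)).1.differentiableAt.differentiableWithinAt
      · intro τ hτ
        rw [interior_Icc] at hτ
        have hh := hall τ hτ.1.le hτ.2.le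
        rw [(hd' τ hh).1.deriv]
        obtain ⟨-, -, -, g4, g5, -, g7, -, g9⟩ := region τ hh
        refine mul_nonneg (by linarith) (le_trans ?_ g9)
        exact div_nonneg (mul_nonneg (by linarith) g7) (by norm_num)
    have hv0c : v 0 ≤ v c := hmono ⟨le_rfl, hc0.le⟩ ⟨hc0.le, le_rfl⟩ hc0.le
    have hk : 0 < (3 - 5 * ρ) * v c - 3 - κ := by nlinarith
    -- `s - v` satisfies a linear differential inequality, hence stays positive
    have hsv : 0 < s - v c := by
      have hm : MonotoneOn (fun τ => (s - v τ) * exp (40 * τ)) (Icc 0 c) := by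
        have hder : ∀ τ, 0 ≤ φ τ → HasDerivAt (fun τ => (s - v τ) * exp (40 * τ))
            (-(v τ * (Pv ρ (v τ) - b0v ρ (v τ) * y τ)) * exp (40 * τ)
              + (s - v τ) * (exp (40 * τ) * (40 * 1))) τ := fun τ hh =>
          ((hd' τ hh).1.const_sub s).mul (((hasDerivAt_id τ).const_mul 40).exp)
        refine monotoneOn_of_deriv_nonneg (convex_Icc 0 c) (by fun_prop) ?_ ?_
        · intro τ hτ
          rw [interior_Icc] at hτ
          exact (hder τ (hall τ hτ.1.le hτ.2.le)).differentiableAt.differentiableWithinAt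
        · intro τ hτ
          rw [interior_Icc] at hτ
          have hh := hall τ hτ.1.le hτ.2.le
          rw [(hder τ hh).deriv]
          obtain ⟨g1, -, g3, g4, g5, g6, g7, g8, g9⟩ := region τ hh
          have hb1 : b0v ρ (v τ) - Pv ρ (v τ) = (3 - 5 * ρ) * v τ - 3 := by unfold b0v Pv; ring
          have hbp : 0 < b0v ρ (v τ) := by linarith
          have hPs : Pv ρ (v τ) ≤ 4 * (s - v τ) := by
            rw [hfac]
            have h0 : ρ * (s - v τ + eps s) ≤ 1 * 4 :=
              mul_le_mul (by linarith [hr.2]) (by linarith [eps_lt hs, hb.2]) (by linarith)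
                (by norm_num)
            have h1 := mul_le_mul_of_nonneg_left h0 (sub_nonneg.2 g3)
            linarith
          have hle : v τ * (Pv ρ (v τ) - b0v ρ (v τ) * y τ) ≤ 40 * (s - v τ) := by
            have : Pv ρ (v τ) - b0v ρ (v τ) * y τ ≤ 4 * (s - v τ) := by
              linarith [mul_nonneg hbp.le g1]
            have h1 := mul_le_mul_of_nonneg_left this (show (0:ℝ) ≤ v τ by linarith)
            have h2 := mul_le_mul_of_nonneg_right (show v τ ≤ 10 by linarith) (show 0 ≤ 4 * (s - v τ) by linarith)
            linarith
          have := mul_le_mul_of_nonneg_right hle (exp_pos (40 * τ)).le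
          linarith
      have := hm ⟨le_rfl, hc0.le⟩ ⟨hc0.le, le_rfl⟩ hc0.le
      simp only [mul_zero, exp_zero, mul_one] at this
      have h0 : 0 < s - v 0 := by linarith
      exact pos_of_mul_pos_left (h0.trans_le this) (exp_pos _).le
    have hPpos : 0 < Pv ρ (v c) := by
      rw [hfac]; exact mul_pos (mul_pos (by linarith [hr.1]) hsv) (by linarith)
    -- the two remaining sides
    have hyc : 0 < y c := by
      by_contra hn
      have hy0 : y c = 0 := le_antisymm (not_lt.1 hn) h1
      have := deriv_nonpos_of_exit dy hc0
        (fun τ g1 g2 => (region τ (hall τ g1 g2.le)).1) hy0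
      rw [hy0] at this
      linarith
    have hqc' : 0 < qB ρ (v c) (y c) := by
      by_contra hn
      have hq0 : qB ρ (v c) (y c) = 0 := le_antisymm (not_lt.1 hn) h2
      have hdP : HasDerivAt (fun τ => Pv ρ (v τ))
          ((4 * ρ - 2 + 2 * ρ * v c) * (v c * (Pv ρ (v c) - b0v ρ (v c) * y c))) c := by
        have := (((dv.const_mul (4 * ρ - 2)).const_add 2).add ((dv.pow 2).const_mul ρ))
        have h2 : HasDerivAt (fun τ => 2 + (4 * ρ - 2) * v τ + ρ * v τ ^ 2) _ c := this
        exact h2.congr_deriv (by push_cast; ring)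
      have hdb : HasDerivAt (fun τ => b0v ρ (v τ))
          ((1 - ρ + 2 * ρ * v c) * (v c * (Pv ρ (v c) - b0v ρ (v c) * y c))) c := by
        have := (dv.sub_const 1).mul ((dv.const_mul ρ).const_add 1)
        have h2 : HasDerivAt (fun τ => (v τ - 1) * (1 + ρ * v τ)) _ c := this
        exact h2.congr_deriv (by ring)
      have hdq : HasDerivAt (fun τ => 1 - ((3 - 5 * ρ) * v τ - 3) / 1000)
          (-((3 - 5 * ρ) * (v c * (Pv ρ (v c) - b0v ρ (v c) * y c)) / 1000)) c :=
        (((dv.const_mul (3 - 5 * ρ)).sub_const 3).div_const 1000).const_sub 1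
      have hdd := (hdP.mul hdq).sub (hdb.mul dy)
      have hle := deriv_nonpos_of_exit (φ := fun τ => qB ρ (v τ) (y τ)) hdd hc0
        (fun τ g1 g2 => (region τ (hall τ g1 g2.le)).2.1) hq0
      have hid := qB_deriv_id ρ (v c) (y c) hq0
      have hin := barrier_ineq (by linarith [hr.1]) (by linarith [hr.2]) h5 h6 (by linarith) h7
      have hb1 : b0v ρ (v c) - Pv ρ (v c) = (3 - 5 * ρ) * v c - 3 := by unfold b0v Pv; ring
      have hbp : 0 < b0v ρ (v c) := by linarith
      have hrhs := mul_pos (mul_pos (show 0 < (3 - 5 * ρ) * v c - 3 by linarith) hPpos) hin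
      rw [← hid] at hrhs
      have := pos_of_mul_pos_right hrhs hbp.le
      linarith
    have : 0 < φ c := by
      rw [hφ]; simp only [lt_min_iff]; exact ⟨⟨hyc, hqc'⟩, hsv, hk⟩
    linarith
  intro τ hτ
  have := hpos τ hτ
  rw [hφ] at this
  simp only [lt_min_iff] at this
  obtain ⟨⟨h1, h2⟩, h3, h4⟩ := this
  exact ⟨h1, h2, by linarith, by linarith⟩

/-- `1 + (W + Z) / 2` for the central profile, at the radius `ζ`. -/
def uE (ρ ζ : ℝ) : ℝ := 1 + (wE ρ ζ - wE ρ (-ζ)) / (2 * ζ)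
/-- `(W - Z) / 10` for the central profile, at the radius `ζ`. -/
def sigE (ρ ζ : ℝ) : ℝ := (wE ρ ζ + wE ρ (-ζ)) / (10 * ζ)

/-- Entry of the central orbit into the invariant region. The leading coefficient of the barrier
function at the centre is `25 ρ (1 - 2ρ/3) (2/3 - P/1000) > 0`. -/
lemma entry_at {ρ : ℝ} (h1 : 19 / 100 < ρ) (h2 : ρ < 24 / 125) {g h : ℝ → ℝ}
    (hg : ContinuousAt g 0) (hh : ContinuousAt h 0) (hg0 : g 0 = 1)
    (hh0 : h 0 = -(25 / 3 * ρ * (1 - 5 * ρ / 3) * (1 - 2 * ρ / 3))) :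
    ∀ᶠ ζ in 𝓝[>] (0 : ℝ), ∀ u σ : ℝ, u = 1 - 5 * ρ / 3 + ζ ^ 2 * h ζ → σ = g ζ / (5 * ζ) →
      0 < u ∧ 0 < σ ∧ 0 < 1 - u ^ 2 / σ ^ 2 ∧ 0 < qB ρ (1 / u) (1 - u ^ 2 / σ ^ 2) ∧
      1 / u < 3 ∧ 0 < (3 - 5 * ρ) * (1 / u) - 3 := by
  obtain ⟨u, hu⟩ : ∃ u : ℝ → ℝ, u = fun ζ => 1 - 5 * ρ / 3 + ζ ^ 2 * h ζ := ⟨_, rfl⟩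
  have huc : ContinuousAt u 0 := by
    rw [hu]; exact continuousAt_const.add ((continuousAt_id.pow 2).mul hh)
  have hu0 : u 0 = 1 - 5 * ρ / 3 := by rw [hu]; simp
  have hu0p : 67 / 100 < u 0 := by rw [hu0]; linarith
  have hu0n : u 0 ≠ 0 := by linarith
  have hvc : ContinuousAt (fun ζ => 1 / u ζ) 0 := continuousAt_const.div huc hu0n
  have hPc : ContinuousAt (fun ζ => Pv ρ (1 / u ζ)) 0 := by
    unfold Pv; exact ((continuousAt_const.add (continuousAt_const.mul hvc)).add
      (continuousAt_const.mul (hvc.pow 2)))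
  have hbc : ContinuousAt (fun ζ => b0v ρ (1 / u ζ)) 0 := by
    unfold b0v; exact (hvc.sub continuousAt_const).mul
      (continuousAt_const.add (continuousAt_const.mul hvc))
  obtain ⟨F, hF⟩ : ∃ F : ℝ → ℝ, F = fun ζ => 25 * b0v ρ (1 / u ζ) * u ζ ^ 2 / g ζ ^ 2
      + 3 * h ζ / u ζ * (1 + Pv ρ (1 / u ζ) / 1000) := ⟨_, rfl⟩
  have hFc : ContinuousAt F 0 := by
    rw [hF]
    exact (((continuousAt_const.mul hbc).mul (huc.pow 2)).div (hg.pow 2) (by simp [hg0])).add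
      (((continuousAt_const.mul hh).div huc hu0n).mul
        (continuousAt_const.add (hPc.div_const 1000)))
  have hv0u : 1 / u 0 ≤ 3 / 2 := by
    rw [div_le_iff₀ (by linarith)]; linarith
  have hv0l : 1 ≤ 1 / u 0 := by
    rw [le_div_iff₀ (by linarith)]; linarith
  have hP0 : Pv ρ (1 / u 0) ≤ 100 := by
    unfold Pv; nlinarith
  have hF0 : 0 < F 0 := by
    have e1 : 25 * b0v ρ (1 / u 0) * u 0 ^ 2 / g 0 ^ 2 = 25 * (5 * ρ / 3) * (1 - 2 * ρ / 3) := by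
      rw [hg0]; unfold b0v
      have : 25 * ((1 / u 0 - 1) * (1 + ρ * (1 / u 0))) * u 0 ^ 2 / 1 ^ 2
        = 25 * ((1 - u 0) * (u 0 + ρ)) := by field_simp
      rw [this, hu0]; ring
    have e2 : 3 * h 0 / u 0 = -(25 * ρ * (1 - 2 * ρ / 3)) := by
      rw [div_eq_iff hu0n, hh0, hu0]; ring
    rw [hF]
    simp only
    rw [e1, e2]
    have : 0 < ρ * (1 - 2 * ρ / 3) := mul_pos (by linarith) (by linarith)
    nlinarith [mul_le_mul_of_nonneg_left hP0 this.le]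
  have hHc : ContinuousAt (fun ζ => 25 * ζ ^ 2 * u ζ ^ 2 / g ζ ^ 2) 0 :=
    ((continuousAt_const.mul (continuousAt_id.pow 2)).mul (huc.pow 2)).div (hg.pow 2)
      (by simp [hg0])
  have E1 := (huc.eventually (lt_mem_nhds (show (2:ℝ) / 5 < u 0 by linarith)))
  have E2 := (hg.eventually (lt_mem_nhds (show (0:ℝ) < g 0 by rw [hg0]; norm_num)))
  have E3 := (hFc.eventually (lt_mem_nhds hF0))
  have E4 := (hHc.eventually (gt_mem_nhds (show _ < (1:ℝ) by norm_num)))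
  have hh0n : h 0 < 0 := by
    rw [hh0]
    have := mul_pos (mul_pos (show 0 < 25 / 3 * ρ by linarith) (show 0 < 1 - 5 * ρ / 3 by linarith))
      (show 0 < 1 - 2 * ρ / 3 by linarith)
    linarith
  have E5 := (hh.eventually (gt_mem_nhds hh0n))
  filter_upwards [nhdsWithin_le_nhds E1, nhdsWithin_le_nhds E2, nhdsWithin_le_nhds E3,
    nhdsWithin_le_nhds E4, nhdsWithin_le_nhds E5, self_mem_nhdsWithin] with ζ k1 k2 k3 k4 k5 hζ
  have hζ : 0 < ζ := hζ
  intro u' σ hu' hσ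
  have hu'' : u' = u ζ := by rw [hu', hu]
  have hH : u' ^ 2 / σ ^ 2 = 25 * ζ ^ 2 * u ζ ^ 2 / g ζ ^ 2 := by
    rw [hu'', hσ]; field_simp; norm_num
  have hup : 0 < u ζ := by linarith
  have hq : (3 - 5 * ρ) * (1 / u ζ) - 3 = -(3 * ζ ^ 2 * h ζ / u ζ) := by
    have : u ζ = 1 - 5 * ρ / 3 + ζ ^ 2 * h ζ := by rw [hu]
    field_simp
    linear_combination (-3) * this
  have hqp : 0 < (3 - 5 * ρ) * (1 / u ζ) - 3 := by
    rw [hq]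
    have : 3 * ζ ^ 2 * h ζ / u ζ < 0 := div_neg_of_neg_of_pos
      (mul_neg_of_pos_of_neg (by positivity) k5) hup
    linarith
  refine ⟨by rw [hu'']; exact hup, by rw [hσ]; positivity, by rw [hH]; linarith, ?_, ?_, ?_⟩
  · rw [hH, hu'']
    have e : qB ρ (1 / u ζ) (1 - 25 * ζ ^ 2 * u ζ ^ 2 / g ζ ^ 2) = ζ ^ 2 * F ζ := by
      have hb1 : Pv ρ (1 / u ζ) - b0v ρ (1 / u ζ) = -((3 - 5 * ρ) * (1 / u ζ) - 3) := by
        unfold b0v Pv; ring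
      rw [hq] at hb1
      unfold qB
      rw [hq, hF]
      simp only
      generalize Pv ρ (1 / u ζ) = P at *
      generalize b0v ρ (1 / u ζ) = b at *
      have : P - b = 3 * ζ ^ 2 * h ζ / u ζ := by linarith
      have e1 : P * (1 - -(3 * ζ ^ 2 * h ζ / u ζ) / 1000) - b * (1 - 25 * ζ ^ 2 * u ζ ^ 2 / g ζ ^ 2)
        = (P - b) + P * (3 * ζ ^ 2 * h ζ / u ζ) / 1000 + b * (25 * ζ ^ 2 * u ζ ^ 2 / g ζ ^ 2) := by
        ring
      rw [e1, this]; ring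
    rw [e]; positivity
  · rw [hu'', div_lt_iff₀ hup]; linarith
  · rw [hu'']; exact hqp

lemma qB_cwa {a b c : ℝ → ℝ} {S : Set ℝ} {x : ℝ} (ha : ContinuousWithinAt a S x)
    (hb : ContinuousWithinAt b S x) (hc : ContinuousWithinAt c S x) :
    ContinuousWithinAt (fun s => qB (a s) (b s) (c s)) S x := by
  unfold qB Pv b0v
  fun_prop

set_option maxHeartbeats 1000000 in
/-- The central orbits, started at a fixed small radius `ζ0`, enter the invariant region uniformly
for all parameters close to the critical one. -/
lemma entry : ∃ ζ0 > 0, ∃ s1, 16 / 5 < s1 ∧ s1 < sS ∧ ∃ κ > 0, ∀ s ∈ Icc s1 sS,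
    ContDiffOn ℝ (⊤ : ℕ∞) (wE (rho s)) (Ioo (-(2 * ζ0)) (2 * ζ0)) ∧
    (∀ ζ : ℝ, ζ ≠ 0 → |ζ| < 2 * ζ0 → ∃ d, HasDerivAt (wE (rho s)) d ζ ∧
      rho s * wE (rho s) ζ + (ζ + 1 / 2 * (wE (rho s) ζ - wE (rho s) (-ζ)
        + 1 / 5 * (wE (rho s) ζ + wE (rho s) (-ζ)))) * d
        + 1 / 10 / ζ * (wE (rho s) ζ ^ 2 - wE (rho s) (-ζ) ^ 2) = 0) ∧
    ContinuousWithinAt (fun s => uE (rho s) ζ0) (Icc s1 sS) s ∧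
    ContinuousWithinAt (fun s => sigE (rho s) ζ0) (Icc s1 sS) s ∧
    0 < uE (rho s) ζ0 ∧ 0 < sigE (rho s) ζ0 ∧
    0 < 1 - uE (rho s) ζ0 ^ 2 / sigE (rho s) ζ0 ^ 2 ∧
    0 < qB (rho s) (1 / uE (rho s) ζ0) (1 - uE (rho s) ζ0 ^ 2 / sigE (rho s) ζ0 ^ 2) ∧
    1 / uE (rho s) ζ0 < s ∧ κ < (3 - 5 * rho s) * (1 / uE (rho s) ζ0) - 3 := by
  obtain ⟨R0, hR0, hcont, hprof⟩ := central_profile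
  have hrb := rho_bounds sS_mem
  have hr1 : ∀ s ∈ Dm, |rho s| ≤ 1 := fun s hs => by
    have := rho_bounds hs
    exact abs_le.2 ⟨by linarith [this.1], by linarith [this.2]⟩
  obtain ⟨-, -, g, h, hg, hh, hg0, hh0, hgh⟩ := hprof _ (hr1 sS sS_mem)
  rw [wS_three] at hh0
  have hev := entry_at (by linarith [hrb.1]) (by linarith [hrb.2]) hg hh hg0 hh0
  have hsm : ∀ᶠ ζ : ℝ in 𝓝[>] 0, ζ < R0 / 2 :=
    nhdsWithin_le_nhds (gt_mem_nhds (by linarith))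
  obtain ⟨ζ0, ⟨k, hk⟩, hζ0⟩ := ((hev.and hsm).and self_mem_nhdsWithin).exists
  have hζ0 : 0 < ζ0 := hζ0
  have hab : |ζ0| < R0 := by rw [abs_of_pos hζ0]; linarith
  have hab' : |-ζ0| < R0 := by rw [abs_neg]; exact hab
  obtain ⟨he1, he2⟩ := hgh ζ0 hab
  have hk' := k (uE (rho sS) ζ0) (sigE (rho sS) ζ0)
    (by unfold uE; rw [wS_one] at he2
        have : (wE (rho sS) ζ0 - wE (rho sS) (-ζ0)) / (2 * ζ0)
          = (wE (rho sS) ζ0 - wE (rho sS) (-ζ0)) / 2 / ζ0 := by rw [div_div]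
        rw [this, he2]; field_simp; ring)
    (by unfold sigE; rw [← he1]; field_simp; ring)
  obtain ⟨j1, j2, j3, j4, j5, j6⟩ := hk'
  have hmaps : MapsTo rho Dm (Icc (-1) 1) := fun s hs => abs_le.1 (hr1 s hs)
  have c1 : ContinuousOn (fun s => wE (rho s) ζ0) Dm := (hcont ζ0 hab).comp rho_cont hmaps
  have c2 : ContinuousOn (fun s => wE (rho s) (-ζ0)) Dm := (hcont (-ζ0) hab').comp rho_cont hmaps
  have cu : ContinuousOn (fun s => uE (rho s) ζ0) Dm :=
    continuousOn_const.add ((c1.sub c2).div_const _)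
  have cs : ContinuousOn (fun s => sigE (rho s) ζ0) Dm := (c1.add c2).div_const _
  have wu := cu sS sS_mem
  have ws := cs sS sS_mem
  have wr := rho_cont sS sS_mem
  have wv : ContinuousWithinAt (fun s => 1 / uE (rho s) ζ0) Dm sS :=
    continuousWithinAt_const.div wu j1.ne'
  have wy : ContinuousWithinAt (fun s => 1 - uE (rho s) ζ0 ^ 2 / sigE (rho s) ζ0 ^ 2) Dm sS :=
    continuousWithinAt_const.sub ((wu.pow 2).div (ws.pow 2) (pow_pos j2 2).ne')
  have wk : ContinuousWithinAt (fun s => (3 - 5 * rho s) * (1 / uE (rho s) ζ0) - 3) Dm sS :=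
    ((continuousWithinAt_const.sub (continuousWithinAt_const.mul wr)).mul wv).sub
      continuousWithinAt_const
  have wq : ContinuousWithinAt (fun s => qB (rho s) (1 / uE (rho s) ζ0)
      (1 - uE (rho s) ζ0 ^ 2 / sigE (rho s) ζ0 ^ 2)) Dm sS := qB_cwa wr wv wy
  obtain ⟨κ, hκ, hκ2⟩ : ∃ κ, 0 < κ ∧ κ < (3 - 5 * rho sS) * (1 / uE (rho sS) ζ0) - 3 :=
    exists_between j6
  have hDm : Dm ∈ 𝓝[≤] sS := by
    unfold Dm; exact Ioc_mem_nhdsLE sS_mem.1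
  have hnh : 𝓝[Dm] sS = 𝓝[≤] sS := by
    refine le_antisymm (nhdsWithin_mono _ fun x hx => hx.2) ?_
    exact nhdsWithin_le_of_mem hDm
  have EV : ∀ᶠ s in 𝓝[≤] sS, 0 < uE (rho s) ζ0 ∧ 0 < sigE (rho s) ζ0 ∧
    0 < 1 - uE (rho s) ζ0 ^ 2 / sigE (rho s) ζ0 ^ 2 ∧
    0 < qB (rho s) (1 / uE (rho s) ζ0) (1 - uE (rho s) ζ0 ^ 2 / sigE (rho s) ζ0 ^ 2) ∧
    1 / uE (rho s) ζ0 < 3 ∧ κ < (3 - 5 * rho s) * (1 / uE (rho s) ζ0) - 3 := by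
    rw [← hnh]
    filter_upwards [wu.eventually (lt_mem_nhds j1), ws.eventually (lt_mem_nhds j2),
      wy.eventually (lt_mem_nhds j3), wq.eventually (lt_mem_nhds j4),
      wv.eventually (gt_mem_nhds j5), wk.eventually (lt_mem_nhds hκ2)] with s a1 a2 a3 a4 a5 a6
    exact ⟨a1, a2, a3, a4, a5, a6⟩
  obtain ⟨l, hl, hl2⟩ := mem_nhdsLE_iff_exists_Icc_subset.1 (inter_mem EV hDm)
  refine ⟨ζ0, hζ0, max l (323/100), lt_of_lt_of_le (by norm_num) (le_max_right _ _), max_lt hl (by have := sS_bounds; linarith [this.1]), κ, hκ, ?_⟩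
  intro s hs
  have hsl : s ∈ Icc l sS := ⟨(le_max_left _ _).trans hs.1, hs.2⟩
  have hsD : s ∈ Dm := (hl2 hsl).2
  have hss : Icc (max l (323/100)) sS ⊆ Dm := fun x hx => (hl2 ⟨(le_max_left _ _).trans hx.1, hx.2⟩).2
  obtain ⟨b1, b2, b3, b4, b5, b6⟩ := (hl2 hsl).1
  obtain ⟨p1, p2, -⟩ := hprof _ (hr1 s hsD)
  refine ⟨p1.mono (Ioo_subset_Ioo (by linarith) (by linarith)), ?_,
    (cu s hsD).mono hss, (cs s hsD).mono hss, b1, b2, b3, b4, ?_, b6⟩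
  · intro ζ hz hz2
    obtain ⟨d, hd1, hd2⟩ := p2 ζ hz (by linarith)
    exact ⟨d, hd1, hd2⟩
  · linarith [(Dm_bounds hsD).1]

/-- Along an orbit in the invariant region, `v` reaches any neighbourhood of the sonic value `s` in
a time controlled by the rate `κ`. -/
lemma right_rate {s κ : ℝ} (hs : s ∈ Dm) (hκ : 0 < κ) {v y : ℝ → ℝ} (hv : Continuous v)
    (hd : ∀ τ, 0 ≤ τ → HasDerivAt v (v τ * (Pv (rho s) (v τ) - b0v (rho s) (v τ) * y τ)) τ)
    (hc : ∀ τ, 0 ≤ τ → 0 < y τ ∧ 0 < qB (rho s) (v τ) (y τ) ∧ v τ < s ∧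
      κ < (3 - 5 * rho s) * v τ - 3) {r : ℝ} (hr : 0 < r) {τ : ℝ}
    (hτ : 4 / (κ / 10000 * r ^ 2) ≤ τ) : s - v τ < r := by
  have hb := Dm_bounds hs
  have hρ := rho_bounds hs
  have hε := eps_nonneg hs
  have hfac := Pv_factor hs
  generalize rho s = ρ at *
  have hT : 0 < 4 / (κ / 10000 * r ^ 2) := by positivity
  have hlow : ∀ τ, 0 ≤ τ → κ / 10000 * (s - v τ) ^ 2
      ≤ v τ * (Pv ρ (v τ) - b0v ρ (v τ) * y τ) ∧ 1 ≤ v τ := by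
    intro τ hτ
    obtain ⟨h1, h2, h3, h4⟩ := hc τ hτ
    have hv1 : 1 ≤ v τ := by nlinarith [hρ.1, hρ.2]
    have hx : 0 < s - v τ := by linarith
    have hP : 1 / 10 * (s - v τ) ^ 2 ≤ Pv ρ (v τ) := by
      rw [hfac]
      have : 1 / 10 * ((s - v τ) * (s - v τ)) ≤ ρ * ((s - v τ) * (s - v τ + eps s)) :=
        mul_le_mul (by linarith [hρ.1]) (mul_le_mul_of_nonneg_left (by linarith) hx.le)
          (mul_pos hx hx).le (by linarith [hρ.1])
      linarith
    have hq : κ * (1 / 10 * (s - v τ) ^ 2) ≤ ((3 - 5 * ρ) * v τ - 3) * Pv ρ (v τ) :=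
      mul_le_mul h4.le hP (by positivity) (by linarith)
    have h5 : κ / 10000 * (s - v τ) ^ 2 ≤ Pv ρ (v τ) - b0v ρ (v τ) * y τ := by
      unfold qB at h2; linarith
    have h6 : 0 ≤ κ / 10000 * (s - v τ) ^ 2 := by positivity
    have h7 := mul_le_mul_of_nonneg_right hv1 (h6.trans h5)
    exact ⟨by linarith, hv1⟩
  by_contra hn
  have hn := not_lt.1 hn
  have hτ0 : 0 ≤ τ := hT.le.trans hτ
  have hmono : MonotoneOn v (Icc 0 τ) := by
    refine monotoneOn_of_deriv_nonneg (convex_Icc 0 τ) hv.continuousOn ?_ ?_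
    · intro t ht
      rw [interior_Icc] at ht
      exact (hd t ht.1.le).differentiableAt.differentiableWithinAt
    · intro t ht
      rw [interior_Icc] at ht
      rw [(hd t ht.1.le).deriv]
      have h0 : 0 ≤ κ / 10000 * (s - v t) ^ 2 := by positivity
      exact h0.trans (hlow t ht.1.le).1
  have hmono2 : MonotoneOn (fun t => v t - κ / 10000 * r ^ 2 * t) (Icc 0 τ) := by
    have hder : ∀ t, 0 ≤ t → HasDerivAt (fun t => v t - κ / 10000 * r ^ 2 * t)
        (v t * (Pv ρ (v t) - b0v ρ (v t) * y t) - κ / 10000 * r ^ 2 * 1) t := fun t ht =>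
      (hd t ht).sub ((hasDerivAt_id t).const_mul _)
    refine monotoneOn_of_deriv_nonneg (convex_Icc 0 τ) (by fun_prop) ?_ ?_
    · intro t ht
      rw [interior_Icc] at ht
      exact (hder t ht.1.le).differentiableAt.differentiableWithinAt
    · intro t ht
      rw [interior_Icc] at ht
      rw [(hder t ht.1.le).deriv]
      have h1 : v t ≤ v τ := hmono ⟨ht.1.le, ht.2.le⟩ ⟨hτ0, le_rfl⟩ ht.2.le
      have h2 : r ^ 2 ≤ (s - v t) ^ 2 := pow_le_pow_left₀ hr.le (by linarith) 2
      have h3 := mul_le_mul_of_nonneg_left h2 (show 0 ≤ κ / 10000 by positivity)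
      linarith [(hlow t ht.1.le).1]
  have h1 := hmono2 ⟨le_rfl, hτ0⟩ ⟨hτ0, le_rfl⟩ hτ0
  simp only at h1
  have h2 : 4 ≤ κ / 10000 * r ^ 2 * τ := by
    rw [div_le_iff₀ (by positivity)] at hτ; linarith
  have h3 := (hlow 0 le_rfl).2
  have h4 := (hc τ hτ0).2.2.1
  linarith [hb.2]

/-- The orbits issued from the centre of symmetry, for all parameters close to the critical one. -/
lemma right_orbit : ∃ ζ0 > 0, ∃ s1, 16 / 5 < s1 ∧ s1 < sS ∧ ∃ V Y : ℝ → ℝ → ℝ,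
    (∀ s ∈ Icc s1 sS,
      ContDiffOn ℝ (⊤ : ℕ∞) (wE (rho s)) (Ioo (-(2 * ζ0)) (2 * ζ0)) ∧
      (∀ ζ : ℝ, ζ ≠ 0 → |ζ| < 2 * ζ0 → ∃ d, HasDerivAt (wE (rho s)) d ζ ∧
        rho s * wE (rho s) ζ + (ζ + 1 / 2 * (wE (rho s) ζ - wE (rho s) (-ζ)
          + 1 / 5 * (wE (rho s) ζ + wE (rho s) (-ζ)))) * d
          + 1 / 10 / ζ * (wE (rho s) ζ ^ 2 - wE (rho s) (-ζ) ^ 2) = 0) ∧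
      0 < uE (rho s) ζ0 ∧ 0 < sigE (rho s) ζ0 ∧ V s 0 = 1 / uE (rho s) ζ0 ∧
      Y s 0 = 1 - uE (rho s) ζ0 ^ 2 / sigE (rho s) ζ0 ^ 2 ∧ Continuous (V s) ∧ Continuous (Y s) ∧
      ∀ τ, 0 ≤ τ →
        HasDerivAt (V s) (V s τ * (Pv (rho s) (V s τ) - b0v (rho s) (V s τ) * Y s τ)) τ ∧
        HasDerivAt (Y s)
          (-2 * (1 - Y s τ) * (a0v (rho s) (V s τ) * Y s τ - 6 / 5 * Pv (rho s) (V s τ))) τ ∧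
        0 < Y s τ ∧ Y s τ < 1 ∧ 1 ≤ V s τ ∧ V s τ < s ∧
        0 < Pv (rho s) (V s τ) - b0v (rho s) (V s τ) * Y s τ) ∧
    (∀ τ, 0 ≤ τ → ContinuousOn (fun s => V s τ) (Icc s1 sS) ∧
      ContinuousOn (fun s => Y s τ) (Icc s1 sS)) ∧
    ∀ r > 0, ∃ T > 0, ∀ s ∈ Icc s1 sS, ∀ τ, T ≤ τ → s - V s τ < r := by
  obtain ⟨ζ0, hζ0, s1, hs1, hs1', κ, hκ, H⟩ := entry
  obtain ⟨Φ, hΦ0, hΦd, hΦc⟩ := box_flow fR_contDiff (show (0:ℝ) ≤ 10 by norm_num)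
  obtain ⟨p, hp⟩ : ∃ p : ℝ → ℝ × ℝ × ℝ, p = fun s => (rho s, 1 / uE (rho s) ζ0,
    1 - uE (rho s) ζ0 ^ 2 / sigE (rho s) ζ0 ^ 2) := ⟨_, rfl⟩
  have hsub : Icc s1 sS ⊆ Dm := fun s hs => ⟨hs1.trans_le hs.1, hs.2⟩
  have h1 : ∀ s τ, HasDerivAt (fun τ => (Φ (p s) τ).1) 0 τ := fun s τ => (hΦd (p s) τ).fst
  have hconst : ∀ s τ, (Φ (p s) τ).1 = rho s := by
    intro s τ
    have := is_const_of_deriv_eq_zero (f := fun τ => (Φ (p s) τ).1)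
      (fun τ => (h1 s τ).differentiableAt) (fun τ => (h1 s τ).deriv) τ 0
    simp only [hΦ0] at this
    rw [this, hp]
  have hcont : ∀ s, Continuous (Φ (p s)) := fun s =>
    continuous_iff_continuousAt.2 fun τ => (hΦd (p s) τ).continuousAt
  have hvc : ∀ s, Continuous fun τ => (Φ (p s) τ).2.1 := fun s => (hcont s).snd.fst
  have hyc : ∀ s, Continuous fun τ => (Φ (p s) τ).2.2 := fun s => (hcont s).snd.snd
  have hder : ∀ s ∈ Dm, ∀ τ, |(Φ (p s) τ).2.1| ≤ 10 → |(Φ (p s) τ).2.2| ≤ 10 →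
      HasDerivAt (fun τ => (Φ (p s) τ).2.1) ((Φ (p s) τ).2.1 * (Pv (rho s) (Φ (p s) τ).2.1
        - b0v (rho s) (Φ (p s) τ).2.1 * (Φ (p s) τ).2.2)) τ ∧
      HasDerivAt (fun τ => (Φ (p s) τ).2.2) (-2 * (1 - (Φ (p s) τ).2.2) *
        (a0v (rho s) (Φ (p s) τ).2.1 * (Φ (p s) τ).2.2
          - 6 / 5 * Pv (rho s) (Φ (p s) τ).2.1)) τ := by
    intro s hs τ hv hy
    have h0 : |(Φ (p s) τ).1| ≤ 10 := by
      rw [hconst]; have := rho_bounds hs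
      exact abs_le.2 ⟨by linarith [this.1], by linarith [this.2]⟩
    have h := hΦd (p s) τ
    rw [cl3_of_abs h0 hv hy] at h
    have e := hconst s τ
    constructor
    · have h2 := h.snd.fst
      simp only [fR, e] at h2
      exact h2
    · have h2 := h.snd.snd
      simp only [fR, e] at h2
      exact h2
  have hconf : ∀ s ∈ Icc s1 sS, ∀ τ, 0 ≤ τ → 0 < (Φ (p s) τ).2.2 ∧
      0 < qB (rho s) (Φ (p s) τ).2.1 (Φ (p s) τ).2.2 ∧ (Φ (p s) τ).2.1 < s ∧
      κ < (3 - 5 * rho s) * (Φ (p s) τ).2.1 - 3 := by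
    intro s hs
    obtain ⟨-, -, -, -, k1, k2, k3, k4, k5, k6⟩ := H s hs
    refine right_confine (hsub hs) hκ (hvc s) (hyc s) (hder s (hsub hs)) ?_ ?_ ?_ ?_
    all_goals simp only [hΦ0]; rw [hp]; assumption
  have hbd : ∀ s ∈ Icc s1 sS, ∀ τ, 0 ≤ τ → (Φ (p s) τ).2.2 < 1 ∧ 1 ≤ (Φ (p s) τ).2.1 ∧
      0 < Pv (rho s) (Φ (p s) τ).2.1 - b0v (rho s) (Φ (p s) τ).2.1 * (Φ (p s) τ).2.2 := by
    intro s hs τ hτ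
    obtain ⟨k1, k2, k3, k4⟩ := hconf s hs τ hτ
    have hρ := rho_bounds (hsub hs)
    have hfac := Pv_factor (hsub hs) (Φ (p s) τ).2.1
    have hε := eps_nonneg (hsub hs)
    generalize (Φ (p s) τ).2.1 = v at *
    generalize (Φ (p s) τ).2.2 = y at *
    generalize rho s = ρ at *
    have hv1 : 1 ≤ v := by nlinarith [hρ.1, hρ.2]
    have hP : 0 < Pv ρ v := by
      rw [hfac]; exact mul_pos (mul_pos (by linarith [hρ.1]) (by linarith)) (by linarith)
    have hb1 : b0v ρ v - Pv ρ v = (3 - 5 * ρ) * v - 3 := by unfold b0v Pv; ring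
    have hq : 0 < ((3 - 5 * ρ) * v - 3) * Pv ρ v := mul_pos (by linarith) hP
    unfold qB at k2
    refine ⟨?_, hv1, by linarith⟩
    have : 0 < b0v ρ v * (1 - y) := by linarith
    linarith [pos_of_mul_pos_right this (by linarith)]
  refine ⟨ζ0, hζ0, s1, hs1, hs1', fun s τ => (Φ (p s) τ).2.1, fun s τ => (Φ (p s) τ).2.2,
    ?_, ?_, ?_⟩
  · intro s hs
    obtain ⟨m1, m2, -, -, k1, k2, k3, k4, k5, k6⟩ := H s hs
    refine ⟨m1, m2, k1, k2, by simp only [hΦ0]; rw [hp], by simp only [hΦ0]; rw [hp], hvc s, hyc s,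
      fun τ hτ => ?_⟩
    obtain ⟨j1, j2, j3, j4⟩ := hconf s hs τ hτ
    obtain ⟨i1, i2, i3⟩ := hbd s hs τ hτ
    have hb := Dm_bounds (hsub hs)
    obtain ⟨d1, d2⟩ := hder s (hsub hs) τ (abs_le.2 ⟨by linarith, by linarith [hb.2]⟩)
      (abs_le.2 ⟨by linarith, by linarith⟩)
    exact ⟨d1, d2, j1, i1, i2, j3, i3⟩
  · have hpc : ContinuousOn p (Icc s1 sS) := by
      intro s hs
      obtain ⟨-, -, c1, c2, k1, k2, -⟩ := H s hs
      rw [hp]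
      exact ((rho_cont s (hsub hs)).mono hsub).prodMk ((continuousWithinAt_const.div c1 k1.ne').prodMk
        (continuousWithinAt_const.sub ((c1.pow 2).div (c2.pow 2) (pow_pos k2 2).ne')))
    intro τ hτ
    have := (hΦc τ hτ).comp_continuousOn hpc
    exact ⟨this.snd.fst, this.snd.snd⟩
  · intro r hr
    refine ⟨4 / (κ / 10000 * r ^ 2), by positivity, fun s hs τ hτ => ?_⟩
    refine right_rate (y := fun τ => (Φ (p s) τ).2.2) (hsub hs) hκ (hvc s) (fun t ht => ?_)
      (hconf s hs) hr hτ
    have hb := Dm_bounds (hsub hs)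
    obtain ⟨j1, j2, j3, j4⟩ := hconf s hs t ht
    obtain ⟨i1, i2, i3⟩ := hbd s hs t ht
    exact (hder s (hsub hs) t (abs_le.2 ⟨by linarith, by linarith [hb.2]⟩)
      (abs_le.2 ⟨by linarith, by linarith⟩)).1

/-! ### Comparison of orbits with barriers -/

lemma cv_X_pow (R : ℝ) (n : ℕ) : Cv R ((X : PowerSeries ℝ) ^ n) :=
  cv_of_finite n (fun m hm => by rw [coeff_X_pow, if_neg (by omega)]) R

lemma ev_X_pow (n : ℕ) (x : ℝ) : ev ((X : PowerSeries ℝ) ^ n) x = x ^ n := by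
  induction n with
  | zero => rw [pow_zero, pow_zero, ev_one]
  | succ n ih =>
    rw [pow_succ, ev_mul (cv_X_pow (|x| + 1) n) (cv_X _) (by linarith), ih, ev_X, pow_succ]

lemma ev_C_mul_X_pow (c : ℝ) (n : ℕ) (x : ℝ) :
    ev (C c * (X : PowerSeries ℝ) ^ n) x = c * x ^ n := by
  rw [ev_mul (cv_C (|x| + 1) c) (cv_X_pow _ n) (by linarith), ev_C, ev_X_pow]

lemma cv_C_mul_X_pow (R c : ℝ) (n : ℕ) :
    Cv R (C c * (X : PowerSeries ℝ) ^ n) := (cv_C R c).mul (cv_X_pow R n)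

lemma cv_VPs (R s : ℝ) : Cv R (VPs s) :=
  cv_of_finite 3 (fun n hn => by
    rw [coeff_VPs, if_neg (by omega), if_neg (by omega), if_neg (by omega)]) R
lemma cv_VBs (R s : ℝ) : Cv R (VBs s) :=
  cv_of_finite 3 (fun n hn => by
    rw [coeff_VBs, if_neg (by omega), if_neg (by omega), if_neg (by omega), if_neg (by omega)]) R
lemma cv_A0s (R s : ℝ) : Cv R (A0s s) :=
  cv_of_finite 2 (fun n hn => by
    rw [coeff_A0s, if_neg (by omega), if_neg (by omega), if_neg (by omega)]) R
lemma cv_PPs (R s : ℝ) : Cv R (PPs s) :=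
  cv_of_finite 2 (fun n hn => by rw [coeff_PPs, if_neg (by omega), if_neg (by omega)]) R

lemma ev_VPs {s : ℝ} (hs : s ∈ Dm) (x : ℝ) : ev (VPs s) x = (s - x) * Pv (rho s) (s - x) := by
  rw [ev_of_finite 3 (fun n hn => by
    rw [coeff_VPs, if_neg (by omega), if_neg (by omega), if_neg (by omega)])]
  rw [Pv_factor hs]
  simp [Finset.sum_range_succ, coeff_VPs, pp1, pp2, pp3]
  ring
lemma ev_VBs (s x : ℝ) : ev (VBs s) x = (s - x) * b0v (rho s) (s - x) := by
  rw [ev_of_finite 3 (fun n hn => by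
    rw [coeff_VBs, if_neg (by omega), if_neg (by omega), if_neg (by omega), if_neg (by omega)])]
  simp [Finset.sum_range_succ, coeff_VBs, ka0, ka1, ka2, ka3, b0v]
  ring
lemma ev_A0s (s x : ℝ) : ev (A0s s) x = a0v (rho s) (s - x) := by
  rw [ev_of_finite 2 (fun n hn => by
    rw [coeff_A0s, if_neg (by omega), if_neg (by omega), if_neg (by omega)])]
  simp [Finset.sum_range_succ, coeff_A0s, al0, al1, al2, a0v]
  ring
lemma ev_PPs {s : ℝ} (hs : s ∈ Dm) (x : ℝ) : ev (PPs s) x = Pv (rho s) (s - x) := by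
  rw [ev_of_finite 2 (fun n hn => by rw [coeff_PPs, if_neg (by omega), if_neg (by omega)])]
  rw [Pv_factor hs]
  simp [Finset.sum_range_succ, coeff_PPs]
  ring

lemma Cv.dd {R : ℝ} {f : PowerSeries ℝ} (hf : Cv R f) : Cv R (dd f) := hf.deriv

lemma cv_Res {R s : ℝ} {Q : PowerSeries ℝ} (hQ : Cv R Q) : Cv R (Res s Q) :=
  (((cv_VPs R s).mul hQ.dd).sub (((cv_VBs R s).mul hQ).mul hQ.dd)).sub
    (((cv_C R 2).mul ((cv_one R).sub hQ)).mul (((cv_A0s R s).mul hQ).sub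
      ((cv_C R _).mul (cv_PPs R s))))

lemma ev_Res {R s : ℝ} (hs : s ∈ Dm) {Q : PowerSeries ℝ} (hQ : Cv R Q) {x : ℝ} (hx : |x| < R) :
    ev (Res s Q) x = (s - x) * (Pv (rho s) (s - x) - b0v (rho s) (s - x) * ev Q x) * ev (dd Q) x
      - 2 * (1 - ev Q x) * (a0v (rho s) (s - x) * ev Q x - 6 / 5 * Pv (rho s) (s - x)) := by
  have c1 := cv_VPs R s
  have c2 := cv_VBs R s
  have c3 := cv_A0s R s
  have c4 := cv_PPs R s
  rw [Res, ev_sub ((c1.mul hQ.dd).sub ((c2.mul hQ).mul hQ.dd))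
    (((cv_C R 2).mul ((cv_one R).sub hQ)).mul ((c3.mul hQ).sub ((cv_C R _).mul c4))) hx,
    ev_sub (c1.mul hQ.dd) ((c2.mul hQ).mul hQ.dd) hx, ev_mul c1 hQ.dd hx,
    ev_mul (c2.mul hQ) hQ.dd hx, ev_mul c2 hQ hx,
    ev_mul ((cv_C R 2).mul ((cv_one R).sub hQ)) ((c3.mul hQ).sub ((cv_C R _).mul c4)) hx,
    ev_mul (cv_C R 2) ((cv_one R).sub hQ) hx, ev_sub (cv_one R) hQ hx,
    ev_sub (c3.mul hQ) ((cv_C R _).mul c4) hx, ev_mul c3 hQ hx, ev_mul (cv_C R _) c4 hx,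
    ev_C, ev_C, ev_one, ev_VPs hs, ev_VBs, ev_A0s, ev_PPs hs]
  ring

/-- The orbit of the centre of symmetry, followed up to the sonic line `v = s`. -/
structure Orb (s : ℝ) (v y : ℝ → ℝ) : Prop where
  mem : s ∈ Dm
  cv : Continuous v
  cy : Continuous y
  dv : ∀ τ, 0 ≤ τ → HasDerivAt v (v τ * (Pv (rho s) (v τ) - b0v (rho s) (v τ) * y τ)) τ
  dy : ∀ τ, 0 ≤ τ →
    HasDerivAt y (-2 * (1 - y τ) * (a0v (rho s) (v τ) * y τ - 6 / 5 * Pv (rho s) (v τ))) τ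
  bd : ∀ τ, 0 ≤ τ → 0 < y τ ∧ y τ < 1 ∧ 1 ≤ v τ ∧ v τ < s ∧
    0 < Pv (rho s) (v τ) - b0v (rho s) (v τ) * y τ
  lim : ∀ r > 0, ∃ T > 0, ∀ τ, T ≤ τ → s - v τ < r

lemma Orb.mono {s : ℝ} {v y : ℝ → ℝ} (h : Orb s v y) {t1 t2 : ℝ} (h0 : 0 ≤ t1) (h12 : t1 ≤ t2) :
    v t1 ≤ v t2 := by
  have : MonotoneOn v (Icc t1 t2) := by
    refine monotoneOn_of_deriv_nonneg (convex_Icc _ _) h.cv.continuousOn ?_ ?_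
    · intro τ hτ
      rw [interior_Icc] at hτ
      exact (h.dv τ (h0.trans hτ.1.le)).differentiableAt.differentiableWithinAt
    · intro τ hτ
      rw [interior_Icc] at hτ
      have hτ0 := h0.trans hτ.1.le
      rw [(h.dv τ hτ0).deriv]
      obtain ⟨-, -, h3, -, h5⟩ := h.bd τ hτ0
      exact mul_nonneg (by linarith) h5.le
  exact this ⟨le_rfl, h12⟩ ⟨h12, le_rfl⟩ h12

lemma Orb.hit {s : ℝ} {v y : ℝ → ℝ} (h : Orb s v y) {x : ℝ} (hx : 0 < x) (hx0 : x ≤ s - v 0) :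
    ∃ τ, 0 ≤ τ ∧ s - v τ = x := by
  obtain ⟨T, hT, hT2⟩ := h.lim x hx
  have hc : ContinuousOn (fun τ => s - v τ) (Icc 0 T) := (continuous_const.sub h.cv).continuousOn
  obtain ⟨τ, hτ, e⟩ := intermediate_value_Icc' hT.le hc ⟨(hT2 T le_rfl).le, hx0⟩
  exact ⟨τ, hτ.1, e⟩

/-- Derivative of `y - Q(s - v)` along an orbit; on contact it is the residual of `Q`. -/
lemma Orb.hasDerivAt_sub {s : ℝ} {v y : ℝ → ℝ} (h : Orb s v y) {R : ℝ} {Q : PowerSeries ℝ}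
    (hQ : Cv R Q) {τ : ℝ} (hτ : 0 ≤ τ) (hx : s - v τ < R) :
    HasDerivAt (fun τ => y τ - ev Q (s - v τ))
      (-2 * (1 - y τ) * (a0v (rho s) (v τ) * y τ - 6 / 5 * Pv (rho s) (v τ))
        - ev (dd Q) (s - v τ) * -(v τ * (Pv (rho s) (v τ) - b0v (rho s) (v τ) * y τ))) τ := by
  have hx' : |s - v τ| < R := by
    rw [abs_of_pos (by linarith [(h.bd τ hτ).2.2.2.1])]; exact hx
  have hd : HasDerivAt (ev Q) (ev (dd Q) (s - v τ)) (s - v τ) := ev_hasDerivAt hQ hx'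
  have hc : HasDerivAt (fun τ => ev Q (s - v τ)) _ τ :=
    HasDerivAt.comp (h := fun τ => s - v τ) τ hd ((h.dv τ hτ).const_sub s)
  exact (h.dy τ hτ).sub hc

lemma Orb.contact {s : ℝ} {v y : ℝ → ℝ} (h : Orb s v y) {R : ℝ} {Q : PowerSeries ℝ}
    (hQ : Cv R Q) {τ : ℝ} (hτ : 0 ≤ τ) (hx : s - v τ < R) (he : y τ - ev Q (s - v τ) = 0) :
    HasDerivAt (fun τ => y τ - ev Q (s - v τ)) (ev (Res s Q) (s - v τ)) τ := by
  have hx' : |s - v τ| < R := by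
    rw [abs_of_pos (by linarith [(h.bd τ hτ).2.2.2.1])]; exact hx
  refine (h.hasDerivAt_sub hQ hτ hx).congr_deriv ?_
  rw [ev_Res h.mem hQ hx', ← sub_eq_zero.1 he, sub_sub_cancel]
  ring

/-- A function whose zeros on `[t₀, t₁]` are strict down-crossings stays negative. -/
lemma no_return {D : ℝ → ℝ} {t0 t1 : ℝ} (ht : t0 ≤ t1) (hc : ContinuousOn D (Icc t0 t1))
    (hd : ∀ t ∈ Icc t0 t1, D t = 0 → ∃ d, HasDerivAt D d t ∧ d < 0) (h0 : D t0 < 0) :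
    D t1 < 0 := by
  by_contra hn
  have hn := not_lt.1 hn
  -- first zero: infimum of the closed set of points where `D ≥ 0`
  obtain ⟨S, hS⟩ : ∃ S, S = Icc t0 t1 ∩ D ⁻¹' Ici 0 := ⟨_, rfl⟩
  have hScl : IsClosed S := by rw [hS]; exact hc.preimage_isClosed_of_isClosed isClosed_Icc isClosed_Ici
  have hSne : S.Nonempty := ⟨t1, by rw [hS]; exact ⟨⟨ht, le_rfl⟩, hn⟩⟩
  have hSb : BddBelow S := ⟨t0, fun x hx => by rw [hS] at hx; exact hx.1.1⟩
  obtain ⟨c, hce⟩ : ∃ c, c = sInf S := ⟨_, rfl⟩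
  have hcS : c ∈ S := by rw [hce]; exact hScl.csInf_mem hSne hSb
  have hcS' := hcS
  rw [hS] at hcS'
  have hbefore : ∀ t, t0 ≤ t → t < c → D t < 0 := by
    intro t h1 h2
    by_contra hh
    have : t ∈ S := by rw [hS]; exact ⟨⟨h1, h2.le.trans hcS'.1.2⟩, not_lt.1 hh⟩
    have := csInf_le hSb this
    rw [← hce] at this; linarith
  have hc0 : 0 ≤ D c := hcS'.2
  have htc : t0 < c := by
    rcases hcS'.1.1.lt_or_eq with h | h
    · exact h
    · rw [← h] at hc0; linarith
  have hzero : D c = 0 := by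
    refine le_antisymm ?_ hc0
    have hcw : ContinuousWithinAt D (Ico t0 c) c :=
      (hc c hcS'.1).mono fun x hx => ⟨hx.1, hx.2.le.trans hcS'.1.2⟩
    have hcl : c ∈ closure (Ico t0 c) := by rw [closure_Ico htc.ne]; exact ⟨htc.le, le_rfl⟩
    have := mem_closure_iff_nhdsWithin_neBot.1 hcl
    exact le_of_tendsto hcw (by
      filter_upwards [self_mem_nhdsWithin] with x hx
      exact (hbefore x hx.1 hx.2).le)
  obtain ⟨d, hd1, hd2⟩ := hd c hcS'.1 hzero
  have := deriv_nonpos_of_exit (φ := fun t => -D t) hd1.neg htc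
    (fun τ h1 h2 => by linarith [hbefore τ h1 h2]) (by simp [hzero])
  linarith

/-- Solutions of a linear equation keep their sign. -/
lemma linear_sign {e c : ℝ → ℝ} {t0 : ℝ} (hc : ContinuousOn c (Ici t0))
    (hd : ∀ t, t0 ≤ t → HasDerivAt e (c t * e t) t) {t : ℝ} (ht : t0 ≤ t) :
    ∃ p > 0, e t = p * e t0 := by
  obtain ⟨k, hk⟩ : ∃ k : ℝ → ℝ, k = fun t => c (max t t0) := ⟨_, rfl⟩
  have hkc : Continuous k := by
    rw [hk]
    exact hc.comp_continuous (continuous_id.max continuous_const) fun x => mem_Ici.2 (le_max_right x t0)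
  have hint : ∀ t, HasDerivAt (fun t => ∫ u in t0..t, k u) (k t) t := fun t =>
    intervalIntegral.integral_hasDerivAt_right (hkc.intervalIntegrable _ _)
      (hkc.stronglyMeasurableAtFilter _ _) hkc.continuousAt
  have hder : ∀ t, t0 ≤ t → HasDerivAt (fun t => e t * exp (-∫ u in t0..t, k u)) 0 t := by
    intro t ht
    have := (hd t ht).mul (hint t).neg.exp
    refine this.congr_deriv ?_
    have : k t = c t := by rw [hk]; simp [max_eq_left ht]
    rw [this]; ring
  have hconst := constant_of_has_deriv_right_zero (f := fun t => e t * exp (-∫ u in t0..t, k u))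
    (a := t0) (b := t) (fun x hx => (hder x hx.1).continuousAt.continuousWithinAt)
    (fun x hx => (hder x hx.1).hasDerivWithinAt) t ⟨ht, le_rfl⟩
  simp only [intervalIntegral.integral_same, neg_zero, exp_zero, mul_one] at hconst
  refine ⟨exp (∫ u in t0..t, k u), exp_pos _, ?_⟩
  rw [← hconst, mul_comm, mul_assoc, ← exp_add, neg_add_cancel, exp_zero, mul_one]

/-- The position of an orbit relative to the analytic solution does not change. -/
lemma Orb.persist {s : ℝ} {v y : ℝ → ℝ} (h : Orb s v y) {R : ℝ} {Q : PowerSeries ℝ}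
    (hQ : Cv R Q) (hres : Res s Q = 0) {t0 : ℝ} (h0 : 0 ≤ t0) (hx : s - v t0 < R) {t : ℝ}
    (ht : t0 ≤ t) : ∃ p > 0, y t - ev Q (s - v t) = p * (y t0 - ev Q (s - v t0)) := by
  have hxt : ∀ t, t0 ≤ t → s - v t < R := fun t ht => by linarith [h.mono h0 ht]
  have hxa : ∀ t, t0 ≤ t → |s - v t| < R := fun t ht => by
    rw [abs_of_pos (by linarith [(h.bd t (h0.trans ht)).2.2.2.1])]; exact hxt t ht
  refine linear_sign (e := fun t => y t - ev Q (s - v t)) (c := fun t =>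
    -2 * (a0v (rho s) (v t) * (1 - y t - ev Q (s - v t)) + 6 / 5 * Pv (rho s) (v t))
      - v t * b0v (rho s) (v t) * ev (dd Q) (s - v t)) ?_ (fun t ht => ?_) ht
  · intro t ht
    have c1 : ContinuousAt (fun t => ev Q (s - v t)) t :=
      (ev_hasDerivAt hQ (hxa t ht)).continuousAt.comp (f := fun t => s - v t)
        (continuous_const.sub h.cv).continuousAt
    have c2 : ContinuousAt (fun t => ev (dd Q) (s - v t)) t :=
      (ev_hasDerivAt hQ.dd (hxa t ht)).continuousAt.comp (f := fun t => s - v t)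
        (continuous_const.sub h.cv).continuousAt
    have c3 := h.cv.continuousAt (x := t)
    have c4 := h.cy.continuousAt (x := t)
    refine ContinuousAt.continuousWithinAt ?_
    unfold a0v Pv b0v
    fun_prop
  · refine (h.hasDerivAt_sub hQ (h0.trans ht) (hxt t ht)).congr_deriv ?_
    have e := ev_Res h.mem hQ (hxa t ht)
    rw [hres, sub_sub_cancel] at e
    have e0 : ev (0 : PowerSeries ℝ) (s - v t) = 0 := by simp [ev]
    rw [e0] at e
    linear_combination (-1) * e

/-! ### Leading-order expansions with uniform remainders -/

/-- The series `f` divided by `X ^ k` after dropping the terms of order below `k`. -/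
def sh (k : ℕ) (f : PowerSeries ℝ) : PowerSeries ℝ :=
  mk fun j => coeff (j + k) f

lemma coeff_sh (k j : ℕ) (f : PowerSeries ℝ) :
    coeff j (sh k f) = coeff (j + k) f := by
  rw [sh, coeff_mk]

lemma Cv.sh {R : ℝ} {f : PowerSeries ℝ} (hf : Cv R f) (k : ℕ) : Cv R (sh k f) := by
  intro x hx
  rcases eq_or_ne x 0 with rfl | h0
  · refine summable_of_ne_finset_zero (s := {0}) fun n hn => ?_
    simp only [Finset.mem_singleton] at hn
    simp [hn]
  · have h1 := (summable_nat_add_iff k).2 (hf x hx)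
    refine (h1.mul_right (|x| ^ k)⁻¹).congr fun n => ?_
    have : |x| ^ k ≠ 0 := pow_ne_zero _ (abs_ne_zero.2 h0)
    rw [coeff_sh, norm_mul, norm_mul, norm_pow, norm_pow, pow_add, Real.norm_eq_abs x]
    field_simp

lemma ev_sh {R : ℝ} {f : PowerSeries ℝ} (hf : Cv R f) (k : ℕ) {x : ℝ} (hx : |x| < R) :
    ev f x = ∑ j ∈ Finset.range k, coeff j f * x ^ j + x ^ k * ev (sh k f) x := by
  have hs : Summable fun n => coeff n f * x ^ n := (hf x hx).of_norm
  rw [ev, ← hs.sum_add_tsum_nat_add k, ev, ← tsum_mul_left]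
  congr 1
  refine tsum_congr fun n => ?_
  rw [coeff_sh, pow_add]; ring

lemma ev_shift {R : ℝ} {f : PowerSeries ℝ} (hf : Cv R f) {k : ℕ}
    (hk : ∀ j < k, coeff j f = 0) {x : ℝ} (hx : |x| < R) :
    ev f x = x ^ k * ev (sh k f) x := by
  rw [ev_sh hf k hx, Finset.sum_eq_zero (fun j hj => by
    rw [hk j (Finset.mem_range.1 hj), zero_mul]), zero_add]

lemma Cv.tendsto_zero {R : ℝ} (hR : 0 < R) {f : PowerSeries ℝ} (hf : Cv R f) :
    Tendsto (ev f) (𝓝[>] 0) (𝓝 (coeff 0 f)) := by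
  have := (ev_hasDerivAt hf (by simpa using hR : |(0 : ℝ)| < R)).continuousAt
  have h2 : Tendsto (ev f) (𝓝 0) (𝓝 (ev f 0)) := this
  rw [ev_zero_right] at h2
  exact h2.mono_left nhdsWithin_le_nhds

lemma small_sign {R : ℝ} (hR : 0 < R) {f : PowerSeries ℝ} (hf : Cv R f) {k : ℕ}
    (hk : ∀ j < k, coeff j f = 0) (hp : 0 < coeff k f) :
    ∀ᶠ x in 𝓝[>] (0 : ℝ), 0 < ev f x := by
  have h1 := (hf.sh k).tendsto_zero hR
  rw [coeff_sh, zero_add] at h1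
  filter_upwards [h1.eventually (lt_mem_nhds hp), self_mem_nhdsWithin,
    nhdsWithin_le_nhds (gt_mem_nhds hR)] with x hx h0 hxR
  have h0' : 0 < x := h0
  rw [ev_shift hf hk (by rw [abs_of_pos h0']; exact hxR)]
  exact mul_pos (pow_pos h0' k) hx

lemma coeff_le {R : ℝ} (hR : 0 < R) {f : PowerSeries ℝ} (hf : Cv R f) {k : ℕ}
    (hk : ∀ j < k, coeff j f = 0) {c : ℝ}
    (hc : ∀ᶠ x in 𝓝[>] (0 : ℝ), ev f x ≤ c * x ^ k) : coeff k f ≤ c := by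
  have h1 := (hf.sh k).tendsto_zero hR
  rw [coeff_sh, zero_add] at h1
  refine le_of_tendsto h1 ?_
  filter_upwards [hc, self_mem_nhdsWithin, nhdsWithin_le_nhds (gt_mem_nhds hR)] with x hx h0 hxR
  have h0' : 0 < x := h0
  rw [ev_shift hf hk (by rw [abs_of_pos h0']; exact hxR), mul_comm c] at hx
  exact le_of_mul_le_mul_left hx (pow_pos h0' k)

/-- The series is a polynomial of degree at most `d`. -/
def FS (d : ℕ) (f : PowerSeries ℝ) : Prop := ∀ j, d < j → coeff j f = 0

lemma FS.mono {d e : ℕ} {f : PowerSeries ℝ} (h : FS d f) (hde : d ≤ e) : FS e f :=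
  fun j hj => h j (by omega)
lemma FS.add {d e : ℕ} {f g : PowerSeries ℝ} (hf : FS d f) (hg : FS e g) : FS (d + e) (f + g) :=
  fun j hj => by rw [map_add, hf j (by omega), hg j (by omega), add_zero]
lemma FS.sub {d e : ℕ} {f g : PowerSeries ℝ} (hf : FS d f) (hg : FS e g) : FS (d + e) (f - g) :=
  fun j hj => by rw [map_sub, hf j (by omega), hg j (by omega), sub_zero]
lemma FS.neg {d : ℕ} {f : PowerSeries ℝ} (hf : FS d f) : FS d (-f) :=
  fun j hj => by rw [map_neg, hf j hj, neg_zero]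
lemma FS.mul {d e : ℕ} {f g : PowerSeries ℝ} (hf : FS d f) (hg : FS e g) : FS (d + e) (f * g) := by
  intro j hj
  rw [coeff_mul]
  refine Finset.sum_eq_zero fun p hp => ?_
  have := Finset.HasAntidiagonal.mem_antidiagonal.1 hp
  rcases Nat.lt_or_ge d p.1 with h | h
  · rw [hf _ h, zero_mul]
  · rw [hg p.2 (by omega), mul_zero]
lemma FS.dd {d : ℕ} {f : PowerSeries ℝ} (hf : FS d f) : FS d (dd f) :=
  fun j hj => by rw [coeff_dd, hf _ (by omega), zero_mul]
lemma fs_C (c : ℝ) : FS 0 (C c) :=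
  fun j hj => by rw [coeff_C, if_neg (by omega)]
lemma fs_one : FS 0 (1 : PowerSeries ℝ) := by simpa using fs_C 1
lemma fs_VPs (s : ℝ) : FS 3 (VPs s) := fun n hn => by
  rw [coeff_VPs, if_neg (by omega), if_neg (by omega), if_neg (by omega)]
lemma fs_VBs (s : ℝ) : FS 3 (VBs s) := fun n hn => by
  rw [coeff_VBs, if_neg (by omega), if_neg (by omega), if_neg (by omega), if_neg (by omega)]
lemma fs_A0s (s : ℝ) : FS 2 (A0s s) := fun n hn => by
  rw [coeff_A0s, if_neg (by omega), if_neg (by omega), if_neg (by omega)]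
lemma fs_PPs (s : ℝ) : FS 2 (PPs s) := fun n hn => by
  rw [coeff_PPs, if_neg (by omega), if_neg (by omega)]
lemma fs_Tr (s : ℝ) (m : ℕ) : FS m (Tr s m) := coeff_Tr_gt s m

lemma FS.cv {d : ℕ} {f : PowerSeries ℝ} (hf : FS d f) (R : ℝ) : Cv R f := cv_of_finite d hf R

lemma exists_fs_res (m : ℕ) : ∃ d, ∀ s, FS d (Res s (Tr s m)) :=
  ⟨_, fun s => (((fs_VPs s).mul (fs_Tr s m).dd).sub (((fs_VBs s).mul (fs_Tr s m)).mul
    (fs_Tr s m).dd)).sub (((fs_C 2).mul (fs_one.sub (fs_Tr s m))).mul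
      (((fs_A0s s).mul (fs_Tr s m)).sub ((fs_C _).mul (fs_PPs s))))⟩
lemma exists_fs_aop (m : ℕ) : ∃ d, ∀ s, FS d (Aop s (Tr s m)) :=
  ⟨_, fun s => (fs_VPs s).sub ((fs_VBs s).mul (fs_Tr s m))⟩
lemma exists_fs_bop (m : ℕ) : ∃ d, ∀ s, FS d (Bop s (Tr s m)) :=
  ⟨_, fun s => ((((fs_VBs s).mul (fs_Tr s m).dd).neg.sub ((fs_C 2).mul (fs_A0s s))).sub
    ((fs_C _).mul (fs_PPs s))).add (((fs_C 4).mul (fs_A0s s)).mul (fs_Tr s m))⟩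

lemma unif_const {K : Set ℝ} (hK : IsCompact K) {f : ℝ → PowerSeries ℝ} (hf : CC K f) {d : ℕ}
    (hd : ∀ s, FS d (f s)) : ∃ C, 0 ≤ C ∧ ∀ s ∈ K, ∀ x : ℝ, |x| ≤ 1 → |ev (f s) x| ≤ C := by
  have hb : ∀ j, ∃ C, ∀ s ∈ K, |coeff j (f s)| ≤ C := fun j =>
    hK.exists_bound_of_continuousOn (hf j)
  choose C hC using hb
  refine ⟨∑ j ∈ Finset.range (d + 1), |C j|, Finset.sum_nonneg fun j _ => abs_nonneg _,
    fun s hs x hx => ?_⟩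
  rw [ev_of_finite d (hd s)]
  refine (Finset.abs_sum_le_sum_abs _ _).trans (Finset.sum_le_sum fun j _ => ?_)
  rw [abs_mul, abs_pow]
  have h1 : |x| ^ j ≤ 1 := pow_le_one₀ (abs_nonneg _) hx
  have h2 := (hC j s hs).trans (le_abs_self _)
  calc _ ≤ |C j| * 1 := mul_le_mul h2 h1 (by positivity) (abs_nonneg _)
    _ = _ := mul_one _

/-- Taylor remainders of a polynomial family, uniformly over a compact parameter set. -/
lemma unif_tail {K : Set ℝ} (hK : IsCompact K) {f : ℝ → PowerSeries ℝ} (hf : CC K f) {d : ℕ}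
    (hd : ∀ s, FS d (f s)) (m : ℕ) : ∃ C, 0 ≤ C ∧ ∀ s ∈ K, ∀ x : ℝ, |x| ≤ 1 →
      |ev (f s) x - ∑ j ∈ Finset.range m, coeff j (f s) * x ^ j| ≤ C * |x| ^ m := by
  obtain ⟨C, hC0, hC⟩ := unif_const hK (f := fun s => sh m (f s)) (d := d)
    (fun j => by simp only [coeff_sh]; exact hf _)
    (fun s j hj => by rw [coeff_sh]; exact hd s _ (by omega))
  refine ⟨C, hC0, fun s hs x hx => ?_⟩
  rw [ev_sh ((hd s).cv 2) m (by linarith), add_sub_cancel_left, abs_mul, abs_pow, mul_comm]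
  exact mul_le_mul_of_nonneg_right (hC s hs x hx) (by positivity)

/-- Uniform leading-order expansions of the residual and its linearisation at `Tr s m`. -/
lemma unif_bounds {K : Set ℝ} (hK : IsCompact K) (hD : K ⊆ Dm) {m : ℕ} (hm : 1 ≤ m)
    (hk : ∀ j : ℕ, 2 ≤ j → j ≤ m → ∀ s ∈ K, lam s - mu s * j ≠ 0) :
    ∃ C, 1 ≤ C ∧ ∀ s ∈ K, |num s (m + 1)| ≤ C ∧ ∀ x : ℝ, 0 ≤ x → x ≤ 1 →
      |ev (Res s (Tr s m)) x - num s (m + 1) * x ^ (m + 1)| ≤ C * x ^ (m + 2) ∧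
      |ev (Aop s (Tr s m)) x - mu s * x| ≤ C * x ^ 2 ∧
      |ev (Bop s (Tr s m)) x + lam s| ≤ C * x ∧
      |ev (VBs s) x| ≤ C ∧ |ev (A0s s) x| ≤ C ∧ |ev (Tr s m) x - a1 s * x| ≤ C * x ^ 2 := by
  have hT := cc_Tr hD m hk
  obtain ⟨d1, hd1⟩ := exists_fs_res m
  obtain ⟨d2, hd2⟩ := exists_fs_aop m
  obtain ⟨d3, hd3⟩ := exists_fs_bop m
  obtain ⟨C1, h1, H1⟩ := unif_tail hK (hT.res hD) hd1 (m + 2)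
  obtain ⟨C2, h2, H2⟩ := unif_tail hK (hT.aop hD) hd2 2
  obtain ⟨C3, h3, H3⟩ := unif_tail hK (hT.bop hD) hd3 1
  obtain ⟨C4, h4, H4⟩ := unif_const hK (cc_VBs.mono hD) fs_VBs
  obtain ⟨C5, h5, H5⟩ := unif_const hK (cc_A0s.mono hD) fs_A0s
  obtain ⟨C6, h6, H6⟩ := unif_tail hK hT (fun s => fs_Tr s m) 2
  obtain ⟨C7, h7⟩ := hK.exists_bound_of_continuousOn (num_cont hD (m + 1)
    (fun j a b => hk j a (by omega)))
  obtain ⟨C, hC⟩ : ∃ C, C = 1 + C1 + C2 + C3 + C4 + C5 + C6 + |C7| := ⟨_, rfl⟩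
  have h7' := abs_nonneg C7
  refine ⟨C, by linarith, fun s hs => ⟨?_, fun x hx0 hx1 => ?_⟩⟩
  · have := h7 s hs
    rw [Real.norm_eq_abs] at this
    linarith [le_abs_self C7]
  have hxa : |x| = x := abs_of_nonneg hx0
  have hx1' : |x| ≤ 1 := by rw [hxa]; exact hx1
  have t0 : coeff 0 (Tr s m) = 0 := by rw [coeff_Tr, if_pos (by omega), aS_zero]
  have t1 : coeff 1 (Tr s m) = a1 s := by rw [coeff_Tr, if_pos hm, aS_one]
  have e1 : ∑ j ∈ Finset.range (m + 2), coeff j (Res s (Tr s m)) * x ^ j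
      = num s (m + 1) * x ^ (m + 1) := by
    rw [Finset.sum_range_succ, Finset.sum_eq_zero, zero_add]
    · rfl
    · intro j hj
      rw [coeff_res_Tr (hD hs) m hm (fun j a b => hk j a b s hs) j
        (by have := Finset.mem_range.1 hj; omega), zero_mul]
  have e2 : ∑ j ∈ Finset.range 2, coeff j (Aop s (Tr s m)) * x ^ j = mu s * x := by
    simp [Finset.sum_range_succ, coeff_one_Aop t0 t1]
    have := coeff_zero_Aop (s := s) t0
    simpa using this
  have e3 : ∑ j ∈ Finset.range 1, coeff j (Bop s (Tr s m)) * x ^ j = -lam s := by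
    rw [Finset.sum_range_one, coeff_zero_Bop t0 t1]; simp
  have e6 : ∑ j ∈ Finset.range 2, coeff j (Tr s m) * x ^ j = a1 s * x := by
    rw [Finset.sum_range_succ, Finset.sum_range_one, t0, t1]; simp
  have g1 := H1 s hs x hx1'
  have g2 := H2 s hs x hx1'
  have g3 := H3 s hs x hx1'
  have g4 := H4 s hs x hx1'
  have g5 := H5 s hs x hx1'
  have g6 := H6 s hs x hx1'
  rw [e1, hxa] at g1
  rw [e2, hxa] at g2
  rw [e3, hxa, sub_neg_eq_add, pow_one] at g3
  rw [e6, hxa] at g6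
  refine ⟨g1.trans ?_, g2.trans ?_, g3.trans ?_, g4.trans ?_, g5.trans ?_, g6.trans ?_⟩
  · exact mul_le_mul_of_nonneg_right (by linarith) (by positivity)
  · exact mul_le_mul_of_nonneg_right (by linarith) (by positivity)
  · exact mul_le_mul_of_nonneg_right (by linarith) (by positivity)
  · linarith
  · linarith
  · exact mul_le_mul_of_nonneg_right (by linarith) (by positivity)

/-- The comparison polynomial `T_m + A x^{m+1}(1 - M x)`. -/
def Qp (s : ℝ) (m : ℕ) (A M : ℝ) : PowerSeries ℝ :=
  Tr s m + (C A * X ^ (m + 1)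
    + C (-(A * M)) * X ^ (m + 2))

lemma fs_C_mul_X_pow (c : ℝ) (n : ℕ) : FS n (C c * (X : PowerSeries ℝ) ^ n) :=
  fun j hj => by rw [coeff_C_mul, coeff_X_pow, if_neg (by omega), mul_zero]

lemma dd_C_mul_X_pow (c : ℝ) (n : ℕ) :
    dd (C c * (X : PowerSeries ℝ) ^ (n + 1))
      = C (c * (n + 1)) * X ^ n := by
  ext j
  rw [coeff_dd, coeff_C_mul, coeff_X_pow, coeff_C_mul,
    coeff_X_pow]
  by_cases hj : j = n
  · simp [hj]
  · simp [hj]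

lemma cv_Qp (s : ℝ) (m : ℕ) (A M R : ℝ) : Cv R (Qp s m A M) :=
  ((fs_Tr s m).cv R).add ((cv_C_mul_X_pow R _ _).add (cv_C_mul_X_pow R _ _))

lemma ev_Qp (s : ℝ) (m : ℕ) (A M x : ℝ) :
    ev (Qp s m A M) x = ev (Tr s m) x + A * x ^ (m + 1) * (1 - M * x) := by
  have hx : |x| < |x| + 1 := by linarith
  rw [Qp, ev_add ((fs_Tr s m).cv _) ((cv_C_mul_X_pow _ _ _).add (cv_C_mul_X_pow _ _ _)) hx,
    ev_add (cv_C_mul_X_pow _ _ _) (cv_C_mul_X_pow _ _ _) hx, ev_C_mul_X_pow, ev_C_mul_X_pow]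
  ring

lemma ev_Res_Qp (s : ℝ) (m : ℕ) (A M x : ℝ) :
    ev (Res s (Qp s m A M)) x = ev (Res s (Tr s m)) x
      + ev (Aop s (Tr s m)) x * (A * x ^ m * ((m + 1) - (m + 2) * M * x))
      + ev (Bop s (Tr s m)) x * (A * x ^ (m + 1) * (1 - M * x))
      - ev (VBs s) x * (A * x ^ (m + 1) * (1 - M * x))
          * (A * x ^ m * ((m + 1) - (m + 2) * M * x))
      + 2 * ev (A0s s) x * (A * x ^ (m + 1) * (1 - M * x)) ^ 2 := by
  obtain ⟨R, hR⟩ : ∃ R, R = |x| + 1 := ⟨_, rfl⟩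
  have hx : |x| < R := by linarith
  obtain ⟨Z, hZ⟩ : ∃ Z, Z = C A * (X : PowerSeries ℝ) ^ (m + 1)
    + C (-(A * M)) * X ^ (m + 2) := ⟨_, rfl⟩
  have cZ : Cv R Z := by rw [hZ]; exact (cv_C_mul_X_pow _ _ _).add (cv_C_mul_X_pow _ _ _)
  have eZ : ev Z x = A * x ^ (m + 1) * (1 - M * x) := by
    rw [hZ, ev_add (cv_C_mul_X_pow _ _ _) (cv_C_mul_X_pow _ _ _) hx, ev_C_mul_X_pow,
      ev_C_mul_X_pow]; ring
  have eZ' : ev (dd Z) x = A * x ^ m * ((m + 1) - (m + 2) * M * x) := by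
    rw [hZ, dd_add, dd_C_mul_X_pow, dd_C_mul_X_pow,
      ev_add (cv_C_mul_X_pow _ _ _) (cv_C_mul_X_pow _ _ _) hx, ev_C_mul_X_pow, ev_C_mul_X_pow]
    push_cast; ring
  have cT := (fs_Tr s m).cv R
  have c1 : Cv R (Res s (Tr s m)) := cv_Res cT
  have c4 := cv_VBs R s
  have c5 := cv_A0s R s
  have c2 : Cv R (Aop s (Tr s m)) := (cv_VPs R s).sub (c4.mul cT)
  have c3 : Cv R (Bop s (Tr s m)) := by
    obtain ⟨d, hd⟩ := exists_fs_bop m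
    exact (hd s).cv R
  rw [Qp, ← hZ, res_add, sq Z,
    ev_add (((c1.add (c2.mul cZ.dd)).add (c3.mul cZ)).sub ((c4.mul cZ).mul cZ.dd))
      (((cv_C R 2).mul c5).mul (cZ.mul cZ)) hx,
    ev_sub ((c1.add (c2.mul cZ.dd)).add (c3.mul cZ)) ((c4.mul cZ).mul cZ.dd) hx,
    ev_add (c1.add (c2.mul cZ.dd)) (c3.mul cZ) hx, ev_add c1 (c2.mul cZ.dd) hx,
    ev_mul c2 cZ.dd hx, ev_mul c3 cZ hx, ev_mul (c4.mul cZ) cZ.dd hx, ev_mul c4 cZ hx,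
    ev_mul ((cv_C R 2).mul c5) (cZ.mul cZ) hx, ev_mul (cv_C R 2) c5 hx, ev_mul cZ cZ hx,
    ev_C, eZ, eZ']
  ring

/-! ### Comparison polynomials at the sonic point -/

lemma Orb.late {s : ℝ} {v y : ℝ → ℝ} (h : Orb s v y) {p : ℝ → Prop}
    (hp : ∀ᶠ x in 𝓝[>] (0 : ℝ), p x) : ∃ T, 0 ≤ T ∧ ∀ τ, T ≤ τ → p (s - v τ) := by
  obtain ⟨δ, hδ, hd⟩ := mem_nhdsGT_iff_exists_Ioo_subset.1 hp
  obtain ⟨T, hT, h2⟩ := h.lim δ hδ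
  exact ⟨T, hT.le, fun τ hτ => hd ⟨by linarith [(h.bd τ (hT.le.trans hτ)).2.2.2.1], h2 τ hτ⟩⟩

lemma Orb.above {s : ℝ} {v y : ℝ → ℝ} (h : Orb s v y) {R : ℝ} {Q : PowerSeries ℝ}
    (hQ : Cv R Q) {t0 : ℝ} (h0 : 0 ≤ t0) (hx : s - v t0 < R)
    (hres : ∀ x, 0 < x → x ≤ s - v t0 → 0 < ev (Res s Q) x)
    (hs : ev Q (s - v t0) < y t0) {t : ℝ} (ht : t0 ≤ t) : ev Q (s - v t) < y t := by
  have hxt : ∀ t, t0 ≤ t → s - v t ≤ s - v t0 := fun t ht => by linarith [h.mono h0 ht]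
  have := no_return (D := fun t => -(y t - ev Q (s - v t))) ht
    (fun u hu => ((h.hasDerivAt_sub hQ (h0.trans hu.1)
      ((hxt u hu.1).trans_lt hx)).continuousAt.neg).continuousWithinAt)
    (fun u hu hz => ⟨_, (h.contact hQ (h0.trans hu.1) ((hxt u hu.1).trans_lt hx)
      (by have hz' : -(y u - ev Q (s - v u)) = 0 := hz
          linarith)).neg, by
        have := hres (s - v u) (by linarith [(h.bd u (h0.trans hu.1)).2.2.2.1]) (hxt u hu.1)
        linarith⟩) (by linarith)
  linarith

lemma Orb.below {s : ℝ} {v y : ℝ → ℝ} (h : Orb s v y) {R : ℝ} {Q : PowerSeries ℝ}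
    (hQ : Cv R Q) {t0 : ℝ} (h0 : 0 ≤ t0) (hx : s - v t0 < R)
    (hres : ∀ x, 0 < x → x ≤ s - v t0 → ev (Res s Q) x < 0)
    (hs : y t0 < ev Q (s - v t0)) {t : ℝ} (ht : t0 ≤ t) : y t < ev Q (s - v t) := by
  have hxt : ∀ t, t0 ≤ t → s - v t ≤ s - v t0 := fun t ht => by linarith [h.mono h0 ht]
  have := no_return (D := fun t => (y t - ev Q (s - v t))) ht
    (fun u hu => ((h.hasDerivAt_sub hQ (h0.trans hu.1)
      ((hxt u hu.1).trans_lt hx)).continuousAt).continuousWithinAt)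
    (fun u hu hz => ⟨_, (h.contact hQ (h0.trans hu.1) ((hxt u hu.1).trans_lt hx)
      hz), hres (s - v u) (by linarith [(h.bd u (h0.trans hu.1)).2.2.2.1]) (hxt u hu.1)⟩)
    (by linarith)
  linarith

lemma VBs_bounds {s : ℝ} (hs : s ∈ Dm) {x : ℝ} (h0 : 0 ≤ x) (h1 : x ≤ 1) :
    1 ≤ ev (VBs s) x ∧ ev (VBs s) x ≤ 12 := by
  obtain ⟨a, b⟩ := Dm_bounds hs
  obtain ⟨c, d⟩ := rho_bounds hs
  rw [ev_VBs, b0v]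
  obtain ⟨v, hv⟩ : ∃ v, v = s - x := ⟨_, rfl⟩
  rw [← hv]
  have v1 : 2.2 < v := by norm_num at *; linarith
  have v2 : v < 3.236068 := by norm_num at *; linarith
  have r1 : 1 ≤ 1 + rho s * v := by nlinarith
  have r2 : 1 + rho s * v ≤ 1.63 := by nlinarith
  have w1 : 1 ≤ v * (v - 1) := by nlinarith
  have w2 : v * (v - 1) ≤ 7.24 := by nlinarith
  constructor
  · nlinarith
  · nlinarith

/-- The estimates of `unif_bounds` at one parameter. -/
def Ubd (s : ℝ) (m : ℕ) (C : ℝ) : Prop :=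
  |num s (m + 1)| ≤ C ∧ ∀ x : ℝ, 0 ≤ x → x ≤ 1 →
      |ev (Res s (Tr s m)) x - num s (m + 1) * x ^ (m + 1)| ≤ C * x ^ (m + 2) ∧
      |ev (Aop s (Tr s m)) x - mu s * x| ≤ C * x ^ 2 ∧
      |ev (Bop s (Tr s m)) x + lam s| ≤ C * x ∧
      |ev (VBs s) x| ≤ C ∧ |ev (A0s s) x| ≤ C ∧ |ev (Tr s m) x - a1 s * x| ≤ C * x ^ 2

lemma err_real {m : ℕ} {A C M x e1 e2 e3 : ℝ} (hC : 0 ≤ C) (hx0 : 0 ≤ x)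
    (hM : 0 ≤ M) (hMx : M * x ≤ 1) (h1 : |e1| ≤ C * x ^ (m + 2)) (h2 : |e2| ≤ C * x ^ 2)
    (h3 : |e3| ≤ C * x) :
    |e1 + e2 * (A * x ^ m * ((m + 1) - (m + 2) * M * x)) + e3 * (A * x ^ (m + 1) * (1 - M * x))|
      ≤ C * x ^ (m + 2) * (1 + |A| * (m + 2)) := by
  have hm : (0 : ℝ) ≤ m := Nat.cast_nonneg m
  have hMx0 : 0 ≤ M * x := mul_nonneg hM hx0
  have k1 : |((m : ℝ) + 1) - (m + 2) * M * x| ≤ m + 1 := by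
    rw [abs_le]; constructor <;> nlinarith
  have k2 : |1 - M * x| ≤ 1 := by rw [abs_le]; constructor <;> linarith
  have p0 : 0 ≤ x ^ m := pow_nonneg hx0 m
  have b2 : |e2 * (A * x ^ m * ((m + 1) - (m + 2) * M * x))|
      ≤ (C * x ^ 2) * (|A| * x ^ m * (m + 1)) := by
    rw [abs_mul, abs_mul, abs_mul, abs_of_nonneg p0]
    gcongr
  have b3 : |e3 * (A * x ^ (m + 1) * (1 - M * x))| ≤ (C * x) * (|A| * x ^ (m + 1) * 1) := by
    rw [abs_mul, abs_mul, abs_mul, abs_of_nonneg (pow_nonneg hx0 (m + 1))]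
    gcongr
  have : C * x ^ (m + 2) * (1 + |A| * (m + 2)) = C * x ^ (m + 2)
      + (C * x ^ 2) * (|A| * x ^ m * (m + 1)) + (C * x) * (|A| * x ^ (m + 1) * 1) := by ring
  rw [this]
  refine (abs_add_le _ _).trans (add_le_add ((abs_add_le _ _).trans (add_le_add h1 b2)) b3)

/-- Leading behaviour of the residual of the comparison polynomial. -/
lemma res_Qp_est {s : ℝ} {m : ℕ} {C A M x : ℝ} (hU : Ubd s m C) (hC : 0 ≤ C) (hx0 : 0 ≤ x)
    (hx1 : x ≤ 1) (hM : 0 ≤ M) (hMx : M * x ≤ 1) :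
    |ev (Res s (Qp s m A M)) x - ((num s (m + 1) + A * (mu s * (m + 1) - lam s)) * x ^ (m + 1)
      + A * M * (lam s - mu s * (m + 2)) * x ^ (m + 2)
      + A ^ 2 * x ^ (2 * m + 1) * (1 - M * x) * (-ev (VBs s) x * ((m + 1) - (m + 2) * M * x)
        + 2 * ev (A0s s) x * x * (1 - M * x)))|
      ≤ C * x ^ (m + 2) * (1 + |A| * (m + 2)) := by
  obtain ⟨h1, h2, h3, -, -, -⟩ := hU.2 x hx0 hx1
  have := err_real (A := A) hC hx0 hM hMx h1 h2 h3
  refine le_of_eq_of_le ?_ this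
  congr 1
  rw [ev_Res_Qp]
  ring

lemma ev_Tr_one (s x : ℝ) : ev (Tr s 1) x = a1 s * x := by
  have : Tr s 1 = C (a1 s) * X ^ 1 := by rw [Tr, pow_one]
  rw [this, ev_C_mul_X_pow, pow_one]

lemma A0s_nonneg {s : ℝ} (hs : s ∈ Dm) {x : ℝ} (h1 : x ≤ 1) :
    0 ≤ ev (A0s s) x := by
  obtain ⟨a, b⟩ := Dm_bounds hs
  obtain ⟨c, d⟩ := rho_bounds hs
  rw [ev_A0s, a0v]
  obtain ⟨v, hv⟩ : ∃ v, v = s - x := ⟨_, rfl⟩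
  rw [← hv]
  have v1 : 2.2 < v := by norm_num at *; linarith
  have : 0 ≤ (3 / 5 - rho s / 5) * v := mul_nonneg (by norm_num at *; linarith) (by linarith)
  have : 0 ≤ 6 / 5 * rho s * v ^ 2 := by
    have : 0 ≤ rho s := by norm_num at *; linarith
    positivity
  linarith

/-- A quadratic lower barrier at the sonic line. -/
lemma lower_barrier {s : ℝ} {v y : ℝ → ℝ} (h : Orb s v y) {C xh : ℝ} (hC : 1 ≤ C)
    (hU : Ubd s 1 C) (hlm : 8 ≤ lam s - 2 * mu s) (ha : 0 < a1 s) (hx0 : 0 < xh) (hx1 : xh ≤ 1)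
    (hxC : xh * C ≤ 1) (hxa : xh * (C + 1) ≤ a1 s) (hxv : xh ≤ s - v 0) :
    ∀ τ, 0 ≤ τ → s - v τ ≤ xh →
      a1 s * (s - v τ) - a1 s / xh * (s - v τ) ^ 2 < y τ := by
  obtain ⟨k, hk⟩ : ∃ k, k = a1 s / xh := ⟨_, rfl⟩
  have hkx : k * xh = a1 s := by rw [hk]; field_simp
  have hkC : C + 1 ≤ k := by rw [hk, le_div_iff₀ hx0]; linarith
  have hk0 : 0 < k := by linarith
  have ha1 := a1_lt h.mem
  have hev : ∀ x, ev (Qp s 1 (-k) 0) x = a1 s * x - k * x ^ 2 := fun x => by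
    rw [ev_Qp, ev_Tr_one]; ring
  have hres : ∀ x, 0 < x → x ≤ xh → 0 < ev (Res s (Qp s 1 (-k) 0)) x := by
    intro x hx hxx
    have e := res_Qp_est (A := -k) (M := 0) hU (by linarith) hx.le (hxx.trans hx1) le_rfl
      (by linarith)
    have e' := (abs_le.1 e).1
    rw [abs_neg, abs_of_pos hk0] at e'
    have b1 := (VBs_bounds h.mem hx.le (hxx.trans hx1)).2
    have b2 := A0s_nonneg h.mem (hxx.trans hx1)
    have b3 := (abs_le.1 hU.1).1
    push_cast at e'
    have x2 : 0 < x ^ 2 := by positivity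
    have kx : k * x ≤ a1 s := by rw [← hkx]; gcongr
    have q1 : k ^ 2 * x ^ 3 * (2 * ev (VBs s) x) ≤ 0.24 * k * x ^ 2 := by
      have : k ^ 2 * x ^ 3 * (2 * ev (VBs s) x) = (k * x ^ 2) * (2 * ev (VBs s) x) * (k * x) := by
        ring
      rw [this]
      have : (k * x ^ 2) * (2 * ev (VBs s) x) * (k * x) ≤ (k * x ^ 2) * (2 * 12) * 0.01 := by
        have : k * x ≤ 0.01 := by norm_num at *; linarith
        have h9 := (VBs_bounds h.mem hx.le (hxx.trans hx1)).1
        gcongr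
      linarith
    have q2 : C * x ^ 3 * (1 + k * 3) ≤ x ^ 2 * (1 + k * 3) := by
      have : C * x ^ 3 = x * C * x ^ 2 := by ring
      rw [this]
      have : x * C ≤ 1 := (mul_le_mul_of_nonneg_right hxx (by linarith)).trans hxC
      have h9 : 0 ≤ x ^ 2 * (1 + k * 3) := by positivity
      nlinarith
    have q3 : 0 ≤ k ^ 2 * x ^ 3 * (2 * ev (A0s s) x * x) := by positivity
    have q4 : 8 * k * x ^ 2 ≤ k * (lam s - 2 * mu s) * x ^ 2 := by
      have : 0 ≤ k * x ^ 2 := by positivity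
      nlinarith
    have q5 : -C * x ^ 2 ≤ num s (1 + 1) * x ^ 2 := by
      exact mul_le_mul_of_nonneg_right b3 x2.le
    have q6 : (C + 1) * x ^ 2 ≤ k * x ^ 2 := mul_le_mul_of_nonneg_right hkC x2.le
    have q7 : 0 < k * x ^ 2 := by positivity
    norm_num at e' q1 ⊢
    linarith
  obtain ⟨t0, ht0, hx⟩ := h.hit hx0 hxv
  intro τ hτ hxτ
  rcases le_total t0 τ with hle | hle
  · have := h.above (cv_Qp s 1 (-k) 0 2) ht0 (by rw [hx]; linarith) (by rw [hx]; exact hres)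
      (by rw [hx, hev]; have := (h.bd t0 ht0).1; nlinarith) hle
    rw [hev, hk] at this
    exact this
  · have e : s - v τ = xh := le_antisymm hxτ (by linarith [h.mono hτ hle])
    rw [e]
    have h1 := (h.bd τ hτ).1
    have : a1 s / xh * xh ^ 2 = a1 s * xh := by field_simp
    linarith

lemma Qp_zero (s : ℝ) (m : ℕ) : Qp s m (aS s (m + 1)) 0 = Tr s (m + 1) := by
  rw [Qp, Tr_succ]; simp

lemma coeff_Yf_sub_Qp {s : ℝ} {m : ℕ} {M : ℝ} :
    (∀ j < m + 2, coeff j (Yf s - Qp s m (aS s (m + 1)) M) = 0) ∧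
    coeff (m + 2) (Yf s - Qp s m (aS s (m + 1)) M)
      = aS s (m + 2) + aS s (m + 1) * M := by
  have e : Qp s m (aS s (m + 1)) M
      = Tr s (m + 1) + C (-(aS s (m + 1) * M)) * X ^ (m + 2) := by
    rw [Qp, Tr_succ, add_assoc]
  rw [e]
  constructor
  · intro j hj
    rw [map_sub, map_add, Yf, coeff_mk, coeff_Tr, if_pos (by omega),
      coeff_C_mul, coeff_X_pow, if_neg (by omega)]; ring
  · rw [map_sub, map_add, Yf, coeff_mk, coeff_Tr, if_neg (by omega),
      coeff_C_mul, coeff_X_pow, if_pos rfl]; ring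

set_option maxHeartbeats 1000000 in
/-- Just past the resonance `k = m + 1`, where `aS s (m+1)` is huge and positive, the orbit of the
centre stays below the smooth solution. -/
lemma orbit_below {s : ℝ} {v y : ℝ → ℝ} (h : Orb s v y) {m : ℕ} (hm : 1 ≤ m) {C M d0 R : ℝ}
    (hC : 1 ≤ C) (hU : Ubd s m C) (hk : ∀ j : ℕ, 2 ≤ j → lam s - mu s * j ≠ 0)
    (hY : Cv R (Yf s)) (hR : 0 < R) (ha : 0 ≤ a1 s) (hd0 : 0 < d0)
    (hd : d0 ≤ mu s * (m + 2) - lam s) (hM : 0 < M) (hMd : C * (m + 4) ≤ M * d0)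
    (hMx : 2 * C ≤ (m + 2) * M) (hMv : 1 ≤ (s - v 0) * ((m + 2) * M))
    (hA : 1 ≤ aS s (m + 1)) (hA2 : 2 * (C + 2) * ((m + 2) * M) ^ (m + 1) ≤ aS s (m + 1)) :
    ∀ τ, 0 ≤ τ → s - v τ < R → y τ < ev (Yf s) (s - v τ) := by
  obtain ⟨A, hAe⟩ : ∃ A, A = aS s (m + 1) := ⟨_, rfl⟩
  rw [← hAe] at hA hA2
  have hm0 : (1 : ℝ) ≤ m := by exact_mod_cast hm
  obtain ⟨X, hX⟩ : ∃ X, X = 1 / (((m : ℝ) + 2) * M) := ⟨_, rfl⟩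
  have hP : 0 < ((m : ℝ) + 2) * M := by positivity
  have hX0 : 0 < X := by rw [hX]; positivity
  have hXP : X * ((m + 2) * M) = 1 := by rw [hX]; field_simp
  have hXC : 2 * C * X ≤ 1 := by
    rw [← hXP, mul_comm X]; exact mul_le_mul_of_nonneg_right hMx hX0.le
  have hX1 : X ≤ 1 := by nlinarith
  have hXv : X ≤ s - v 0 := by
    rw [hX, div_le_iff₀ hP]; exact hMv
  have hrec : num s (m + 1) + A * (mu s * (m + 1) - lam s) = 0 := by
    have h1 := aS_eq s (m := m + 1) (by omega)
    have h2 := hk (m + 1) (by omega)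
    rw [← hAe] at h1
    rw [eq_div_iff h2] at h1
    push_cast at h1
    linarith
  -- the quadratic part of the residual has a favourable sign below `X`
  have quad : ∀ M', 0 ≤ M' → M' ≤ M → ∀ x, 0 < x → x ≤ X →
      A ^ 2 * x ^ (2 * m + 1) * (1 - M' * x) * (-ev (VBs s) x * ((m + 1) - (m + 2) * M' * x)
        + 2 * ev (A0s s) x * x * (1 - M' * x)) ≤ 0 ∧ M' * x ≤ 1 := by
    intro M' hM0 hM1 x hx hxX
    have c1 : (m + 2) * M' * x ≤ 1 := by
      calc (m + 2) * M' * x ≤ (m + 2) * M * X := by gcongr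
        _ = 1 := by rw [← hXP]; ring
    have c0 : 0 ≤ M' * x := by positivity
    have c2 : M' * x ≤ 1 := by nlinarith
    have c3 := (VBs_bounds h.mem hx.le (hxX.trans hX1)).1
    have c4 := (abs_le.1 (hU.2 x hx.le (hxX.trans hX1)).2.2.2.2.1).2
    have c5 : 2 * ev (A0s s) x * x * (1 - M' * x) ≤ 1 := by
      have d1 : ev (A0s s) x * x ≤ C * X := by
        have := A0s_nonneg h.mem (hxX.trans hX1)
        gcongr
      have d2 := A0s_nonneg h.mem (hxX.trans hX1)
      have d3 : 0 ≤ ev (A0s s) x * x := mul_nonneg d2 hx.le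
      nlinarith
    have c6 : 1 ≤ ev (VBs s) x * ((m + 1) - (m + 2) * M' * x) := by
      have : 1 ≤ ((m : ℝ) + 1) - (m + 2) * M' * x := by linarith
      nlinarith
    refine ⟨mul_nonpos_of_nonneg_of_nonpos ?_ (by linarith), c2⟩
    have : 0 ≤ 1 - M' * x := by linarith
    positivity
  have hAM : |A| = A := abs_of_pos (by linarith)
  have cb : C * (1 + A * (m + 2)) ≤ C * (m + 3) * A := by
    have : 1 + A * (m + 2) ≤ (m + 3) * A := by linarith
    calc _ ≤ C * ((m + 3) * A) := by gcongr
      _ = _ := by ring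
  have hresQ : ∀ x, 0 < x → x ≤ X → ev (Res s (Qp s m A M)) x < 0 := by
    intro x hx hxX
    obtain ⟨q1, q2⟩ := quad M hM.le le_rfl x hx hxX
    have e := (abs_le.1 (res_Qp_est (A := A) hU (by linarith) hx.le (hxX.trans hX1) hM.le q2)).2
    rw [hrec, hAM] at e
    have p : 0 < x ^ (m + 2) := by positivity
    have q3 : C * x ^ (m + 2) * (1 + A * (m + 2)) ≤ C * (m + 3) * A * x ^ (m + 2) := by
      have := mul_le_mul_of_nonneg_right cb p.le
      linarith
    have q4 : C * (m + 4) * A * x ^ (m + 2) ≤ A * M * (mu s * (m + 2) - lam s) * x ^ (m + 2) := by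
      have : C * (m + 4) * A ≤ A * M * (mu s * (m + 2) - lam s) := by
        calc C * (m + 4) * A ≤ M * d0 * A := by gcongr
          _ ≤ M * (mu s * (m + 2) - lam s) * A := by gcongr
          _ = _ := by ring
      exact mul_le_mul_of_nonneg_right this p.le
    have q5 : 0 < C * A * x ^ (m + 2) := by positivity
    linarith
  have hnum : num s (m + 2) ≤ C * (m + 3) * A := by
    have hz : ∀ j < m + 2, coeff j (Res s (Tr s (m + 1))) = 0 := fun j hj =>
      coeff_res_Tr h.mem (m + 1) (by omega) (fun j a _ => hk j a) j (by omega)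
    refine coeff_le one_pos (cv_Res ((fs_Tr s (m + 1)).cv 1)) hz ?_
    filter_upwards [self_mem_nhdsWithin, nhdsWithin_le_nhds (gt_mem_nhds hX0)] with x hx hxX
    have hx : 0 < x := hx
    obtain ⟨q1, q2⟩ := quad 0 le_rfl hM.le x hx hxX.le
    have e := (abs_le.1 (res_Qp_est (A := A) hU (by linarith) hx.le (hxX.le.trans hX1) le_rfl q2)).2
    rw [hrec, hAM, hAe, Qp_zero, ← hAe] at e
    have p : 0 < x ^ (m + 2) := by positivity
    have q3 : C * x ^ (m + 2) * (1 + A * (m + 2)) ≤ C * (m + 3) * A * x ^ (m + 2) := by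
      have := mul_le_mul_of_nonneg_right cb p.le
      linarith
    linarith
  have hco : 0 < aS s (m + 2) + A * M := by
    obtain ⟨d, hde⟩ : ∃ d, d = mu s * (m + 2) - lam s := ⟨_, rfl⟩
    rw [← hde] at hd
    have hd1 : 0 < d := by linarith
    have e : aS s (m + 2) = -(num s (m + 2) / d) := by
      rw [aS_eq s (by omega)]
      have : lam s - mu s * ((m + 2 : ℕ) : ℝ) = -d := by rw [hde]; push_cast; ring
      rw [this, div_neg]
    rw [e]
    have : num s (m + 2) / d < A * M := by
      rw [div_lt_iff₀ hd1]
      calc num s (m + 2) ≤ C * (m + 3) * A := hnum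
        _ < C * (m + 4) * A := by nlinarith
        _ ≤ M * d0 * A := by gcongr
        _ ≤ M * d * A := by gcongr
        _ = A * M * d := by ring
    linarith
  have hev1 : 1 < ev (Qp s m A M) X := by
    rw [ev_Qp]
    have t1 := (abs_le.1 (hU.2 X hX0.le hX1).2.2.2.2.2).1
    have t2 : C * X ^ 2 ≤ C := by
      have : X ^ 2 ≤ 1 := pow_le_one₀ hX0.le hX1
      nlinarith
    have t3 : 0 ≤ a1 s * X := by positivity
    have t4 : 1 / 2 ≤ 1 - M * X := by
      have e1 : (m : ℝ) * (M * X) + 2 * (M * X) = 1 := by rw [← hXP]; ring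
      have e2 : 0 ≤ (m : ℝ) * (M * X) := by positivity
      linarith
    have t5 : 2 * (C + 2) ≤ A * X ^ (m + 1) := by
      have := mul_le_mul_of_nonneg_right hA2 (pow_nonneg hX0.le (m + 1))
      rw [mul_assoc, ← mul_pow, mul_comm _ X, hXP, one_pow, mul_one] at this
      exact this
    have t6 : A * X ^ (m + 1) * (1 / 2) ≤ A * X ^ (m + 1) * (1 - M * X) :=
      mul_le_mul_of_nonneg_left t4 (by positivity)
    linarith
  intro τ hτ hxτ
  by_contra hcon
  have hcon := not_lt.1 hcon
  have hsm : ∀ᶠ x in 𝓝[>] (0 : ℝ), 0 < ev (Yf s - Qp s m A M) x := by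
    have h9 := coeff_Yf_sub_Qp (s := s) (m := m) (M := M)
    rw [← hAe] at h9
    exact small_sign hR (hY.sub (cv_Qp s m A M R)) h9.1 (by rw [h9.2]; exact hco)
  obtain ⟨T1, hT1, h1⟩ := h.late (hsm.and (nhdsWithin_le_nhds (gt_mem_nhds hR)))
  obtain ⟨t0, ht0, hx0⟩ := h.hit hX0 hXv
  obtain ⟨t, ht⟩ : ∃ t, t = max (max T1 t0) τ := ⟨_, rfl⟩
  have htT : T1 ≤ t := by rw [ht]; exact (le_max_left _ _).trans (le_max_left _ _)
  have htt0 : t0 ≤ t := by rw [ht]; exact (le_max_right _ _).trans (le_max_left _ _)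
  have htτ : τ ≤ t := by rw [ht]; exact le_max_right _ _
  obtain ⟨g1, g2⟩ := h1 t htT
  have hpos : 0 < s - v t := by linarith [(h.bd t (hτ.trans htτ)).2.2.2.1]
  rw [ev_sub hY (cv_Qp s m A M R) (by rw [abs_of_pos hpos]; exact g2)] at g1
  have g3 := h.below (cv_Qp s m A M 2) ht0 (by rw [hx0]; linarith) (by rw [hx0]; exact hresQ)
    (by rw [hx0]; linarith [(h.bd t0 ht0).2.1]) htt0
  obtain ⟨p, hp, g4⟩ := h.persist hY (res_Yf h.mem hk) hτ hxτ htτ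
  have : 0 ≤ p * (y τ - ev (Yf s) (s - v τ)) := mul_nonneg hp.le (by linarith)
  linarith

set_option maxHeartbeats 1000000 in
/-- Just before the resonance `k = m + 1`, where `aS s (m+1)` is huge and negative, the orbit of the
centre stays above the smooth solution. -/
lemma orbit_above {s : ℝ} {v y : ℝ → ℝ} (h : Orb s v y) {m : ℕ} (hm : 1 ≤ m)
    {C M d0 R c0 X k : ℝ}
    (hC : 1 ≤ C) (hU : Ubd s m C) (hk : ∀ j : ℕ, 2 ≤ j → lam s - mu s * j ≠ 0)
    (hY : Cv R (Yf s)) (hR : 0 < R) (hd0 : 0 < d0)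
    (hd : d0 ≤ mu s * (m + 2) - lam s) (hM : 0 < M) (hc0 : 0 < c0)
    (hMd : C * (m + 4) * (1 + c0) ≤ M * d0)
    (hX0 : 0 < X) (hX1 : X ≤ 1) (hMX : 2 * (M * X) ≤ 1) (hXv : X ≤ s - v 0)
    (hA : aS s (m + 1) ≤ -1) (hAX : -aS s (m + 1) * X ^ (m - 1) = c0)
    (hlow : ∀ τ, 0 ≤ τ → s - v τ ≤ X → a1 s * (s - v τ) - k * (s - v τ) ^ 2 < y τ)
    (hck : 2 * (C + k) ≤ c0) :
    ∀ τ, 0 ≤ τ → s - v τ < R → ev (Yf s) (s - v τ) < y τ := by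
  obtain ⟨B, hBe⟩ : ∃ B, B = -aS s (m + 1) := ⟨_, rfl⟩
  have hAe : aS s (m + 1) = -B := by rw [hBe, neg_neg]
  rw [hAe, neg_neg] at hAX
  have hB : 1 ≤ B := by linarith
  have hm0 : (1 : ℝ) ≤ m := by exact_mod_cast hm
  have hrec : num s (m + 1) + -B * (mu s * (m + 1) - lam s) = 0 := by
    have h1 := aS_eq s (m := m + 1) (by omega)
    have h2 := hk (m + 1) (by omega)
    rw [hAe] at h1
    rw [eq_div_iff h2] at h1
    push_cast at h1
    linarith
  have hBx : ∀ x, 0 < x → x ≤ X → B * x ^ (m - 1) ≤ c0 := by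
    intro x hx hxX
    rw [← hAX]; gcongr
  have quad : ∀ M', 0 ≤ M' → M' ≤ M → ∀ x, 0 < x → x ≤ X →
      -(C * (m + 3) * c0 * B * x ^ (m + 2)) ≤
      (-B) ^ 2 * x ^ (2 * m + 1) * (1 - M' * x) * (-ev (VBs s) x * ((m + 1) - (m + 2) * M' * x)
        + 2 * ev (A0s s) x * x * (1 - M' * x)) ∧ M' * x ≤ 1 := by
    intro M' hM0 hM1 x hx hxX
    have c0' : 0 ≤ M' * x := by positivity
    have c2 : 2 * (M' * x) ≤ 1 := by
      calc 2 * (M' * x) ≤ 2 * (M * X) := by gcongr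
        _ ≤ 1 := hMX
    have c3 := (VBs_bounds h.mem hx.le (hxX.trans hX1)).1
    have c3' := (abs_le.1 (hU.2 x hx.le (hxX.trans hX1)).2.2.2.1).2
    have c4 := A0s_nonneg h.mem (hxX.trans hX1)
    have c5 : 0 ≤ 2 * ev (A0s s) x * x * (1 - M' * x) := by
      have : 0 ≤ 1 - M' * x := by linarith
      positivity
    have c6 : ev (VBs s) x * ((m + 1) - (m + 2) * M' * x) ≤ C * (m + 3) := by
      have e1 : ((m : ℝ) + 1) - (m + 2) * M' * x ≤ m + 3 := by nlinarith
      calc _ ≤ ev (VBs s) x * (m + 3) := mul_le_mul_of_nonneg_left e1 (by linarith)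
        _ ≤ _ := mul_le_mul_of_nonneg_right c3' (by linarith)
    refine ⟨?_, by linarith⟩
    have c7 : 0 ≤ 1 - M' * x := by linarith
    have c8 : (1 - M' * x) ≤ 1 := by linarith
    obtain ⟨P, hP⟩ : ∃ P, P = B ^ 2 * x ^ (2 * m + 1) := ⟨_, rfl⟩
    have hP0 : 0 ≤ P := by rw [hP]; positivity
    have hPe : P ≤ c0 * B * x ^ (m + 2) := by
      have : P = B * x ^ (m - 1) * (B * x ^ (m + 2)) := by
        rw [hP, show 2 * m + 1 = (m - 1) + (m + 2) by omega, pow_add]; ring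
      rw [this]
      calc _ ≤ c0 * (B * x ^ (m + 2)) := mul_le_mul_of_nonneg_right (hBx x hx hxX) (by positivity)
        _ = _ := by ring
    rw [neg_sq, ← hP]
    have c9 : 0 ≤ C * (m + 3) := by positivity
    calc -(C * (m + 3) * c0 * B * x ^ (m + 2)) = -((c0 * B * x ^ (m + 2)) * (C * (m + 3))) := by ring
      _ ≤ -(P * (C * (m + 3))) := neg_le_neg (mul_le_mul_of_nonneg_right hPe c9)
      _ ≤ -(P * (1 - M' * x) * (C * (m + 3))) := by
          refine neg_le_neg (mul_le_mul_of_nonneg_right ?_ c9)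
          exact mul_le_of_le_one_right hP0 c8
      _ = P * (1 - M' * x) * -(C * (m + 3)) := by ring
      _ ≤ _ := mul_le_mul_of_nonneg_left (by linarith) (mul_nonneg hP0 c7)
  have hAM : |(-B)| = B := by rw [abs_neg]; exact abs_of_pos (by linarith)
  have cb : C * (1 + B * (m + 2)) ≤ C * (m + 3) * B := by
    have : 1 + B * (m + 2) ≤ (m + 3) * B := by linarith
    calc _ ≤ C * ((m + 3) * B) := by gcongr
      _ = _ := by ring
  have hMd' : C * (m + 3) * (1 + c0) * B < M * d0 * B := by
    have : C * (m + 3) * (1 + c0) < C * (m + 4) * (1 + c0) := by gcongr; linarith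
    exact mul_lt_mul_of_pos_right (this.trans_le hMd) (by linarith)
  have hresQ : ∀ x, 0 < x → x ≤ X → 0 < ev (Res s (Qp s m (-B) M)) x := by
    intro x hx hxX
    obtain ⟨q1, q2⟩ := quad M hM.le le_rfl x hx hxX
    have e := (abs_le.1 (res_Qp_est (A := -B) hU (by linarith) hx.le (hxX.trans hX1) hM.le q2)).1
    rw [hrec, hAM] at e
    have p : 0 < x ^ (m + 2) := by positivity
    have q3 : C * x ^ (m + 2) * (1 + B * (m + 2)) ≤ C * (m + 3) * B * x ^ (m + 2) := by
      have := mul_le_mul_of_nonneg_right cb p.le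
      linarith
    have q4 : M * d0 * B * x ^ (m + 2) ≤ B * M * (mu s * (m + 2) - lam s) * x ^ (m + 2) := by
      have : M * d0 * B ≤ B * M * (mu s * (m + 2) - lam s) := by
        calc M * d0 * B ≤ M * (mu s * (m + 2) - lam s) * B := by gcongr
          _ = _ := by ring
      exact mul_le_mul_of_nonneg_right this p.le
    have q5 := mul_lt_mul_of_pos_right hMd' p
    linarith
  have hnum : -num s (m + 2) ≤ C * (m + 3) * (1 + c0) * B := by
    have hz : ∀ j < m + 2, coeff j (-Res s (Tr s (m + 1))) = 0 := fun j hj => by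
      rw [map_neg, coeff_res_Tr h.mem (m + 1) (by omega) (fun j a _ => hk j a) j (by omega), neg_zero]
    have : -num s (m + 2) = coeff (m + 2) (-Res s (Tr s (m + 1))) := by
      rw [map_neg]; rfl
    rw [this]
    refine coeff_le one_pos (cv_Res ((fs_Tr s (m + 1)).cv 1)).neg hz ?_
    filter_upwards [self_mem_nhdsWithin, nhdsWithin_le_nhds (gt_mem_nhds hX0)] with x hx hxX
    have hx : 0 < x := hx
    obtain ⟨q1, q2⟩ := quad 0 le_rfl hM.le x hx hxX.le
    have e := (abs_le.1 (res_Qp_est (A := -B) hU (by linarith) hx.le (hxX.le.trans hX1) le_rfl q2)).1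
    rw [hrec, hAM, ← hAe, Qp_zero, hAe] at e
    rw [ev_neg]
    have p : 0 < x ^ (m + 2) := by positivity
    have q3 : C * x ^ (m + 2) * (1 + B * (m + 2)) ≤ C * (m + 3) * B * x ^ (m + 2) := by
      have := mul_le_mul_of_nonneg_right cb p.le
      linarith
    linarith
  have hco : 0 < -(aS s (m + 2) + -B * M) := by
    obtain ⟨d, hde⟩ : ∃ d, d = mu s * (m + 2) - lam s := ⟨_, rfl⟩
    rw [← hde] at hd
    have hd1 : 0 < d := by linarith
    have e : aS s (m + 2) = -num s (m + 2) / d := by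
      rw [aS_eq s (by omega)]
      have : lam s - mu s * ((m + 2 : ℕ) : ℝ) = -d := by rw [hde]; push_cast; ring
      rw [this, div_neg, neg_div]
    rw [e]
    have : -num s (m + 2) / d < B * M := by
      rw [div_lt_iff₀ hd1]
      calc -num s (m + 2) ≤ C * (m + 3) * (1 + c0) * B := hnum
        _ < M * d0 * B := hMd'
        _ ≤ M * d * B := by gcongr
        _ = B * M * d := by ring
    linarith
  obtain ⟨t0, ht0, hx0⟩ := h.hit hX0 hXv
  have hstart : ev (Qp s m (-B) M) X < y t0 := by
    rw [ev_Qp]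
    have t1 := (abs_le.1 (hU.2 X hX0.le hX1).2.2.2.2.2).2
    have t2 := hlow t0 ht0 hx0.le
    rw [hx0] at t2
    have t3 : B * X ^ (m + 1) = c0 * X ^ 2 := by
      rw [← hAX, show m + 1 = (m - 1) + 2 by omega, pow_add]; ring
    have t4 : c0 * X ^ 2 * (1 / 2) ≤ c0 * X ^ 2 * (1 - M * X) := by
      refine mul_le_mul_of_nonneg_left (by linarith) (by positivity)
    have t5 : 2 * (C + k) * X ^ 2 ≤ c0 * X ^ 2 := mul_le_mul_of_nonneg_right hck (by positivity)
    have t6 : -B * X ^ (m + 1) * (1 - M * X) = -(c0 * X ^ 2 * (1 - M * X)) := by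
      rw [← t3]; ring
    rw [t6]
    linarith
  intro τ hτ hxτ
  by_contra hcon
  have hcon := not_lt.1 hcon
  have hsm : ∀ᶠ x in 𝓝[>] (0 : ℝ), 0 < ev (-(Yf s - Qp s m (-B) M)) x := by
    have h9 := coeff_Yf_sub_Qp (s := s) (m := m) (M := M)
    rw [hAe] at h9
    exact small_sign hR (hY.sub (cv_Qp s m (-B) M R)).neg
      (fun j hj => by rw [map_neg, h9.1 j hj, neg_zero]) (by rw [map_neg, h9.2]; exact hco)
  obtain ⟨T1, hT1, h1⟩ := h.late (hsm.and (nhdsWithin_le_nhds (gt_mem_nhds hR)))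
  obtain ⟨t, ht⟩ : ∃ t, t = max (max T1 t0) τ := ⟨_, rfl⟩
  have htT : T1 ≤ t := by rw [ht]; exact (le_max_left _ _).trans (le_max_left _ _)
  have htt0 : t0 ≤ t := by rw [ht]; exact (le_max_right _ _).trans (le_max_left _ _)
  have htτ : τ ≤ t := by rw [ht]; exact le_max_right _ _
  obtain ⟨g1, g2⟩ := h1 t htT
  have hpos : 0 < s - v t := by linarith [(h.bd t (hτ.trans htτ)).2.2.2.1]
  rw [ev_neg, ev_sub hY (cv_Qp s m (-B) M R) (by rw [abs_of_pos hpos]; exact g2)] at g1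
  have g3 := h.above (cv_Qp s m (-B) M 2) ht0 (by rw [hx0]; linarith) (by rw [hx0]; exact hresQ)
    (by rw [hx0]; exact hstart) htt0
  obtain ⟨p, hp, g4⟩ := h.persist hY (res_Yf h.mem hk) hτ hxτ htτ
  have : p * (y τ - ev (Yf s) (s - v τ)) ≤ 0 := mul_nonpos_of_nonneg_of_nonpos hp.le (by linarith)
  linarith

lemma pos_lb {K : Set ℝ} (hK : IsCompact K) {f : ℝ → ℝ} (hf : ContinuousOn f K)
    (hp : ∀ s ∈ K, 0 < f s) : ∃ c > 0, ∀ s ∈ K, c ≤ f s := by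
  rcases K.eq_empty_or_nonempty with he | hne
  · exact ⟨1, one_pos, by simp [he]⟩
  · obtain ⟨x, hx, hm⟩ := hK.exists_isMinOn hne hf
    exact ⟨f x, hp x hx, fun s hs => hm hs⟩

lemma first_zero {f : ℝ → ℝ} {a b : ℝ} (hab : a < b) (hf : ContinuousOn f (Icc a b))
    (ha : f a < 0) (hb : 0 < f b) : ∃ c ∈ Ioo a b, f c = 0 ∧ ∀ x ∈ Ico a c, f x < 0 := by
  have hc : IsCompact (Icc a b ∩ f ⁻¹' Ici 0) :=
    isCompact_Icc.of_isClosed_subset (hf.preimage_isClosed_of_isClosed isClosed_Icc isClosed_Ici)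
      inter_subset_left
  obtain ⟨c, ⟨hc1, hc2⟩, hmin⟩ := hc.exists_isLeast ⟨b, ⟨hab.le, le_rfl⟩, hb.le⟩
  have hc2 : 0 ≤ f c := hc2
  obtain ⟨z, hz, hz0⟩ := intermediate_value_Icc hc1.1 (hf.mono (Icc_subset_Icc_right hc1.2))
    (⟨ha.le, hc2⟩ : (0 : ℝ) ∈ Icc (f a) (f c))
  have hcz : z = c := le_antisymm hz.2 (hmin ⟨⟨hz.1, hz.2.trans hc1.2⟩, hz0.ge⟩)
  rw [hcz] at hz0
  refine ⟨c, ⟨lt_of_le_of_ne hc1.1 fun h => ?_, lt_of_le_of_ne hc1.2 fun h => ?_⟩, hz0,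
    fun x hx => ?_⟩
  · rw [h, hz0] at ha; exact lt_irrefl _ ha
  · rw [← h, hz0] at hb; exact lt_irrefl _ hb
  · by_contra hn
    exact absurd (hmin ⟨⟨hx.1, hx.2.le.trans hc1.2⟩, not_lt.1 hn⟩) (not_le.2 hx.2)

lemma last_zero {f : ℝ → ℝ} {a b : ℝ} (hab : a < b) (hf : ContinuousOn f (Icc a b))
    (ha : f a < 0) (hb : 0 < f b) : ∃ c ∈ Ioo a b, f c = 0 ∧ ∀ x ∈ Ioc c b, 0 < f x := by
  obtain ⟨c, hc, h0, h1⟩ := first_zero (f := fun x => -f (a + b - x)) hab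
    (hf.comp (by fun_prop) fun x hx => ⟨by linarith [hx.2], by linarith [hx.1]⟩).neg
    (by simpa using hb) (by simpa using ha)
  refine ⟨a + b - c, ⟨by linarith [hc.2], by linarith [hc.1]⟩, by simpa using h0, fun x hx => ?_⟩
  have := h1 (a + b - x) ⟨by linarith [hx.2], by linarith [hx.1]⟩
  simpa using this

/-- A parameter window on which `n < k < n + 1`, with `k = n` and `k = n + 1` at its end points. -/
lemma select {s1 : ℝ} (h1 : s1 < sS) (hG : ∀ s ∈ Ico s1 sS, Good s) :
    ∃ N : ℕ, ∀ n : ℕ, N ≤ n → ∃ a b, s1 ≤ a ∧ a < b ∧ b < sS ∧ lam a = mu a * n ∧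
      lam b = mu b * (n + 1) ∧ ∀ s ∈ Ioo a b, mu s * n < lam s ∧ lam s < mu s * (n + 1) := by
  have g1 := hG s1 ⟨le_rfl, h1⟩
  obtain ⟨N, hN⟩ := exists_nat_gt (lam s1 / mu s1)
  rw [div_lt_iff₀ g1.mu0] at hN
  have hsub : Icc s1 sS ⊆ Dm := fun s hs => ⟨g1.mem.1.trans_le hs.1, hs.2⟩
  have hφ : ∀ c : ℝ, ContinuousOn (fun s => lam s - mu s * c) (Icc s1 sS) := fun c =>
    (lam_cont.mono hsub).sub ((mu_cont.mono hsub).mul continuousOn_const)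
  refine ⟨N, fun n hn => ?_⟩
  have hnN : (N : ℝ) ≤ n := by exact_mod_cast hn
  have hs1 : lam s1 - mu s1 * n < 0 := by
    have := mul_le_mul_of_nonneg_left hnN g1.mu0.le
    linarith
  have hs1' : lam s1 - mu s1 * (n + 1) < 0 := by linarith [g1.mu0]
  obtain ⟨b, hb, hb0, hb1⟩ := first_zero h1 (hφ (n + 1)) hs1' (by
    rw [mu_sS]; linarith [lam_pos sS_mem])
  have gb := hG b ⟨hb.1.le, hb.2⟩
  obtain ⟨a, ha, ha0, ha1⟩ := last_zero hb.1 ((hφ n).mono (Icc_subset_Icc_right hb.2.le)) hs1 (by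
    linarith [gb.mu0])
  exact ⟨a, b, ha.1.le, ha.2, hb.2, by linarith, by linarith, fun s hs =>
    ⟨by linarith [ha1 s ⟨hs.1, hs.2.le⟩], by linarith [hb1 s ⟨ha.1.le.trans hs.1.le, hs.2⟩]⟩⟩

lemma num_pos {s : ℝ} (h : Good s) {m : ℕ} (hm : 150 ≤ m) (hk : mu s * m < lam s) :
    0 < num s (m + 1) := by
  have H := hyp_of_lt h m hk
  refine lt_of_lt_of_le ?_ (num_bounds h (m := m + 1) (by omega) (by simpa using hk)
    (by simpa using H)).1
  have := H.pos m (by omega) le_rfl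
  have h2 := h.lam_pos
  rw [Nat.add_sub_cancel]
  unfold Lb
  positivity

lemma gap_ne {s : ℝ} (h : Good s) {m : ℕ} (hk : mu s * m < lam s) :
    ∀ j : ℕ, 2 ≤ j → j ≤ m → lam s - mu s * j ≠ 0 := fun _ _ hj => (gap_pos h hk hj).ne'

/-- A gap `n < k < n + 1` excludes every resonance. -/
lemma no_res {s : ℝ} {n : ℕ} (hm : 0 < mu s) (h : mu s * n < lam s ∧ lam s < mu s * (n + 1)) (j : ℕ) :
    lam s - mu s * j ≠ 0 := by
  intro h0
  have e : lam s = mu s * j := by linarith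
  rw [e] at h
  have h1 := lt_of_mul_lt_mul_left h.1 hm.le
  have h2 := lt_of_mul_lt_mul_left h.2 hm.le
  norm_cast at h1 h2
  omega

/-- Near the left end of the window the orbit of the centre is below the smooth solution. -/
lemma exists_below {a b δ : ℝ} {V Y : ℝ → ℝ → ℝ} (hab : a < b) (hG : ∀ s ∈ Icc a b, Good s)
    (hO : ∀ s ∈ Icc a b, Orb s (V s) (Y s)) (hδ : 0 < δ) (hδ' : ∀ s ∈ Icc a b, δ ≤ s - V s 0)
    {m : ℕ} (hm : 150 ≤ m) (ha : lam a = mu a * (m + 1 : ℕ))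
    (hI : ∀ s ∈ Ico a b, s ≠ a → mu s * (m + 1 : ℕ) < lam s ∧ lam s < mu s * ((m + 1 : ℕ) + 1)) :
    ∃ s ∈ Ioo a b, ∀ R > 0, Cv R (Yf s) → ∀ τ, 0 ≤ τ → s - V s τ < R →
      Y s τ < ev (Yf s) (s - V s τ) := by
  obtain ⟨c, hc⟩ : ∃ c, c = (a + b) / 2 := ⟨_, rfl⟩
  have hac : a < c := by linarith
  have hcb : c < b := by linarith
  have hK : IsCompact (Icc a c) := isCompact_Icc
  have hKG : ∀ s ∈ Icc a c, Good s := fun s hs => hG s ⟨hs.1, hs.2.trans hcb.le⟩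
  have hKD : Icc a c ⊆ Dm := fun s hs => (hKG s hs).mem
  have hlt : ∀ s ∈ Icc a c, mu s * m < lam s ∧ lam s < mu s * (m + 2) := by
    intro s hs
    have h0 := (hKG s hs).mu0
    rcases eq_or_ne s a with h | h
    · rw [h] at h0 ⊢; rw [ha]; push_cast; constructor <;> linarith
    · have := hI s ⟨hs.1, hs.2.trans_lt hcb⟩ h
      push_cast at this
      constructor <;> linarith [this.1, this.2]
  obtain ⟨C, hC, hU⟩ := unif_bounds hK hKD (m := m) (by omega) fun j h1 h2 s hs =>
    gap_ne (hKG s hs) (hlt s hs).1 j h1 h2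
  have hlc := lam_cont.mono hKD
  have hmc := mu_cont.mono hKD
  obtain ⟨d0, hd0, hd⟩ := pos_lb hK (f := fun s => mu s * (m + 2) - lam s)
    ((hmc.mul continuousOn_const).sub hlc) fun s hs => by linarith [(hlt s hs).2]
  obtain ⟨ν, hν, hn⟩ := pos_lb hK (num_cont hKD (m + 1) fun j h1 h2 s hs =>
    gap_ne (hKG s hs) (hlt s hs).1 j h1 h2) fun s hs => num_pos (hKG s hs) hm (hlt s hs).1
  obtain ⟨M, hM⟩ : ∃ M, M = C * (m + 4) / d0 + 2 * C + 1 / δ := ⟨_, rfl⟩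
  have hm0 : (0 : ℝ) ≤ m := m.cast_nonneg
  have hM1 : 0 ≤ C * (m + 4) / d0 := by positivity
  have hM2 : 0 < 1 / δ := by positivity
  have hM0 : 0 < M := by rw [hM]; linarith
  obtain ⟨Θ, hΘ⟩ : ∃ Θ, Θ = 1 + 2 * (C + 2) * ((m + 2) * M) ^ (m + 1) := ⟨_, rfl⟩
  have hΘ0 : 0 ≤ 2 * (C + 2) * ((m + 2) * M) ^ (m + 1) := by positivity
  have hev : ∀ᶠ s in 𝓝[Icc a c] a, lam s - mu s * (m + 1 : ℕ) < ν / Θ := by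
    have h1 : ContinuousWithinAt (fun s => lam s - mu s * (m + 1 : ℕ)) (Icc a c) a :=
      (hlc.sub (hmc.mul continuousOn_const)) a ⟨le_rfl, hac.le⟩
    refine h1.eventually (gt_mem_nhds ?_)
    show lam a - mu a * _ < _
    rw [ha, sub_self]
    exact div_pos hν (by linarith)
  have := left_nhdsWithin_Ioo_neBot hac
  obtain ⟨s, hs1, hs2⟩ := ((hev.filter_mono (nhdsWithin_mono a Ioo_subset_Icc_self)).and
    self_mem_nhdsWithin).exists
  have hsK := Ioo_subset_Icc_self hs2
  have hgap := hI s ⟨hs2.1.le, hs2.2.trans hcb⟩ hs2.1.ne'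
  refine ⟨s, ⟨hs2.1, hs2.2.trans hcb⟩, fun R hR hY => ?_⟩
  have g := hKG s hsK
  have hA : Θ ≤ aS s (m + 1) := by
    rw [aS_eq s (by omega), le_div_iff₀ (by linarith [hgap.1])]
    rw [lt_div_iff₀ (by linarith)] at hs1
    linarith [hn s hsK]
  have hCU := hU s hsK
  refine orbit_below (hO s ⟨hs2.1.le, (hs2.2.trans hcb).le⟩) (m := m) (by omega) hC hCU
    (fun j _ => no_res g.mu0 hgap j) hY hR (a1_nonneg g.mem) hd0 (hd s hsK) hM0 ?_ ?_ ?_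
    (by linarith) (by linarith)
  · have : C * (m + 4) = C * (m + 4) / d0 * d0 := by field_simp
    rw [this]
    exact mul_le_mul_of_nonneg_right (by linarith) hd0.le
  · have : M ≤ (m + 2) * M := le_mul_of_one_le_left hM0.le (by linarith)
    linarith
  · have h1 : 1 / δ ≤ (m + 2) * M :=
      le_trans (by linarith) (le_mul_of_one_le_left hM0.le (by linarith : (1 : ℝ) ≤ m + 2))
    calc 1 = δ * (1 / δ) := by field_simp
      _ ≤ _ := mul_le_mul (hδ' s ⟨hs2.1.le, (hs2.2.trans hcb).le⟩) h1 hM2.le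
        (hδ.le.trans (hδ' s ⟨hs2.1.le, (hs2.2.trans hcb).le⟩))

/-- Near the right end of the window the orbit of the centre is above the smooth solution. -/
lemma exists_above {a b δ : ℝ} {V Y : ℝ → ℝ → ℝ} (hab : a < b) (hG : ∀ s ∈ Icc a b, Good s)
    (hO : ∀ s ∈ Icc a b, Orb s (V s) (Y s)) (hδ : 0 < δ) (hδ' : ∀ s ∈ Icc a b, δ ≤ s - V s 0)
    {m : ℕ} (hm : 150 ≤ m) (hbS : b < sS) (hb : lam b = mu b * (m + 1))
    (hI : ∀ s ∈ Ioo a b, mu s * m < lam s ∧ lam s < mu s * (m + 1)) :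
    ∃ s ∈ Ioo a b, ∀ R > 0, Cv R (Yf s) → ∀ τ, 0 ≤ τ → s - V s τ < R →
      ev (Yf s) (s - V s τ) < Y s τ := by
  obtain ⟨c, hc⟩ : ∃ c, c = (a + b) / 2 := ⟨_, rfl⟩
  have hac : a < c := by linarith
  have hcb : c < b := by linarith
  have hK : IsCompact (Icc c b) := isCompact_Icc
  have hKG : ∀ s ∈ Icc c b, Good s := fun s hs => hG s ⟨hac.le.trans hs.1, hs.2⟩
  have hKD : Icc c b ⊆ Dm := fun s hs => (hKG s hs).mem
  have hlt : ∀ s ∈ Icc c b, mu s * m < lam s ∧ lam s ≤ mu s * (m + 1) := by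
    intro s hs
    have h0 := (hKG s hs).mu0
    rcases eq_or_ne s b with h | h
    · rw [h] at h0 ⊢; rw [hb]; constructor <;> linarith
    · have := hI s ⟨hac.trans_le hs.1, lt_of_le_of_ne hs.2 h⟩
      exact ⟨this.1, this.2.le⟩
  obtain ⟨C, hC, hU⟩ := unif_bounds hK hKD (m := m) (by omega) fun j h1 h2 s hs =>
    gap_ne (hKG s hs) (hlt s hs).1 j h1 h2
  obtain ⟨C1, hC1, hU1⟩ := unif_bounds hK hKD (m := 1) le_rfl fun j h1 h2 s hs => by omega
  have hlc := lam_cont.mono hKD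
  have hmc := mu_cont.mono hKD
  obtain ⟨d0, hd0, hd⟩ := pos_lb hK hmc fun s hs => (hKG s hs).mu0
  obtain ⟨ν, hν, hn⟩ := pos_lb hK (num_cont hKD (m + 1) fun j h1 h2 s hs =>
    gap_ne (hKG s hs) (hlt s hs).1 j h1 h2) fun s hs => num_pos (hKG s hs) hm (hlt s hs).1
  obtain ⟨α, hα, hα1⟩ := pos_lb hK (a1_cont.mono hKD) fun s hs =>
    a1_pos (hKG s hs).mem (hs.2.trans_lt hbS)
  obtain ⟨xh, hxh⟩ : ∃ xh, xh = min (min δ 1) (min (1 / C1) (α / (C1 + 1))) := ⟨_, rfl⟩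
  have hC1' : 0 < C1 := by linarith
  have hxh0 : 0 < xh := by rw [hxh]; positivity
  have hx1 : xh ≤ δ := by rw [hxh]; exact (min_le_left _ _).trans (min_le_left _ _)
  have hx2 : xh ≤ 1 := by rw [hxh]; exact (min_le_left _ _).trans (min_le_right _ _)
  have hx3 : xh * C1 ≤ 1 := by
    rw [← le_div_iff₀ hC1', hxh]; exact (min_le_right _ _).trans (min_le_left _ _)
  have hx4 : xh * (C1 + 1) ≤ α := by
    rw [← le_div_iff₀ (by linarith), hxh]; exact (min_le_right _ _).trans (min_le_right _ _)
  obtain ⟨k, hk⟩ : ∃ k, k = 1 / xh := ⟨_, rfl⟩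
  have hk0 : 0 < k := by rw [hk]; positivity
  obtain ⟨c0, hc0⟩ : ∃ c0, c0 = 2 * (C + k) := ⟨_, rfl⟩
  have hc0p : 0 < c0 := by linarith
  obtain ⟨M, hM⟩ : ∃ M, M = C * (m + 4) * (1 + c0) / d0 := ⟨_, rfl⟩
  have hm0 : (0 : ℝ) ≤ m := m.cast_nonneg
  have hM0 : 0 < M := by rw [hM]; positivity
  obtain ⟨Xm, hXm⟩ : ∃ Xm, Xm = min xh (1 / (2 * M)) := ⟨_, rfl⟩
  have hXm0 : 0 < Xm := by rw [hXm]; positivity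
  obtain ⟨Θ, hΘ⟩ : ∃ Θ, Θ = 1 + c0 / Xm ^ (m - 1) := ⟨_, rfl⟩
  have hΘ0 : 0 < c0 / Xm ^ (m - 1) := by positivity
  have hev : ∀ᶠ s in 𝓝[Icc c b] b, mu s * (m + 1) - lam s < ν / Θ := by
    have h1 : ContinuousWithinAt (fun s => mu s * (m + 1) - lam s) (Icc c b) b :=
      ((hmc.mul continuousOn_const).sub hlc) b ⟨hcb.le, le_rfl⟩
    refine h1.eventually (gt_mem_nhds ?_)
    show mu b * _ - lam b < _
    rw [hb, sub_self]
    exact div_pos hν (by linarith)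
  have := right_nhdsWithin_Ioo_neBot hcb
  obtain ⟨s, hs1, hs2⟩ := ((hev.filter_mono (nhdsWithin_mono b Ioo_subset_Icc_self)).and
    self_mem_nhdsWithin).exists
  have hsK := Ioo_subset_Icc_self hs2
  have hsO : s ∈ Ioo a b := ⟨hac.trans hs2.1, hs2.2⟩
  have hgap := hI s hsO
  refine ⟨s, hsO, fun R hR hY => ?_⟩
  have g := hKG s hsK
  have hA : Θ ≤ -aS s (m + 1) := by
    rw [aS_eq s (by omega), ← div_neg, le_div_iff₀ (by push_cast; linarith [hgap.2])]
    rw [lt_div_iff₀ (by linarith)] at hs1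
    push_cast
    linarith [hn s hsK]
  have hB : 0 < -aS s (m + 1) := by linarith
  obtain ⟨X, hX⟩ : ∃ X, X = (c0 / -aS s (m + 1)) ^ (((m - 1 : ℕ) : ℝ)⁻¹) := ⟨_, rfl⟩
  have hX0 : 0 < X := by rw [hX]; positivity
  have hXp : X ^ (m - 1) = c0 / -aS s (m + 1) := by
    rw [hX]; exact Real.rpow_inv_natCast_pow (by positivity) (by omega)
  have hXX : X ≤ Xm := by
    refine le_of_pow_le_pow_left₀ (n := m - 1) (by omega) hXm0.le ?_
    rw [hXp, div_le_iff₀ hB]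
    calc c0 = Xm ^ (m - 1) * (c0 / Xm ^ (m - 1)) := by field_simp
      _ ≤ _ := mul_le_mul_of_nonneg_left (by linarith) (by positivity)
  have hXx : X ≤ xh := hXX.trans (by rw [hXm]; exact min_le_left _ _)
  have hOs := hO s ⟨hsO.1.le, hsO.2.le⟩
  have hvs := hδ' s ⟨hsO.1.le, hsO.2.le⟩
  refine orbit_above hOs (m := m) (k := k) (c0 := c0) (X := X) (by omega) hC (hU s hsK)
    (fun j _ => no_res g.mu0 hgap j) hY hR hd0
    (by linarith [hd s hsK, hgap.2]) hM0 hc0p ?_ hX0 (hXx.trans hx2) ?_ (by linarith)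
    (by linarith) (by rw [hXp, mul_comm]; exact div_mul_cancel₀ _ hB.ne') ?_ hc0.ge
  · rw [hM]; exact (div_mul_cancel₀ _ hd0.ne').ge
  · have h1 : X ≤ 1 / (2 * M) := hXX.trans (by rw [hXm]; exact min_le_right _ _)
    rw [le_div_iff₀ (by positivity)] at h1
    linarith
  · intro τ hτ hle
    have h1 := lower_barrier hOs hC1 (hU1 s hsK) (by linarith [g.lam9, g.k_big, g.mu0])
      (a1_pos g.mem (hs2.2.trans hbS)) hxh0 hx2 hx3 (hx4.trans (hα1 s hsK)) (hx1.trans hvs) τ hτ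
      (hle.trans hXx)
    have h2 : a1 s / xh ≤ k := by
      rw [hk]; gcongr; linarith [a1_lt g.mem]
    have h3 := mul_le_mul_of_nonneg_right h2 (sq_nonneg (s - V s τ))
    linarith

/-- The shooting argument: for every large `n` there is a parameter with `n < k < n + 1` whose
orbit of the centre coincides near the sonic point with the analytic solution `Yf`. -/
lemma matching {s1 : ℝ} {V Y : ℝ → ℝ → ℝ} (h1 : s1 < sS)
    (hO : ∀ s ∈ Icc s1 sS, Orb s (V s) (Y s))
    (hc : ∀ τ, 0 ≤ τ → ContinuousOn (fun s => V s τ) (Icc s1 sS) ∧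
      ContinuousOn (fun s => Y s τ) (Icc s1 sS))
    (hu : ∀ r > 0, ∃ T > 0, ∀ s ∈ Icc s1 sS, ∀ τ, T ≤ τ → s - V s τ < r) :
    ∃ N : ℕ, ∀ n : ℕ, N ≤ n → ∃ s ∈ Icc s1 sS, Good s ∧ s < sS ∧
      (mu s * n < lam s ∧ lam s < mu s * (n + 1)) ∧ ∃ R > 0, Cv R (Yf s) ∧ ∃ T, 0 ≤ T ∧
      ∀ τ, T ≤ τ → s - V s τ < R ∧ Y s τ = ev (Yf s) (s - V s τ) := by
  obtain ⟨s0, hs0, hG0⟩ := (mem_nhdsLT_iff_exists_Ioo_subset).1 good_eventually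
  have hs0 : s0 < sS := hs0
  obtain ⟨s2, hs2⟩ : ∃ s2, s2 = max s1 ((s0 + sS) / 2) := ⟨_, rfl⟩
  have h2 : s2 < sS := by rw [hs2]; exact max_lt h1 (by linarith)
  have h12 : s1 ≤ s2 := by rw [hs2]; exact le_max_left _ _
  have h02 : s0 < s2 := by rw [hs2]; exact lt_of_lt_of_le (by linarith) (le_max_right _ _)
  have hG : ∀ s ∈ Ico s2 sS, Good s := fun s hs => hG0 ⟨h02.trans_le hs.1, hs.2⟩
  obtain ⟨N, hN⟩ := select h2 hG
  obtain ⟨δ, hδ, hδ'⟩ := pos_lb (isCompact_Icc (a := s1) (b := sS)) (f := fun s => s - V s 0)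
    (continuousOn_id.sub (hc 0 le_rfl).1) fun s hs => by
      linarith [((hO s hs).bd 0 le_rfl).2.2.2.1]
  refine ⟨max N 151, fun n hn => ?_⟩
  obtain ⟨a, b, h2a, hab, hbS, ha, hb, hI⟩ := hN n ((le_max_left _ _).trans hn)
  have hn' : 151 ≤ n := (le_max_right _ _).trans hn
  have hI1 : ∀ s ∈ Icc a b, s ∈ Icc s1 sS := fun s hs =>
    ⟨h12.trans (h2a.trans hs.1), hs.2.trans hbS.le⟩
  have hGI : ∀ s ∈ Icc a b, Good s := fun s hs => hG s ⟨h2a.trans hs.1, hs.2.trans_lt hbS⟩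
  have hOI : ∀ s ∈ Icc a b, Orb s (V s) (Y s) := fun s hs => hO s (hI1 s hs)
  obtain ⟨m, rfl⟩ : ∃ m, n = m + 1 := ⟨n - 1, by omega⟩
  obtain ⟨p, hp, hp1⟩ := exists_below hab hGI hOI hδ (fun s hs => hδ' s (hI1 s hs)) (m := m)
    (by omega) ha fun s hs hne => hI s ⟨lt_of_le_of_ne hs.1 hne.symm, hs.2⟩
  obtain ⟨q, hq, hq1⟩ := exists_above hab hGI hOI hδ (fun s hs => hδ' s (hI1 s hs)) (m := m + 1)
    (by omega) hbS hb hI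
  have hsub : uIcc p q ⊆ Ioo a b := fun s hs =>
    ⟨lt_of_lt_of_le (lt_min hp.1 hq.1) hs.1, lt_of_le_of_lt hs.2 (max_lt hp.2 hq.2)⟩
  have hsub1 : uIcc p q ⊆ Icc s1 sS := fun s hs => hI1 s (Ioo_subset_Icc_self (hsub hs))
  have hD : uIcc p q ⊆ Dm := fun s hs => (hGI s (Ioo_subset_Icc_self (hsub hs))).mem
  obtain ⟨R, hR1, hR⟩ := aS_geom isCompact_uIcc hD (m + 1) fun s hs => hI s (hsub hs)
  have hR0 : 0 < R := by linarith
  have hcv : ∀ s ∈ uIcc p q, Cv (1 / R) (Yf s) := fun s hs =>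
    cv_of_geom (C := 1) hR0 fun k => by rw [one_mul, Yf, coeff_mk]; exact hR s hs k
  obtain ⟨T, hT, hT'⟩ := hu (1 / (2 * R)) (by positivity)
  have hlt : 1 / (2 * R) < 1 / R := one_div_lt_one_div_of_lt hR0 (by linarith)
  have hres : ∀ s x, ev (rescale x (Yf s)) 1 = ev (Yf s) x := fun s x => by
    simp [ev, coeff_rescale, mul_comm]
  have hVc := ((hc T hT.le).1.mono hsub1)
  have hcont : ContinuousOn (fun s => Y s T - ev (Yf s) (s - V s T)) (uIcc p q) := by
    refine ((hc T hT.le).2.mono hsub1).sub ?_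
    have h3 : ContinuousOn (fun s => ev (rescale (s - V s T) (Yf s)) 1) (uIcc p q) := by
      refine ev_continuousOn_param (C := 1) (R := 1 / 2) (by norm_num) (fun k => ?_)
        (fun s hs k => ?_) (by norm_num)
      · simp only [coeff_rescale, Yf, coeff_mk]
        exact ((continuousOn_id.sub hVc).pow k).mul (aS_cont hD k fun j _ _ s hs =>
          no_res (hGI s (Ioo_subset_Icc_self (hsub hs))).mu0 (hI s (hsub hs)) j)
      · rw [coeff_rescale, Yf, coeff_mk, abs_mul, one_mul, abs_pow]
        have h4 := hT' s (hsub1 hs) T le_rfl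
        have h5 : 0 < s - V s T := by linarith [((hO s (hsub1 hs)).bd T hT.le).2.2.2.1]
        rw [abs_of_pos h5]
        calc _ ≤ (1 / (2 * R)) ^ k * R ^ k := by gcongr; exact hR s hs k
          _ = (1 / 2) ^ k := by rw [← mul_pow]; congr 1; field_simp
    exact h3.congr fun s _ => (hres s _).symm
  obtain ⟨s, hs, hs0⟩ := intermediate_value_uIcc hcont (show (0 : ℝ) ∈ _ by
    refine Icc_subset_uIcc ⟨?_, ?_⟩
    · have := hp1 (1 / R) (by positivity) (hcv p left_mem_uIcc) T hT.le
        ((hT' p (hsub1 left_mem_uIcc) T le_rfl).trans hlt)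
      linarith
    · have := hq1 (1 / R) (by positivity) (hcv q right_mem_uIcc) T hT.le
        ((hT' q (hsub1 right_mem_uIcc) T le_rfl).trans hlt)
      linarith)
  have hs0 : Y s T - ev (Yf s) (s - V s T) = 0 := hs0
  have hw := hI s (hsub hs)
  have g := hGI s (Ioo_subset_Icc_self (hsub hs))
  refine ⟨s, hsub1 hs, g, (hsub hs).2.trans hbS, hw, 1 / R, by positivity, hcv s hs, T, hT.le,
    fun τ hτ => ⟨(hT' s (hsub1 hs) τ hτ).trans hlt, ?_⟩⟩
  obtain ⟨c, _, hc2⟩ := (hO s (hsub1 hs)).persist (hcv s hs)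
    (res_Yf g.mem fun j _ => no_res g.mu0 hw j) hT.le ((hT' s (hsub1 hs) T le_rfl).trans hlt) hτ
  rw [hs0, mul_zero] at hc2
  linarith

section
/-! ### Positivity of the residual to the left of the sonic point -/

/-- The range `0 < t ≤ θ_N` of distances to the left of the sonic point on which the partial sum
of order `N` is used as a barrier. -/
structure LR (s : ℝ) (N : ℕ) (t : ℝ) : Prop where
  good : Good s
  hN : 151 ≤ N
  lt : mu s * N < lam s
  pos : 0 < t
  small : t ≤ 1 / 10 ^ 4
  th : t * (lam s * Lb N) ≤ lam s - mu s * N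

variable {s t : ℝ} {N : ℕ}

lemma LR.hyp (h : LR s N t) : Hyp s N := hyp_of_lt h.good N h.lt

lemma LR.tL (h : LR s N t) : t * Lb N ≤ 1 := by
  have := h.th
  have l := h.good.lam_pos
  have m := mul_nonneg h.good.mu0.le (Nat.cast_nonneg (α := ℝ) N)
  have : lam s * (t * Lb N) ≤ lam s * 1 := by linarith
  exact le_of_mul_le_mul_left this l

lemma LR.nR (h : LR s N t) : (151 : ℝ) ≤ N := by exact_mod_cast h.hN

lemma LR.w_step (h : LR s N t) {j : ℕ} (h1 : 15 ≤ j) (h2 : j ≤ N) :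
    aS s j * t ^ j * Lb N ≤ Ub j * (aS s (j - 1) * t ^ (j - 1)) := by
  have hu := h.hyp.up j h1 h2
  have p := h.hyp.pos j (by omega) h2
  have l := h.good.lam_pos
  have hj : mu s * j ≤ mu s * N :=
    mul_le_mul_of_nonneg_left (Nat.cast_le.2 h2) h.good.mu0.le
  have k1 : t * (lam s * Lb N) * aS s j ≤ (lam s - mu s * j) * aS s j :=
    mul_le_mul_of_nonneg_right (by linarith [h.th]) p.le
  have k2 : lam s * (t * Lb N * aS s j) ≤ lam s * (Ub j * aS s (j - 1)) := by linarith
  have k3 := mul_le_mul_of_nonneg_right (le_of_mul_le_mul_left k2 l) (pow_pos h.pos (j - 1)).le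
  obtain ⟨i, rfl⟩ : ∃ i, j = i + 1 := ⟨j - 1, by omega⟩
  simp only [Nat.add_sub_cancel] at k3 ⊢
  rw [pow_succ]; linarith

lemma LR.wpos (h : LR s N t) {j : ℕ} (h1 : 2 ≤ j) (h2 : j ≤ N) : 0 < aS s j * t ^ j :=
  mul_pos (h.hyp.pos j h1 h2) (pow_pos h.pos j)

/-- The weighted coefficients `a_j t^j` are symmetric-decreasing: stripping one factor at both ends
of `[i, i + d]` gains `Ub (i+1) · Ub (i+d) ≤ Lb N ^ 2`. -/
lemma LR.pair (h : LR s N t) (d : ℕ) : ∀ i, 14 ≤ i → i + d ≤ N → 2 * i + d + 1 ≤ N + 15 →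
    aS s (i + d) * t ^ (i + d) ≤ aS s i * t ^ i := by
  have hN := h.nR
  have L0 : 0 < Lb N := by unfold Lb; positivity
  induction d using Nat.twoStepInduction with
  | zero => intro i _ _ _; exact le_rfl
  | one =>
    intro i h1 h2 h3
    have k := h.w_step (show 15 ≤ i + 1 by omega) h2
    rw [Nat.add_sub_cancel] at k
    have hU : Ub (i + 1) ≤ Lb N := by
      have : (2 * i + 2 : ℝ) ≤ N + 15 := by exact_mod_cast h3
      unfold Ub Lb; push_cast; linarith
    have w := h.wpos (show 2 ≤ i by omega) (by omega)
    have : aS s (i + 1) * t ^ (i + 1) * Lb N ≤ aS s i * t ^ i * Lb N := by nlinarith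
    exact le_of_mul_le_mul_right this L0
  | more d ih _ =>
    intro i h1 h2 h3
    have k1 := h.w_step (show 15 ≤ i + 1 by omega) (by omega)
    have k2 := h.w_step (show 15 ≤ i + (d + 2) by omega) h2
    have k3 := ih (i + 1) (by omega) (by omega) (by omega)
    rw [Nat.add_sub_cancel] at k1
    rw [show i + (d + 2) - 1 = i + 1 + d by omega] at k2
    have w := h.wpos (show 2 ≤ i by omega) (by omega)
    have hU0 : 0 < Ub (i + (d + 2)) := by unfold Ub; positivity
    have hUU : Ub (i + (d + 2)) * Ub (i + 1) ≤ Lb N ^ 2 := by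
      have h4 : (2 * i + d + 3 : ℝ) ≤ N + 15 := by exact_mod_cast h3
      have e : (Ub (i + (d + 2)) + Ub (i + 1)) / 2 ≤ Lb N := by
        unfold Ub Lb; push_cast; linarith
      have : 0 < Ub (i + 1) := by unfold Ub; positivity
      nlinarith [sq_nonneg (Ub (i + (d + 2)) - Ub (i + 1))]
    have : aS s (i + (d + 2)) * t ^ (i + (d + 2)) * Lb N ^ 2 ≤ aS s i * t ^ i * Lb N ^ 2 :=
      calc _ = aS s (i + (d + 2)) * t ^ (i + (d + 2)) * Lb N * Lb N := by ring
        _ ≤ Ub (i + (d + 2)) * (aS s (i + 1 + d) * t ^ (i + 1 + d)) * Lb N := by gcongr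
        _ ≤ Ub (i + (d + 2)) * (aS s (i + 1) * t ^ (i + 1)) * Lb N := by gcongr
        _ = Ub (i + (d + 2)) * (aS s (i + 1) * t ^ (i + 1) * Lb N) := by ring
        _ ≤ Ub (i + (d + 2)) * (Ub (i + 1) * (aS s i * t ^ i)) := by gcongr
        _ = Ub (i + (d + 2)) * Ub (i + 1) * (aS s i * t ^ i) := by ring
        _ ≤ Lb N ^ 2 * (aS s i * t ^ i) := by gcongr
        _ = _ := by ring
    exact le_of_mul_le_mul_right this (by positivity)

lemma LR.prod_le (h : LR s N t) {e f : ℕ} (he : 14 ≤ e) (hef : e ≤ f) (hf : f ≤ N)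
    (hs : N + 14 ≤ e + f) : aS s e * aS s f * t ^ (e + f) ≤ aS s 14 * aS s N * t ^ (N + 14) := by
  have h1 := h.pair (e + f - (N + 14)) (N + 14 - f) (by omega) (by omega) (by omega)
  rw [show N + 14 - f + (e + f - (N + 14)) = e by omega] at h1
  have h2 := dom' h.good h.lt h.hyp (p := N + 14 - f) (q := f) (by omega) (by omega)
    (by have := h.hN; omega) (by omega)
  rw [show N + 14 - f + f - 14 = N by omega] at h2
  have w := h.wpos (show 2 ≤ f by omega) hf
  have tp := pow_pos h.pos (N + 14)
  calc aS s e * aS s f * t ^ (e + f) = aS s e * t ^ e * (aS s f * t ^ f) := by rw [pow_add]; ring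
    _ ≤ aS s (N + 14 - f) * t ^ (N + 14 - f) * (aS s f * t ^ f) := by gcongr
    _ = aS s (N + 14 - f) * aS s f * t ^ (N + 14) := by
        rw [show N + 14 = N + 14 - f + f by omega, pow_add]
        simp only [Nat.add_sub_cancel]; ring
    _ ≤ _ := by gcongr

/-- The unit in which the quadratic part of the residual is measured. -/
def qE (s t : ℝ) (N : ℕ) : ℝ := 7 / 10 ^ 6 * aS s N * t ^ (N + 2) / Lb N

lemma LR.sq_coeff (h : LR s N t) {m j : ℕ} (hm : N + 2 ≤ m) (h1 : m - 2 ≤ j) (h2 : j ≤ m + 1) :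
    0 ≤ coeff j (Zt s (N + 1) ^ 2) ∧ coeff j (Zt s (N + 1) ^ 2) * t ^ m ≤
      (m + 2) * (if m ≤ N + 16 then qE s t N else qE s t N * t ^ 2) := by
  have hN := h.nR
  have hN' := h.hN
  have L1 : 1 < Lb N := by unfold Lb; linarith
  have t1 : t ≤ 1 := h.small.trans (by norm_num)
  have t0 := h.pos
  have pN := h.hyp.pos N (by omega) le_rfl
  have p14 := h.hyp.pos 14 (by omega) (by omega)
  have a14 := h.good.a14
  have hz0 : ∀ j, 0 ≤ coeff j (Zt s (N + 1)) := by
    intro j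
    rw [coeff_Zt _ _ _ (by omega)]
    split_ifs with hj
    · exact (h.hyp.pos j (by omega) hj.2).le
    · exact le_rfl
  have L0 : 0 < Lb N := by linarith
  have EL : qE s t N * Lb N = 7 / 10 ^ 6 * aS s N * t ^ (N + 2) := div_mul_cancel₀ _ L0.ne'
  have E0 : 0 < qE s t N := by unfold qE; positivity
  have B0 : 0 < (if m ≤ N + 16 then qE s t N else qE s t N * t ^ 2) := by split_ifs <;> positivity
  have E4 : 7 / 10 ^ 6 * aS s N * t ^ (N + 13) ≤ qE s t N * t ^ 2 := by
    refine le_of_mul_le_mul_right ?_ L0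
    have e : t ^ 9 * Lb N ≤ 1 := by
      have : t ^ 9 * Lb N = t ^ 8 * (t * Lb N) := by ring
      rw [this]; exact mul_le_one₀ (pow_le_one₀ t0.le t1) (by positivity) h.tL
    calc 7 / 10 ^ 6 * aS s N * t ^ (N + 13) * Lb N
        = 7 / 10 ^ 6 * aS s N * t ^ (N + 2) * t ^ 2 * (t ^ 9 * Lb N) := by ring
      _ ≤ 7 / 10 ^ 6 * aS s N * t ^ (N + 2) * t ^ 2 * 1 := by gcongr
      _ = _ := by rw [← EL]; ring
  have E5 : qE s t N * t ^ 2 ≤ qE s t N := mul_le_of_le_one_right E0.le (pow_le_one₀ t0.le t1)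
  rw [sq, coeff_mul, Finset.Nat.sum_antidiagonal_eq_sum_range_succ_mk]
  refine ⟨Finset.sum_nonneg fun i _ => mul_nonneg (hz0 _) (hz0 _), ?_⟩
  rw [Finset.sum_mul]
  have key : ∀ e f : ℕ, e + f = j → e ≤ f → 14 ≤ e → f ≤ N → aS s e * aS s f * t ^ m ≤
      (if m ≤ N + 16 then qE s t N else qE s t N * t ^ 2) := by
    intro e f hj hef he hf
    have pe := h.hyp.pos e (by omega) (by omega)
    have pf := h.hyp.pos f (by omega) (by omega)
    rcases Nat.lt_or_ge (e + f) (N + 14) with c | c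
    · rw [if_pos (by omega)]
      have k1 := dom' h.good h.lt h.hyp he (by omega : 14 ≤ f) (by omega) (by omega)
      have k2 := grow_mono h.good h.hyp (i := e + f - 14) (j := N - 1) (by omega) (by omega)
        (by omega)
      have k3 := grow h.good h.hyp (show 76 ≤ N by omega) le_rfl
      refine le_of_mul_le_mul_right ?_ L0
      rw [EL]
      have p1 := h.hyp.pos (e + f - 14) (by omega) (by omega)
      calc aS s e * aS s f * t ^ m * Lb N ≤ aS s 14 * aS s (e + f - 14) * t ^ (N + 2) * Lb N := by
            gcongr ?_ * ?_ * _
            exact pow_le_pow_of_le_one t0.le t1 hm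
        _ ≤ 7 / 10 ^ 6 * aS s (N - 1) * t ^ (N + 2) * Lb N := by gcongr
        _ = 7 / 10 ^ 6 * (Lb N * aS s (N - 1)) * t ^ (N + 2) := by ring
        _ ≤ _ := by gcongr
    · have k1 := h.prod_le he hef hf c
      have hm1 : t ^ (m + 1) ≤ t ^ (e + f) := pow_le_pow_of_le_one t0.le t1 (by omega)
      have k2 : aS s e * aS s f * t ^ m * t ≤ 7 / 10 ^ 6 * aS s N * t ^ (N + 13) * t :=
        calc aS s e * aS s f * t ^ m * t = aS s e * aS s f * t ^ (m + 1) := by ring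
          _ ≤ aS s e * aS s f * t ^ (e + f) := by gcongr
          _ ≤ _ := k1
          _ ≤ 7 / 10 ^ 6 * aS s N * t ^ (N + 14) := by gcongr
          _ = _ := by ring
      have k3 := (le_of_mul_le_mul_right k2 t0).trans E4
      split_ifs
      · exact k3.trans E5
      · exact k3
  have : ∀ i ∈ Finset.range j.succ, coeff i (Zt s (N + 1)) *
      coeff (j - i) (Zt s (N + 1)) * t ^ m
      ≤ (if m ≤ N + 16 then qE s t N else qE s t N * t ^ 2) := by
    intro i hi
    have hi' := Finset.mem_range.1 hi
    rw [coeff_Zt _ _ _ (by omega), coeff_Zt _ _ _ (by omega)]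
    by_cases c1 : 14 ≤ i ∧ i ≤ N + 1 - 1
    · by_cases c2 : 14 ≤ j - i ∧ j - i ≤ N + 1 - 1
      · rw [if_pos c1, if_pos c2]
        rcases le_total i (j - i) with c | c
        · exact key i (j - i) (by omega) c c1.1 (by omega)
        · rw [mul_comm (aS s i)]
          exact key (j - i) i (by omega) c c2.1 (by omega)
      · rw [if_neg c2, mul_zero, zero_mul]; exact B0.le
    · rw [if_neg c1, zero_mul, zero_mul]; exact B0.le
  refine (Finset.sum_le_sum this).trans ?_
  rw [Finset.sum_const, Finset.card_range, nsmul_eq_mul]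
  have : ((j.succ : ℕ) : ℝ) ≤ m + 2 := by exact_mod_cast (by omega : j.succ ≤ m + 2)
  gcongr

lemma LR.lin_coeff (h : LR s N t) {m : ℕ} (hm : N + 2 ≤ m) :
    |coeff m (Aop s (Tr s 13) * dd (Zt s (N + 1)) + Bop s (Tr s 13) * Zt s (N + 1))|
      ≤ if m ≤ N + 16 then 7 / 10 ^ 3 * lam s * N * aS s N else 0 := by
  have hN := h.nR
  have hN' := h.hN
  have pN := h.hyp.pos N (by omega) le_rfl
  have l0 := h.good.lam_pos
  have z0 : ∀ j, N < j → coeff j (Zt s (N + 1)) = 0 := fun j hj => by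
    rw [coeff_Zt _ _ _ (by omega), if_neg (by omega)]
  have d0 : ∀ j, N ≤ j → coeff j (dd (Zt s (N + 1))) = 0 := fun j hj => by
    rw [coeff_dd, z0 _ (by omega), zero_mul]
  have zb : ∀ j, N - 14 ≤ j → |coeff j (Zt s (N + 1))| ≤ aS s N := fun j hj => by
    rw [coeff_Zt _ _ _ (by omega)]
    split_ifs with c
    · rw [abs_of_pos (h.hyp.pos j (by omega) c.2)]
      exact grow_mono h.good h.hyp (by omega) c.2 le_rfl
    · rw [abs_zero]; exact pN.le
  have db : ∀ j, N - 14 ≤ j → |coeff j (dd (Zt s (N + 1)))| ≤ N * aS s N :=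
    fun j hj => by
    rcases Nat.lt_or_ge j N with c | c
    · rw [coeff_dd, abs_mul, mul_comm]
      have : |(j + 1 : ℝ)| ≤ N := by
        rw [abs_of_nonneg (by positivity)]; exact_mod_cast c
      gcongr
      exact zb _ (by omega)
    · rw [d0 j c, abs_zero]; positivity
  rw [map_add, coeff_mul_low (Aop s (Tr s 13)) _ (aop13_high s) (by omega),
    coeff_mul_low (Bop s (Tr s 13)) _ (bop13_high s) (by omega)]
  split_ifs with c
  · simp only [Finset.sum_range_succ' _ (n := 16), Finset.sum_range_succ' _ (n := 15),
      Finset.sum_range_succ' _ (n := 14), Finset.sum_range_succ' _ (n := 13)]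
    simp only [zero_add, Nat.sub_zero]
    rw [d0 m (by omega), d0 (m - 1) (by omega), d0 (m - (1 + 1)) (by omega), z0 m (by omega),
      z0 (m - 1) (by omega)]
    have sA : |∑ l ∈ Finset.range 13, coeff (l + 1 + 1 + 1 + 1) (Aop s (Tr s 13)) *
        coeff (m - (l + 1 + 1 + 1 + 1)) (dd (Zt s (N + 1)))|
        ≤ 0.0004 * lam s * (N * aS s N) := by
      refine (Finset.abs_sum_le_sum_abs _ _).trans (le_trans ?_
        (mul_le_mul_of_nonneg_right h.good.sumA.le (by positivity)))
      rw [Finset.sum_mul]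
      refine Finset.sum_le_sum fun l hl => ?_
      rw [abs_mul]
      have := Finset.mem_range.1 hl
      gcongr
      exact db _ (by omega)
    have sB : |∑ l ∈ Finset.range 13, coeff (l + 1 + 1 + 1) (Bop s (Tr s 13)) *
        coeff (m - (l + 1 + 1 + 1)) (Zt s (N + 1))|
        ≤ 0.008 * lam s * aS s N := by
      refine (Finset.abs_sum_le_sum_abs _ _).trans (le_trans ?_
        (mul_le_mul_of_nonneg_right h.good.sumB.le pN.le))
      rw [Finset.sum_mul]
      refine Finset.sum_le_sum fun l hl => ?_
      rw [abs_mul]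
      have := Finset.mem_range.1 hl
      gcongr
      exact zb _ (by omega)
    have s3 : |coeff (1 + 1 + 1) (Aop s (Tr s 13)) *
        coeff (m - (1 + 1 + 1)) (dd (Zt s (N + 1)))|
        ≤ 0.00597 * lam s * (N * aS s N) := by
      rw [abs_mul]
      refine mul_le_mul ?_ (db _ (by omega)) (abs_nonneg _) (by positivity)
      have := h.good.A3
      rw [abs_le]; constructor <;> linarith
    have s2 : |coeff (1 + 1) (Bop s (Tr s 13)) *
        coeff (m - (1 + 1)) (Zt s (N + 1))| ≤ 0.025 * lam s * aS s N := by
      rw [abs_mul]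
      refine mul_le_mul ?_ (zb _ (by omega)) (abs_nonneg _) (by positivity)
      have := h.good.B2
      rw [abs_le]; constructor <;> linarith
    have hp : 151 * (lam s * aS s N) ≤ N * (lam s * aS s N) := by gcongr
    rw [abs_le] at sA sB s3 s2 ⊢
    constructor <;> linarith [sA.1, sA.2, sB.1, sB.2, s3.1, s3.2, s2.1, s2.2]
  · rw [Finset.sum_eq_zero, Finset.sum_eq_zero, add_zero, abs_zero]
    · intro k hk
      have := Finset.mem_range.1 hk
      rw [z0 _ (by omega), mul_zero]
    · intro k hk
      have := Finset.mem_range.1 hk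
      rw [d0 _ (by omega), mul_zero]

lemma LR.coeff_small (h : LR s N t) {m : ℕ} (hm : N + 2 ≤ m) (hm2 : m ≤ 2 * N + 4) :
    |coeff m (Res s (Tr s N))| * t ^ m ≤
      if m ≤ N + 16 then 7 / 10 ^ 3 * lam s * N * aS s N * t ^ (N + 2) + 60 * N ^ 2 * qE s t N
      else 60 * N ^ 2 * (qE s t N * t ^ 2) := by
  have hN := h.nR
  have hN' := h.hN
  have t0 := h.pos
  have e : Res s (Tr s N) = Res s (Tr s 13) + (Aop s (Tr s 13) * dd (Zt s (N + 1))
      + Bop s (Tr s 13) * Zt s (N + 1)) + (C 2 * A0s s * Zt s (N + 1) ^ 2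
        - VBs s * Zt s (N + 1) * dd (Zt s (N + 1))) := by
    have := res_add s (Tr s 13) (Zt s (N + 1))
    rw [show Tr s 13 + Zt s (N + 1) = Tr s N by rw [Zt, Nat.add_sub_cancel]; ring] at this
    rw [this]; ring
  have r0 : coeff m (Res s (Tr s 13)) = 0 := by
    obtain ⟨n, rfl⟩ : ∃ n, m = n + 3 := ⟨m - 3, by omega⟩
    exact coeff_res_high s 13 n (by omega)
  have hl := mul_le_mul_of_nonneg_right (h.lin_coeff hm) (pow_pos t0 m).le
  obtain ⟨B, hB⟩ : ∃ B, B = if m ≤ N + 16 then qE s t N else qE s t N * t ^ 2 := ⟨_, rfl⟩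
  have hq := quad_coeff h.good (Zt s (N + 1)) (m := m) (Q := (m + 2) * B / t ^ m) (by omega)
    fun j h1 h2 => by
      have := h.sq_coeff hm h1 h2
      rw [le_div_iff₀ (pow_pos t0 m), hB]; exact this
  have hq' := mul_le_mul_of_nonneg_right hq (pow_pos t0 m).le
  have B0 : 0 ≤ B := by
    have h0 := h.sq_coeff hm (le_refl (m - 2)) (by omega)
    have h1 := (mul_nonneg h0.1 (pow_pos t0 m).le).trans h0.2
    rw [← hB] at h1
    exact nonneg_of_mul_nonneg_right h1 (by positivity)
  have hm3 : (m : ℝ) ≤ 2 * N + 4 := by exact_mod_cast hm2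
  have hqq : (12.5 * (m + 1) + 14) * ((m + 2) * B / t ^ m) * t ^ m ≤ 60 * N ^ 2 * B := by
    have : (12.5 * (m + 1) + 14) * ((m + 2) * B / t ^ m) * t ^ m
        = (12.5 * (m + 1) + 14) * (m + 2) * B := by field_simp
    rw [this]
    refine mul_le_mul_of_nonneg_right ?_ B0
    calc (12.5 * (m + 1) + 14 : ℝ) * (m + 2) ≤ (12.5 * (2 * N + 4 + 1) + 14) * (2 * N + 4 + 2) := by
          gcongr
      _ ≤ _ := by nlinarith
  rw [e, map_add, map_add, r0, zero_add]
  refine (mul_le_mul_of_nonneg_right (abs_add_le _ _) (pow_pos t0 m).le).trans ?_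
  rw [add_mul]
  refine (add_le_add hl (hq'.trans hqq)).trans ?_
  rw [hB]
  have pN := h.hyp.pos N (by omega) le_rfl
  have l0 := h.good.lam_pos
  split_ifs
  · have : t ^ m ≤ t ^ (N + 2) := pow_le_pow_of_le_one t0.le (h.small.trans (by norm_num)) hm
    gcongr
  · simp

lemma LR.nt (h : LR s N t) : N * t ≤ 257 := by
  have := h.tL
  have hN := h.nR
  unfold Lb at this
  nlinarith [h.pos]

/-- The leading term of the residual of `Tr s N` has a sign, and dominates the rest. -/
lemma LR.resid_pos (h : LR s N t) (ho : Odd N) : 0 < ev (Res s (Tr s N)) (-t) := by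
  have hN := h.nR
  have hN' := h.hN
  have t0 := h.pos
  have pN := h.hyp.pos N (by omega) le_rfl
  have l0 := h.good.lam_pos
  have hne : ∀ j : ℕ, 2 ≤ j → j ≤ N → lam s - mu s * j ≠ 0 := fun j _ hj =>
    (gap_pos h.good h.lt hj).ne'
  rw [ev_of_finite (2 * N + 4) (fun n hn => by
    obtain ⟨k, rfl⟩ : ∃ k, n = k + 3 := ⟨n - 3, by omega⟩
    exact coeff_res_high s N k (by omega))]
  rw [show 2 * N + 4 + 1 = N + 2 + (15 + (N - 12)) by omega, Finset.sum_range_add,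
    Finset.sum_range_succ, Finset.sum_eq_zero, Finset.sum_range_add]
  swap
  · intro j hj
    rw [coeff_res_Tr h.good.mem N (by omega) hne j (by have := Finset.mem_range.1 hj; omega),
      zero_mul]
  have hE : Even (N + 1) := by
    obtain ⟨k, rfl⟩ := ho; exact ⟨k + 1, by ring⟩
  have lead := (num_bounds h.good (m := N + 1) (by omega) (by simpa using h.lt)
    (by simpa using h.hyp)).1
  rw [Nat.add_sub_cancel, num, Nat.add_sub_cancel] at lead
  have lead' := mul_le_mul_of_nonneg_right lead (pow_pos t0 (N + 1)).le
  rw [hE.neg_pow]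
  obtain ⟨C, hC⟩ : ∃ C, C = 7 / 10 ^ 3 * lam s * N * aS s N * t ^ (N + 2)
    + 60 * N ^ 2 * qE s t N := ⟨_, rfl⟩
  obtain ⟨D, hD⟩ : ∃ D, D = 60 * N ^ 2 * (qE s t N * t ^ 2) := ⟨_, rfl⟩
  have b1 : ∀ x ∈ Finset.range 15, -C ≤ coeff (N + 2 + x) (Res s (Tr s N)) *
      (-t) ^ (N + 2 + x) := fun x hx => by
    have hx' := Finset.mem_range.1 hx
    have := h.coeff_small (m := N + 2 + x) (by omega) (by omega)
    rw [if_pos (by omega), ← hC] at this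
    refine (neg_le_neg this).trans ((neg_abs_le _).trans_eq' ?_)
    rw [abs_mul, abs_pow, abs_neg, abs_of_pos t0]
  have b2 : ∀ x ∈ Finset.range (N - 12), -D ≤ coeff (N + 2 + (15 + x))
      (Res s (Tr s N)) * (-t) ^ (N + 2 + (15 + x)) := fun x hx => by
    have hx' := Finset.mem_range.1 hx
    have := h.coeff_small (m := N + 2 + (15 + x)) (by omega) (by omega)
    rw [if_neg (by omega), ← hD] at this
    refine (neg_le_neg this).trans ((neg_abs_le _).trans_eq' ?_)
    rw [abs_mul, abs_pow, abs_neg, abs_of_pos t0]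
  have s1 := Finset.card_nsmul_le_sum _ _ _ b1
  have s2 := Finset.card_nsmul_le_sum _ _ _ b2
  rw [Finset.card_range, nsmul_eq_mul] at s1 s2
  have L0 : 0 < Lb N := by unfold Lb; linarith
  have EL : qE s t N * Lb N = 7 / 10 ^ 6 * aS s N * t ^ (N + 2) := div_mul_cancel₀ _ L0.ne'
  have E0 : 0 < qE s t N := by unfold qE; positivity
  have nt := h.nt
  have ht4 := h.small
  have hDC : (N : ℝ) * D ≤ 60 * N ^ 2 * qE s t N := by
    rw [hD]
    have : (N : ℝ) * t * t ≤ 1 := by nlinarith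
    calc (N : ℝ) * (60 * N ^ 2 * (qE s t N * t ^ 2))
        = 60 * N ^ 2 * qE s t N * ((N : ℝ) * t * t) := by ring
      _ ≤ 60 * N ^ 2 * qE s t N * 1 := by gcongr
      _ = _ := by ring
  have hD0 : 0 ≤ D := by rw [hD]; positivity
  have hcast : ((N - 12 : ℕ) : ℝ) ≤ N := by exact_mod_cast Nat.sub_le _ _
  have hD2 : ((N - 12 : ℕ) : ℝ) * D ≤ N * D := by gcongr
  -- all in units of `a_N t^(N+1)`
  obtain ⟨u, hu⟩ : ∃ u, u = aS s N * t ^ (N + 1) := ⟨_, rfl⟩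
  have u0 : 0 < u := by rw [hu]; positivity
  have q1 : 60 * N ^ 2 * qE s t N ≤ 2 / 10 ^ 5 * (N * u) := by
    have k1 : qE s t N * (0.0039 * N) ≤ 7 / 10 ^ 6 * (1 / 10 ^ 4) * u :=
      calc qE s t N * (0.0039 * N) ≤ qE s t N * Lb N := by
            gcongr; unfold Lb; linarith
        _ = 7 / 10 ^ 6 * t * u := by rw [EL, hu]; ring
        _ ≤ _ := by gcongr
    have k := mul_le_mul_of_nonneg_left k1 (show (0 : ℝ) ≤ 60 / 0.0039 * N by positivity)
    have k2 : 60 / 0.0039 * (N : ℝ) * (qE s t N * (0.0039 * N)) = 60 * N ^ 2 * qE s t N := by ring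
    rw [k2] at k
    refine k.trans ?_
    nlinarith [mul_pos (by linarith : (0 : ℝ) < N) u0]
  have q2 : 7 / 10 ^ 3 * lam s * N * aS s N * t ^ (N + 2) ≤ 7 / 10 ^ 7 * lam s * N * u := by
    calc _ = 7 / 10 ^ 3 * lam s * N * u * t := by rw [hu]; ring
      _ ≤ 7 / 10 ^ 3 * lam s * N * u * (1 / 10 ^ 4) := by gcongr
      _ = _ := by ring
  have q3 : lam s * Lb (N + 1 : ℕ) * aS s N * t ^ (N + 1) = lam s * Lb (N + 1 : ℕ) * u := by
    rw [hu]; ring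
  rw [q3] at lead'
  have q4 : 0.0039 * N * (lam s * u) ≤ lam s * Lb (N + 1 : ℕ) * u := by
    have : 0.0039 * (N : ℝ) ≤ Lb (N + 1 : ℕ) := by unfold Lb; push_cast; linarith
    calc _ ≤ Lb (N + 1 : ℕ) * (lam s * u) := by gcongr
      _ = _ := by ring
  have q5 : 9.2 * (N * u) ≤ lam s * (N * u) := by have := h.good.lam9; gcongr
  have q6 : 0 < (N : ℝ) * u := by positivity
  push_cast at s1
  linarith

lemma LR.abs_sum (h : LR s N t) :
    ∑ j ∈ Finset.range N, (j + 1) * aS s (j + 1) * t ^ j ≤ 1 / 50 := by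
  have hN := h.nR
  have hN' := h.hN
  have t0 := h.pos
  have ht4 := h.small
  rw [show N = 1 + (12 + (N - 13)) by omega, Finset.sum_range_add, Finset.sum_range_add,
    Finset.sum_range_one]
  have b1 : ∀ x ∈ Finset.range 12, ((1 + x : ℕ) + 1 : ℝ) * aS s (1 + x + 1) * t ^ (1 + x)
      ≤ 13 / 20 * (1 / 10 ^ 4) := fun x hx => by
    have hx' := Finset.mem_range.1 hx
    have h1 : ((1 + x : ℕ) + 1 : ℝ) ≤ 13 := by exact_mod_cast (by omega : 1 + x + 1 ≤ 13)
    have h2 := h.good.small (1 + x + 1) (by omega) (by omega)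
    have p := h.hyp.pos (1 + x + 1) (by omega) (by omega)
    have h3 : t ^ (1 + x) ≤ 1 / 10 ^ 4 :=
      (pow_le_of_le_one t0.le (ht4.trans (by norm_num)) (by omega)).trans ht4
    refine le_trans (b := 13 * (1 / 20) * (1 / 10 ^ 4)) ?_ (by norm_num)
    gcongr
  have b2 : ∀ x ∈ Finset.range (N - 13), ((1 + (12 + x) : ℕ) + 1 : ℝ) * aS s (1 + (12 + x) + 1)
      * t ^ (1 + (12 + x)) ≤ N * (7 / 10 ^ 6 * (t ^ 2 * (1 / 10 ^ 4))) := fun x hx => by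
    have hx' := Finset.mem_range.1 hx
    have h1 : ((1 + (12 + x) : ℕ) + 1 : ℝ) ≤ N := by exact_mod_cast (by omega)
    have h2 := h.pair x 14 le_rfl (by omega) (by omega)
    rw [show 1 + (12 + x) + 1 = 14 + x by omega]
    have p := h.hyp.pos (14 + x) (by omega) (by omega)
    have h3 : aS s (14 + x) * t ^ (1 + (12 + x)) * t ≤ 7 / 10 ^ 6 * t ^ 13 * t :=
      calc _ = aS s (14 + x) * t ^ (14 + x) := by
            rw [show 14 + x = 1 + (12 + x) + 1 by omega]; ring
        _ ≤ _ := h2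
        _ ≤ 7 / 10 ^ 6 * t ^ 14 := by have := h.good.a14; gcongr
        _ = _ := by ring
    have h4 := le_of_mul_le_mul_right h3 t0
    have h5 : t ^ 11 ≤ 1 / 10 ^ 4 :=
      (pow_le_of_le_one t0.le (ht4.trans (by norm_num)) (by omega)).trans ht4
    calc _ ≤ N * (aS s (14 + x) * t ^ (1 + (12 + x))) := by rw [mul_assoc]; gcongr
      _ ≤ N * (7 / 10 ^ 6 * t ^ 13) := by gcongr
      _ = N * (7 / 10 ^ 6 * (t ^ 2 * t ^ 11)) := by ring
      _ ≤ _ := by gcongr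
  have s1 := Finset.sum_le_card_nsmul _ _ _ b1
  have s2 := Finset.sum_le_card_nsmul _ _ _ b2
  rw [Finset.card_range, nsmul_eq_mul] at s1 s2
  have hcast : ((N - 13 : ℕ) : ℝ) ≤ N := by exact_mod_cast Nat.sub_le _ _
  have s3 : ((N - 13 : ℕ) : ℝ) * (N * (7 / 10 ^ 6 * (t ^ 2 * (1 / 10 ^ 4)))) ≤ 1 / 10 ^ 3 :=
    calc _ ≤ (N : ℝ) * (N * (7 / 10 ^ 6 * (t ^ 2 * (1 / 10 ^ 4)))) := by gcongr
      _ = 7 / 10 ^ 10 * ((N * t) * (N * t)) := by ring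
      _ ≤ 7 / 10 ^ 10 * (257 * 257) := by
          have := h.nt
          gcongr
      _ ≤ _ := by norm_num
  have s0 : ((0 : ℕ) + 1 : ℝ) * aS s (0 + 1) * t ^ 0 ≤ 1 / 100 := by
    have := a1_lt h.good.mem
    rw [zero_add, aS_one]; norm_num at *; linarith
  push_cast at *
  linarith

/-- If `T = Tr s N` were nonnegative where `P ≤ 0`, its residual could not be positive. -/
lemma LR.T_neg (h : LR s N t) (ho : Odd N) (he : t ≤ eps s) : ev (Tr s N) (-t) < 0 := by
  have hN' := h.hN
  have t0 := h.pos
  have ht4 := h.small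
  have hr := h.resid_pos ho
  have hsum := h.abs_sum
  have hs := h.good.mem
  have hpos : ∀ j, 0 ≤ aS s (j + 1) ∨ N < j + 1 := fun j => by
    rcases Nat.eq_zero_or_pos j with rfl | hj
    · left; rw [zero_add, aS_one]; exact a1_nonneg hs
    · rcases Nat.lt_or_ge N (j + 1) with c | c
      · exact Or.inr c
      · exact Or.inl (h.hyp.pos _ (by omega) c).le
  have hcv : Cv 1 (Tr s N) := cv_of_finite N (coeff_Tr_gt s N) 1
  rw [ev_Res hs hcv (by rw [abs_neg, abs_of_pos t0]; linarith), sub_neg_eq_add] at hr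
  have hd : |ev (dd (Tr s N)) (-t)| ≤ 1 / 50 := by
    rw [ev_of_finite (N - 1) (fun n hn => by
      rw [coeff_dd, coeff_Tr_gt _ _ _ (by omega), zero_mul])]
    refine (Finset.abs_sum_le_sum_abs _ _).trans (le_trans (le_of_eq ?_) hsum)
    rw [show N - 1 + 1 = N by omega]
    refine Finset.sum_congr rfl fun j hj => ?_
    have := Finset.mem_range.1 hj
    rw [coeff_dd, coeff_Tr, if_pos (by omega), abs_mul, abs_pow, abs_neg, abs_of_pos t0, abs_mul,
      abs_of_nonneg ((hpos j).resolve_right (by omega)),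
      abs_of_nonneg (by positivity : (0 : ℝ) ≤ j + 1)]
    ring
  have hT : ev (Tr s N) (-t) ≤ 1 / 2 := by
    rw [ev_of_finite N (coeff_Tr_gt s N), Finset.sum_range_succ', coeff_Tr_le _ _ _ (by omega),
      aS_zero, zero_mul, add_zero]
    refine (Finset.sum_le_sum fun j hj => ?_).trans (hsum.trans (by norm_num))
    have := Finset.mem_range.1 hj
    rw [coeff_Tr, if_pos (by omega)]
    have p := (hpos j).resolve_right (by omega)
    refine (le_abs_self _).trans ?_
    rw [abs_mul, abs_pow, abs_neg, abs_of_pos t0, abs_of_nonneg p]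
    have : t ^ (j + 1) ≤ t ^ j := pow_le_pow_of_le_one t0.le (ht4.trans (by norm_num)) (by omega)
    have h2 : aS s (j + 1) ≤ (j + 1) * aS s (j + 1) := by
      nlinarith [Nat.cast_nonneg (α := ℝ) j]
    gcongr
  obtain ⟨hs1, hs2⟩ := Dm_bounds hs
  obtain ⟨r1, r2⟩ := rho_bounds hs
  by_contra! hT0
  have hPn : Pv (rho s) (s + t) ≤ 0 := by
    rw [Pv_factor hs]
    have := mul_nonneg (mul_nonneg (by linarith : 0 ≤ rho s) t0.le) (by linarith : 0 ≤ eps s - t)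
    linarith
  have hb0 : b0v (rho s) (s + t) ≤ 4 ∧ 0 ≤ b0v (rho s) (s + t) := by
    have h1 : rho s * (s + t) ≤ 0.192 * 3.24 := mul_le_mul r2.le (by linarith) (by linarith) (by norm_num)
    have h2 : 0 ≤ rho s * (s + t) := mul_nonneg (by linarith) (by linarith)
    unfold b0v
    exact ⟨(mul_le_mul (by linarith : s + t - 1 ≤ 2.24) (by linarith : _ ≤ (1.63 : ℝ))
      (by linarith) (by norm_num)).trans (by norm_num), mul_nonneg (by linarith) (by linarith)⟩
  have ha0 : 2 ≤ a0v (rho s) (s + t) := by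
    unfold a0v; nlinarith [mul_nonneg (by linarith : 0 ≤ rho s) (sq_nonneg (s + t))]
  generalize ev (Tr s N) (-t) = T at *
  generalize ev (dd (Tr s N)) (-t) = T' at *
  generalize Pv (rho s) (s + t) = P at *
  generalize b0v (rho s) (s + t) = b at *
  generalize a0v (rho s) (s + t) = a at *
  have k0 : 0 ≤ b * T - P := by nlinarith
  have k1 : (s + t) * (P - b * T) * T' ≤ 4 * (b * T - P) * (1 / 50) :=
    calc (s + t) * (P - b * T) * T' = (s + t) * (b * T - P) * (-T') := by ring
      _ ≤ (s + t) * (b * T - P) * (1 / 50) := by gcongr; linarith [(abs_le.1 hd).1]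
      _ ≤ _ := by gcongr; linarith
  have k2 : 2 * T - 6 / 5 * P ≤ 2 * (1 - T) * (a * T - 6 / 5 * P) := by
    have e1 : 2 * T ≤ a * T := by gcongr
    have e2 := mul_nonneg (by linarith : 0 ≤ a * T - 6 / 5 * P) (by linarith : 0 ≤ 1 - 2 * T)
    linarith
  have k3 : b * T ≤ 4 * T := by gcongr; exact hb0.1
  linarith
end

section
/-! ### The orbit to the left of the sonic point -/

lemma Good.eps_small {s : ℝ} (h : Good s) : eps s ≤ 1 / 10 ^ 4 := by
  have e1 := lam_mul_mu h.mem
  have e2 := (al0_ka0 h.mem).1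
  have r := rho_bounds h.mem
  have e0 := eps_nonneg h.mem
  have l := h.lam_pos
  have l2 : lam s ≤ 15 := by
    have h1 := h.kap; have h2 := h.alp
    have h3 := abs_nonneg (ka1 s); have h4 := abs_nonneg (ka2 s); have h5 := abs_nonneg (ka3 s)
    have h6 := abs_nonneg (al1 s); have h7 := abs_nonneg (al2 s)
    have h8 := le_abs_self (ka0 s); have h9 := le_abs_self (al0 s)
    have h10 := a1_lt h.mem; have h11 := a1_nonneg h.mem
    have : ka0 s * a1 s ≤ 25 * 0.01 := mul_le_mul (by linarith) h10.le h11 (by norm_num)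
    unfold lam; linarith
  have h1 : lam s * (2 * 10 ^ 7 * mu s) ≤ 15 * 15 :=
    mul_le_mul l2 (h.k_big.le.trans l2) (by have := h.mu0; positivity) (by norm_num)
  have h2 : 0.19 * eps s * 0.9 ≤ rho s * eps s * (2 * al0 s * s - 12 / 5 * ka0 s) := by
    have : 0 ≤ rho s * eps s := mul_nonneg (by linarith) e0
    gcongr; exact r.1.le
  norm_num at *; linarith

/-- The desingularised field in `v` and `G = σ² / u²` is `(-v Q, -2 G A)`. -/
def Qv (ρ v G : ℝ) : ℝ := b0v ρ v * (1 - G) + Pv ρ v * G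
def Av (ρ v G : ℝ) : ℝ := a0v ρ v * (1 - G) + 6 / 5 * Pv ρ v * G

lemma Av_eq (ρ v G : ℝ) : Av ρ v G = 6 / 5 * Qv ρ v G + (8 / 5 - (3 / 5 - ρ) * v) * (1 - G) := by
  unfold Av Qv a0v b0v Pv; ring

structure LOrb (s : ℝ) (v G : ℝ → ℝ) : Prop where
  good : Good s
  cv : Continuous v
  cG : Continuous G
  pos : ∀ τ, 0 ≤ τ → 0 < v τ ∧ 0 < G τ
  dv : ∀ τ, 0 ≤ τ → v τ ≤ 4 → G τ ≤ 2 → HasDerivAt v (-(v τ * Qv (rho s) (v τ) (G τ))) τ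
  dG : ∀ τ, 0 ≤ τ → v τ ≤ 4 → G τ ≤ 2 → HasDerivAt G (-(2 * G τ * Av (rho s) (v τ) (G τ))) τ

lemma exists_LOrb {s v0 G0 : ℝ} (h : Good s) (hv : 0 < v0) (hG : 0 < G0) :
    ∃ v G, LOrb s v G ∧ v 0 = v0 ∧ G 0 = G0 := by
  obtain ⟨f, hf⟩ : ∃ f : ℝ × ℝ × ℝ → ℝ × ℝ × ℝ, f = fun p =>
    (0, -(p.2.1 * Qv p.1 p.2.1 p.2.2), -(2 * p.2.2 * Av p.1 p.2.1 p.2.2)) := ⟨_, rfl⟩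
  have hc : ContDiff ℝ 1 f := by
    rw [hf]; unfold Qv Av a0v b0v Pv; fun_prop
  obtain ⟨Φ, h0, hd, -⟩ := box_flow hc (B := 4) (by norm_num)
  obtain ⟨p, hp⟩ : ∃ p : ℝ × ℝ × ℝ, p = (rho s, v0, G0) := ⟨_, rfl⟩
  have hr := rho_bounds h.mem
  have hr4 : |rho s| ≤ 4 := by rw [abs_le]; constructor <;> linarith
  have d1 : ∀ τ, HasDerivAt (fun τ => (Φ p τ).1) 0 τ := fun τ => by
    have := (hd p τ).fst; rw [hf] at this; exact this
  have e1 : ∀ τ, (Φ p τ).1 = rho s := fun τ => by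
    have := is_const_of_deriv_eq_zero (fun τ => (d1 τ).differentiableAt) (fun τ => (d1 τ).deriv) τ 0
    simpa [h0, hp] using this
  have d2 : ∀ τ, HasDerivAt (fun τ => (Φ p τ).2.1)
      (-(cl1 4 (Φ p τ).2.1 * Qv (rho s) (cl1 4 (Φ p τ).2.1) (cl1 4 (Φ p τ).2.2))) τ := fun τ => by
    have t : HasDerivAt (fun τ => (Φ p τ).2.1) (-(cl1 4 (Φ p τ).2.1 *
        Qv (cl1 4 (Φ p τ).1) (cl1 4 (Φ p τ).2.1) (cl1 4 (Φ p τ).2.2))) τ := by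
      have := (hd p τ).snd.fst
      rw [hf] at this; exact this
    rwa [e1, cl1_of_abs hr4] at t
  have d3 : ∀ τ, HasDerivAt (fun τ => (Φ p τ).2.2)
      (-(2 * cl1 4 (Φ p τ).2.2 * Av (rho s) (cl1 4 (Φ p τ).2.1) (cl1 4 (Φ p τ).2.2))) τ :=
    fun τ => by
    have t : HasDerivAt (fun τ => (Φ p τ).2.2) (-(2 * cl1 4 (Φ p τ).2.2 *
        Av (cl1 4 (Φ p τ).1) (cl1 4 (Φ p τ).2.1) (cl1 4 (Φ p τ).2.2))) τ := by
      have := (hd p τ).snd.snd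
      rw [hf] at this; exact this
    rwa [e1, cl1_of_abs hr4] at t
  have c2 : Continuous fun τ => (Φ p τ).2.1 :=
    continuous_iff_continuousAt.2 fun τ => (d2 τ).continuousAt
  have c3 : Continuous fun τ => (Φ p τ).2.2 :=
    continuous_iff_continuousAt.2 fun τ => (d3 τ).continuousAt
  -- the truncation is multiplication by a continuous factor, so signs are preserved
  have hk : ∀ a : ℝ, cl1 4 a = 4 / max 4 |a| * a := fun a => by
    rcases le_total |a| 4 with h | h
    · rw [cl1_of_abs h, max_eq_left h]; norm_num
    · rw [max_eq_right h]
      rcases abs_cases a with ⟨e, e'⟩ | ⟨e, e'⟩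
      · rw [e, cl1, min_eq_left (by linarith), max_eq_right (by norm_num),
          div_mul_cancel₀ _ (by linarith)]
      · rw [e, cl1, min_eq_right (by linarith), max_eq_left (by linarith), div_neg, neg_mul,
          div_mul_cancel₀ _ (by linarith)]
  have hm : ∀ a : ℝ, max 4 |a| ≠ 0 := fun a => by positivity
  have cc : Continuous (cl1 4) := (cl1_lip 4).continuous
  have p2 : ∀ τ, 0 ≤ τ → 0 < (Φ p τ).2.1 := fun τ hτ => by
    obtain ⟨q, hq, e⟩ := linear_sign (e := fun τ => (Φ p τ).2.1) (c := fun τ =>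
      -(4 / max 4 |(Φ p τ).2.1| * Qv (rho s) (cl1 4 (Φ p τ).2.1) (cl1 4 (Φ p τ).2.2))) (t0 := 0)
      (Continuous.continuousOn (by
        unfold Qv b0v Pv
        have := c2.abs
        fun_prop (disch := intros; exact hm _)))
      (fun t _ => (d2 t).congr_deriv (by rw [hk (Φ p t).2.1]; ring)) hτ
    have e : (Φ p τ).2.1 = q * (Φ p 0).2.1 := e
    rw [e, h0, hp]; exact mul_pos hq hv
  have p3 : ∀ τ, 0 ≤ τ → 0 < (Φ p τ).2.2 := fun τ hτ => by
    obtain ⟨q, hq, e⟩ := linear_sign (e := fun τ => (Φ p τ).2.2) (c := fun τ =>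
      -(2 * (4 / max 4 |(Φ p τ).2.2|) * Av (rho s) (cl1 4 (Φ p τ).2.1) (cl1 4 (Φ p τ).2.2)))
      (t0 := 0)
      (Continuous.continuousOn (by
        unfold Av a0v Pv
        have := c3.abs
        fun_prop (disch := intros; exact hm _)))
      (fun t _ => (d3 t).congr_deriv (by rw [hk (Φ p t).2.2]; ring)) hτ
    have e : (Φ p τ).2.2 = q * (Φ p 0).2.2 := e
    rw [e, h0, hp]; exact mul_pos hq hG
  refine ⟨_, _, ⟨h, c2, c3, fun τ hτ => ⟨p2 τ hτ, p3 τ hτ⟩, fun τ hτ h1 h2 => ?_,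
    fun τ hτ h1 h2 => ?_⟩, by simp [h0, hp], by simp [h0, hp]⟩
  all_goals
    have a1 := p2 τ hτ
    have a2 := p3 τ hτ
    first
      | have := d2 τ
        rw [cl1_of_abs (abs_le.2 ⟨by linarith, h1⟩), cl1_of_abs (abs_le.2 ⟨by linarith, by linarith⟩)]
          at this
        exact this
      | have := d3 τ
        rw [cl1_of_abs (a := (Φ p τ).2.1) (abs_le.2 ⟨by linarith, h1⟩),
          cl1_of_abs (abs_le.2 ⟨by linarith, by linarith⟩)] at this
        exact this

variable {s : ℝ} {v G : ℝ → ℝ}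

lemma LOrb.contact (h : LOrb s v G) {N : ℕ} {τ : ℝ} (hτ : 0 ≤ τ) (h4 : v τ ≤ 4) (h2 : G τ ≤ 2)
    (hx : |s - v τ| < 1) (he : 1 - 1 / G τ - ev (Tr s N) (s - v τ) = 0) :
    HasDerivAt (fun τ => 1 - 1 / G τ - ev (Tr s N) (s - v τ))
      (-(G τ * ev (Res s (Tr s N)) (s - v τ))) τ := by
  have hG := (h.pos τ hτ).2.ne'
  have hcv : Cv 1 (Tr s N) := cv_of_finite N (coeff_Tr_gt s N) 1
  have hd : HasDerivAt (ev (Tr s N)) (ev (dd (Tr s N)) (s - v τ)) (s - v τ) := ev_hasDerivAt hcv hx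
  have hc : HasDerivAt (fun τ => ev (Tr s N) (s - v τ)) _ τ :=
    HasDerivAt.comp (h := fun τ => s - v τ) τ hd ((h.dv τ hτ h4 h2).const_sub s)
  have hy : HasDerivAt (fun τ => 1 - 1 / G τ) (-(2 * Av (rho s) (v τ) (G τ) / G τ)) τ := by
    have : HasDerivAt (fun τ => 1 - (G τ)⁻¹) _ τ := ((h.dG τ hτ h4 h2).inv hG).const_sub 1
    simp only [one_div]
    exact this.congr_deriv (by field_simp)
  refine (hy.sub hc).congr_deriv ?_
  rw [ev_Res h.good.mem hcv hx, ← sub_eq_zero.1 he, sub_sub_cancel]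
  unfold Qv Av
  field_simp
  ring

lemma LOrb.step (h : LOrb s v G) {N : ℕ} (ho : Odd N) (hN : 151 ≤ N) (hk : mu s * N < lam s)
    {τ1 c : ℝ} (h0 : 0 ≤ τ1) (h1 : τ1 ≤ c)
    (hb : ∀ τ ∈ Icc τ1 c, s < v τ ∧ v τ - s ≤ eps s ∧
      (v τ - s) * (lam s * Lb N) ≤ lam s - mu s * N)
    (hD : 1 - 1 / G τ1 - ev (Tr s N) (s - v τ1) < 0) :
    1 - 1 / G c - ev (Tr s N) (s - v c) < 0 := by
  have he := h.good.eps_small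
  have hs := Dm_bounds h.good.mem
  refine no_return (D := fun τ => 1 - 1 / G τ - ev (Tr s N) (s - v τ)) h1 ?_ (fun τ hτ hz => ?_) hD
  · have hcv : Cv 1 (Tr s N) := cv_of_finite N (coeff_Tr_gt s N) 1
    intro τ hτ
    obtain ⟨b1, b2, b3⟩ := hb τ hτ
    have c1 : ContinuousAt (fun t => ev (Tr s N) (s - v t)) τ :=
      (ev_hasDerivAt hcv (by rw [abs_lt]; constructor <;> linarith)).continuousAt.comp
        (f := fun t => s - v t) (continuous_const.sub h.cv).continuousAt
    have c2 := h.cG.continuousAt (x := τ)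
    have c3 := (h.pos τ (h0.trans hτ.1)).2.ne'
    exact ((continuousAt_const.sub (continuousAt_const.div c2 c3)).sub c1).continuousWithinAt
  · obtain ⟨b1, b2, b3⟩ := hb τ hτ
    have L : LR s N (v τ - s) := ⟨h.good, hN, hk, by linarith, b2.trans he, b3⟩
    have r := L.resid_pos ho
    have t := L.T_neg ho b2
    have hG := (h.pos τ (h0.trans hτ.1)).2
    rw [neg_sub] at r t
    have hG1 : G τ ≤ 1 := by
      have hz : 1 - 1 / G τ - ev (Tr s N) (s - v τ) = 0 := hz
      have : 1 < 1 / G τ := by linarith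
      rw [lt_div_iff₀ hG] at this; linarith
    exact ⟨_, h.contact (h0.trans hτ.1) (by linarith) (by linarith)
      (by rw [abs_lt]; constructor <;> linarith) hz, by have := mul_pos hG r; linarith⟩

lemma LOrb.mono (h : LOrb s v G) {c : ℝ}
    (hb : ∀ τ ∈ Icc 0 c, Qv (rho s) (v τ) (G τ) ≤ 0 ∧ G τ ≤ 2 ∧ v τ ≤ 4) :
    MonotoneOn v (Icc 0 c) := by
  have d : ∀ τ ∈ Icc 0 c, _ := fun τ hτ => h.dv τ hτ.1 (hb τ hτ).2.2 (hb τ hτ).2.1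
  refine monotoneOn_of_deriv_nonneg (convex_Icc _ _) h.cv.continuousOn ?_ ?_
  · intro τ hτ
    exact (d τ (interior_subset hτ)).differentiableAt.differentiableWithinAt
  · intro τ hτ
    have hτ := interior_subset hτ
    rw [(d τ hτ).deriv]
    have := mul_nonneg (h.pos τ hτ.1).1.le (neg_nonneg.2 (hb τ hτ).1)
    linarith

/-- Replacing the partial sum of order `N + 2` by that of order `N` at the distance where the
latter starts being used. -/
lemma T_switch (hg : Good s) {N : ℕ} (ho : Odd N) (hN : 151 ≤ N) (hk : mu s * (N + 2 : ℕ) < lam s)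
    {t : ℝ} (ht : 0 < t) (he : t * (lam s * Lb (N + 2)) = lam s - mu s * (N + 2 : ℕ)) :
    ev (Tr s (N + 2)) (-t) ≤ ev (Tr s N) (-t) := by
  have H := hyp_of_lt hg _ hk
  have l := H.low (N + 2) (by omega) le_rfl
  rw [← he, show N + 2 - 1 = N + 1 by omega] at l
  have hL : 0 < lam s * Lb (N + 2) := mul_pos hg.lam_pos (by unfold Lb; positivity)
  have l2 : aS s (N + 1) ≤ t * aS s (N + 2) := le_of_mul_le_mul_left (by linarith) hL
  have e : ∀ M, N ≤ M → ∀ j ∈ Finset.range (N + 1), coeff j (Tr s M) * (-t) ^ j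
      = aS s j * (-t) ^ j := fun M hM j hj => by
    rw [coeff_Tr_le _ _ _ (by have := Finset.mem_range.1 hj; omega)]
  rw [ev_of_finite _ (coeff_Tr_gt s (N + 2)), ev_of_finite _ (coeff_Tr_gt s N),
    Finset.sum_range_succ, Finset.sum_range_succ, Finset.sum_congr rfl (e _ (by omega)),
    Finset.sum_congr rfl (e N le_rfl), coeff_Tr_le _ _ _ le_rfl, coeff_Tr_le _ _ _ (by omega),
    (ho.add_one).neg_pow, (show Odd (N + 2) by grind).neg_pow]
  have := mul_le_mul_of_nonneg_right l2 (pow_pos ht (N + 1)).le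
  rw [pow_succ t (N + 1)]; linarith

lemma LOrb.chain (h : LOrb s v G) {n : ℕ} (ho : Odd n) (hk : mu s * n < lam s) (h0 : s < v 0)
    (hθ : (v 0 - s) * (lam s * Lb n) ≤ lam s - mu s * n)
    (hD : 1 - 1 / G 0 - ev (Tr s n) (s - v 0) < 0) (j : ℕ) :
    ∀ N, 151 ≤ N → N + 2 * j = n → ∃ δ > 0, ∀ c, 0 ≤ c →
      (∀ τ ∈ Icc 0 c, Qv (rho s) (v τ) (G τ) ≤ 0 ∧ G τ ≤ 2 ∧ v τ ≤ 4) → v c - s ≤ eps s →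
      (v c - s) * (lam s * Lb N) ≤ lam s - mu s * N →
      1 - 1 / G c ≤ -δ ∧ ((j = 0 ∨ lam s - mu s * (N + 2 : ℕ) ≤ (v c - s) * (lam s * Lb (N + 2))) →
        1 - 1 / G c - ev (Tr s N) (s - v c) < 0) := by
  have hl := h.good.lam_pos
  have hmu := h.good.mu0
  have hLm : ∀ N : ℕ, 0 < lam s * Lb N := fun N => mul_pos hl (by unfold Lb; positivity)
  have hcmp : ∀ N : ℕ, 151 ≤ N → N ≤ n → Odd N → ∃ δ > 0, ∀ t, v 0 - s ≤ t → t ≤ eps s →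
      t * (lam s * Lb N) ≤ lam s - mu s * N → ev (Tr s N) (-t) ≤ -δ := fun N h1 h2 ho' => by
    have hkN : mu s * N < lam s := lt_of_le_of_lt (by gcongr) hk
    obtain ⟨δ, hδ, hm⟩ := pos_lb (K := Icc (v 0 - s) (min (eps s) ((lam s - mu s * N)
      / (lam s * Lb N)))) isCompact_Icc (f := fun t => -ev (Tr s N) (-t)) (by
        have : (fun t : ℝ => -ev (Tr s N) (-t)) = fun t => -∑ k ∈ Finset.range (N + 1),
            coeff k (Tr s N) * (-t) ^ k := by
          funext t; rw [ev_of_finite _ (coeff_Tr_gt s N)]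
        rw [this]
        fun_prop) (fun t ht => by
        have ht2 := le_min_iff.1 ht.2
        rw [le_div_iff₀ (hLm N)] at ht2
        have L : LR s N t := ⟨h.good, h1, hkN, by linarith [ht.1],
          ht2.1.trans h.good.eps_small, ht2.2⟩
        linarith [L.T_neg ho' ht2.1])
    refine ⟨δ, hδ, fun t h1 h2 h3 => ?_⟩
    have := hm t ⟨h1, le_min h2 ((le_div_iff₀ (hLm N)).2 h3)⟩
    linarith
  induction j with
  | zero =>
    intro N hN e
    obtain rfl : N = n := by omega
    obtain ⟨δ, hδ, hm⟩ := hcmp N hN le_rfl ho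
    refine ⟨δ, hδ, fun c hc hb he hc2 => ?_⟩
    have mo := h.mono hb
    have k : 1 - 1 / G c - ev (Tr s N) (s - v c) < 0 := by
      refine h.step ho hN hk le_rfl hc (fun τ hτ => ?_) hD
      have m1 := mo ⟨le_rfl, hc⟩ hτ hτ.1
      have m2 := mo hτ ⟨hc, le_rfl⟩ hτ.2
      refine ⟨by linarith, by linarith, le_trans ?_ hc2⟩
      exact mul_le_mul_of_nonneg_right (by linarith) (hLm N).le
    have m1 := mo ⟨le_rfl, hc⟩ ⟨hc, le_rfl⟩ hc
    have := hm (v c - s) (by linarith) he hc2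
    rw [neg_sub] at this
    exact ⟨by linarith, fun _ => k⟩
  | succ j ih =>
    intro N hN e
    have hoN : Odd N := by
      rw [← e] at ho; grind
    obtain ⟨δ1, hδ1, hm1⟩ := ih (N + 2) (by omega) (by omega)
    obtain ⟨δ, hδ, hm⟩ := hcmp N hN (by omega) hoN
    refine ⟨min δ1 δ, lt_min hδ1 hδ, fun c hc hb he hc2 => ?_⟩
    have mo := h.mono hb
    have m0 := mo ⟨le_rfl, hc⟩ ⟨hc, le_rfl⟩ hc
    have hN2 : mu s * (N + 2 : ℕ) ≤ mu s * n := by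
      gcongr; omega
    have hLc : Lb (N + 2) ≤ Lb n := by
      have : ((N + 2 : ℕ) : ℝ) ≤ n := by exact_mod_cast (by omega : N + 2 ≤ n)
      unfold Lb; push_cast at *; linarith
    have key : lam s - mu s * (N + 2 : ℕ) ≤ (v c - s) * (lam s * Lb (N + 2)) →
        1 - 1 / G c - ev (Tr s N) (s - v c) < 0 := fun hge => by
      have i0 : (v 0 - s) * (lam s * Lb (N + 2)) ≤ lam s - mu s * (N + 2 : ℕ) := by
        have : (v 0 - s) * (lam s * Lb (N + 2)) ≤ (v 0 - s) * (lam s * Lb n) := by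
          have : 0 ≤ v 0 - s := by linarith
          gcongr
        linarith
      obtain ⟨τ1, hτ1, e1⟩ := intermediate_value_Icc hc (f := fun τ =>
        (v τ - s) * (lam s * Lb (N + 2)))
        ((h.cv.sub continuous_const).mul continuous_const).continuousOn ⟨i0, hge⟩
      have e1 : (v τ1 - s) * (lam s * Lb (N + 2)) = lam s - mu s * (N + 2 : ℕ) := e1
      have n0 := mo ⟨le_rfl, hc⟩ hτ1 hτ1.1
      have n1 := mo hτ1 ⟨hc, le_rfl⟩ hτ1.2
      have q1 := (hm1 τ1 hτ1.1 (fun τ hτ => hb τ ⟨hτ.1, hτ.2.trans hτ1.2⟩) (by linarith)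
        (by push_cast at *; exact e1.le)).2 (Or.inr (by
          have : Lb (N + 2) ≤ Lb (N + 2 + 2) := by unfold Lb; push_cast; linarith
          have a : (v τ1 - s) * (lam s * Lb (N + 2)) ≤ (v τ1 - s) * (lam s * Lb (N + 2 + 2)) := by
            have : 0 ≤ v τ1 - s := by linarith
            gcongr
          have b : mu s * (N + 2 : ℕ) ≤ mu s * (N + 2 + 2 : ℕ) := by gcongr; omega
          push_cast at *
          linarith))
      have sw := T_switch h.good hoN hN (by linarith) (by linarith) e1
      rw [neg_sub] at sw
      refine h.step hoN hN (lt_of_le_of_lt (by gcongr; omega) hk) hτ1.1 hτ1.2 (fun τ hτ => ?_)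
        (by linarith)
      have hτ' : τ ∈ Icc 0 c := ⟨hτ1.1.trans hτ.1, hτ.2⟩
      have m1 := mo ⟨le_rfl, hc⟩ hτ' hτ'.1
      have m2 := mo hτ' ⟨hc, le_rfl⟩ hτ'.2
      exact ⟨by linarith, by linarith,
        (mul_le_mul_of_nonneg_right (by linarith) (hLm N).le).trans hc2⟩
    refine ⟨?_, fun hh => key (hh.resolve_left (by omega))⟩
    rcases le_total ((v c - s) * (lam s * Lb (N + 2))) (lam s - mu s * (N + 2 : ℕ)) with g | g
    · have := (hm1 c hc hb he (by push_cast at *; exact g)).1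
      linarith [min_le_left δ1 δ]
    · have k := key g
      have := hm (v c - s) (by linarith) he hc2
      rw [neg_sub] at this
      linarith [min_le_right δ1 δ]
end

section
lemma slope_bound {f : ℝ → ℝ} {a b K : ℝ} (hab : a ≤ b)
    (hd : ∀ τ ∈ Icc a b, ∃ d, HasDerivAt f d τ ∧ d ≤ K) : f b - f a ≤ K * (b - a) := by
  refine (convex_Icc a b).image_sub_le_mul_sub_of_deriv_le (fun τ hτ => ?_) (fun τ hτ => ?_)
    (fun τ hτ => ?_) a ⟨le_rfl, hab⟩ b ⟨hab, le_rfl⟩ hab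
  · obtain ⟨d, h, -⟩ := hd τ hτ; exact h.continuousAt.continuousWithinAt
  · obtain ⟨d, h, -⟩ := hd τ (interior_subset hτ)
    exact h.differentiableAt.differentiableWithinAt
  · obtain ⟨d, h, h'⟩ := hd τ (interior_subset hτ); rwa [h.deriv]

lemma decay {f : ℝ → ℝ} {κ T : ℝ} (hκ : 0 < κ)
    (hd : ∀ τ, T ≤ τ → ∃ d, HasDerivAt f d τ ∧ d ≤ -κ * f τ) (h0 : ∀ τ, T ≤ τ → 0 ≤ f τ) :
    Tendsto f atTop (𝓝 0) := by
  have h1 : ∀ τ, T ≤ τ → f τ ≤ exp (κ * T) * f T * exp (-(κ * τ)) := fun τ hτ => by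
    have := slope_bound (f := fun τ => exp (κ * τ) * f τ) (K := 0) hτ (fun t ht => by
      obtain ⟨d, h, h'⟩ := hd t ht.1
      have e : HasDerivAt (fun τ => exp (κ * τ)) (exp (κ * t) * κ) t := by
        simpa using ((hasDerivAt_id t).const_mul κ).exp
      refine ⟨_, e.mul h, ?_⟩
      have := mul_le_mul_of_nonneg_left h' (exp_pos (κ * t)).le
      linarith)
    rw [exp_neg, ← div_eq_mul_inv, le_div_iff₀ (exp_pos _)]
    linarith
  have h2 : Tendsto (fun τ => exp (κ * T) * f T * exp (-(κ * τ))) atTop (𝓝 0) := by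
    have := (tendsto_exp_neg_atTop_nhds_zero.comp (tendsto_id.const_mul_atTop hκ)).const_mul
      (exp (κ * T) * f T)
    rw [mul_zero] at this; exact this
  refine tendsto_of_tendsto_of_tendsto_of_le_of_le' tendsto_const_nhds h2 ?_ ?_
  · filter_upwards [eventually_ge_atTop T] with τ hτ using h0 τ hτ
  · filter_upwards [eventually_ge_atTop T] with τ hτ using h1 τ hτ

variable {s : ℝ} {v G : ℝ → ℝ}

lemma b0_near {s v : ℝ} (hs : s ∈ Dm) (h1 : s - 0.1 ≤ v) : 3 < b0v (rho s) v := by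
  have hs := Dm_bounds hs
  have hr := rho_bounds ‹_›
  have h1 : 0.19 * 3.1 ≤ rho s * v := mul_le_mul hr.1.le (by linarith) (by norm_num) (by linarith)
  unfold b0v
  calc (3 : ℝ) < 2.1 * 1.58 := by norm_num
    _ ≤ _ := mul_le_mul (by linarith) (by linarith) (by norm_num) (by linarith)

lemma kk_pos {s v : ℝ} (hs : s ∈ Dm) (h0 : 0 < v) (h : v ≤ s + 0.01) :
    0.2 ≤ 8 / 5 - (3 / 5 - rho s) * v := by
  have hs := Dm_bounds hs
  have hr := rho_bounds ‹_›
  have : (3 / 5 - rho s) * v ≤ 0.41 * 3.25 :=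
    mul_le_mul (by linarith) (by linarith) h0.le (by norm_num)
  linarith

/-- The orbit cannot stay in `Q < 0`: it meets `Q = 0` above the second zero of `P`. -/
lemma LOrb.phase1 (h : LOrb s v G) {n : ℕ} (ho : Odd n) (hn : 151 ≤ n) (hk : mu s * n < lam s)
    (h0 : s < v 0) (hε : v 0 - s ≤ eps s)
    (hθ : (v 0 - s) * (lam s * Lb n) ≤ lam s - mu s * n)
    (hD : 1 - 1 / G 0 - ev (Tr s n) (s - v 0) < 0) (hQ : Qv (rho s) (v 0) (G 0) < 0) :
    ∃ τe, 0 ≤ τe ∧ Qv (rho s) (v τe) (G τe) = 0 ∧ s < v τe ∧ v τe < s + eps s ∧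
      ∀ τ ∈ Icc 0 τe, G τ < 1 ∧ v τ ≤ 4 := by
  have hs := Dm_bounds h.good.mem
  have hr := rho_bounds h.good.mem
  have he := h.good.eps_small
  obtain ⟨δ, hδ, hm⟩ := h.chain ho hk h0 hθ hD ((n - 151) / 2) 151 le_rfl (by
    obtain ⟨m, rfl⟩ := ho; omega)
  have K1 : ∀ c, 0 ≤ c → (∀ τ ∈ Icc 0 c, Qv (rho s) (v τ) (G τ) ≤ 0 ∧ G τ ≤ 2 ∧ v τ ≤ 4) →
      v c - s ≤ eps s → 1 - 1 / G c ≤ -δ := fun c hc hb hcv => by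
    refine (hm c hc hb hcv ?_).1
    have l := h.good.lam_pos
    have k := h.good.k_big
    have : (v c - s) * (lam s * Lb 151) ≤ 1 / 10 ^ 4 * (lam s * 2) := by
      have : lam s * Lb 151 ≤ lam s * 2 := by gcongr; unfold Lb; norm_num
      have h3 : 0 < lam s * Lb 151 := mul_pos l (by unfold Lb; positivity)
      exact mul_le_mul (hcv.trans he) this h3.le (by norm_num)
    norm_num at *; linarith
  have G1 : ∀ c, 0 ≤ c → 1 - 1 / G c ≤ -δ → G c < 1 := fun c hc hy => by
    have : 1 < 1 / G c := by linarith
    rwa [lt_div_iff₀ (h.pos c hc).2, one_mul] at this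
  have K2 : ∀ c, 0 ≤ c → (∀ τ ∈ Icc 0 c, Qv (rho s) (v τ) (G τ) ≤ 0 ∧ G τ ≤ 2 ∧ v τ ≤ 4) →
      v c - s < eps s := fun c hc hb => by
    by_contra! hge
    obtain ⟨c1, hc1, e1⟩ := intermediate_value_Icc hc (f := fun τ => v τ - s)
      (h.cv.sub continuous_const).continuousOn ⟨hε, hge⟩
    have e1 : v c1 - s = eps s := e1
    have hy := G1 c1 hc1.1 (K1 c1 hc1.1 (fun τ hτ => hb τ ⟨hτ.1, hτ.2.trans hc1.2⟩) e1.le)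
    have hq := (hb c1 hc1).1
    have hP : Pv (rho s) (v c1) = 0 := by
      rw [Pv_factor h.good.mem, show s - v c1 + eps s = 0 by linarith, mul_zero]
    have hb0 := b0_near h.good.mem (show s - 0.1 ≤ v c1 by linarith [eps_nonneg h.good.mem])
    unfold Qv at hq
    rw [hP] at hq
    have := mul_pos (by linarith : 0 < b0v (rho s) (v c1)) (by linarith : 0 < 1 - G c1)
    linarith
  obtain ⟨φ, hφ⟩ : ∃ φ : ℝ → ℝ, φ = fun τ =>
    min (-Qv (rho s) (v τ) (G τ)) (min (2 - G τ) (4 - v τ)) := ⟨_, rfl⟩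
  have hcQ : Continuous fun τ => Qv (rho s) (v τ) (G τ) := by
    have c1 := h.cv; have c2 := h.cG
    unfold Qv b0v Pv; fun_prop
  have hφc : Continuous φ := by
    rw [hφ]
    exact hcQ.neg.min ((continuous_const.sub h.cG).min (continuous_const.sub h.cv))
  have hφ0 : ∀ τ, 0 ≤ φ τ → Qv (rho s) (v τ) (G τ) ≤ 0 ∧ G τ ≤ 2 ∧ v τ ≤ 4 := fun τ hτ => by
    rw [hφ] at hτ
    obtain ⟨a, b⟩ := le_min_iff.1 hτ
    obtain ⟨b, c⟩ := le_min_iff.1 b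
    exact ⟨by linarith, by linarith, by linarith⟩
  have hy00 : 1 - 1 / G 0 < 0 := by
    have L : LR s n (v 0 - s) := ⟨h.good, hn, hk, by linarith, hε.trans he, hθ⟩
    have := L.T_neg ho hε
    rw [neg_sub] at this; linarith
  have hst : 0 < φ 0 := by
    have : G 0 < 1 := by
      have : 1 < 1 / G 0 := by linarith
      rwa [lt_div_iff₀ (h.pos 0 le_rfl).2, one_mul] at this
    rw [hφ]
    exact lt_min (by linarith) (lt_min (by linarith) (by linarith))
  by_cases hex : ∃ t, 0 ≤ t ∧ φ t ≤ 0
  · obtain ⟨t, ht, ht2⟩ := hex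
    obtain ⟨c, hc0, -, hc, hbef⟩ := first_exit hφc hst ht ht2
    have hb : ∀ c' ≤ c, ∀ τ ∈ Icc 0 c', Qv (rho s) (v τ) (G τ) ≤ 0 ∧ G τ ≤ 2 ∧ v τ ≤ 4 :=
      fun c' hc' τ hτ => by
      rcases (hτ.2.trans hc').lt_or_eq with e | e
      · exact hφ0 τ (hbef τ hτ.1 e).le
      · rw [e]; exact hφ0 c hc.ge
    have k2 := K2 c hc0.le (hb c le_rfl)
    have all : ∀ τ ∈ Icc 0 c, G τ < 1 ∧ v τ ≤ 4 := fun τ hτ =>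
      ⟨G1 τ hτ.1 (K1 τ hτ.1 (hb τ hτ.2) (K2 τ hτ.1 (hb τ hτ.2)).le), (hb c le_rfl τ hτ).2.2⟩
    have m0 := h.mono (hb c le_rfl) ⟨le_rfl, hc0.le⟩ ⟨hc0.le, le_rfl⟩ hc0.le
    refine ⟨c, hc0.le, ?_, by linarith, by linarith, all⟩
    have hg := (all c ⟨hc0.le, le_rfl⟩).1
    rw [hφ] at hc
    rcases min_choice (-Qv (rho s) (v c) (G c)) (min (2 - G c) (4 - v c)) with e | e
    · have : -Qv (rho s) (v c) (G c) = 0 := by rw [← e]; exact hc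
      linarith
    · have : 0 < min (2 - G c) (4 - v c) := lt_min (by linarith) (by linarith)
      rw [← e] at this
      exact absurd hc this.ne'
  · push Not at hex
    exfalso
    have hb : ∀ c, ∀ τ ∈ Icc 0 c, Qv (rho s) (v τ) (G τ) ≤ 0 ∧ G τ ≤ 2 ∧ v τ ≤ 4 :=
      fun c τ hτ => hφ0 τ (hex τ hτ.1).le
    have facts : ∀ τ, 0 ≤ τ → s < v τ ∧ v τ - s < eps s ∧ 1 - 1 / G τ ≤ -δ ∧ 1 / G τ ≤ 1.01 :=
      fun τ hτ => by
      have k2 := K2 τ hτ (hb τ)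
      have k1 := K1 τ hτ (hb τ) k2.le
      have m0 := h.mono (hb τ) ⟨le_rfl, hτ⟩ ⟨hτ, le_rfl⟩ hτ
      have q := (hb τ τ ⟨hτ, le_rfl⟩).1
      have hb0 := b0_near h.good.mem (show s - 0.1 ≤ v τ by linarith)
      have gp := (h.pos τ hτ).2
      have hG := G1 τ hτ k1
      refine ⟨by linarith, k2, k1, ?_⟩
      have hP : -0.01 ≤ Pv (rho s) (v τ) := by
        rw [Pv_factor h.good.mem]
        have t0 : 0 ≤ v τ - s := by linarith
        have : rho s * (v τ - s) * (s - v τ + eps s) ≤ 1 * 0.01 * 1 := by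
          have := mul_le_mul (by linarith : rho s ≤ 1) (by linarith : v τ - s ≤ 0.01) t0
            (by norm_num)
          exact mul_le_mul this (by linarith) (by linarith) (by norm_num)
        linarith
      rw [div_le_iff₀ gp]
      unfold Qv at q
      have q1 : 3 * (1 - G τ) ≤ b0v (rho s) (v τ) * (1 - G τ) :=
        mul_le_mul_of_nonneg_right hb0.le (by linarith)
      have q2 := mul_le_mul_of_nonneg_right hP gp.le
      linarith
    have := slope_bound (f := fun τ => 2 * (s - v τ) + (1 - (G τ)⁻¹)) (a := 0) (b := 3 / δ)
      (K := -(0.4 * δ)) (by positivity) (fun τ hτ => by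
        obtain ⟨f1, f2, f3, f4⟩ := facts τ hτ.1
        obtain ⟨b1, b2, b3⟩ := hb τ τ ⟨hτ.1, le_rfl⟩
        have gp := (h.pos τ hτ.1).2
        refine ⟨_, (((h.dv τ hτ.1 b3 b2).const_sub s).const_mul 2).add
          (((h.dG τ hτ.1 b3 b2).inv gp.ne').const_sub 1), ?_⟩
        have e : 2 * - -(v τ * Qv (rho s) (v τ) (G τ)) + -(- -(2 * G τ * Av (rho s) (v τ) (G τ))
            / G τ ^ 2) = Qv (rho s) (v τ) (G τ) * (2 * v τ - 12 / 5 * (1 / G τ))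
              + 2 * (8 / 5 - (3 / 5 - rho s) * v τ) * (1 - 1 / G τ) := by
          rw [Av_eq]; field_simp; ring
        rw [e]
        have k := kk_pos h.good.mem (h.pos τ hτ.1).1 (by linarith)
        have e1 := mul_nonneg (neg_nonneg.2 b1) (by linarith : 0 ≤ 2 * v τ - 12 / 5 * (1 / G τ))
        have e2 := mul_le_mul_of_nonneg_left f3 (by linarith :
          0 ≤ 2 * (8 / 5 - (3 / 5 - rho s) * v τ) - 0.4)
        have e3 := mul_nonneg (by linarith :
          0 ≤ 2 * (8 / 5 - (3 / 5 - rho s) * v τ) - 0.4) hδ.le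
        linarith)
    have e : -(0.4 * δ) * (3 / δ - 0) = -1.2 := by field_simp; norm_num
    rw [e] at this
    obtain ⟨f1, f2, f3, f4⟩ := facts (3 / δ) (by positivity)
    rw [one_div] at f4 hy00
    linarith

lemma LOrb.dQ (h : LOrb s v G) {τ : ℝ} (h0 : 0 ≤ τ) (h1 : v τ ≤ 4) (h2 : G τ ≤ 2)
    (hQ : Qv (rho s) (v τ) (G τ) = 0) :
    HasDerivAt (fun τ => Qv (rho s) (v τ) (G τ))
      (2 * b0v (rho s) (v τ) * Av (rho s) (v τ) (G τ)) τ := by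
  have hv : HasDerivAt v 0 τ := (h.dv τ h0 h1 h2).congr_deriv (by rw [hQ]; ring)
  have hG := h.dG τ h0 h1 h2
  have hb : HasDerivAt (fun τ => b0v (rho s) (v τ)) 0 τ :=
    ((hv.sub_const 1).mul ((hv.const_mul (rho s)).const_add 1)).congr_deriv (by ring)
  have hP : HasDerivAt (fun τ => Pv (rho s) (v τ)) 0 τ :=
    (((hv.const_mul (4 * rho s - 2)).const_add 2).add ((hv.pow 2).const_mul (rho s))).congr_deriv
      (by ring)
  refine ((hb.mul (hG.const_sub 1)).add (hP.mul hG)).congr_deriv ?_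
  unfold Qv at hQ
  linear_combination (-2 * Av (rho s) (v τ) (G τ)) * hQ

lemma LOrb.phase2 (h : LOrb s v G) {τ2 : ℝ} (h0 : 0 ≤ τ2) (hs : s < sS) (hG : G τ2 < 1)
    (hv : v τ2 < s + eps s) (hQ : 0 < Qv (rho s) (v τ2) (G τ2)) :
    ∃ G1 < 1, ∀ τ, τ2 ≤ τ → G τ < G1 ∧ v τ < s + eps s ∧
      (0 < Qv (rho s) (v τ) (G τ) ∨ v τ < s) := by
  have hsb := Dm_bounds h.good.mem
  have hr := rho_bounds h.good.mem
  have he := h.good.eps_small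
  have he0 := eps_pos h.good.mem hs
  obtain ⟨w, hw1, hw2, hw3⟩ : ∃ w, v τ2 < w ∧ s < w ∧ w < s + eps s := by
    obtain ⟨w, a, b⟩ := exists_between (max_lt hv (by linarith : s < s + eps s))
    exact ⟨w, (le_max_left _ _).trans_lt a, (le_max_right _ _).trans_lt a, b⟩
  obtain ⟨G1, hG1, hG2⟩ := exists_between hG
  obtain ⟨q, hq⟩ : ∃ q : ℝ → ℝ, q = fun τ => Qv (rho s) (v τ) (G τ) := ⟨_, rfl⟩
  have hqe : ∀ τ, q τ = Qv (rho s) (v τ) (G τ) := fun τ => by rw [hq]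
  have hcq : Continuous q := by
    have c1 := h.cv; have c2 := h.cG
    rw [hq]; unfold Qv b0v Pv; fun_prop
  obtain ⟨φ, hφ⟩ : ∃ φ : ℝ → ℝ, φ = fun τ =>
    min (min (G1 - G τ) (max (q τ) (s - v τ))) (w - v τ) := ⟨_, rfl⟩
  have hφc : Continuous φ := by
    have c1 := h.cv; have c2 := h.cG
    rw [hφ]; fun_prop
  suffices hpos : ∀ τ, τ2 ≤ τ → 0 < φ τ by
    refine ⟨G1, hG2, fun τ hτ => ?_⟩
    have := hpos τ hτ
    rw [hφ] at this
    obtain ⟨a, b⟩ := lt_min_iff.1 this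
    obtain ⟨a, c⟩ := lt_min_iff.1 a
    refine ⟨by linarith, by linarith, ?_⟩
    rcases lt_max_iff.1 c with c | c
    · left; rwa [hqe] at c
    · right; linarith
  by_contra! hcon
  obtain ⟨t, ht, ht2⟩ := hcon
  obtain ⟨c, hc0, -, hc, hbef⟩ := first_exit (φ := fun τ => φ (τ2 + τ)) (by fun_prop) (by
      show 0 < φ (τ2 + 0)
      rw [add_zero, hφ, hq]
      exact lt_min (lt_min (by linarith) (lt_max_of_lt_left hQ)) (by linarith))
    (t := t - τ2) (by linarith) (by simpa using ht2)
  obtain ⟨T, hT⟩ : ∃ T, T = τ2 + c := ⟨_, rfl⟩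
  rw [← hT] at hc
  have hbef : ∀ τ, τ2 ≤ τ → τ < T → 0 < φ τ := fun τ h1 h2 => by
    have := hbef (τ - τ2) (by linarith) (by linarith)
    simpa using this
  have hT2 : τ2 < T := by linarith
  have hall : ∀ τ, 0 ≤ φ τ → G τ ≤ G1 ∧ v τ ≤ w ∧ (0 ≤ q τ ∨ v τ ≤ s) := fun τ h => by
    rw [hφ] at h
    obtain ⟨a, b⟩ := le_min_iff.1 h
    obtain ⟨a, c⟩ := le_min_iff.1 a
    refine ⟨by linarith, by linarith, ?_⟩
    rcases le_max_iff.1 c with c | c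
    · exact Or.inl c
    · right; linarith
  obtain ⟨g1, g2, g3⟩ := hall T hc.ge
  have hT0 : 0 ≤ T := by linarith
  obtain ⟨vp, gp⟩ := h.pos T hT0
  have hv4 : v T ≤ 4 := by linarith
  have dv := h.dv T hT0 hv4 (by linarith)
  have dG := h.dG T hT0 hv4 (by linarith)
  have kk := kk_pos h.good.mem vp (by linarith)
  -- `Q = 0` cannot be reached from `Q > 0` on the side `v > s`
  have noQ : s < v T → q T ≠ 0 := fun hsv hq0 => by
    have hd := h.dQ hT0 hv4 (by linarith) (by rw [← hqe]; exact hq0)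
    have hnb : ∀ᶠ τ in 𝓝 T, s < v τ := h.cv.continuousAt.eventually (lt_mem_nhds hsv)
    obtain ⟨r, hr0, hr1⟩ := Metric.eventually_nhds_iff.1 hnb
    have := deriv_nonpos_of_exit hd (a := max τ2 (T - r / 2)) (c := T)
      (max_lt hT2 (by linarith)) (fun τ h1 h2 => by
        have h3 := (le_max_left _ _).trans h1
        have h4 := (le_max_right _ _).trans h1
        have h5 := hr1 (show dist τ T < r by rw [Real.dist_eq, abs_lt]; constructor <;> linarith)
        have := (hall τ (hbef τ h3 h2).le).2.2.resolve_right (by linarith)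
        rwa [hqe] at this) (by rw [← hqe]; exact hq0)
    rw [Av_eq, ← hqe, hq0] at this
    have hb0 := b0_near h.good.mem (show s - 0.1 ≤ v T by linarith)
    have := mul_pos (by linarith : 0 < 2 * b0v (rho s) (v T))
      (mul_pos (by linarith : 0 < 8 / 5 - (3 / 5 - rho s) * v T) (by linarith : 0 < 1 - G T))
    linarith
  rw [hφ] at hc
  rcases min_choice (min (G1 - G T) (max (q T) (s - v T))) (w - v T) with e | e
  · rcases min_choice (G1 - G T) (max (q T) (s - v T)) with e' | e'
    · have z : G1 - G T = 0 := by rw [← e', ← e]; exact hc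
      have := deriv_nonpos_of_exit (dG.const_sub G1) hT2
        (fun τ h1 h2 => by linarith [(hall τ (hbef τ h1 h2).le).1]) z
      have hA : 0 < Av (rho s) (v T) (G T) := by
        have k1 := mul_pos (by linarith : 0 < 8 / 5 - (3 / 5 - rho s) * v T)
          (by linarith : 0 < 1 - G T)
        rcases g3 with g3 | g3
        · rw [Av_eq, ← hqe]; linarith
        · have hP : 0 ≤ Pv (rho s) (v T) := by
            rw [Pv_factor h.good.mem]
            exact mul_nonneg (mul_nonneg (by linarith) (by linarith)) (by linarith)
          have ha : 0 < a0v (rho s) (v T) := by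
            have r1 : 0 < 3 / 5 - rho s / 5 := by linarith
            have r2 : 0 < rho s := by linarith
            unfold a0v; positivity
          have := mul_pos ha (by linarith : 0 < 1 - G T)
          unfold Av; positivity
      have := mul_pos (mul_pos two_pos gp) hA
      linarith
    · have z : max (q T) (s - v T) = 0 := by rw [← e', ← e]; exact hc
      have z1 : q T ≤ 0 := (le_max_left _ _).trans z.le
      have z2 : s - v T ≤ 0 := (le_max_right _ _).trans z.le
      rcases z2.lt_or_eq with z2 | z2
      · refine noQ (by linarith) (le_antisymm z1 ?_)
        rcases le_max_iff.1 z.ge with z3 | z3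
        · exact z3
        · linarith
      · rw [hqe] at z1
        have hP : Pv (rho s) (v T) = 0 := by rw [Pv_factor h.good.mem, z2]; ring
        unfold Qv at z1
        rw [hP] at z1
        have hb0 := b0_near h.good.mem (show s - 0.1 ≤ v T by linarith)
        have := mul_pos (by linarith : 0 < b0v (rho s) (v T)) (by linarith : 0 < 1 - G T)
        linarith
  · have z : w - v T = 0 := by rw [← e]; exact hc
    have := deriv_nonpos_of_exit (dv.const_sub w) hT2
      (fun τ h1 h2 => by linarith [(hall τ (hbef τ h1 h2).le).2.1]) z
    have hq0 := g3.resolve_right (by linarith)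
    have := mul_pos vp (hq0.lt_of_ne' (noQ (by linarith)))
    rw [← hqe] at *
    linarith
end

section
variable {s : ℝ} {v G : ℝ → ℝ}

/-- Once `G` is decreasing, the orbit is attracted by the point `v = 1`, `G = 0`. -/
lemma LOrb.after (h : LOrb s v G) {τ2 G1 : ℝ} (h0 : 0 ≤ τ2) (hs : s < sS) (hG1 : G1 < 1)
    (hall : ∀ τ, τ2 ≤ τ → G τ < G1 ∧ v τ < s + eps s ∧ (0 < Qv (rho s) (v τ) (G τ) ∨ v τ < s)) :
    Tendsto v atTop (𝓝 1) ∧ Tendsto G atTop (𝓝 0) := by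
  have hsb := Dm_bounds h.good.mem
  have hr := rho_bounds h.good.mem
  have he := h.good.eps_small
  have he0 := eps_pos h.good.mem hs
  obtain ⟨κ, hκ⟩ : ∃ κ, κ = 0.4 * (1 - G1) := ⟨_, rfl⟩
  have hκ0 : 0 < κ := by rw [hκ]; linarith
  have dv : ∀ τ, τ2 ≤ τ → HasDerivAt v (-(v τ * Qv (rho s) (v τ) (G τ))) τ := fun τ hτ => by
    obtain ⟨a, b, -⟩ := hall τ hτ
    exact h.dv τ (h0.trans hτ) (by linarith) (by linarith)
  have dG : ∀ τ, τ2 ≤ τ → ∃ d, HasDerivAt G d τ ∧ d ≤ -κ * G τ := fun τ hτ => by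
    obtain ⟨a, b, g⟩ := hall τ hτ
    obtain ⟨vp, gp⟩ := h.pos τ (h0.trans hτ)
    refine ⟨_, h.dG τ (h0.trans hτ) (by linarith) (by linarith), ?_⟩
    have hA : 0.2 * (1 - G1) ≤ Av (rho s) (v τ) (G τ) := by
      have k0 : 0.2 * (1 - G1) ≤ 0.2 * (1 - G τ) := by linarith
      refine k0.trans ?_
      rcases g with g | g
      · have := mul_le_mul_of_nonneg_right (kk_pos h.good.mem vp (by linarith))
          (by linarith : 0 ≤ 1 - G τ)
        rw [Av_eq]; linarith
      · have hP : 0 ≤ Pv (rho s) (v τ) := by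
          rw [Pv_factor h.good.mem]
          exact mul_nonneg (mul_nonneg (by linarith) (by linarith)) (by linarith)
        have ha : 0.2 ≤ a0v (rho s) (v τ) := by
          have r1 : 0 < 3 / 5 - rho s / 5 := by linarith
          have r2 : 0 < rho s := by linarith
          have : 0 ≤ (3 / 5 - rho s / 5) * v τ + 6 / 5 * rho s * v τ ^ 2 := by positivity
          unfold a0v; linarith
        have := mul_le_mul_of_nonneg_right ha (by linarith : 0 ≤ 1 - G τ)
        have : 0 ≤ 6 / 5 * Pv (rho s) (v τ) * G τ := by positivity
        unfold Av; linarith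
    have := mul_le_mul_of_nonneg_right hA gp.le
    rw [hκ]; linarith
  have tG : Tendsto G atTop (𝓝 0) :=
    decay hκ0 dG fun τ hτ => (h.pos τ (h0.trans hτ)).2.le
  refine ⟨?_, tG⟩
  obtain ⟨T, hT⟩ := eventually_atTop.1 ((eventually_ge_atTop τ2).and
    (tG.eventually (gt_mem_nhds (by norm_num : (0 : ℝ) < 1 / 6))))
  have b1 : ∀ τ, τ2 ≤ τ → |3 - (3 - 5 * rho s) * v τ| ≤ 6 := fun τ hτ => by
    have vp := (h.pos τ (h0.trans hτ)).1
    have e1 : 0 ≤ (3 - 5 * rho s) * v τ := mul_nonneg (by linarith) vp.le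
    have e2 : (3 - 5 * rho s) * v τ ≤ 2.05 * 4 :=
      mul_le_mul (by linarith) (by linarith [(hall τ hτ).2.1]) vp.le (by norm_num)
    rw [abs_le]; constructor <;> linarith
  have Qe : ∀ τ, Qv (rho s) (v τ) (G τ)
      = b0v (rho s) (v τ) + (3 - (3 - 5 * rho s) * v τ) * G τ := fun τ => by
    unfold Qv b0v Pv; ring
  obtain ⟨m, hm⟩ : ∃ m, m = min (v T) (1 / 2) / 2 := ⟨_, rfl⟩
  have hT0 := (hT T le_rfl).1
  have hvT := (h.pos T (h0.trans hT0)).1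
  have hm0 : 0 < m := by rw [hm]; exact half_pos (lt_min hvT (by norm_num))
  have hm1 : m ≤ 1 / 4 := by rw [hm]; linarith [min_le_right (v T) (1 / 2)]
  have hm2 : m < v T := by rw [hm]; linarith [min_le_left (v T) (1 / 2)]
  have low : ∀ τ, T ≤ τ → m < v τ := fun τ hτ => by
    have := no_return (D := fun τ => m - v τ) hτ (by have := h.cv; fun_prop) (fun t ht hz => by
      refine ⟨_, (dv t (hT0.trans ht.1)).const_sub m, ?_⟩
      have hz : m - v t = 0 := hz
      have vp := (h.pos t (h0.trans (hT0.trans ht.1))).1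
      have g := (hT t ht.1).2
      have gp := (h.pos t (h0.trans (hT0.trans ht.1))).2
      have c1 := (le_abs_self _).trans (b1 t (hT0.trans ht.1))
      have c2 : (3 - (3 - 5 * rho s) * v t) * G t ≤ 3 * (1 / 6) :=
        mul_le_mul (by have := mul_nonneg (by linarith : 0 ≤ 3 - 5 * rho s) vp.le; linarith)
          g.le gp.le (by norm_num)
      have c3 : (1 - v t) * 1 ≤ (1 - v t) * (1 + rho s * v t) :=
        mul_le_mul_of_nonneg_left (by have := mul_nonneg (by linarith : 0 ≤ rho s) vp.le; linarith)
          (by linarith)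
      have : Qv (rho s) (v t) (G t) < 0 := by rw [Qe]; unfold b0v; linarith
      have := mul_pos vp (neg_pos.2 this)
      linarith) (by linarith)
    linarith
  obtain ⟨κ', hκ'⟩ : ∃ κ', κ' = min (2 * m) (κ / 2) := ⟨_, rfl⟩
  have hκ'0 : 0 < κ' := by rw [hκ']; exact lt_min (by linarith) (by linarith)
  have tL : Tendsto (fun τ => (v τ - 1) ^ 2 + 300 / κ * G τ) atTop (𝓝 0) := by
    refine decay hκ'0 (T := T) (fun τ hτ => ?_) (fun τ hτ => ?_)
    · obtain ⟨d, hd, hd2⟩ := dG τ (hT0.trans hτ)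
      refine ⟨_, (((dv τ (hT0.trans hτ)).sub_const 1).pow 2).add (hd.const_mul (300 / κ)), ?_⟩
      obtain ⟨vp, gp⟩ := h.pos τ (h0.trans (hT0.trans hτ))
      have v4 : v τ ≤ 4 := by linarith [(hall τ (hT0.trans hτ)).2.1]
      have c0 : 300 / κ * d ≤ -(300 * G τ) := by
        have := mul_le_mul_of_nonneg_left hd2 (by positivity : 0 ≤ 300 / κ)
        refine this.trans (le_of_eq ?_); field_simp
      have c1 : κ' * (300 / κ * G τ) ≤ 150 * G τ := by
        have : κ' ≤ κ / 2 := by rw [hκ']; exact min_le_right _ _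
        calc _ ≤ κ / 2 * (300 / κ * G τ) := by gcongr
          _ = _ := by field_simp; norm_num
      have c2 : -(v τ * (v τ - 1) * (3 - (3 - 5 * rho s) * v τ)) ≤ 4 * 3 * 6 := by
        refine (neg_le_abs _).trans ?_
        rw [abs_mul, abs_mul]
        have := b1 τ (hT0.trans hτ)
        have h1 : |v τ| ≤ 4 := by rw [abs_le]; constructor <;> linarith
        have h2 : |v τ - 1| ≤ 3 := by rw [abs_le]; constructor <;> linarith
        gcongr
      have c3 := mul_le_mul_of_nonneg_right c2 gp.le
      have c4 : κ' * (v τ - 1) ^ 2 ≤ 2 * v τ * (1 + rho s * v τ) * (v τ - 1) ^ 2 := by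
        refine mul_le_mul_of_nonneg_right ?_ (sq_nonneg _)
        have : κ' ≤ 2 * m := by rw [hκ']; exact min_le_left _ _
        have := low τ hτ
        have := mul_pos vp (mul_pos (by linarith : 0 < rho s) vp)
        linarith
      rw [Qe]; unfold b0v
      norm_num
      linarith
    · have := (h.pos τ (h0.trans (hT0.trans hτ))).2
      positivity
  have tL2 : Tendsto (fun τ => (v τ - 1) ^ 2) atTop (𝓝 0) := by
    have := tL.sub (tG.const_mul (300 / κ))
    simpa using this
  have := tL2.sqrt
  simp only [sqrt_sq_eq_abs, sqrt_zero] at this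
  have := (tendsto_zero_iff_abs_tendsto_zero _).2 this
  simpa using this.add_const 1

/-- The left orbit exits the sonic region, stays in `G < 1` and converges to `v = 1`, `G = 0`. -/
lemma LOrb.final (h : LOrb s v G) (hs : s < sS) {n : ℕ} (ho : Odd n) (hn : 151 ≤ n)
    (hk : mu s * n < lam s)
    (h0 : s < v 0) (hε : v 0 - s ≤ eps s)
    (hθ : (v 0 - s) * (lam s * Lb n) ≤ lam s - mu s * n)
    (hD : 1 - 1 / G 0 - ev (Tr s n) (s - v 0) < 0) (hQ : Qv (rho s) (v 0) (G 0) < 0) :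
    (∃ Gm < 1, ∀ τ, 0 ≤ τ → G τ ≤ Gm ∧ v τ ≤ 4) ∧ Tendsto v atTop (𝓝 1) ∧
      Tendsto G atTop (𝓝 0) := by
  have hsb := Dm_bounds h.good.mem
  have he := h.good.eps_small
  obtain ⟨τe, e0, e1, e2, e3, e4⟩ := h.phase1 ho hn hk h0 hε hθ hD hQ
  obtain ⟨g1, g4⟩ := e4 τe ⟨e0, le_rfl⟩
  have hd := h.dQ e0 g4 (by linarith) e1
  have hpos : 0 < 2 * b0v (rho s) (v τe) * Av (rho s) (v τe) (G τe) := by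
    rw [Av_eq, e1]
    have hb0 := b0_near h.good.mem (show s - 0.1 ≤ v τe by linarith)
    have kk := kk_pos h.good.mem (by linarith) (show v τe ≤ s + 0.01 by linarith)
    have : 0 < 1 - G τe := by linarith
    have : 0 < 8 / 5 - (3 / 5 - rho s) * v τe := by linarith
    have : 0 < b0v (rho s) (v τe) := by linarith
    rw [mul_zero, zero_add]; positivity
  have ev1 : ∀ᶠ τ in 𝓝[>] τe, 0 < Qv (rho s) (v τ) (G τ) := by
    have := (hasDerivAt_iff_tendsto_slope.1 hd).mono_left
      (nhdsWithin_mono τe (fun x hx => (ne_of_gt hx : x ≠ τe)) : 𝓝[>] τe ≤ 𝓝[≠] τe)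
    filter_upwards [this.eventually (lt_mem_nhds hpos), self_mem_nhdsWithin] with τ h1 h2
    rw [slope_def_field, e1, sub_zero] at h1
    exact (div_pos_iff_of_pos_right (sub_pos.2 h2)).1 h1
  have ev2 : ∀ᶠ τ in 𝓝 τe, G τ < 1 ∧ v τ < s + eps s :=
    (h.cG.continuousAt.eventually (gt_mem_nhds g1)).and
      (h.cv.continuousAt.eventually (gt_mem_nhds e3))
  obtain ⟨r, hr0, hr⟩ := Metric.eventually_nhds_iff.1 ev2
  obtain ⟨τ2, q1, q2, q3⟩ := (ev1.and ((eventually_mem_nhdsWithin (a := τe) (s := Ioi τe)).and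
    (nhdsWithin_le_nhds (gt_mem_nhds (show τe < τe + r by linarith))))).exists
  have q2 : τe < τ2 := q2
  have q3 : τ2 < τe + r := q3
  have near : ∀ τ, τe ≤ τ → τ ≤ τ2 → G τ < 1 ∧ v τ < s + eps s := fun τ a b =>
    hr (by rw [Real.dist_eq, abs_lt]; constructor <;> linarith)
  have n2 := near τ2 q2.le le_rfl
  have q0 : 0 ≤ τ2 := e0.trans q2.le
  obtain ⟨G1, hG1, hall⟩ := h.phase2 q0 hs n2.1 n2.2 q1
  refine ⟨?_, h.after q0 hs hG1 hall⟩
  have hini : ∀ τ ∈ Icc 0 τ2, G τ < 1 ∧ v τ ≤ 4 := fun τ hτ => by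
    rcases le_total τ τe with a | a
    · exact e4 τ ⟨hτ.1, a⟩
    · have := near τ a hτ.2
      exact ⟨this.1, by linarith⟩
  obtain ⟨x, hx, hmax⟩ := (isCompact_Icc (a := (0 : ℝ)) (b := τ2)).exists_isMaxOn
    ⟨0, le_rfl, q0⟩ h.cG.continuousOn
  refine ⟨max G1 (G x), max_lt hG1 (hini x hx).1, fun τ hτ => ?_⟩
  rcases le_total τ τ2 with a | a
  · exact ⟨le_max_of_le_right (hmax ⟨hτ, a⟩), (hini τ ⟨hτ, a⟩).2⟩
  · obtain ⟨b1, b2, -⟩ := hall τ a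
    exact ⟨le_max_of_le_left b1.le, by linarith⟩

end

lemma small_sign_neg {R : ℝ} (hR : 0 < R) {f : PowerSeries ℝ} (hf : Cv R f) {k : ℕ}
    (hk : ∀ j < k, coeff j f = 0) (hp : 0 < (-1) ^ k * coeff k f) :
    ∀ᶠ t in 𝓝[>] (0 : ℝ), 0 < ev f (-t) := by
  have e : ∀ t, ev (rescale (-1) f) t = ev f (-t) := fun t => by
    simp only [ev, coeff_rescale]
    congr 1; ext n
    rw [neg_eq_neg_one_mul t, mul_pow]; ring
  have := small_sign hR (f := rescale (-1) f) (k := k) (fun x hx => by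
      have := hf (-x) (by rwa [abs_neg])
      refine this.congr fun n => ?_
      rw [coeff_rescale, neg_eq_neg_one_mul x, mul_pow]
      congr 1; ring) (fun j hj => by rw [coeff_rescale, hk j hj, mul_zero])
    (by rw [coeff_rescale]; exact hp)
  filter_upwards [this] with t ht
  rwa [e] at ht

/-- Every point of the smooth curve on the far side of the sonic line, close enough to it, starts an
orbit converging to `v = 1`, `G = 0`. -/
lemma left_orbit {s : ℝ} (h : Good s) (hs : s < sS) {n : ℕ} (ho : Odd n) (hn : 151 ≤ n)
    (hk : mu s * n < lam s ∧ lam s < mu s * (n + 1)) {R : ℝ} (hR : 0 < R) (hY : Cv R (Yf s)) :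
    ∀ᶠ t in 𝓝[>] (0 : ℝ), ev (Yf s) (-t) < 0 ∧ ∃ v G : ℝ → ℝ, v 0 = s + t ∧
      G 0 = 1 / (1 - ev (Yf s) (-t)) ∧ Continuous v ∧ Continuous G ∧
      (∀ τ, 0 ≤ τ → HasDerivAt v (-(v τ * Qv (rho s) (v τ) (G τ))) τ ∧
        HasDerivAt G (-(2 * G τ * Av (rho s) (v τ) (G τ))) τ ∧ 0 < v τ ∧ 0 < G τ) ∧
      (∃ Gm < 1, ∀ τ, 0 ≤ τ → G τ ≤ Gm) ∧ Tendsto v atTop (𝓝 1) ∧ Tendsto G atTop (𝓝 0) := by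
  have hsb := Dm_bounds h.mem
  have ha1 := a1_pos h.mem hs
  have c0 : coeff 0 (Yf s) = 0 := by rw [Yf, coeff_mk, aS_zero]
  have c1 : coeff 1 (Yf s) = a1 s := by rw [Yf, coeff_mk, aS_one]
  have s1 := small_sign_neg hR (f := -Yf s) hY.neg (k := 1) (fun j hj => by
    rw [Nat.lt_one_iff.1 hj, map_neg, c0, neg_zero]) (by rw [map_neg, c1]; linarith)
  have s2 := small_sign_neg hR (f := Tr s n - Yf s) (k := n + 1)
    ((cv_of_finite n (coeff_Tr_gt s n) R).sub hY) (fun j hj => by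
      rw [map_sub, coeff_Tr s n j, if_pos (by omega), Yf, coeff_mk, sub_self]) (by
      rw [map_sub, coeff_Tr_gt s n _ (by omega), Yf, coeff_mk, (Odd.add_one ho).neg_one_pow,
        aS_eq s (by omega)]
      have := num_pos h (m := n) (by omega) hk.1
      have d : lam s - mu s * (n + 1 : ℕ) < 0 := by push_cast; linarith
      have := div_neg_of_pos_of_neg this d
      linarith)
  have s3 := small_sign_neg hR (f := VBs s * Yf s - VPs s) (k := 1)
    (((cv_VBs R s).mul hY).sub (cv_VPs R s)) (fun j hj => by
      rw [Nat.lt_one_iff.1 hj]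
      rw [coeff_zero_eq_constantCoeff] at c0
      simp [VPs, c0]) (by
      have := h.mu0
      simp [VPs, VBs, c0, c1, coeff_mul, coeff_X_pow,
        Finset.Nat.antidiagonal_succ, coeff_X]
      unfold mu at this
      linarith)
  have hlim : ∀ᶠ t in 𝓝[>] (0 : ℝ), t < R ∧ t < eps s ∧ t * (lam s * Lb n) < lam s - mu s * n := by
    refine nhdsWithin_le_nhds ((gt_mem_nhds hR).and ((gt_mem_nhds (eps_pos h.mem hs)).and ?_))
    have : Tendsto (fun t => t * (lam s * Lb n)) (𝓝 0) (𝓝 (0 * (lam s * Lb n))) :=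
      (continuous_id.mul continuous_const).tendsto 0
    exact this.eventually (gt_mem_nhds (by linarith))
  filter_upwards [s1, s2, s3, hlim, self_mem_nhdsWithin] with t t1 t2 t3 t4 t0
  have t0 : 0 < t := t0
  obtain ⟨tR, tε, tθ⟩ := t4
  have htR : |(-t)| < R := by rw [abs_neg, abs_of_pos t0]; exact tR
  rw [ev_neg] at t1
  rw [ev_sub (cv_of_finite n (coeff_Tr_gt s n) R) hY htR] at t2
  rw [ev_sub ((cv_VBs R s).mul hY) (cv_VPs R s) htR, ev_mul (cv_VBs R s) hY htR, ev_VPs h.mem, ev_VBs,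
    sub_neg_eq_add] at t3
  obtain ⟨y, hy⟩ : ∃ y, y = ev (Yf s) (-t) := ⟨_, rfl⟩
  rw [← hy] at t1 t2 t3 ⊢
  have hG0 : 0 < 1 / (1 - y) := one_div_pos.2 (by linarith)
  obtain ⟨v, G, hL, e1, e2⟩ := exists_LOrb h (v0 := s + t) (G0 := 1 / (1 - y)) (by linarith) hG0
  have ey : 1 - 1 / G 0 = y := by rw [e2, one_div_one_div]; ring
  have ex : s - v 0 = -t := by rw [e1]; ring
  obtain ⟨⟨Gm, g1, g2⟩, g3, g4⟩ := hL.final hs ho hn hk.1 (by linarith) (by linarith)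
    (by rw [show v 0 - s = t by linarith]; exact tθ.le) (by rw [ey, ex]; linarith) (by
      have e : Qv (rho s) (v 0) (G 0) = G 0 * (Pv (rho s) (v 0) - b0v (rho s) (v 0) * y) := by
        rw [← ey]; have : G 0 ≠ 0 := by rw [e2]; exact hG0.ne'
        unfold Qv; field_simp; ring
      rw [e, e2, e1]
      refine mul_neg_of_pos_of_neg hG0 ?_
      have : (s + t) * (Pv (rho s) (s + t) - b0v (rho s) (s + t) * y) < 0 := by linarith
      exact neg_of_mul_neg_right this (by linarith))
  refine ⟨by linarith, v, G, e1, e2, hL.cv, hL.cG, fun τ hτ => ?_, ⟨Gm, g1, fun τ hτ => (g2 τ hτ).1⟩, g3, g4⟩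
  obtain ⟨a, b⟩ := g2 τ hτ
  obtain ⟨c, d⟩ := hL.pos τ hτ
  exact ⟨hL.dv τ hτ b (by linarith), hL.dG τ hτ b (by linarith), c, d⟩

/-! ### From the phase plane to the autonomous system, and gluing -/

lemma smooth_of_autonomous {E : Type*} [NormedAddCommGroup E] [NormedSpace ℝ E] {F : E → E}
    {K : Set E} {c : ℝ → E} {U : Set ℝ} (hU : IsOpen U) (hF : ContDiffOn ℝ (⊤ : ℕ∞) F K)
    (hK : ∀ x ∈ U, c x ∈ K) (hd : ∀ x ∈ U, HasDerivAt c (F (c x)) x) :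
    ContDiffOn ℝ (⊤ : ℕ∞) c U := by
  rw [contDiffOn_infty]
  intro n
  induction n with
  | zero =>
    rw [Nat.cast_zero, contDiffOn_zero]
    exact fun x hx => (hd x hx).continuousAt.continuousWithinAt
  | succ n ih =>
    push_cast
    rw [contDiffOn_succ_iff_deriv_of_isOpen hU]
    refine ⟨fun x hx => (hd x hx).differentiableAt.differentiableWithinAt, by simp, ?_⟩
    exact ((hF.of_le (by exact_mod_cast le_top)).comp ih hK).congr fun x hx => (hd x hx).deriv

/-- `(W, Z)` is differentiable at `x` and satisfies the autonomous system there. -/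
def Sol (ρ : ℝ) (W Z : ℝ → ℝ) (x : ℝ) : Prop :=
  ∃ w z, HasDerivAt W w x ∧ HasDerivAt Z z x ∧
    DW (7 / 5) (W x) (Z x) * w = NW (7 / 5) (1 + ρ) (W x) (Z x) ∧
    DZ (7 / 5) (W x) (Z x) * z = NZ (7 / 5) (1 + ρ) (W x) (Z x)

/-- Away from the sonic lines. -/
def Reg (W Z : ℝ → ℝ) (x : ℝ) : Prop :=
  DW (7 / 5) (W x) (Z x) ≠ 0 ∧ DZ (7 / 5) (W x) (Z x) ≠ 0

/-- The function equal to `f` up to `b` and to `g` afterwards. -/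
def gl (b : ℝ) (f g : ℝ → ℝ) (x : ℝ) : ℝ := if x ≤ b then f x else g x

section
variable {ρ a b : ℝ} {f₁ f₂ g₁ g₂ : ℝ → ℝ}

lemma gl_le {f g : ℝ → ℝ} {x : ℝ} (h : x ≤ b) : gl b f g x = f x := if_pos h
lemma gl_gt {f g : ℝ → ℝ} {x : ℝ} (h : b < x) : gl b f g x = g x := if_neg (not_le.2 h)
lemma gl_lt_ev {f g : ℝ → ℝ} {x : ℝ} (h : x < b) : gl b f g =ᶠ[𝓝 x] f := by
  filter_upwards [Iio_mem_nhds h] with y hy using gl_le (le_of_lt hy)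
lemma gl_gt_ev {f g : ℝ → ℝ} {x : ℝ} (h : b < x) : gl b f g =ᶠ[𝓝 x] g := by
  filter_upwards [Ioi_mem_nhds h] with y hy using gl_gt hy

lemma Sol.congr {x : ℝ} (h : Sol ρ f₁ f₂ x) (e1 : g₁ =ᶠ[𝓝 x] f₁) (e2 : g₂ =ᶠ[𝓝 x] f₂) :
    Sol ρ g₁ g₂ x := by
  obtain ⟨w, z, hw, hz, h1, h2⟩ := h
  refine ⟨w, z, hw.congr_of_eventuallyEq e1, hz.congr_of_eventuallyEq e2, ?_⟩
  rw [e1.eq_of_nhds, e2.eq_of_nhds]; exact ⟨h1, h2⟩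

lemma Sol.shift {x k : ℝ} (h : Sol ρ f₁ f₂ (x - k)) :
    Sol ρ (fun x => f₁ (x - k)) (fun x => f₂ (x - k)) x := by
  obtain ⟨w, z, hw, hz, h1⟩ := h
  exact ⟨w, z, hw.comp_sub_const x k, hz.comp_sub_const x k, h1⟩

lemma Sol.glue (hf : ∀ x ∈ Icc a b, Sol ρ f₁ f₂ x) (hg : ∀ x, b ≤ x → Sol ρ g₁ g₂ x)
    (e1 : f₁ b = g₁ b) (e2 : f₂ b = g₂ b) (hD : Reg g₁ g₂ b) (x : ℝ) (hx : a ≤ x) :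
    Sol ρ (gl b f₁ g₁) (gl b f₂ g₂) x := by
  rcases lt_trichotomy x b with h | h | h
  · exact (hf x ⟨hx, h.le⟩).congr (gl_lt_ev h) (gl_lt_ev h)
  · subst h
    obtain ⟨w, z, hw, hz, h1, h2⟩ := hf x ⟨hx, le_rfl⟩
    obtain ⟨w', z', hw', hz', h1', h2'⟩ := hg x le_rfl
    rw [e1, e2] at h1 h2
    have ew : w' = w := mul_left_cancel₀ hD.1 (h1'.trans h1.symm)
    have ez : z' = z := mul_left_cancel₀ hD.2 (h2'.trans h2.symm)
    subst ew ez
    refine ⟨w', z', glue_at hw hw' e1, glue_at hz hz' e2, ?_⟩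
    rw [gl_le le_rfl, gl_le le_rfl, e1, e2]
    exact ⟨h1, h2⟩
  · exact (hg x h.le).congr (gl_gt_ev h) (gl_gt_ev h)

lemma Reg.glue (hf : ∀ x ∈ Icc a b, Reg f₁ f₂ x) {x : ℝ} (hg : b < x → Reg g₁ g₂ x) (hx : a ≤ x) :
    Reg (gl b f₁ g₁) (gl b f₂ g₂) x := by
  unfold Reg
  rcases le_or_gt x b with h | h
  · rw [gl_le h, gl_le h]; exact hf x ⟨hx, h⟩
  · rw [gl_gt h, gl_gt h]; exact hg h

end

/-- A solution on `[a, ∞)` which tends to the origin and meets the sonic lines only at the sonic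
point, smoothly. -/
structure Tail (s a : ℝ) (W Z : ℝ → ℝ) : Prop where
  sol : ∀ x, a ≤ x → Sol (rho s) W Z x
  sonic : ∃ c, a < c ∧ W c = 6 / s - 1 ∧ Z c = -4 / s - 1 ∧ ContDiffAt ℝ (⊤ : ℕ∞) W c ∧
    ContDiffAt ℝ (⊤ : ℕ∞) Z c ∧ ∀ x, a ≤ x → x ≠ c → Reg W Z x
  lim : Tendsto W atTop (𝓝 0) ∧ Tendsto Z atTop (𝓝 0)

section
variable {s a b : ℝ} {f₁ f₂ g₁ g₂ : ℝ → ℝ}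

lemma tendsto_gl {f g : ℝ → ℝ} (h : Tendsto g atTop (𝓝 0)) : Tendsto (gl b f g) atTop (𝓝 0) :=
  h.congr' (by filter_upwards [eventually_gt_atTop b] with x hx using (gl_gt hx).symm)

lemma Tail.shift (h : Tail s a g₁ g₂) (b : ℝ) :
    Tail s b (fun x => g₁ (x - (b - a))) (fun x => g₂ (x - (b - a))) := by
  obtain ⟨c, h1, h2, h3, h4, h5, h6⟩ := h.sonic
  have t : Tendsto (fun x : ℝ => x - (b - a)) atTop atTop :=
    tendsto_atTop_add_const_right _ _ tendsto_id
  have hs : ContDiffAt ℝ (⊤ : ℕ∞) (fun x : ℝ => x - (b - a)) (c + (b - a)) := by fun_prop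
  refine ⟨fun x hx => (h.sol _ (by linarith)).shift, ⟨c + (b - a), by linarith, ?_, ?_, ?_, ?_,
    fun x hx hc => h6 _ (by linarith) fun h => hc (by linarith)⟩, h.lim.1.comp t, h.lim.2.comp t⟩
  · rw [add_sub_cancel_right]; exact h2
  · rw [add_sub_cancel_right]; exact h3
  · exact ContDiffAt.comp (c + (b - a)) (by rwa [add_sub_cancel_right]) hs
  · exact ContDiffAt.comp (c + (b - a)) (by rwa [add_sub_cancel_right]) hs

lemma Tail.prepend (hab : a ≤ b) (hf : ∀ x ∈ Icc a b, Sol (rho s) f₁ f₂ x ∧ Reg f₁ f₂ x)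
    (h : Tail s b g₁ g₂) (e1 : f₁ b = g₁ b) (e2 : f₂ b = g₂ b) :
    Tail s a (gl b f₁ g₁) (gl b f₂ g₂) := by
  obtain ⟨c, h1, h2, h3, h4, h5, h6⟩ := h.sonic
  refine ⟨Sol.glue (fun x hx => (hf x hx).1) h.sol e1 e2 (h6 b le_rfl h1.ne),
    ⟨c, hab.trans_lt h1, by rwa [gl_gt h1], by rwa [gl_gt h1],
      h4.congr_of_eventuallyEq (gl_gt_ev h1), h5.congr_of_eventuallyEq (gl_gt_ev h1),
      fun x hx hc => Reg.glue (fun x hx => (hf x hx).2) (fun hb => h6 x hb.le hc) hx⟩,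
    tendsto_gl h.lim.1, tendsto_gl h.lim.2⟩

end

/-- `W` and `Z` in terms of `v = 1 / (1 + (W + Z) / 2)` and `y = 1 - u² / σ²`. -/
def Wvy (v y : ℝ) : ℝ := (1 + 5 / √(1 - y)) / v - 1
def Zvy (v y : ℝ) : ℝ := (1 - 5 / √(1 - y)) / v - 1

lemma DW_vy {v y : ℝ} (h0 : v ≠ 0) : DW (7 / 5) (Wvy v y) (Zvy v y) = (1 + 1 / √(1 - y)) / v := by
  unfold DW alphaF Wvy Zvy; field_simp; ring
lemma DZ_vy {v y : ℝ} (h0 : v ≠ 0) : DZ (7 / 5) (Wvy v y) (Zvy v y) = (1 - 1 / √(1 - y)) / v := by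
  unfold DZ alphaF Wvy Zvy; field_simp; ring

lemma reg_vy {v y : ℝ → ℝ} {x : ℝ} (h0 : 0 < v x) (h1 : y x < 1) (h2 : y x ≠ 0) :
    Reg (fun x => Wvy (v x) (y x)) (fun x => Zvy (v x) (y x)) x := by
  have hq : 0 < √(1 - y x) := sqrt_pos.2 (by linarith)
  unfold Reg
  rw [DW_vy h0.ne', DZ_vy h0.ne']
  refine ⟨by positivity, div_ne_zero (fun h => h2 ?_) h0.ne'⟩
  have : √(1 - y x) = 1 := by
    have : 1 / √(1 - y x) = 1 := by linarith
    rwa [div_eq_one_iff_eq hq.ne', eq_comm] at this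
  have := sq_sqrt (show 0 ≤ 1 - y x by linarith)
  rw [‹√(1 - y x) = 1›] at this
  linarith

lemma sol_vy {ρ : ℝ} {v y : ℝ → ℝ} {x dv dy : ℝ} (hv : HasDerivAt v dv x) (hy : HasDerivAt y dy x)
    (h0 : v x ≠ 0) (h1 : y x < 1) (h2 : y x ≠ 0)
    (e1 : y x * dv = v x * (Pv ρ (v x) - b0v ρ (v x) * y x))
    (e2 : y x * dy = -2 * (1 - y x) * (a0v ρ (v x) * y x - 6 / 5 * Pv ρ (v x))) :
    Sol ρ (fun x => Wvy (v x) (y x)) (fun x => Zvy (v x) (y x)) x := by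
  have h1' : 0 < 1 - y x := by linarith
  have hq : 0 < √(1 - y x) := sqrt_pos.2 h1'
  have hq2 := sq_sqrt h1'.le
  have dg : HasDerivAt (fun x => 5 / √(1 - y x)) (5 * dy / (2 * √(1 - y x) ^ 3)) x := by
    have : HasDerivAt (fun x => 5 / √(1 - y x)) _ x :=
      (hasDerivAt_const x (5 : ℝ)).div ((hy.const_sub 1).sqrt h1'.ne') hq.ne'
    exact this.congr_deriv (by field_simp; ring)
  have dW : HasDerivAt (fun x => Wvy (v x) (y x)) _ x :=
    ((dg.const_add 1).div hv h0).sub_const 1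
  have dZ : HasDerivAt (fun x => Zvy (v x) (y x)) _ x :=
    ((dg.const_sub 1).div hv h0).sub_const 1
  refine ⟨_, _, dW, dZ, ?_, ?_⟩
  all_goals
    first | rw [DW_vy h0] | rw [DZ_vy h0]
    refine mul_left_cancel₀ h2 ?_
    unfold Pv b0v at e1
    unfold Pv a0v at e2
    obtain ⟨q, hqe⟩ : ∃ q, q = √(1 - y x) := ⟨_, rfl⟩
    rw [← hqe] at hq hq2
    have hy2 : y x = 1 - q ^ 2 := by linarith
    simp only [NW, NZ, Wvy, Zvy, alphaF, ← hqe]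
    rw [hy2] at e1 e2 h2 ⊢
    rw [mul_comm, ← eq_div_iff h2] at e1 e2
    subst e1 e2
    have hq0 := hq.ne'
    field_simp
    ring

/-! ### The solution through the sonic point -/

/-- By continuity the equations extend to a removable exceptional point. -/
lemma Sol.of_punctured {ρ x : ℝ} {W Z : ℝ → ℝ} (hW : ContDiffAt ℝ (⊤ : ℕ∞) W x)
    (hZ : ContDiffAt ℝ (⊤ : ℕ∞) Z x) (h : ∀ᶠ ξ in 𝓝[≠] x, Sol ρ W Z ξ) : Sol ρ W Z x := by
  have d1 : ∀ f : ℝ → ℝ, ContDiffAt ℝ (⊤ : ℕ∞) f x →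
      ContinuousAt f x ∧ ContinuousAt (deriv f) x ∧ HasDerivAt f (deriv f x) x := fun f hf =>
    ⟨hf.continuousAt, (hf.continuousAt_fderiv (by simp)).clm_apply continuousAt_const, (hf.differentiableAt (by simp)).hasDerivAt⟩
  obtain ⟨w1, w2, w3⟩ := d1 W hW
  obtain ⟨z1, z2, z3⟩ := d1 Z hZ
  have key : ∀ D N d : ℝ → ℝ, ContinuousAt D x → ContinuousAt N x → ContinuousAt d x →
      (∀ᶠ ξ in 𝓝[≠] x, D ξ * d ξ = N ξ) → D x * d x = N x := fun D N d hD hN hd he =>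
    tendsto_nhds_unique (((hD.mul hd).tendsto.mono_left nhdsWithin_le_nhds).congr' he)
      (hN.tendsto.mono_left nhdsWithin_le_nhds)
  refine ⟨_, _, w3, z3, ?_, ?_⟩
  · refine key (fun ξ => DW (7 / 5) (W ξ) (Z ξ)) (fun ξ => NW (7 / 5) (1 + ρ) (W ξ) (Z ξ)) (deriv W)
      (by unfold DW; fun_prop) (by unfold NW; fun_prop) w2 ?_
    filter_upwards [h] with ξ ⟨w, z, hw, hz, e1, e2⟩
    rw [hw.deriv]; exact e1
  · refine key (fun ξ => DZ (7 / 5) (W ξ) (Z ξ)) (fun ξ => NZ (7 / 5) (1 + ρ) (W ξ) (Z ξ)) (deriv Z)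
      (by unfold DZ; fun_prop) (by unfold NZ; fun_prop) z2 ?_
    filter_upwards [h] with ξ ⟨w, z, hw, hz, e1, e2⟩
    rw [hz.deriv]; exact e2

lemma mid_orbit {s R : ℝ} (h : s ∈ Dm) (hs : s < sS) (hm : 0 < mu s) (hR : 0 < R)
    (hY : Cv R (Yf s)) (hres : Res s (Yf s) = 0) :
    ∃ r > 0, ∃ θ : ℝ → ℝ, θ 0 = 0 ∧ StrictMono θ ∧ Function.Surjective θ ∧
      (∀ x, |θ x| < r → Sol (rho s) (fun x => Wvy (s + θ x) (ev (Yf s) (-θ x)))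
          (fun x => Zvy (s + θ x) (ev (Yf s) (-θ x))) x ∧
        (x ≠ 0 → Reg (fun x => Wvy (s + θ x) (ev (Yf s) (-θ x)))
          (fun x => Zvy (s + θ x) (ev (Yf s) (-θ x))) x)) ∧
      ContDiffAt ℝ (⊤ : ℕ∞) (fun x => Wvy (s + θ x) (ev (Yf s) (-θ x))) 0 ∧
      ContDiffAt ℝ (⊤ : ℕ∞) (fun x => Zvy (s + θ x) (ev (Yf s) (-θ x))) 0 ∧
      ev (Yf s) 0 = 0 := by
  have hsb := Dm_bounds h
  have ha1 := a1_pos h hs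
  have c0 : coeff 0 (Yf s) = 0 := by rw [Yf, coeff_mk, aS_zero]
  have c1 : coeff 1 (Yf s) = a1 s := by rw [Yf, coeff_mk, aS_one]
  obtain ⟨f, hf⟩ : ∃ f, f = VPs s - VBs s * Yf s := ⟨_, rfl⟩
  have hfc : Cv R f := by rw [hf]; exact (cv_VPs R s).sub ((cv_VBs R s).mul hY)
  have f0 : ∀ j < 1, coeff j f = 0 := fun j hj => by
    rw [Nat.lt_one_iff.1 hj, hf]
    rw [coeff_zero_eq_constantCoeff] at c0 ⊢
    simp [VPs, c0]
  have f1 : coeff 1 f = mu s := by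
    rw [hf]
    simp [VPs, VBs, c0, c1, coeff_mul, coeff_X_pow,
        Finset.Nat.antidiagonal_succ, coeff_X]
    unfold mu
    ring
  obtain ⟨A, hA⟩ : ∃ A, A = ev (sh 1 (Yf s)) := ⟨_, rfl⟩
  obtain ⟨B, hB⟩ : ∃ B, B = ev (sh 1 f) := ⟨_, rfl⟩
  have eA : ∀ x, |x| < R → ev (Yf s) x = x * A x := fun x hx => by
    rw [ev_shift hY (k := 1) (fun j hj => by rw [Nat.lt_one_iff.1 hj, c0]) hx, pow_one, hA]
  have eB : ∀ x, |x| < R →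
      (s - x) * (Pv (rho s) (s - x) - b0v (rho s) (s - x) * ev (Yf s) x) = x * B x := fun x hx => by
    have := ev_shift hfc (k := 1) f0 hx
    rw [hf, ev_sub (cv_VPs R s) ((cv_VBs R s).mul hY) hx, ev_mul (cv_VBs R s) hY hx, ev_VPs h, ev_VBs,
      pow_one, ← hf, ← hB] at this
    linarith
  have sA : ContDiffOn ℝ (⊤ : ℕ∞) A (Ioo (-R) R) := by rw [hA]; exact ev_contDiffOn (hY.sh 1)
  have sB : ContDiffOn ℝ (⊤ : ℕ∞) B (Ioo (-R) R) := by rw [hB]; exact ev_contDiffOn (hfc.sh 1)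
  have sY := ev_contDiffOn hY
  have m0 : Ioo (-R) R ∈ 𝓝 (0 : ℝ) := Ioo_mem_nhds (by linarith) hR
  have A0 : 0 < A 0 := by rw [hA, ev_zero_right, coeff_sh, c1]; exact ha1
  have B0 : 0 < B 0 := by rw [hB, ev_zero_right, coeff_sh, f1]; exact hm
  have Y0 : ev (Yf s) 0 = 0 := by rw [ev_zero_right, c0]
  have hev : ∀ᶠ x in 𝓝 (0 : ℝ), 0 < A x ∧ 0 < B x ∧ ev (Yf s) x < 1 ∧ |x| < R ∧ |x| < 1 := by
    refine ((sA.contDiffAt m0).continuousAt.eventually (lt_mem_nhds A0)).and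
      (((sB.contDiffAt m0).continuousAt.eventually (lt_mem_nhds B0)).and
      (((sY.contDiffAt m0).continuousAt.eventually (gt_mem_nhds (by rw [Y0]; exact one_pos))).and ?_))
    have := continuous_abs.tendsto (0 : ℝ)
    rw [abs_zero] at this
    exact (this.eventually (gt_mem_nhds hR)).and (this.eventually (gt_mem_nhds one_pos))
  obtain ⟨e, e0, he⟩ := Metric.eventually_nhds_iff.1 hev
  obtain ⟨r, hr0, hre⟩ := exists_between e0
  have hr : ∀ x, |x| ≤ r → 0 < A x ∧ 0 < B x ∧ ev (Yf s) x < 1 ∧ |x| < R ∧ |x| < 1 := fun x hx =>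
    he (by rw [Real.dist_eq, sub_zero]; exact hx.trans_lt hre)
  have sub : Icc (-r) r ⊆ Ioo (-R) R := fun x hx => abs_lt.1 (hr x (abs_le.2 hx)).2.2.2.1
  have hAB : ContDiffOn ℝ (⊤ : ℕ∞) (fun x => A x / B x) (Icc (-r) r) :=
    (sA.mono sub).div (sB.mono sub) fun x hx => (hr x (abs_le.2 hx)).2.1.ne'
  obtain ⟨c, hc, hcb⟩ := pos_lb isCompact_Icc hAB.continuousOn fun x hx =>
    div_pos (hr x (abs_le.2 hx)).1 (hr x (abs_le.2 hx)).2.1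
  have mcl : ∀ x, cl1 r (-x) ∈ Icc (-r) r := fun x => abs_le.1 (abs_cl1 hr0.le _)
  obtain ⟨θ, t0, tm, ts, td⟩ := reparam (p := fun x => A (cl1 r (-x)) / B (cl1 r (-x)))
    (hAB.continuousOn.comp_continuous ((cl1_lip r).continuous.comp continuous_neg) mcl) hc
    (fun x => hcb _ (mcl x))
  have td' : ∀ x, |θ x| < r → HasDerivAt θ (B (-θ x) / A (-θ x)) x := fun x hx =>
    (td x).congr_deriv (by rw [cl1_of_abs (by rw [abs_neg]; exact hx.le), one_div_div])
  have tc : Continuous θ := continuous_iff_continuousAt.2 fun x => (td x).continuousAt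
  have hU : IsOpen {x | |θ x| < r} := isOpen_lt tc.abs continuous_const
  have hr' : ∀ x, |θ x| < r → 0 < A (-θ x) ∧ 0 < B (-θ x) ∧ ev (Yf s) (-θ x) < 1 ∧ |-θ x| < R ∧
      |-θ x| < 1 := fun x hx => hr _ (by rw [abs_neg]; exact hx.le)
  have hv : ∀ x, |θ x| < r → 0 < s + θ x := fun x hx => by
    have := (abs_lt.1 (hr' x hx).2.2.2.2).2; linarith
  have dy : ∀ x, |θ x| < r → HasDerivAt (fun x => ev (Yf s) (-θ x))
      (ev (dd (Yf s)) (-θ x) * -(B (-θ x) / A (-θ x))) x := fun x hx =>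
    HasDerivAt.comp (h₂ := ev (Yf s)) (h := fun x => -θ x) x
      (ev_hasDerivAt hY (hr' x hx).2.2.2.1) (td' x hx).fun_neg
  have y0 : ∀ x, |θ x| < r → x ≠ 0 → ev (Yf s) (-θ x) ≠ 0 := fun x hx h0 => by
    rw [eA _ (hr' x hx).2.2.2.1]
    refine mul_ne_zero (neg_ne_zero.2 fun h => h0 (tm.injective (h.trans t0.symm))) (hr' x hx).1.ne'
  have sol : ∀ x, |θ x| < r → x ≠ 0 → Sol (rho s) (fun x => Wvy (s + θ x) (ev (Yf s) (-θ x)))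
          (fun x => Zvy (s + θ x) (ev (Yf s) (-θ x))) x := fun x hx h0 => by
    have hA0 := (hr' x hx).1.ne'
    have hx' := (hr' x hx).2.2.2.1
    have e1 : ev (Yf s) (-θ x) * (B (-θ x) / A (-θ x)) =
        (s + θ x) * (Pv (rho s) (s + θ x) - b0v (rho s) (s + θ x) * ev (Yf s) (-θ x)) := by
      have := eB _ hx'
      rw [sub_neg_eq_add] at this
      rw [this, eA _ hx']
      field_simp
    refine sol_vy ((td' x hx).const_add s) (dy x hx) (hv x hx).ne' (hr' x hx).2.2.1 (y0 x hx h0) e1 ?_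
    have := ev_Res h hY hx'
    rw [hres, sub_neg_eq_add, ← e1] at this
    have z : ev (0 : PowerSeries ℝ) (-θ x) = 0 := by simp [ev]
    rw [z] at this
    linarith
  have ev0 : {x | |θ x| < r} ∈ 𝓝 (0 : ℝ) := hU.mem_nhds (by
    change |θ 0| < r
    rw [t0, abs_zero]; exact hr0)
  have tsm : ContDiffAt ℝ (⊤ : ℕ∞) θ 0 := by
    refine ContDiffOn.contDiffAt (smooth_of_autonomous hU (F := fun x => B (-x) / A (-x))
      (K := Icc (-r) r) ?_ (fun x hx => abs_le.1 (le_of_lt hx)) td') ev0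
    have n : ContDiffOn ℝ (⊤ : ℕ∞) (fun x : ℝ => -x) (Icc (-r) r) := contDiff_neg.contDiffOn
    have n' : MapsTo (fun x : ℝ => -x) (Icc (-r) r) (Icc (-r) r) := fun x hx =>
      ⟨neg_le_neg hx.2, by linarith [hx.1]⟩
    exact ((sB.mono sub).comp n n').div ((sA.mono sub).comp n n')
      fun x hx => (hr _ (abs_le.2 (n' hx))).1.ne'
  have ysm : ContDiffAt ℝ (⊤ : ℕ∞) (fun x => ev (Yf s) (-θ x)) 0 :=
    ContDiffAt.comp 0 (g := ev (Yf s)) (by rw [t0, neg_zero]; exact sY.contDiffAt m0) tsm.neg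
  have qsm : ContDiffAt ℝ (⊤ : ℕ∞) (fun x => 5 / √(1 - ev (Yf s) (-θ x))) 0 := by
    refine contDiffAt_const.div ((contDiffAt_const.sub ysm).sqrt ?_) ?_ <;> rw [t0, neg_zero, Y0] <;> simp
  have wsm : ContDiffAt ℝ (⊤ : ℕ∞) (fun x => Wvy (s + θ x) (ev (Yf s) (-θ x))) 0 :=
    ((contDiffAt_const.add qsm).div (contDiffAt_const.add tsm) (by rw [t0]; linarith)).sub
      contDiffAt_const
  have zsm : ContDiffAt ℝ (⊤ : ℕ∞) (fun x => Zvy (s + θ x) (ev (Yf s) (-θ x))) 0 :=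
    ((contDiffAt_const.sub qsm).div (contDiffAt_const.add tsm) (by rw [t0]; linarith)).sub
      contDiffAt_const
  refine ⟨r, hr0, θ, t0, tm, ts, fun x hx => ⟨?_, fun h0 => reg_vy (hv x hx) (hr' x hx).2.2.1
    (y0 x hx h0)⟩, wsm, zsm, Y0⟩
  rcases eq_or_ne x 0 with rfl | h0
  · refine Sol.of_punctured wsm zsm ?_
    filter_upwards [nhdsWithin_le_nhds ev0, self_mem_nhdsWithin] with ξ h1 h2 using sol ξ h1 h2
  · exact sol x hx h0

lemma left_piece {ρ : ℝ} {v G : ℝ → ℝ} (cG : Continuous G)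
    (hd : ∀ τ, 0 ≤ τ → HasDerivAt v (-(v τ * Qv ρ (v τ) (G τ))) τ ∧
        HasDerivAt G (-(2 * G τ * Av ρ (v τ) (G τ))) τ ∧ 0 < v τ ∧ 0 < G τ)
    (hG : ∃ Gm < 1, ∀ τ, 0 ≤ τ → G τ ≤ Gm) (tv : Tendsto v atTop (𝓝 1))
    (tG : Tendsto G atTop (𝓝 0)) :
    ∃ W Z : ℝ → ℝ, W 0 = Wvy (v 0) (1 - 1 / G 0) ∧ Z 0 = Zvy (v 0) (1 - 1 / G 0) ∧
      (∀ x, 0 ≤ x → Sol ρ W Z x ∧ Reg W Z x) ∧ Tendsto W atTop (𝓝 0) ∧ Tendsto Z atTop (𝓝 0) := by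
  obtain ⟨Gm, g1, g2⟩ := hG
  obtain ⟨θ, t0, tm, ts, td⟩ := reparam (p := fun τ => 1 - G (max τ 0)) (c := 1 - Gm)
    (by fun_prop) (by linarith) (fun τ => by linarith [g2 _ (le_max_right τ 0)])
  have tt : Tendsto θ atTop atTop := tm.monotone.tendsto_atTop_atTop fun b => (ts b).imp fun _ h => h.ge
  have sq : ∀ τ, 1 - (1 - 1 / G τ) = (G τ)⁻¹ := fun τ => by rw [one_div]; ring
  have five : ∀ τ, 5 / √(1 - (1 - 1 / G τ)) = 5 * √(G τ) := fun τ => by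
    rw [sq, sqrt_inv, div_inv_eq_mul]
  have key : ∀ x, 0 ≤ x → Sol ρ (fun x => Wvy (v (θ x)) (1 - 1 / G (θ x)))
      (fun x => Zvy (v (θ x)) (1 - 1 / G (θ x))) x ∧ Reg (fun x => Wvy (v (θ x)) (1 - 1 / G (θ x)))
      (fun x => Zvy (v (θ x)) (1 - 1 / G (θ x))) x := fun x hx => by
    have hθ : 0 ≤ θ x := by rw [← t0]; exact tm.monotone hx
    obtain ⟨dv, dG, v0, G0⟩ := hd _ hθ
    have hG1 : 1 - G (θ x) ≠ 0 := by have := g2 _ hθ; linarith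
    have tdx := (td x).congr_deriv (show _ = 1 / (1 - G (θ x)) by rw [max_eq_left hθ])
    have y1 : 1 - 1 / G (θ x) < 1 := by linarith [one_div_pos.2 G0]
    have y0 : 1 - 1 / G (θ x) ≠ 0 := fun h => hG1 (by
      have : 1 / G (θ x) = 1 := by linarith
      rw [div_eq_one_iff_eq G0.ne'] at this; linarith)
    have hv : HasDerivAt (fun x => v (θ x)) _ x := dv.comp x tdx
    have hy : HasDerivAt (fun x => 1 - 1 / G (θ x)) _ x :=
      (((hasDerivAt_const x (1 : ℝ)).fun_div (dG.comp x tdx) G0.ne').const_sub 1)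
    refine ⟨sol_vy hv hy v0.ne' y1 y0 ?_ ?_, reg_vy v0 y1 y0⟩
    · unfold Qv; field_simp; ring
    · unfold Av; simp only [Function.comp_def]; field_simp; ring
  refine ⟨_, _, by simp only [t0], by simp only [t0], key, ?_, ?_⟩
  · have : Tendsto (fun τ => (1 + 5 * √(G τ)) / v τ - 1) atTop (𝓝 ((1 + 5 * √0) / 1 - 1)) :=
      ((((tG.sqrt).const_mul 5).const_add 1).div tv one_ne_zero).sub_const 1
    rw [sqrt_zero, mul_zero, add_zero, div_one, sub_self] at this
    exact (this.comp tt).congr fun x => by simp only [Function.comp_def, Wvy, five]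
  · have : Tendsto (fun τ => (1 - 5 * √(G τ)) / v τ - 1) atTop (𝓝 ((1 - 5 * √0) / 1 - 1)) :=
      ((((tG.sqrt).const_mul 5).const_sub 1).div tv one_ne_zero).sub_const 1
    rw [sqrt_zero, mul_zero, sub_zero, div_one, sub_self] at this
    exact (this.comp tt).congr fun x => by simp only [Function.comp_def, Zvy, five]

lemma tail_exists {s : ℝ} (h : Good s) (hs : s < sS) {n : ℕ} (ho : Odd n) (hn : 151 ≤ n)
    (hk : mu s * n < lam s ∧ lam s < mu s * (n + 1)) {R : ℝ} (hR : 0 < R) (hY : Cv R (Yf s)) :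
    ∃ r > 0, ∀ x, 0 < x → x < r → ∃ a W Z, Tail s a W Z ∧ W a = Wvy (s - x) (ev (Yf s) x) ∧
      Z a = Zvy (s - x) (ev (Yf s) x) := by
  obtain ⟨r, hr, θ, t0, tm, ts, hm, sW, sZ, y0⟩ := mid_orbit h.mem hs h.mu0 hR hY
    (res_Yf h.mem fun j _ => no_res h.mu0 hk j)
  refine ⟨r, hr, fun x1 hx0 hx1 => ?_⟩
  obtain ⟨t, ⟨yt, v, G, v0, G0, -, cG, hd, hG, tv, tG⟩, tr, tp⟩ :=
    ((left_orbit h hs ho hn hk hR hY).and ((Filter.Eventually.filter_mono nhdsWithin_le_nhds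
      (gt_mem_nhds hr)).and (self_mem_nhdsWithin))).exists
  have tp : 0 < t := tp
  obtain ⟨W, Z, W0, Z0, hL, tW, tZ⟩ := left_piece cG hd hG tv tG
  obtain ⟨a, ha⟩ := ts (-x1)
  obtain ⟨b, hb⟩ := ts t
  have a0 : a < 0 := tm.lt_iff_lt.1 (by rw [ha, t0]; linarith)
  have b0 : 0 < b := tm.lt_iff_lt.1 (by rw [hb, t0]; linarith)
  have mid : ∀ x ∈ Icc a b, |θ x| < r := fun x hx => by
    have h1 := tm.monotone hx.1
    have h2 := tm.monotone hx.2
    rw [abs_lt]; constructor <;> linarith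
  have e : 1 - 1 / G 0 = ev (Yf s) (-θ b) := by rw [G0, one_div_one_div, hb]; ring
  rw [e, v0, ← hb] at W0 Z0
  have hRg : ∀ x, b ≤ x → Reg (fun x => W (x - b)) (fun x => Z (x - b)) x := fun x hx =>
    (hL (x - b) (by linarith)).2
  have tt : Tendsto (fun x : ℝ => x - b) atTop atTop := tendsto_atTop_add_const_right _ _ tendsto_id
  refine ⟨a, _, _, ⟨Sol.glue (fun x hx => (hm x (mid x hx)).1)
    (fun x hx => (hL (x - b) (by linarith)).1.shift) (by simp only [sub_self, W0])
    (by simp only [sub_self, Z0]) (hRg b le_rfl), ⟨0, a0, ?_, ?_,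
    sW.congr_of_eventuallyEq (gl_lt_ev b0), sZ.congr_of_eventuallyEq (gl_lt_ev b0),
    fun x hx hc => ?_⟩, tendsto_gl (tW.comp tt), tendsto_gl (tZ.comp tt)⟩, ?_, ?_⟩
  · rw [gl_le b0.le]; simp only [t0, neg_zero, y0, Wvy, sub_zero, sqrt_one, add_zero]; norm_num
  · rw [gl_le b0.le]; simp only [t0, neg_zero, y0, Zvy, sub_zero, sqrt_one, add_zero]; norm_num
  · rcases le_or_gt x b with hb' | hb'
    · have := (hm x (mid x ⟨hx, hb'⟩)).2 hc
      unfold Reg at this ⊢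
      rwa [gl_le hb', gl_le hb']
    · unfold Reg
      rw [gl_gt hb', gl_gt hb']
      exact hRg x hb'.le
  · rw [gl_le (a0.trans b0).le]; simp only [ha, neg_neg, sub_eq_add_neg]
  · rw [gl_le (a0.trans b0).le]; simp only [ha, neg_neg, sub_eq_add_neg]

lemma full_tail {s : ℝ} (h : Good s) (hs : s < sS) {n : ℕ} (ho : Odd n) (hn : 151 ≤ n)
    (hk : mu s * n < lam s ∧ lam s < mu s * (n + 1)) {R : ℝ} (hR : 0 < R) (hY : Cv R (Yf s))
    {V Y : ℝ → ℝ} (hO : Orb s V Y) {T : ℝ} (hT0 : 0 ≤ T)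
    (hT : ∀ τ, T ≤ τ → s - V τ < R ∧ Y τ = ev (Yf s) (s - V τ)) :
    ∃ W Z, Tail s 0 W Z ∧ W 0 = Wvy (V 0) (Y 0) ∧ Z 0 = Zvy (V 0) (Y 0) := by
  obtain ⟨r, hr, tail⟩ := tail_exists h hs ho hn hk hR hY
  obtain ⟨T', hT'0, hT'⟩ := hO.lim r hr
  obtain ⟨t, ht, ht'⟩ : ∃ t, T ≤ t ∧ T' ≤ t := ⟨max T T', le_max_left _ _, le_max_right _ _⟩
  have t0 : 0 ≤ t := hT0.trans ht
  obtain ⟨-, -, -, hVt, -⟩ := hO.bd t t0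
  obtain ⟨a, W, Z, hWZ, eW, eZ⟩ := tail (s - V t) (by linarith) (hT' t ht')
  rw [sub_sub_cancel, ← (hT t ht).2] at eW eZ
  obtain ⟨c, hc, hcb⟩ := pos_lb (isCompact_Icc (a := (0 : ℝ)) (b := t)) hO.cy.continuousOn
    fun τ hτ => (hO.bd τ hτ.1).1
  have hcY := hO.cy
  obtain ⟨θ, θ0, tm, ts, td⟩ := reparam (p := fun τ => Y (max 0 (min τ t))) (by fun_prop) hc
    fun τ => hcb _ ⟨le_max_left _ _, max_le t0 (min_le_right _ _)⟩
  obtain ⟨b, hb⟩ := ts t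
  have b0 : 0 ≤ b := tm.le_iff_le.1 (by rw [θ0, hb]; exact t0)
  refine ⟨_, _, Tail.prepend (f₁ := fun x => Wvy (V (θ x)) (Y (θ x)))
    (f₂ := fun x => Zvy (V (θ x)) (Y (θ x))) b0 (fun x hx => ?_) (hWZ.shift b) ?_ ?_, ?_, ?_⟩
  · have h1 : 0 ≤ θ x := by rw [← θ0]; exact tm.monotone hx.1
    have h2 : θ x ≤ t := by rw [← hb]; exact tm.monotone hx.2
    obtain ⟨Y0, Y1, V1, -, -⟩ := hO.bd _ h1
    have tdx := (td x).congr_deriv (show _ = 1 / Y (θ x) by rw [min_eq_left h2, max_eq_right h1])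
    have V0 : 0 < V (θ x) := by linarith
    refine ⟨sol_vy ((hO.dv _ h1).comp x tdx) ((hO.dy _ h1).comp x tdx) V0.ne' Y1 Y0.ne' ?_ ?_,
      reg_vy V0 Y1 Y0.ne'⟩
    · field_simp
    · field_simp
  · simp only [hb, sub_sub_cancel, eW]
  · simp only [hb, sub_sub_cancel, eZ]
  · rw [gl_le b0]; simp only [θ0]
  · rw [gl_le b0]; simp only [θ0]

/-- The orbit inside the unit of regularity at the origin, in terms of the power series solution
`f` of the profile equation. -/
lemma series_sol {ρ ζ0 : ℝ} {f : ℝ → ℝ}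
    (hf : ∀ ζ, ζ ≠ 0 → |ζ| < 2 * ζ0 → ∃ d, HasDerivAt f d ζ ∧ ρ * f ζ + (ζ + 1 / 2 * (f ζ - f (-ζ)
      + 1 / 5 * (f ζ + f (-ζ)))) * d + 1 / 10 / ζ * (f ζ ^ 2 - f (-ζ) ^ 2) = 0) {x : ℝ}
    (hx : exp x < 2 * ζ0) :
    Sol ρ (fun x => exp (-x) * f (exp x)) (fun x => -(exp (-x) * f (-exp x))) x := by
  have e0 := exp_pos x
  obtain ⟨d, hd, e1⟩ := hf (exp x) e0.ne' (by rwa [abs_of_pos e0])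
  obtain ⟨d', hd', e2⟩ := hf (-exp x) (neg_ne_zero.2 e0.ne') (by rwa [abs_neg, abs_of_pos e0])
  rw [neg_neg] at e2
  have dn : HasDerivAt (fun x => exp (-x)) (exp (-x) * -1) x := (hasDerivAt_neg x).exp
  have dW : HasDerivAt (fun x => exp (-x) * f (exp x)) (d - f (exp x) / exp x) x :=
    (dn.fun_mul (HasDerivAt.comp (h₂ := f) x hd (Real.hasDerivAt_exp x))).congr_deriv (by
      simp only [Function.comp_def]; rw [exp_neg]; field_simp; ring)
  have dZ : HasDerivAt (fun x => -(exp (-x) * f (-exp x))) (d' + f (-exp x) / exp x) x :=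
    (dn.fun_mul (HasDerivAt.comp (h₂ := f) (h := fun x => -exp x) x hd'
      (Real.hasDerivAt_exp x).fun_neg)).fun_neg.congr_deriv (by
      simp only [Function.comp_def]; rw [exp_neg]; field_simp; ring)
  refine ⟨_, _, dW, dZ, ?_, ?_⟩ <;> simp only [DW, NW, DZ, NZ, alphaF, exp_neg]
  · field_simp at e1 ⊢
    linear_combination (1 / 5) * e1
  · field_simp at e2 ⊢
    linear_combination (-1 / 5) * e2

lemma smooth_sol {ρ : ℝ} {W Z : ℝ → ℝ} (h : ∀ x, Sol ρ W Z x) {x : ℝ} (hx : Reg W Z x) :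
    ContDiffAt ℝ (⊤ : ℕ∞) W x ∧ ContDiffAt ℝ (⊤ : ℕ∞) Z x := by
  have cW : Continuous W := continuous_iff_continuousAt.2 fun x => by
    obtain ⟨w, z, hw, -⟩ := h x; exact hw.continuousAt
  have cZ : Continuous Z := continuous_iff_continuousAt.2 fun x => by
    obtain ⟨w, z, -, hz, -⟩ := h x; exact hz.continuousAt
  have hU : IsOpen {x | Reg W Z x} := by
    refine IsOpen.inter (isOpen_ne_fun (by unfold DW; fun_prop) continuous_const)
      (isOpen_ne_fun (by unfold DZ; fun_prop) continuous_const)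
  have := smooth_of_autonomous hU (c := fun x => (W x, Z x))
    (F := fun p : ℝ × ℝ => (NW (7 / 5) (1 + ρ) p.1 p.2 / DW (7 / 5) p.1 p.2,
      NZ (7 / 5) (1 + ρ) p.1 p.2 / DZ (7 / 5) p.1 p.2))
    (K := {p | DW (7 / 5) p.1 p.2 ≠ 0 ∧ DZ (7 / 5) p.1 p.2 ≠ 0}) (by
      refine ContDiffOn.prodMk (ContDiffOn.div ?_ ?_ fun p hp => hp.1)
        (ContDiffOn.div ?_ ?_ fun p hp => hp.2) <;> simp only [NW, DW, NZ, DZ] <;>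
        exact ContDiff.contDiffOn (by fun_prop)) (fun x hx => hx) (fun x hx => by
      obtain ⟨w, z, hw, hz, e1, e2⟩ := h x
      refine (hw.prodMk hz).congr_deriv (Prod.ext ?_ ?_)
      · exact eq_div_of_mul_eq hx.1 (by rw [mul_comm]; exact e1)
      · exact eq_div_of_mul_eq hx.2 (by rw [mul_comm]; exact e2))
  have := this.contDiffAt (hU.mem_nhds hx)
  exact ⟨contDiffAt_fst.comp x this, contDiffAt_snd.comp x this⟩

lemma global_orbit {s ζ0 : ℝ} {f W Z : ℝ → ℝ} (hζ : 0 < ζ0)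
    (hf : ContDiffOn ℝ (⊤ : ℕ∞) f (Ioo (-(2 * ζ0)) (2 * ζ0)))
    (hp : ∀ ζ, ζ ≠ 0 → |ζ| < 2 * ζ0 → ∃ d, HasDerivAt f d ζ ∧ rho s * f ζ +
      (ζ + 1 / 2 * (f ζ - f (-ζ) + 1 / 5 * (f ζ + f (-ζ)))) * d
        + 1 / 10 / ζ * (f ζ ^ 2 - f (-ζ) ^ 2) = 0)
    (hT : Tail s 0 W Z) (eW : W 0 = f ζ0 / ζ0) (eZ : Z 0 = -(f (-ζ0) / ζ0)) :
    ∃ W Z : ℝ → ℝ, ContDiff ℝ (⊤ : ℕ∞) W ∧ ContDiff ℝ (⊤ : ℕ∞) Z ∧ (∀ x, Sol (rho s) W Z x) ∧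
      W 0 = 6 / s - 1 ∧ Z 0 = -4 / s - 1 ∧ Tendsto W atTop (𝓝 0) ∧ Tendsto Z atTop (𝓝 0) ∧
      ∃ δ > 0, ∃ g : ℝ → ℝ, ContDiffOn ℝ (⊤ : ℕ∞) g (Ioo (-δ) δ) ∧ (∀ ζ, 0 < ζ → ζ < δ →
        ζ * W (log ζ) = g ζ ∧ -ζ * Z (log ζ) = g (-ζ)) := by
  have hb := exp_log hζ
  obtain ⟨b, hbe⟩ : ∃ b, b = log ζ0 := ⟨_, rfl⟩
  rw [← hbe] at hb
  have hT' := hT.shift b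
  obtain ⟨fW, hfW⟩ : ∃ k, k = fun x => exp (-x) * f (exp x) := ⟨_, rfl⟩
  obtain ⟨fZ, hfZ⟩ : ∃ k, k = fun x => -(exp (-x) * f (-exp x)) := ⟨_, rfl⟩
  obtain ⟨gW, hgW⟩ : ∃ k, k = fun x => W (x - (b - 0)) := ⟨_, rfl⟩
  obtain ⟨gZ, hgZ⟩ : ∃ k, k = fun x => Z (x - (b - 0)) := ⟨_, rfl⟩
  rw [← hgW, ← hgZ] at hT'
  obtain ⟨c, c1, c2, c3, c4, c5, c6⟩ := hT'.sonic
  have lt : ∀ x, x ≤ b → exp x < 2 * ζ0 := fun x hx => by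
    have := exp_le_exp.2 hx
    rw [hb] at this; linarith
  have sol : ∀ x, Sol (rho s) (gl b fW gW) (gl b fZ gZ) x := fun x => by
    refine Sol.glue (a := min x b) (fun y hy => ?_) hT'.sol ?_ ?_ (c6 b le_rfl c1.ne) x (min_le_left _ _)
    · rw [hfW, hfZ]; exact series_sol hp (lt y hy.2)
    · rw [hfW, hgW]; simp only [sub_zero, sub_self, exp_neg, hb, eW]; field_simp
    · rw [hfZ, hgZ]; simp only [sub_zero, sub_self, exp_neg, hb, eZ]; field_simp
  have sm : ∀ x, ContDiffAt ℝ (⊤ : ℕ∞) (gl b fW gW) x ∧ ContDiffAt ℝ (⊤ : ℕ∞) (gl b fZ gZ) x :=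
    fun x => by
    rcases lt_or_ge x b with hx | hx
    · have e1 : ContDiffAt ℝ (⊤ : ℕ∞) (fun x : ℝ => exp (-x)) x := by fun_prop
      have e2 : ContDiffAt ℝ (⊤ : ℕ∞) exp x := by fun_prop
      have l := lt x hx.le
      have p := exp_pos x
      have w : ContDiffAt ℝ (⊤ : ℕ∞) fW x := by
        rw [hfW]
        exact e1.mul (ContDiffAt.comp (g := f) x (hf.contDiffAt (Ioo_mem_nhds (by linarith) l)) e2)
      have z : ContDiffAt ℝ (⊤ : ℕ∞) fZ x := by
        rw [hfZ]
        exact (e1.mul (ContDiffAt.comp (g := f) (f := fun x => -exp x) x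
          (hf.contDiffAt (Ioo_mem_nhds (by linarith) (by linarith))) e2.neg)).neg
      exact ⟨w.congr_of_eventuallyEq (gl_lt_ev hx), z.congr_of_eventuallyEq (gl_lt_ev hx)⟩
    · rcases eq_or_ne x c with rfl | hc
      · exact ⟨c4.congr_of_eventuallyEq (gl_gt_ev c1), c5.congr_of_eventuallyEq (gl_gt_ev c1)⟩
      · refine smooth_sol sol ?_
        rcases eq_or_lt_of_le hx with rfl | hx'
        · have := c6 b le_rfl hc
          have e : gl b fW gW b = gW b ∧ gl b fZ gZ b = gZ b := by
            rw [gl_le le_rfl, gl_le le_rfl, hfW, hfZ, hgW, hgZ]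
            simp only [sub_zero, sub_self, exp_neg, hb, eW, eZ]
            constructor <;> field_simp
          unfold Reg; rw [e.1, e.2]; exact this
        · unfold Reg; rw [gl_gt hx', gl_gt hx']; exact c6 x hx hc
  have tt : Tendsto (fun x : ℝ => x - -c) atTop atTop := tendsto_atTop_add_const_right _ _ tendsto_id
  have sub : ContDiff ℝ (⊤ : ℕ∞) (fun x : ℝ => x - -c) := by fun_prop
  refine ⟨fun x => gl b fW gW (x - -c), fun x => gl b fZ gZ (x - -c),
    (contDiff_iff_contDiffAt.2 fun x => (sm x).1).comp sub,
    (contDiff_iff_contDiffAt.2 fun x => (sm x).2).comp sub, fun x => (sol _).shift, ?_, ?_,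
    (tendsto_gl hT'.lim.1).comp tt, (tendsto_gl hT'.lim.2).comp tt, exp (-c) * ζ0, by positivity,
    fun ζ => exp (-c) * f (exp c * ζ), ?_, fun ζ h1 h2 => ?_⟩
  · simp only [zero_sub, neg_neg]; rw [gl_gt c1, c2]
  · simp only [zero_sub, neg_neg]; rw [gl_gt c1, c3]
  · have l : ContDiff ℝ (⊤ : ℕ∞) (fun ζ => exp c * ζ) := by fun_prop
    refine contDiffOn_const.mul (hf.comp l.contDiffOn fun ζ hζ' => ?_)
    have e : exp c * (exp (-c) * ζ0) = ζ0 := by rw [← mul_assoc, ← exp_add]; simp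
    have h1 := mul_lt_mul_of_pos_left hζ'.1 (exp_pos c)
    have h2 := mul_lt_mul_of_pos_left hζ'.2 (exp_pos c)
    rw [mul_neg, e] at h1
    rw [e] at h2
    constructor <;> linarith
  · have e1 : exp (log ζ - -c) = exp c * ζ := by rw [sub_neg_eq_add, exp_add, exp_log h1, mul_comm]
    have e2 : log ζ - -c ≤ b := by
      rw [hbe, le_log_iff_exp_le hζ, e1]
      have h2 := mul_lt_mul_of_pos_left h2 (exp_pos c)
      rw [← mul_assoc, ← exp_add] at h2
      simpa using h2.le
    simp only [gl_le e2, hfW, hfZ, exp_neg (log ζ - -c), e1, exp_neg c]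
    have := exp_pos c
    constructor
    · field_simp
    · rw [mul_neg]; field_simp

/-- Passing from the autonomous system to the self-similar profile `ζ W(log ζ)`, `-ζ Z(log ζ)`. -/
lemma profile_of_orbit {ρ δ : ℝ} {W Z g : ℝ → ℝ} (sW : ContDiff ℝ (⊤ : ℕ∞) W)
    (sZ : ContDiff ℝ (⊤ : ℕ∞) Z) (sol : ∀ x, Sol ρ W Z x) (tW : Tendsto W atTop (𝓝 0))
    (tZ : Tendsto Z atTop (𝓝 0)) (hδ : 0 < δ) (sg : ContDiffOn ℝ (⊤ : ℕ∞) g (Ioo (-δ) δ))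
    (hg : ∀ ζ, 0 < ζ → ζ < δ → ζ * W (log ζ) = g ζ ∧ -ζ * Z (log ζ) = g (-ζ)) :
    ∃ w : ℝ → ℝ, ContDiff ℝ (⊤ : ℕ∞) w ∧ (∀ ζ, ζ ≠ 0 → ProfileEqn (7 / 5) (1 + ρ) w ζ) ∧
      w 1 = W 0 ∧ w (-1) = -Z 0 ∧ Tendsto (fun ζ => w ζ / ζ) atTop (𝓝 0) ∧
      Tendsto (fun ζ => w (-ζ) / ζ) atTop (𝓝 0) ∧
      (fun ξ => exp (-ξ) * w (exp ξ)) = W ∧ (fun ξ => -(exp (-ξ) * w (-exp ξ))) = Z := by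
  obtain ⟨w, hw⟩ : ∃ w : ℝ → ℝ, w = fun ζ =>
    if ζ = 0 then g 0 else ζ * (if 0 < ζ then W (log ζ) else Z (log ζ)) := ⟨_, rfl⟩
  have wp : ∀ ζ, 0 < ζ → w ζ = ζ * W (log ζ) := fun ζ h => by
    rw [hw]; simp only [if_neg h.ne', if_pos h]
  have wn : ∀ ζ, ζ < 0 → w ζ = ζ * Z (log ζ) := fun ζ h => by
    rw [hw]; simp only [if_neg h.ne, if_neg h.not_gt]
  have evp : ∀ ζ, 0 < ζ → w =ᶠ[𝓝 ζ] fun ζ => ζ * W (log ζ) := fun ζ h => by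
    filter_upwards [Ioi_mem_nhds h] with x hx using wp x hx
  have evn : ∀ ζ, ζ < 0 → w =ᶠ[𝓝 ζ] fun ζ => ζ * Z (log ζ) := fun ζ h => by
    filter_upwards [Iio_mem_nhds h] with x hx using wn x hx
  have ev0 : w =ᶠ[𝓝 0] g := by
    filter_upwards [Ioo_mem_nhds (neg_lt_zero.2 hδ) hδ] with x hx
    rcases lt_trichotomy x 0 with h | h | h
    · have := (hg (-x) (by linarith) (by linarith [hx.1])).2
      rw [wn x h, ← log_neg_eq_log]; rwa [neg_neg] at this
    · rw [hw]; simp only [h, if_true]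
    · rw [wp x h, (hg x h hx.2).1]
  have lg : ∀ ζ : ℝ, ζ ≠ 0 → ContDiffAt ℝ (⊤ : ℕ∞) log ζ := fun ζ h => contDiffAt_log.2 h
  have sm : ContDiff ℝ (⊤ : ℕ∞) w := contDiff_iff_contDiffAt.2 fun ζ => by
    rcases lt_trichotomy ζ 0 with h | rfl | h
    · exact (contDiffAt_id.mul (sZ.contDiffAt.comp ζ (lg ζ h.ne))).congr_of_eventuallyEq (evn ζ h)
    · exact (sg.contDiffAt (Ioo_mem_nhds (neg_lt_zero.2 hδ) hδ)).congr_of_eventuallyEq ev0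
    · exact (contDiffAt_id.mul (sW.contDiffAt.comp ζ (lg ζ h.ne'))).congr_of_eventuallyEq (evp ζ h)
  have pl : ∀ ζ, 0 < ζ → w (-ζ) = -ζ * Z (log ζ) := fun ζ h => by
    rw [wn _ (by linarith), log_neg_eq_log]
  refine ⟨w, sm, fun ζ h0 => ?_, ?_, ?_, ?_, ?_, ?_, ?_⟩
  · unfold ProfileEqn
    obtain ⟨w', z', d1, d2, e1, e2⟩ := sol (log ζ)
    simp only [DW, NW, DZ, NZ, alphaF] at e1 e2 ⊢
    have hl := Real.hasDerivAt_log h0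
    rcases lt_or_gt_of_ne h0 with h | h
    · have hd := ((hasDerivAt_id ζ).mul (d2.comp ζ hl)).congr_of_eventuallyEq (evn ζ h)
      rw [hd.deriv, wn ζ h, wp (-ζ) (by linarith), log_neg_eq_log]
      simp only [id, Function.comp_def]
      field_simp
      linear_combination 20 * ζ * e2
    · have hd := ((hasDerivAt_id ζ).mul (d1.comp ζ hl)).congr_of_eventuallyEq (evp ζ h)
      rw [hd.deriv, wp ζ h, pl ζ h]
      simp only [id, Function.comp_def]
      field_simp
      linear_combination 20 * ζ * e1
  · rw [wp 1 one_pos, log_one, one_mul]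
  · rw [pl 1 one_pos, log_one, neg_one_mul]
  · refine (tW.comp tendsto_log_atTop).congr' ?_
    filter_upwards [eventually_gt_atTop 0] with ζ h
    rw [wp ζ h, Function.comp_apply]; field_simp
  · have := (tZ.comp tendsto_log_atTop).neg
    rw [neg_zero] at this
    refine this.congr' ?_
    filter_upwards [eventually_gt_atTop 0] with ζ h
    rw [pl ζ h, Function.comp_apply]; field_simp
  · funext ξ
    rw [wp _ (exp_pos ξ), log_exp, ← mul_assoc, ← exp_add]; simp
  · funext ξ
    rw [pl _ (exp_pos ξ), log_exp, neg_mul, mul_neg, neg_neg, ← mul_assoc, ← exp_add]; simp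

/-- Theorem 1.2: for `γ = 7/5` and every sufficiently large odd `n`
there is an exponent `r` with `n < k(r) < n+1` and a smooth self-similar imploding
profile for the isentropic compressible Euler equations. -/
theorem statement1 :
    ∃ N : ℕ, ∀ n : ℕ, Odd n → N ≤ n →
      ∃ r : ℝ, 1 < r ∧ r < rStar (7 / 5) ∧
        (n : ℝ) < kFun (7 / 5) r ∧ kFun (7 / 5) r < (n : ℝ) + 1 ∧
        ∃ Wc : ℝ → ℝ, ContDiff ℝ (⊤ : ℕ∞) Wc ∧
          (∀ ζ : ℝ, ζ ≠ 0 → ProfileEqn (7 / 5) r Wc ζ) ∧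
          Wc 1 = W₀ (7 / 5) r ∧ Wc (-1) = -Z₀ (7 / 5) r ∧
          Tendsto (fun ζ : ℝ => Wc ζ / ζ) atTop (nhds 0) ∧
          Tendsto (fun ζ : ℝ => Wc (-ζ) / ζ) atTop (nhds 0) ∧
          ContDiff ℝ (⊤ : ℕ∞) (fun ξ : ℝ => Real.exp (-ξ) * Wc (Real.exp ξ)) ∧
          ContDiff ℝ (⊤ : ℕ∞) (fun ξ : ℝ => -(Real.exp (-ξ) * Wc (-Real.exp ξ))) ∧
          IsOdeSolutionOn (7 / 5) r (fun ξ : ℝ => Real.exp (-ξ) * Wc (Real.exp ξ))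
            (fun ξ : ℝ => -(Real.exp (-ξ) * Wc (-Real.exp ξ))) Set.univ ∧
          Real.exp (-(0 : ℝ)) * Wc (Real.exp 0) = W₀ (7 / 5) r ∧
          -(Real.exp (-(0 : ℝ)) * Wc (-Real.exp 0)) = Z₀ (7 / 5) r ∧
          Tendsto
            (fun ξ : ℝ =>
              (Real.exp (-ξ) * Wc (Real.exp ξ), -(Real.exp (-ξ) * Wc (-Real.exp ξ))))
            atTop (nhds ((0 : ℝ), (0 : ℝ))) := by
  obtain ⟨ζ0, hζ, s1, hs1, hs1', V, Y, H, Hc, Hu⟩ := right_orbit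
  have hsub : Icc s1 sS ⊆ Dm := fun s hs => ⟨hs1.trans_le hs.1, hs.2⟩
  have hO : ∀ s ∈ Icc s1 sS, Orb s (V s) (Y s) := fun s hs => by
    obtain ⟨-, -, -, -, -, -, cV, cY, hd⟩ := H s hs
    exact ⟨hsub hs, cV, cY, fun τ hτ => (hd τ hτ).1, fun τ hτ => (hd τ hτ).2.1,
      fun τ hτ => (hd τ hτ).2.2, fun r hr => (Hu r hr).imp fun T h => ⟨h.1, h.2 s hs⟩⟩
  obtain ⟨N, hN⟩ := matching hs1' hO Hc Hu
  refine ⟨max N 151, fun n ho hn => ?_⟩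
  obtain ⟨s, hs, hG, hsS, hk, R, hR, hY, T, hT0, hT⟩ := hN n ((le_max_left _ _).trans hn)
  have hm := hsub hs
  obtain ⟨W, Z, hTail, eW, eZ⟩ := full_tail hG hsS ho ((le_max_right _ _).trans hn) hk hR hY
    (hO s hs) hT0 hT
  obtain ⟨sf, hp, u0, g0, eV, eY, -⟩ := H s hs
  have e5 : 5 / √(1 - Y s 0) = 5 * sigE (rho s) ζ0 / uE (rho s) ζ0 := by
    rw [eY, sub_sub_cancel, ← div_pow, sqrt_sq (by positivity)]
    field_simp
  obtain ⟨W, Z, sW, sZ, sol, W0, Z0, tW, tZ, δ, hδ, g, sg, hg⟩ := global_orbit hζ sf hp hTail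
    (by
      rw [eW, Wvy, e5, eV, add_div, one_div_one_div, div_div_div_cancel_right₀ u0.ne', div_one]
      unfold uE sigE; field_simp; ring)
    (by
      rw [eZ, Zvy, e5, eV, sub_div, one_div_one_div, div_div_div_cancel_right₀ u0.ne', div_one]
      unfold uE sigE; field_simp; ring)
  obtain ⟨w, sw, pw, w1, w2, t1, t2, E1, E2⟩ := profile_of_orbit sW sZ sol tW tZ hδ sg hg
  have E1' := congrFun E1 0
  have E2' := congrFun E2 0
  rw [W0] at E1' w1
  rw [Z0] at E2' w2
  refine ⟨1 + rho s, by linarith [(rho_bounds hm).1], rho_lt_rStar hm hsS, ?_, ?_, w, sw, pw, ?_, ?_,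
    t1, t2, ?_, ?_, ?_, ?_, ?_, ?_⟩
  · rw [kFun_eq hm, lt_div_iff₀ hG.mu0]; linarith [hk.1]
  · rw [kFun_eq hm, div_lt_iff₀ hG.mu0]; linarith [hk.2]
  · rw [W0_eq hm, w1]
  · rw [Z0_eq hm, w2]
  · rw [E1]; exact sW
  · rw [E2]; exact sZ
  · rw [E1, E2]
    intro ξ _
    obtain ⟨a, b, ha, hb, h1, h2⟩ := sol ξ
    rw [ha.deriv, hb.deriv]; exact ⟨h1, h2⟩
  · rw [W0_eq hm]; exact E1'
  · rw [Z0_eq hm]; exact E2'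
  · have := tW.prodMk_nhds tZ
    rwa [← E1, ← E2] at this

end SelfSimilarImplosion
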